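/- There exist universal constants C_K > 0, c_d > 0 and C_H ≥ 10 such that the following holds. Given a > 0, there is a threshold R̂₀(a) such that for all R ≥ R̂₀(a): if W : B_R → ℝ satisfies sup over B_R of |W| ≤ a², and v : B_R → ℝ solves -Δv + Wv = 0 in B_R with sup over B_R of |v| ≤ exp(c₁R) for some c₁ ≥ 1, and if for some S ∈ (2^8, R/2) there exist z₀ in the closed ball of radius R - S and L ≥ 0 with |v(z₀)| ≥ exp(-L), then there exists r₀ > 1 (depending on a and R) so that for every r ∈ (0, r₀): sup over B_r of |v| ≥ (r/R)^τ, where τ = max{3 a C_H √(C_K/(32 ln 2)) · R √(log R), 2^{14}(c₁R + L + c_d/log R) · R S^{-1}} + (1/5)(L + c_d/log R). -/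

import Mathlib

/-!
The solution is rescaled by `1 / (2Aa√(log R))`, so that on a disc of radius `ρ ≈ 2AaR√(log R)` it
solves `|Δu| ≤ δ²|u|` with `δ²` of order `1 / log R`; the theorem is the three-ball inequality
`core` for such `u`, applied with `k ≈ T / 16`, where `T` is the maximum in the exponent, and
unwound by `conclude`. The constants are `C_K = 32 log 2 (64mA)²`, `c_d = 1`, `C_H = 10`, `r₀ = 2`.

`core` is a Carleman argument for `∂̄` on a perforated disc.

* Let `F` index the lattice points whose disc of radius `8` contains no zero of `u`. Multiply `u`
  by a cutoff vanishing near the origin, near the outer circle and in small discs around `F`;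
  call the result `U`. Up to cutoff terms `ΔU = D` with `|D| ≤ δ²|U|`.
* `U` is made nearly holomorphic: `gauge` produces `b`, `β` such that
  `∂̄ (e^{-β} (∂U - bU)) ≈ e^{-β} (ΔU - D) / 4` with an arbitrarily small error in `L²`. Here `b`
  solves the Riccati equation `∂̄b + |b|² = D / (4U)` (`riccati`), up to terms invisible to `U`, and
  `β` is the Cauchy transform of a regularisation of `-b conj G / G`, `G = ∂U - bU`. The Cauchy kernel would give `b` of size `δ²ρ`; instead, each
  lattice cell subtracts from it poles at zeros of `U`, which `U` does not see, so that the
  modified kernel decays cubically. Almost every cell has such zeros: it is close to a removed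
  disc, or `u` vanishes nearby and then, by `zero_circle`, on every circle around the cell
  (`cells_exist`). The poles are truncated and averaged over these circles to be in the
  Kato class. Hence `|b| ≲ δ²` near the holes, `|β| ≲ δ²ρ`, and `β` oscillates by `O(δ² log ρ)`
  at unit distance.
* `carleman` is applied to `z^{-k} e^{-β} (∂U - bU)` with a subharmonic weight `wt` which is strictly
  subharmonic near the holes, the origin and the rescaled point `z1`. The error on the edge
  of a hole is bounded by `|u|` only, since there `u` has a sign and `hole_grad` applies.
* `V = ch · ca · u`, supported near the poles `0`, `z1`, `F`, satisfies a radial Poincaré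
  inequality with gain `(ρ / k)²` (`poincare`). Its gradient is controlled by the Carleman density,
  where the derivative falls on `u`, and in the transition zone by integrating from a nearby zero
  of `u` along a segment and a circle (`trans_zone`). For `k ≥ mρ` the gain absorbs the
  error on the holes (`absorb`); the mean value bound `lower_bd` at `z1` then gives `core`.
-/

open Metric

/-- The Laplacian of a function on the plane (identified with `ℂ`). -/
noncomputable def lap (u : ℂ → ℝ) (z : ℂ) : ℝ :=
  fderiv ℝ (fun w => fderiv ℝ u w 1) z 1 +
    fderiv ℝ (fun w => fderiv ℝ u w Complex.I) z Complex.I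

namespace Landis

open Complex MeasureTheory Filter Topology Finset

noncomputable section

/-! ### Wirtinger derivatives and the Carleman inequality -/

local notation "fd" => fderiv ℝ
local notation "C¹" => ContDiff ℝ 1
local notation "C²" => ContDiff ℝ 2
local notation "π" => Real.pi
local notation "HCS" => HasCompactSupport
local notation "𝔹" => Metric.closedBall
local notation "rexp" => Real.exp
local notation "bnum" => (by norm_num)
local notation "bpos" => (by positivity)
local notation "blin" => (by linarith)
local notation "sm" => Real.smoothTransition
local notation "mul_le_l" => mul_le_mul_of_nonneg_left
local notation "mul_le_r" => mul_le_mul_of_nonneg_right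
local notation "Idx" => Finset (ℤ × ℤ)
local notation "DA" => DifferentiableAt ℝ
local notation "icm" => integral_const_mul

lemma nabs (r : ℝ) : ‖r‖ = |r| := rfl

lemma mem_cb {z c : ℂ} {r : ℝ} : z ∈ 𝔹 c r ↔ ‖z - c‖ ≤ r := mem_closedBall_iff_norm

/-- The Wirtinger derivative `∂/∂z̄` of a complex-valued function on the plane. -/
def dbar (F : ℂ → ℂ) (z : ℂ) : ℂ := (fd F z 1 + I * fd F z I) / 2

/-- The Wirtinger derivative `∂/∂z` of a real-valued function on the plane. -/
def dz (u : ℂ → ℝ) (z : ℂ) : ℂ := ((fd u z 1 : ℝ) - I * (fd u z I : ℝ)) / 2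

lemma _root_.Continuous.integ {E : Type*} [NormedAddCommGroup E] {f : ℂ → E} (hf : Continuous f)
    (h : HCS f) : Integrable f :=
  hf.integrable_of_hasCompactSupport h

lemma hcs_of {E E' : Type*} [Zero E] [Zero E'] {f : ℂ → E} {g : ℂ → E'}
    (hf : HCS f) (h : ∀ z, f z = 0 → g z = 0) : HCS g :=
  hf.mono fun z hz h0 => hz (h z h0)

section IBP
variable {E : Type*} [NormedAddCommGroup E] [NormedSpace ℝ E]

lemma cont_fd {f : ℂ → E} (hf : C¹ f) (v : ℂ) :
    Continuous (fun z => fd f z v) :=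
  (hf.continuous_fderiv bnum).clm_apply continuous_const

lemma contDiff_fd {f : ℂ → E} {n : ℕ} (hf : ContDiff ℝ (n + 1 : ℕ) f) (v : ℂ) :
    ContDiff ℝ n (fun z => fd f z v) :=
  (hf.fderiv_right (m := n) (by norm_cast)).clm_apply contDiff_const

lemma contDiff1_fd {f : ℂ → E} (hf : C² f) (v : ℂ) :
    C¹ (fun z => fd f z v) := by fun_prop

lemma hcs_fd {f : ℂ → E} (hc : HCS f) (v : ℂ) :
    HCS (fun z => fd f z v) :=
  (hc.fderiv (𝕜 := ℝ)).mono' (by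
    intro z hz
    apply subset_tsupport
    intro h
    apply hz
    simp only [h]; simp)

/-- Integration by parts for real-valued functions. -/
lemma ibp {f g : ℂ → ℝ} (hf : C¹ f) (hg : C¹ g)
    (hc : HCS f) (v : ℂ) :
    ∫ z, f z * fd g z v = - ∫ z, fd f z v * g z := by
  apply integral_mul_fderiv_eq_neg_fderiv_mul_of_integrable
  · exact ((cont_fd hf v).mul hg.continuous).integ
      ((hcs_fd hc v).mul_right)
  · exact (hf.continuous.mul (cont_fd hg v)).integ hc.mul_right
  · exact (hf.continuous.mul hg.continuous).integ hc.mul_right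
  · intro x _; exact hf.differentiable bnum x
  · intro x _; exact hg.differentiable bnum x

end IBP

/-- `∫ (f_x g_y - f_y g_x) = 0` for real C¹ functions with compact support.
As only first derivatives exist, one uses that `h ↦ ∫ f(z+h) g_y(z) dz` has an even-type symmetry. -/
lemma integral_jac {f g : ℂ → ℝ} (hf : C¹ f) (hg : C¹ g)
    (hcf : HCS f) (hcg : HCS g) (a b : ℂ) :
    ∫ z, fd f z a * fd g z b = ∫ z, fd f z b * fd g z a := by
  -- derivative at `0` of `h ↦ ∫ f (z + h a) k z`
  have key : ∀ (p q : ℂ → ℝ), C¹ p → HCS p → Continuous q → HCS q → ∀ a : ℂ,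
      HasDerivAt (fun h : ℝ => ∫ z, p (z + h * a) * q z) (∫ z, fd p z a * q z) 0 := by
    intro p q hp hcp hq hcq a
    obtain ⟨C, hC⟩ := (hcs_fd hcp a).exists_bound_of_continuous (cont_fd hp a)
    have := (hasDerivAt_integral_of_dominated_loc_of_deriv_le (μ := volume) (𝕜 := ℝ)
      (F := fun (h : ℝ) z => p (z + h * a) * q z)
      (F' := fun (h : ℝ) z => fd p (z + h * a) a * q z) (x₀ := 0)
      (bound := fun z => C * |q z|) (s := Set.univ) univ_mem ?_ ?_ ?_ ?_ ?_ ?_).2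
    · simpa using this
    · refine .of_forall fun h => Continuous.aestronglyMeasurable ?_
      exact (hp.continuous.comp (by fun_prop)).mul hq
    · exact ((hp.continuous.comp (by fun_prop)).mul hq).integ
        hcq.mul_left
    · exact (((cont_fd hp a).comp (g := fun z => fd p z a)
        (f := fun z => z + ((0:ℝ):ℂ) * a) (by fun_prop)).mul hq).aestronglyMeasurable
    · refine .of_forall fun z h _ => ?_
      rw [norm_mul, nabs (q z)]
      exact mul_le_r (hC _) (abs_nonneg _)
    · exact ((hq.abs).integ hcq.norm).const_mul C
    · refine .of_forall fun z h _ => ?_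
      have h1 : HasDerivAt (fun h : ℝ => z + h * a) a h := by
        simpa using ((hasDerivAt_id h).ofReal_comp.mul_const a).const_add z
      have h2 := (hp.differentiable bnum (z + h * a)).hasFDerivAt.comp_hasDerivAt h h1
      exact h2.mul_const (q z)
  have h1 := key f (fun z => fd g z b) hf hcf (cont_fd hg b) (hcs_fd hcg b) a
  have h2 := key g (fun z => fd f z b) hg hcg (cont_fd hf b) (hcs_fd hcf b) a
  have h3 : HasDerivAt (fun h : ℝ => ∫ z, g (z + (-h : ℝ) * a) * fd f z b)
      (-(∫ z, fd g z a * fd f z b)) 0 := by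
    have h0 : HasDerivAt (fun h : ℝ => -h) (-1) 0 := hasDerivAt_neg (0:ℝ)
    have := HasDerivAt.comp (h₂ := fun h : ℝ => ∫ z, g (z + h * a) * fd f z b)
      (0:ℝ) (by simpa using h2) h0
    simpa [Function.comp_def] using this
  have h4 : (fun h : ℝ => ∫ z, f (z + h * a) * fd g z b) =
      fun h : ℝ => -∫ z, g (z + (-h : ℝ) * a) * fd f z b := by
    funext h
    have hfc : C¹ (fun z => f (z + h * a)) := hf.comp (by fun_prop)
    have hcc : HCS (fun z => f (z + h * a)) := hcf.comp_homeomorph (Homeomorph.addRight ((h:ℂ) * a))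
    rw [ibp hfc hg hcc b]
    congr 1
    rw [← integral_add_right_eq_self (fun z => g (z + (-h : ℝ) * a) * fd f z b) ((h : ℂ) * a)]
    congr 1; funext z
    rw [fderiv_comp_add_right]
    simp [mul_comm]
  rw [h4] at h1
  have h5 := h1.unique h3.neg
  rw [h5, neg_neg]
  exact integral_congr_ae (.of_forall fun z => mul_comm _ _)

lemma contDiff1_re {F : ℂ → ℂ} (hF : C¹ F) : C¹ (fun z => (F z).re) := reCLM.contDiff.comp hF

lemma contDiff1_im {F : ℂ → ℂ} (hF : C¹ F) : C¹ (fun z => (F z).im) := imCLM.contDiff.comp hF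

lemma fderiv_re {F : ℂ → ℂ} {z : ℂ} (hF : DA F z) (v : ℂ) :
    fd (fun z => (F z).re) z v = (fd F z v).re := by
  have := (reCLM.hasFDerivAt.comp z hF.hasFDerivAt).fderiv
  change fd (reCLM ∘ F) z v = _
  rw [this]; rfl

lemma fderiv_im {F : ℂ → ℂ} {z : ℂ} (hF : DA F z) (v : ℂ) :
    fd (fun z => (F z).im) z v = (fd F z v).im := by
  have := (imCLM.hasFDerivAt.comp z hF.hasFDerivAt).fderiv
  change fd (imCLM ∘ F) z v = _
  rw [this]; rfl

lemma normSq_aux (a b : ℝ) (F X Y : ℂ) :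
    ‖(X + I * Y) / 2 - ((a : ℂ) + I * b) / 2 * F‖ ^ 2
      - ‖(X - I * Y) / 2 + (((a : ℂ) - I * b) / 2) * F‖ ^ 2 = (X.im * Y.re - Y.im * X.re)
        - (a * (F.re * X.re) + a * (F.im * X.im) + (b * (F.re * Y.re) + b * (F.im * Y.im))) := by
  rw [← normSq_eq_norm_sq, ← normSq_eq_norm_sq]
  simp only [normSq_apply, sub_re, add_re, mul_re,
    sub_im, add_im, mul_im, Complex.I_re, Complex.I_im,
    ofReal_re, ofReal_im, div_ofNat_re, div_ofNat_im]
  ring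

/-- The weighted inequality `½ ∫ Δw |F|² ≤ ∫ |∂̄F - (∂̄w) F|²`. -/
lemma carleman_aux {F : ℂ → ℂ} (hF : C¹ F) (hc : HCS F)
    {w : ℂ → ℝ} (hw : C² w) :
    ∫ z, (1 / 2) * lap w z * ‖F z‖ ^ 2 ≤
      ∫ z, ‖dbar F z - ((fd w z 1 : ℝ) + I * (fd w z I : ℝ)) / 2 * F z‖ ^ 2 := by
  set f₁ : ℂ → ℝ := fun z => (F z).re with hf₁
  set f₂ : ℂ → ℝ := fun z => (F z).im with hf₂
  have c₁ : C¹ f₁ := contDiff1_re hF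
  have c₂ : C¹ f₂ := contDiff1_im hF
  have s₁ : HCS f₁ := hc.comp_left (g := re) (by simp)
  have s₂ : HCS f₂ := hc.comp_left (g := im) (by simp)
  have wx := contDiff1_fd hw 1
  have wy := contDiff1_fd hw I
  have hd : ∀ z, DA F z := hF.differentiable bnum
  -- integration by parts of each of the four terms with a derivative of `w`
  have part : ∀ (f : ℂ → ℝ) (v : ℂ), C¹ f → HCS f → ∫ z, (fd w z v) * (f z * fd f z v) =
        - ∫ z, (1 / 2) * (fd (fun y => fd w y v) z v * f z ^ 2) := by
    intro f v hf hfc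
    have h1 : C¹ (fun z => (1 / 2) * f z ^ 2) := contDiff_const.mul (hf.pow 2)
    have h2 : HCS (fun z => (1 / 2) * f z ^ 2) :=
      hfc.comp_left (g := fun x : ℝ => (1 / 2) * x ^ 2) (by simp)
    have := ibp h1 (contDiff1_fd hw v) h2 v
    have h3 : ∀ z, fd (fun z => (1 / 2) * f z ^ 2) z v = f z * fd f z v := by
      intro z
      have hh := (((hf.differentiable bnum z).hasFDerivAt.pow 2).const_mul (1/2:ℝ)).fderiv
      rw [hh]; simp; ring
    simp only [h3] at this
    rw [show (∫ z, (fd w z v) * (f z * fd f z v)) = ∫ z, f z * fd f z v * fd w z v from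
        integral_congr_ae (.of_forall fun z => by simp only; ring)]
    rw [show (∫ z, (1 / 2) * (fd (fun y => fd w y v) z v * f z ^ 2)) =
      ∫ z, (1 / 2) * f z ^ 2 * fd (fun y => fd w y v) z v from
        integral_congr_ae (.of_forall fun z => by simp only; ring)]
    linarith
  have p1 := part f₁ 1 c₁ s₁
  have p2 := part f₂ 1 c₂ s₂
  have p3 := part f₁ I c₁ s₁
  have p4 := part f₂ I c₂ s₂
  have jac := integral_jac c₂ c₁ s₂ s₁ 1 I
  have int1 : ∀ (f : ℂ → ℝ) (v : ℂ), C¹ f → HCS f →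
      Integrable (fun z => (fd w z v) * (f z * fd f z v)) := fun f v hf hfc =>
    ((contDiff1_fd hw v).continuous.mul
      (hf.continuous.mul (cont_fd hf v))).integ
      (hcs_of hfc fun z hz => by simp [hz])
  have int2 : ∀ (f : ℂ → ℝ) (v : ℂ), C¹ f → HCS f →
      Integrable (fun z => (1 / 2) * (fd (fun y => fd w y v) z v * f z ^ 2)) := by
    intro f v hf hfc
    refine (continuous_const.mul ((cont_fd (contDiff1_fd hw v) v).mul
      (hf.continuous.pow 2))).integ ?_
    exact hcs_of hfc fun z hz => by simp [hz]
  have int3 : ∀ (f g : ℂ → ℝ) (v v' : ℂ), C¹ f → HCS f → C¹ g →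
      Integrable (fun z => fd f z v * fd g z v') := by
    intro f g v v' hf hfc hg
    exact ((cont_fd hf v).mul (cont_fd hg v')).integ
      (hcs_fd hfc v).mul_right
  have hF1 : ∀ z v, (fd f₁ z v) = (fd F z v).re := fun z v => fderiv_re (hd z) v
  have hF2 : ∀ z v, (fd f₂ z v) = (fd F z v).im := fun z v => fderiv_im (hd z) v
  set A : ℂ → ℂ := fun z => dbar F z - ((fd w z 1 : ℝ) + I * (fd w z I : ℝ)) / 2 * F z with hA
  set B : ℂ → ℂ := fun z => (fd F z 1 - I * fd F z I) / 2 +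
    (((fd w z 1 : ℝ) - I * (fd w z I : ℝ)) / 2) * F z with hB
  have id : ∀ z, ‖A z‖ ^ 2 - ‖B z‖ ^ 2 = (fd f₂ z 1 * fd f₁ z I - fd f₂ z I * fd f₁ z 1) -
      ((fd w z 1) * (f₁ z * fd f₁ z 1) + (fd w z 1) * (f₂ z * fd f₂ z 1) +
      ((fd w z I) * (f₁ z * fd f₁ z I) + (fd w z I) * (f₂ z * fd f₂ z I))) := by
    intro z
    rw [hF1, hF1, hF2, hF2]
    exact normSq_aux _ _ _ _ _
  have cA : Continuous A := by
    have := cont_fd hF 1; have := cont_fd hF I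
    have := wx.continuous; have := wy.continuous; have := hF.continuous
    simp only [hA, dbar]; fun_prop
  have cB : Continuous B := by fun_prop
  have kA : HCS A := by
    refine HasCompactSupport.sub ?_ hc.mul_left
    exact ((hcs_fd hc 1).add ((hcs_fd hc I).mul_left)).comp_left (g := fun x : ℂ => x / 2) (by simp)
  have kB : HCS B := by
    refine HasCompactSupport.add ?_ hc.mul_left
    exact ((hcs_fd hc 1).sub ((hcs_fd hc I).mul_left)).comp_left (g := fun x : ℂ => x / 2) (by simp)
  have iA : Integrable (fun z => ‖A z‖ ^ 2) := (cA.norm.pow 2).integ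
    (hcs_of kA fun z hz => by simp [hz])
  have iB : Integrable (fun z => ‖B z‖ ^ 2) := (cB.norm.pow 2).integ
    (hcs_of kB fun z hz => by simp [hz])
  have e1 : (∫ z, ‖A z‖ ^ 2) - ∫ z, ‖B z‖ ^ 2 = ∫ z, (1 / 2) * lap w z * ‖F z‖ ^ 2 := by
    have P : ∀ {f g : ℂ → ℝ}, Integrable f → Integrable g →
        Integrable (fun z => f z + g z) ∧ ∫ z, (f z + g z) = (∫ z, f z) + ∫ z, g z :=
      fun hf hg => ⟨hf.add hg, integral_add hf hg⟩
    have M : ∀ {f g : ℂ → ℝ}, Integrable f → Integrable g →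
        Integrable (fun z => f z - g z) ∧ ∫ z, (f z - g z) = (∫ z, f z) - ∫ z, g z :=
      fun hf hg => ⟨hf.sub hg, integral_sub hf hg⟩
    have i1 := int1 f₁ 1 c₁ s₁
    have i2 := int1 f₂ 1 c₂ s₂
    have i3 := int1 f₁ I c₁ s₁
    have i4 := int1 f₂ I c₂ s₂
    have j1 := int2 f₁ 1 c₁ s₁
    have j2 := int2 f₂ 1 c₂ s₂
    have j3 := int2 f₁ I c₁ s₁
    have j4 := int2 f₂ I c₂ s₂
    have k1 := int3 f₂ f₁ 1 I c₂ s₂ c₁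
    have k2 := int3 f₂ f₁ I 1 c₂ s₂ c₁
    rw [← integral_sub iA iB]
    simp only [id]
    rw [(M (M k1 k2).1 (P (P i1 i2).1 (P i3 i4).1).1).2, (M k1 k2).2,
      (P (P i1 i2).1 (P i3 i4).1).2, (P i1 i2).2, (P i3 i4).2, p1, p2, p3, p4, jac]
    have e3 : ∀ z, (1 / 2) * lap w z * ‖F z‖ ^ 2 =
        ((1 / 2) * (fd (fun y => fd w y 1) z 1 * f₁ z ^ 2) +
        (1 / 2) * (fd (fun y => fd w y 1) z 1 * f₂ z ^ 2)) +
        ((1 / 2) * (fd (fun y => fd w y I) z I * f₁ z ^ 2) +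
        (1 / 2) * (fd (fun y => fd w y I) z I * f₂ z ^ 2)) := by
      intro z
      rw [← normSq_eq_norm_sq, normSq_apply, lap, hf₁, hf₂]; ring
    simp only [e3]
    rw [(P (P j1 j2).1 (P j3 j4).1).2, (P j1 j2).2, (P j3 j4).2]
    ring
  have e2 : 0 ≤ ∫ z, ‖B z‖ ^ 2 := integral_nonneg fun z => bpos
  linarith

/-- The Carleman inequality for `∂̄` with a smooth weight. -/
theorem carleman {H : ℂ → ℂ} (hH : C¹ H) (hc : HCS H)
    {w : ℂ → ℝ} (hw : C² w) :
    ∫ z, (1 / 2) * lap w z * (‖H z‖ ^ 2 * rexp (2 * w z)) ≤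
      ∫ z, ‖dbar H z‖ ^ 2 * rexp (2 * w z) := by
  have hw1 : C¹ w := hw.of_le bnum
  have he : C¹ (fun z => ((rexp (w z) : ℝ) : ℂ)) :=
    ofRealCLM.contDiff.comp (Real.contDiff_exp.comp hw1)
  have key := carleman_aux (F := fun z => H z * (rexp (w z) : ℝ)) (hH.mul he) hc.mul_right hw
  have sq : ∀ z, rexp (2 * w z) = rexp (w z) ^ 2 := fun z => by rw [← Real.exp_nat_mul]; norm_num
  have d1 : ∀ z v, fd (fun z => H z * ((rexp (w z) : ℝ) : ℂ)) z v =
      (fd H z v + H z * (fd w z v : ℝ)) * (rexp (w z) : ℝ) := by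
    intro z v
    have h1 := (hH.differentiable bnum z).hasFDerivAt
    have h2 := (ofRealCLM.hasFDerivAt (x := rexp (w z))).comp z
      (hw1.differentiable bnum z).hasFDerivAt.exp
    have h3 := (h1.mul h2).fderiv
    change fd (H * (ofRealCLM ∘ fun z => rexp (w z))) z v = _
    rw [h3]
    simp
    ring
  calc _ = ∫ z, (1 / 2) * lap w z * ‖H z * ((rexp (w z) : ℝ) : ℂ)‖ ^ 2 := by
        refine integral_congr_ae (.of_forall fun z => ?_)
        simp only [sq, norm_mul, mul_pow, norm_real, nabs, sq_abs]
    _ ≤ _ := key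
    _ = _ := by
        refine integral_congr_ae (.of_forall fun z => ?_)
        simp only [sq, dbar, d1]
        rw [← sq_abs (rexp (w z)), ← nabs, ← norm_real, ← mul_pow, ← norm_mul]
        congr 2
        ring

/-! ### The Cauchy transform -/

lemma locInt_inv : LocallyIntegrable (fun t : ℂ => ((π : ℂ) * t)⁻¹) := by
  refine locallyIntegrable_of_norm_le_rpow (C := 1) (α := 1) ?_ ?_ ?_ ?_
  · simp [finrank_real_complex]
  · simp [finrank_real_complex]
  · refine .of_forall fun t => ?_
    rw [Real.rpow_neg_one, norm_inv, norm_mul, mul_inv, norm_real, nabs, abs_of_pos Real.pi_pos]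
    apply mul_le_r _ bpos
    exact inv_le_one_of_one_le₀ (by linarith [Real.pi_gt_three])
  · exact (by fun_prop : Measurable (fun t : ℂ => ((π : ℂ) * t)⁻¹)).aestronglyMeasurable

/-- The Cauchy transform `g ↦ (1/π) ∫ g(ζ)/(z-ζ) dζ`, the solution operator of `∂/∂z̄`. -/
def cauchy (g : ℂ → ℂ) (z : ℂ) : ℂ := ∫ t : ℂ, ((π : ℂ) * t)⁻¹ * g (z - t)

lemma cauchy_eq_conv (g : ℂ → ℂ) :
    cauchy g = convolution (fun t : ℂ => ((π : ℂ) * t)⁻¹) g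
      (ContinuousLinearMap.mul ℝ ℂ) volume := by
  ext z; simp [cauchy, MeasureTheory.convolution]

lemma cauchy_contDiff {g : ℂ → ℂ} (hg : C¹ g) (hc : HCS g) :
    C¹ (cauchy g) := by
  rw [cauchy_eq_conv]
  exact hc.contDiff_convolution_right _ locInt_inv hg

lemma cauchy_fderiv {g : ℂ → ℂ} (hg : C¹ g) (hc : HCS g) (z v : ℂ) :
    fd (cauchy g) z v = ∫ t : ℂ, ((π : ℂ) * t)⁻¹ * fd g (z - t) v := by
  have h := hc.hasFDerivAt_convolution_right (ContinuousLinearMap.mul ℝ ℂ) locInt_inv hg z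
  rw [← cauchy_eq_conv] at h
  rw [h.fderiv, convolution_precompR_apply _ locInt_inv (hc.fderiv ℝ)
    (hg.continuous_fderiv bnum)]
  simp [MeasureTheory.convolution]

lemma cauchy_integrable {g : ℂ → ℂ} (hg : Continuous g) (hc : HCS g) (z : ℂ) :
    Integrable (fun t : ℂ => ((π : ℂ) * t)⁻¹ * g (z - t)) := by
  have := hc.convolutionExists_right (ContinuousLinearMap.mul ℝ ℂ) locInt_inv hg z
  simpa [ConvolutionExistsAt] using this

lemma dbar_cauchy {g : ℂ → ℂ} (hg : C¹ g) (hc : HCS g) (z : ℂ) :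
    dbar (cauchy g) z = ∫ t : ℂ, ((π : ℂ) * t)⁻¹ * dbar g (z - t) := by
  have h1 := cauchy_integrable (cont_fd hg 1) (hcs_fd hc 1) z
  have h2 := cauchy_integrable (cont_fd hg I) (hcs_fd hc I) z
  rw [dbar, cauchy_fderiv hg hc, cauchy_fderiv hg hc, ← icm, ← integral_add h1
    (h2.const_mul I), ← integral_div]
  congr 1; ext t; simp only [dbar]; ring

lemma ray_integral {g : ℂ → ℂ} (hg : C¹ g) (hc : HCS g) (z e : ℂ)
    (he : ‖e‖ = 1) :
    ∫ r in Set.Ioi (0:ℝ), fd g (z - r * e) e = g z := by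
  have hd : ∀ r : ℝ, HasDerivAt (fun r : ℝ => - g (z - r * e)) (fd g (z - r * e) e) r := by
    intro r
    have h1 : HasDerivAt (fun r : ℝ => z - r * e) (-e) r := by
      have := ((ofRealCLM.hasDerivAt (x := r)).mul_const e).const_sub z
      simpa using this
    have := ((hg.differentiable bnum (z - r * e)).hasFDerivAt.comp_hasDerivAt r h1).neg
    exact this.congr_deriv (by simp)
  obtain ⟨M, hM⟩ := hc.isCompact.isBounded.exists_norm_le
  have hz : ∀ r : ℝ, ‖z‖ + M < |r| → z - r * e ∉ tsupport g := by
    intro r hr hmem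
    have h1 := hM _ hmem
    have h2 : ‖(r:ℂ) * e‖ ≤ ‖z‖ + ‖z - r * e‖ := by
      have := norm_sub_le z (z - r * e); simpa using this
    rw [norm_mul, he, norm_real, nabs] at h2
    linarith
  have hgz : ∀ r : ℝ, ‖z‖ + M < |r| → g (z - r * e) = 0 := fun r hr =>
    image_eq_zero_of_notMem_tsupport (hz r hr)
  have hfz : ∀ r : ℝ, ‖z‖ + M < |r| → fd g (z - r * e) e = 0 := fun r hr => by
    rw [image_eq_zero_of_notMem_tsupport (fun h => hz r hr (tsupport_fderiv_subset ℝ h))]; rfl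
  have hint : Integrable (fun r : ℝ => fd g (z - r * e) e) := by
    apply Continuous.integrable_of_hasCompactSupport
    · exact (cont_fd hg e).comp (by fun_prop)
    · apply HasCompactSupport.of_support_subset_isCompact
        (isCompact_closedBall (0:ℝ) (‖z‖ + M))
      intro r hr
      rw [mem_closedBall, dist_zero_right, nabs]
      by_contra h
      exact hr (hfz r (not_le.1 h))
  have := integral_Ioi_of_hasDerivAt_of_tendsto' (a := (0:ℝ)) (m := (0:ℂ)) (fun r _ => hd r)
    hint.integrableOn (by
      apply tendsto_const_nhds.congr'
      filter_upwards [eventually_gt_atTop (‖z‖ + M)] with r hr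
      rw [hgz r (lt_of_lt_of_le hr (le_abs_self r)), neg_zero])
  rw [this]; simp

lemma circle_integral_zero {g : ℂ → ℂ} (hg : C¹ g) (z : ℂ) {r : ℝ} (hr : 0 < r) :
    ∫ θ in Set.Ioo (-π) π, fd g (z - r * exp (θ * I)) (I * exp (θ * I)) = 0 := by
  have hd : ∀ θ : ℝ, HasDerivAt (fun θ : ℝ => - (r:ℂ)⁻¹ * g (z - r * exp (θ * I)))
      (fd g (z - r * exp (θ * I)) (I * exp (θ * I))) θ := by
    intro θ
    have h0 : HasDerivAt (fun θ : ℝ => exp (θ * I)) (exp (θ * I) * (1 * I)) θ :=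
      ((ofRealCLM.hasDerivAt (x := θ)).mul_const I).cexp
    have h1 := (h0.const_mul (r:ℂ)).const_sub z
    have := ((hg.differentiable bnum (z - r * exp (θ * I))).hasFDerivAt.comp_hasDerivAt
      θ h1).const_mul (-(r:ℂ)⁻¹)
    refine this.congr_deriv ?_
    rw [show -((r:ℂ) * (exp (θ * I) * (1 * I))) = (-r:ℝ) • (I * exp (θ * I)) by
      rw [real_smul]; push_cast; ring, map_smul, real_smul]
    have : (r:ℂ) ≠ 0 := by exact_mod_cast hr.ne'
    push_cast; field_simp
  rw [← integral_Ioc_eq_integral_Ioo, ← intervalIntegral.integral_of_le (by linarith [Real.pi_pos]),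
    intervalIntegral.integral_eq_sub_of_hasDerivAt (fun θ _ => hd θ)]
  · push_cast
    rw [neg_mul ((π:ℝ):ℂ) I, exp_neg, exp_pi_mul_I]; norm_num
  · apply Continuous.intervalIntegrable
    have : Continuous fun p : ℂ × ℂ => fd g p.1 p.2 :=
      ((hg.continuous_fderiv bnum).comp continuous_fst).clm_apply continuous_snd
    exact this.comp (by fun_prop : Continuous fun θ : ℝ =>
      ((z - r * exp (θ * I), I * exp (θ * I)) : ℂ × ℂ))

/-- The Cauchy–Pompeiu formula for compactly supported functions. -/
lemma cauchy_dbar {g : ℂ → ℂ} (hg : C¹ g) (hc : HCS g) (z : ℂ) :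
    ∫ t : ℂ, ((π : ℂ) * t)⁻¹ * dbar g (z - t) = g z := by
  rw [← Complex.integral_comp_polarCoord_symm, polarCoord_target]
  set A : ℝ × ℝ → ℂ := fun p => (2 * π : ℂ)⁻¹ *
    fd g (z - p.1 * exp (p.2 * I)) (exp (p.2 * I)) with hA
  set B : ℝ × ℝ → ℂ := fun p => (2 * π : ℂ)⁻¹ *
    (I * fd g (z - p.1 * exp (p.2 * I)) (I * exp (p.2 * I))) with hB
  have e1 : ∀ p ∈ Set.Ioi (0:ℝ) ×ˢ Set.Ioo (-π) π,
      p.1 • (((π : ℂ) * Complex.polarCoord.symm p)⁻¹ * dbar g (z - Complex.polarCoord.symm p))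
        = A p + B p := by
    rintro ⟨r, θ⟩ ⟨hr, -⟩
    have hr' : (r:ℂ) ≠ 0 := by exact_mod_cast (ne_of_gt hr)
    have hpi : (π:ℂ) ≠ 0 := by simp
    have hp : Complex.polarCoord.symm (r, θ) = r * exp (θ * I) := by
      rw [Complex.polarCoord_symm_apply, exp_mul_I]; simp
    simp only [hA, hB, hp, dbar]
    set w := z - r * exp (θ * I)
    set e := exp (θ * I) with he
    have hcs : e = (Real.cos θ : ℝ) • (1:ℂ) + (Real.sin θ : ℝ) • I := by rw [he, exp_mul_I]; simp
    have hcs' : I * e = (-Real.sin θ : ℝ) • (1:ℂ) + (Real.cos θ : ℝ) • I := by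
      rw [hcs]; simp only [real_smul]; push_cast
      linear_combination (sin θ : ℂ) * I_mul_I
    have f1 : fd g w e = Real.cos θ * fd g w 1 + Real.sin θ * fd g w I := by
      conv_lhs => rw [hcs, map_add, map_smul, map_smul]
      simp
    have f2 : fd g w (I * e) = -Real.sin θ * fd g w 1 + Real.cos θ * fd g w I := by
      rw [hcs', map_add, map_smul, map_smul]; simp
    have h3 : e * (Real.cos θ - Real.sin θ * I) = 1 := by
      rw [hcs]; simp only [real_smul]
      have := cos_sq_add_sin_sq θ
      push_cast
      linear_combination this - (sin θ)^2 * I_mul_I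
    have h4 : e⁻¹ = Real.cos θ - Real.sin θ * I := inv_eq_of_mul_eq_one_right h3
    rw [f1, f2, real_smul, mul_inv, mul_inv, mul_inv, h4]
    field_simp
    linear_combination (- Real.sin θ * fd g w I : ℂ) * I_mul_I
  rw [setIntegral_congr_fun (by measurability) e1]
  obtain ⟨M, hM⟩ := hc.isCompact.isBounded.exists_norm_le
  have hfz : ∀ r θ : ℝ, ‖z‖ + M < |r| → fd g (z - r * exp (θ * I)) = 0 := by
    intro r θ hr
    apply image_eq_zero_of_notMem_tsupport
    intro h
    have h1 := hM _ (tsupport_fderiv_subset ℝ h)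
    have h2 : ‖(r:ℂ) * exp (θ * I)‖ ≤ ‖z‖ + ‖z - r * exp (θ * I)‖ := by
      have := norm_sub_le z (z - r * exp (θ * I)); simpa using this
    rw [norm_mul, norm_exp_ofReal_mul_I, norm_real, nabs] at h2
    linarith
  have hcont : Continuous fun p : ℂ × ℂ => fd g p.1 p.2 :=
      ((hg.continuous_fderiv bnum).comp continuous_fst).clm_apply continuous_snd
  have hAc : Continuous A := continuous_const.mul (hcont.comp (by fun_prop :
    Continuous fun p : ℝ × ℝ => ((z - p.1 * exp (p.2 * I), exp (p.2 * I)) : ℂ × ℂ)))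
  have hBc : Continuous B := continuous_const.mul (continuous_const.mul (hcont.comp (by fun_prop :
    Continuous fun p : ℝ × ℝ => ((z - p.1 * exp (p.2 * I), I * exp (p.2 * I)) : ℂ × ℂ))))
  have hint : ∀ F : ℝ × ℝ → ℂ, Continuous F → (∀ r θ, ‖z‖ + M < |r| → F (r, θ) = 0) →
      IntegrableOn F (Set.Ioi (0:ℝ) ×ˢ Set.Ioo (-π) π) := by
    intro F hF h0
    have hK : IntegrableOn F (Set.Icc (0:ℝ) (‖z‖ + M) ×ˢ Set.Icc (-π) π) :=
      hF.continuousOn.integrableOn_compact (isCompact_Icc.prod isCompact_Icc)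
    refine (integrableOn_iff_integrable_of_support_subset (f := (Set.Ioi (0:ℝ) ×ˢ Set.Ioo (-π) π).indicator F)
      (s := (Set.Icc (0:ℝ) (‖z‖ + M) ×ˢ Set.Icc (-π) π)) ?_).1 ?_ |> fun h =>
        (integrable_indicator_iff (by measurability)).1 h
    · rintro ⟨r, θ⟩ hp
      rw [Set.support_indicator] at hp
      obtain ⟨⟨h1, h2⟩, h3⟩ := hp
      refine ⟨⟨le_of_lt h1, ?_⟩, ⟨h2.1.le, h2.2.le⟩⟩
      by_contra hlt
      exact h3 (h0 r θ (lt_of_lt_of_le (not_le.1 hlt) (le_abs_self r)))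
    · exact hK.indicator (by measurability)
  have hAi := hint A hAc (fun r θ h => by simp [hA, hfz r θ h])
  have hBi := hint B hBc (fun r θ h => by simp [hB, hfz r θ h])
  rw [integral_add hAi hBi, Measure.volume_eq_prod, setIntegral_prod _ hBi,
    ← Measure.volume_eq_prod]
  have hB0 : ∫ x in Set.Ioi (0:ℝ), ∫ y in Set.Ioo (-π) π, B (x, y) = 0 := by
    rw [setIntegral_congr_fun (g := fun _ => (0:ℂ)) measurableSet_Ioi]
    · simp
    · intro r hr
      simp only [hB]
      rw [icm, icm, circle_integral_zero hg z hr]; simp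
  rw [hB0, add_zero]
  rw [Measure.volume_eq_prod, ← setIntegral_prod_swap, setIntegral_prod]
  · simp only [Prod.swap, hA]
    simp_rw [icm]
    simp_rw [ray_integral hg hc z _ (norm_exp_ofReal_mul_I _)]
    have hpi : (π:ℂ) ≠ 0 := by simp
    simp
    rw [max_eq_left bpos]
    push_cast; field_simp; ring
  · exact hAi.swap

lemma dbar_cauchy_eq {g : ℂ → ℂ} (hg : C¹ g) (hc : HCS g) (z : ℂ) :
    dbar (cauchy g) z = g z := by rw [dbar_cauchy hg hc, cauchy_dbar hg hc]

lemma cauchy_eq_kernel (g : ℂ → ℂ) (z : ℂ) :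
    cauchy g z = ∫ ζ : ℂ, ((π : ℂ) * (z - ζ))⁻¹ * g ζ := by
  rw [cauchy, ← integral_sub_left_eq_self _ _ z]; simp

/-! ### The integer lattice and its cells -/

/-- The lattice point of `ℤ[i]` with index `m`. -/
def pt (m : ℤ × ℤ) : ℂ := ⟨m.1, m.2⟩

local notation:max "dpt" z:max m:max => ‖z - pt m‖

/-- The index of a nearest lattice point. -/
def rd (z : ℂ) : ℤ × ℤ := (round z.re, round z.im)

/-- The unit lattice cell around `pt m`. -/
def cell (m : ℤ × ℤ) : Set ℂ := {z | rd z = m}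

/-- The sup norm of a lattice index, as a natural number. -/
def nn (m : ℤ × ℤ) : ℕ := max m.1.natAbs m.2.natAbs

lemma norm_sub_pt_rd (z : ℂ) : ‖z - pt (rd z)‖ ≤ 1 := by
  refine (norm_le_abs_re_add_abs_im _).trans ?_
  have h1 := abs_sub_round z.re
  have h2 := abs_sub_round z.im
  simp only [pt, rd, sub_re, sub_im]
  linarith

lemma norm_sub_pt_of_cell {z : ℂ} {m : ℤ × ℤ} (h : z ∈ cell m) : dpt z m ≤ 1 := by
  have : rd z = m := h
  rw [← this]; exact norm_sub_pt_rd z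

lemma measurable_rd : Measurable rd := by
  have h : Measurable (round : ℝ → ℤ) := by
    have : (round : ℝ → ℤ) = fun x => ⌊x + 1 / 2⌋ := funext round_eq
    rw [this]
    exact (measurable_id.add_const _).floor
  exact (h.comp measurable_re).prodMk (h.comp measurable_im)

lemma measurableSet_cell (m : ℤ × ℤ) : MeasurableSet (cell m) :=
  measurable_rd (measurableSet_singleton m)

lemma cell_subset (m : ℤ × ℤ) : cell m ⊆ 𝔹 (pt m) 1 := fun z hz => by
  rw [mem_cb]; exact norm_sub_pt_of_cell hz

lemma volume_cell_lt (m : ℤ × ℤ) : volume (cell m) < ⊤ :=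
  lt_of_le_of_lt (measure_mono (cell_subset m)) (by rw [volume_closedBall]; finiteness)

lemma integral_cells {E : Type*} [NormedAddCommGroup E] [NormedSpace ℝ E] {f : ℂ → E}
    (hf : Integrable f) (F : Idx) (h : ∀ z, rd z ∉ F → f z = 0) :
    ∫ z, f z = ∑ m ∈ F, ∫ z in cell m, f z := by
  rw [← integral_biUnion_finset F (fun m _ => measurableSet_cell m)]
  · symm
    apply setIntegral_eq_integral_of_forall_compl_eq_zero
    intro z hz
    apply h z
    intro hm
    apply hz
    simp only [Set.mem_iUnion]
    exact ⟨rd z, hm, rfl⟩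
  · intro m _ m' _ hne
    refine Set.disjoint_left.2 fun z hz hz' => hne ?_
    have h1 : rd z = m := hz
    have h2 : rd z = m' := hz'
    rw [← h1, h2]
  · intro m _; exact hf.integrableOn

lemma sum_box (f : ℕ → ℝ) (hf : ∀ n, 0 ≤ f n) (F : Idx) (m₀ : ℤ × ℤ) (N : ℕ)
    (hF : ∀ m ∈ F, nn (m - m₀) ≤ N) :
    ∑ m ∈ F, f (nn (m - m₀)) ≤ ∑ n ∈ range (N + 1), (8 * n + 1) * f n := by
  rw [← sum_fiberwise_of_maps_to (t := range (N + 1)) (g := fun m => nn (m - m₀))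
    (fun m hm => mem_range.2 (Nat.lt_succ_of_le (hF m hm)))]
  apply sum_le_sum
  intro n _
  have h1 : ∑ m ∈ F with nn (m - m₀) = n, f (nn (m - m₀))
      = ((F.filter fun m => nn (m - m₀) = n).card : ℝ) * f n := by
    rw [← nsmul_eq_mul, ← sum_const]
    apply sum_congr rfl
    intro m hm
    rw [(mem_filter.1 hm).2]
  rw [h1]
  apply mul_le_r _ (hf n)
  have h2 : (F.filter fun m => nn (m - m₀) = n).card ≤ (box n : Idx).card := by
    apply Finset.card_le_card_of_injOn (fun m => m - m₀)
    · intro m hm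
      have := (mem_filter.1 hm).2
      rw [mem_coe, Int.mem_box]; exact this
    · intro a _ b _ h; simpa using h
  have h3 : (box n : Idx).card ≤ 8 * n + 1 := by
    rcases Nat.eq_zero_or_pos n with h | h
    · subst h; simp
    · rw [Int.card_box h.ne']; omega
  exact_mod_cast h2.trans h3

lemma nn_le (z : ℂ) (m : ℤ × ℤ) : (nn (m - rd z) : ℝ) ≤ dpt z m + 1 / 2 := by
  have h1 : |((m.1 - round z.re : ℤ) : ℝ)| ≤ dpt z m + 1 / 2 := by
    have := abs_re_le_norm (z - pt m)
    have h2 := abs_sub_round z.re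
    simp only [sub_re] at this
    have e : (pt m).re = m.1 := rfl
    rw [e, abs_sub_comm] at this
    push_cast
    have h3 := abs_sub_le (m.1:ℝ) z.re (round z.re)
    linarith
  have h2 : |((m.2 - round z.im : ℤ) : ℝ)| ≤ dpt z m + 1 / 2 := by
    have := abs_im_le_norm (z - pt m)
    have h2 := abs_sub_round z.im
    simp only [sub_im] at this
    have e : (pt m).im = m.2 := rfl
    rw [e, abs_sub_comm] at this
    push_cast
    have h3 := abs_sub_le (m.2:ℝ) z.im (round z.im)
    linarith
  have e : ∀ k : ℤ, ((k.natAbs : ℕ) : ℝ) = |(k : ℝ)| := fun k => by rw [Nat.cast_natAbs]; simp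
  rw [nn, Nat.cast_max, max_le_iff, e, e]
  exact ⟨h1, h2⟩

lemma nn_le_nat {z : ℂ} {m : ℤ × ℤ} {N : ℕ} (h : dpt z m ≤ N) : nn (m - rd z) ≤ N := by
  have h1 := nn_le z m
  have : (nn (m - rd z) : ℝ) < N + 1 := blin
  exact Nat.lt_succ_iff.1 (by exact_mod_cast this)

lemma card_near (z : ℂ) (F : Idx) (N : ℕ) (hF : ∀ m ∈ F, dpt z m ≤ N) :
    (F.card : ℝ) ≤ 8 * ((N:ℝ) + 1) ^ 2 := by
  have h := sum_box (fun _ => 1) (fun _ => zero_le_one) F (rd z) N (fun m hm => nn_le_nat (hF m hm))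
  simp only [sum_const, nsmul_eq_mul, mul_one] at h
  refine h.trans ?_
  calc ∑ n ∈ range (N + 1), (8 * (n:ℝ) + 1) ≤ ∑ n ∈ range (N + 1), (8 * ((N:ℝ) + 1)) := by
        apply sum_le_sum
        intro n hn
        have : (n:ℝ) ≤ N := by exact_mod_cast Nat.lt_succ_iff.1 (mem_range.1 hn)
        linarith
    _ = _ := by simp; ring

lemma inv_le_nn (z : ℂ) (m : ℤ × ℤ) (p : ℕ) :
    (1 / (1 + dpt z m)) ^ p ≤ 2 ^ p * (1 / (1 + (nn (m - rd z) : ℝ))) ^ p := by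
  rw [← mul_pow]
  apply pow_le_pow_left₀ bpos
  have := nn_le z m
  have h0 := norm_nonneg (z - pt m)
  rw [mul_one_div, div_le_div_iff₀ bpos bpos]
  linarith

lemma sum_one (z : ℂ) (F : Idx) (N : ℕ) (hF : ∀ m ∈ F, dpt z m ≤ N) :
    ∑ m ∈ F, 1 / (1 + dpt z m) ≤ 16 * ((N:ℝ) + 1) := by
  have h := sum_box (fun n => 1 / (1 + (n:ℝ))) (fun _ => bpos) F (rd z) N
    (fun m hm => nn_le_nat (hF m hm))
  have h1 : ∑ m ∈ F, 1 / (1 + dpt z m) ≤ ∑ m ∈ F, 2 * (1 / (1 + (nn (m - rd z) : ℝ))) := by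
    apply sum_le_sum
    intro m _
    simpa using inv_le_nn z m 1
  rw [← mul_sum] at h1
  have h2 : ∑ n ∈ range (N + 1), (8 * (n:ℝ) + 1) * (1 / (1 + (n:ℝ)))
      ≤ ∑ n ∈ range (N + 1), (8:ℝ) := by
    apply sum_le_sum
    intro n _
    rw [mul_one_div, div_le_iff₀ bpos]; linarith
  simp at h2 h1 h ⊢
  linarith

lemma sum_two (z : ℂ) (F : Idx) (N : ℕ) (hF : ∀ m ∈ F, dpt z m ≤ N) :
    ∑ m ∈ F, (1 / (1 + dpt z m)) ^ 2 ≤ 32 * (1 + Real.log ((N:ℝ) + 1)) := by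
  have h := sum_box (fun n => (1 / (1 + (n:ℝ))) ^ 2) (fun _ => bpos) F (rd z) N
    (fun m hm => nn_le_nat (hF m hm))
  have h1 : ∑ m ∈ F, (1 / (1 + dpt z m)) ^ 2
      ≤ ∑ m ∈ F, 2 ^ 2 * (1 / (1 + (nn (m - rd z) : ℝ))) ^ 2 := by
    apply sum_le_sum
    intro m _
    exact inv_le_nn z m 2
  rw [← mul_sum] at h1
  have h2 : ∑ n ∈ range (N + 1), (8 * (n:ℝ) + 1) * (1 / (1 + (n:ℝ))) ^ 2
      ≤ 8 * ∑ n ∈ range (N + 1), ((n:ℝ) + 1)⁻¹ := by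
    rw [mul_sum]
    apply sum_le_sum
    intro n _
    rw [one_div, inv_pow, ← div_eq_mul_inv, ← div_eq_mul_inv, div_le_div_iff₀ bpos bpos]
    nlinarith [(Nat.cast_nonneg n : (0:ℝ) ≤ n)]
  have h3 := harmonic_le_one_add_log (N + 1)
  rw [harmonic] at h3
  push_cast at h3
  linarith

lemma sum_three (z : ℂ) (F : Idx) :
    ∑ m ∈ F, (1 / (1 + dpt z m)) ^ 3 ≤ 128 := by
  obtain ⟨N, hN⟩ : ∃ N : ℕ, ∀ m ∈ F, nn (m - rd z) ≤ N :=
    ⟨F.sup fun m => nn (m - rd z), fun m hm => le_sup (f := fun m => nn (m - rd z)) hm⟩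
  have h := sum_box (fun n => (1 / (1 + (n:ℝ))) ^ 3) (fun _ => bpos) F (rd z) N hN
  have h1 : ∑ m ∈ F, (1 / (1 + dpt z m)) ^ 3
      ≤ ∑ m ∈ F, 2 ^ 3 * (1 / (1 + (nn (m - rd z) : ℝ))) ^ 3 := by
    apply sum_le_sum
    intro m _
    exact inv_le_nn z m 3
  rw [← mul_sum] at h1
  have h2 : ∀ N : ℕ, ∑ n ∈ range (N + 1), (8 * (n:ℝ) + 1) * (1 / (1 + (n:ℝ))) ^ 3
      ≤ 16 - 8 / ((N:ℝ) + 1) := by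
    intro N
    induction N with
    | zero => norm_num
    | succ k ih =>
      rw [sum_range_succ]
      refine (add_le_add_left ih _).trans ?_
      push_cast
      have hk : (0:ℝ) ≤ k := Nat.cast_nonneg k
      rw [show (1:ℝ) + (k + 1) = k + 2 by ring, show (k:ℝ) + 1 + 1 = k + 2 by ring]
      have : (8 * ((k:ℝ) + 1) + 1) * (1 / (k + 2)) ^ 3 ≤ 8 / (k + 1) - 8 / (k + 2) := by
        rw [div_sub_div _ _ bpos bpos, one_div, inv_pow, ← div_eq_mul_inv,
          div_le_div_iff₀ bpos bpos]
        nlinarith [mul_nonneg hk hk, mul_nonneg (mul_nonneg hk hk) hk]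
      linarith
  have h3 := h2 N
  have : 0 ≤ 8 / ((N:ℝ) + 1) := bpos
  linarith

/-- The indices of the lattice points in the box of side `2N`. -/
def bx (N : ℕ) : Idx := Finset.Icc (-(N:ℤ)) N ×ˢ Finset.Icc (-(N:ℤ)) N

lemma mem_bx_of {z : ℂ} {N : ℕ} (h : ‖z‖ + 1 ≤ N) : rd z ∈ bx N := by
  have e : ∀ x : ℝ, |x| + 1 ≤ N → round x ∈ Finset.Icc (-(N:ℤ)) N := by
    intro x hx
    have h1 := abs_le.1 (abs_sub_round x)
    have h2 := abs_le.1 (le_refl |x|)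
    rw [Finset.mem_Icc]
    constructor
    · have : (-(N:ℤ) : ℝ) ≤ (round x : ℝ) := by push_cast; linarith
      exact_mod_cast this
    · have : (round x : ℝ) ≤ ((N:ℤ) : ℝ) := by push_cast; linarith
      exact_mod_cast this
  rw [bx, mem_product]
  exact ⟨e _ (by linarith [abs_re_le_norm z]), e _ (by linarith [abs_im_le_norm z])⟩

lemma norm_pt_le {m : ℤ × ℤ} {N : ℕ} (h : m ∈ bx N) : ‖pt m‖ ≤ 2 * N := by
  rw [bx, mem_product, Finset.mem_Icc, Finset.mem_Icc] at h
  refine (norm_le_abs_re_add_abs_im _).trans ?_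
  have h1 : |(m.1:ℝ)| ≤ N := abs_le.2 ⟨by exact_mod_cast h.1.1, by exact_mod_cast h.1.2⟩
  have h2 : |(m.2:ℝ)| ≤ N := abs_le.2 ⟨by exact_mod_cast h.2.1, by exact_mod_cast h.2.2⟩
  simp only [pt]; linarith

/-! ### Cell multipliers and the Kato condition -/

section dbarRules
variable {f g : ℂ → ℂ} {z : ℂ}

lemma dbar_add (hf : DA f z) (hg : DA g z) :
    dbar (fun w => f w + g w) z = dbar f z + dbar g z := by
  simp only [dbar]; rw [fderiv_fun_add hf hg]; simp; ring

lemma dbar_sub (hf : DA f z) (hg : DA g z) :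
    dbar (fun w => f w - g w) z = dbar f z - dbar g z := by
  simp only [dbar]; rw [fderiv_fun_sub hf hg]; simp; ring

lemma dbar_mul (hf : DA f z) (hg : DA g z) :
    dbar (fun w => f w * g w) z = dbar f z * g z + f z * dbar g z := by
  simp only [dbar]; rw [fderiv_fun_mul hf hg]; simp; ring

lemma dbar_const (c : ℂ) : dbar (fun _ => c) z = 0 := by simp [dbar]

lemma dbar_of_holo (hf : DifferentiableAt ℂ f z) : dbar f z = 0 := by
  have h := hf.hasFDerivAt.restrictScalars ℝ
  rw [dbar, h.fderiv]
  have : fderiv ℂ f z I = I * fderiv ℂ f z 1 := by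
    have := (fderiv ℂ f z).map_smul I 1
    rwa [smul_eq_mul, smul_eq_mul, mul_one] at this
  simp only [ContinuousLinearMap.coe_restrictScalars']
  rw [this, ← mul_assoc, I_mul_I]; ring

lemma dbar_sum {ι : Type*} (s : Finset ι) (f : ι → ℂ → ℂ)
    (hf : ∀ i ∈ s, DA (f i) z) :
    dbar (fun w => ∑ i ∈ s, f i w) z = ∑ i ∈ s, dbar (f i) z := by
  simp only [dbar]
  rw [fderiv_fun_sum hf]
  simp only [FunLike.coe_sum, _root_.sum_apply]
  rw [mul_sum, ← sum_add_distrib, sum_div]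

end dbarRules

section
variable {α E : Type*} [MeasurableSpace α] {μ : Measure α} [NormedAddCommGroup E] {f g : α → E}

lemma iadd (hf : Integrable f μ) (hg : Integrable g μ) : Integrable (fun x => f x + g x) μ :=
  hf.add hg

lemma isub (hf : Integrable f μ) (hg : Integrable g μ) : Integrable (fun x => f x - g x) μ :=
  hf.sub hg

lemma isum {ι : Type*} (s : Finset ι) {f : ι → α → E} (hf : ∀ i ∈ s, Integrable (f i) μ) :
    Integrable (fun x => ∑ i ∈ s, f i x) μ := integrable_finsetSum s hf

end

lemma locInt_inv_shift (z : ℂ) : LocallyIntegrable (fun ζ : ℂ => ((π : ℂ) * (z - ζ))⁻¹) := by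
  have h := locInt_inv
  rw [locallyIntegrable_iff] at h ⊢
  intro k hk
  have h2 := h _ (hk.image (f := fun ζ => z - ζ) (by fun_prop))
  have := ((Measure.measurePreserving_sub_left (volume : Measure ℂ) z).integrableOn_comp_preimage
    (Homeomorph.subLeft z).measurableEmbedding).2 h2
  refine this.mono_set ?_
  intro x hx
  exact ⟨x, hx, rfl⟩

lemma locInt_mul {g : ℂ → ℂ} (hg : Continuous g) (z : ℂ) :
    LocallyIntegrable (fun ζ : ℂ => ((π : ℂ) * (z - ζ))⁻¹ * g ζ) := by
  have := (locInt_inv_shift z)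
  rw [locallyIntegrable_iff] at this ⊢
  intro k hk
  exact (this k hk).mul_continuousOn hg.continuousOn hk

lemma locInt_div {f : ℂ → ℝ} (hf : Continuous f) (z : ℂ) :
    LocallyIntegrable (fun ζ : ℂ => f ζ / ‖z - ζ‖) := by
  have := locInt_inv_shift z
  rw [locallyIntegrable_iff] at this ⊢
  intro k hk
  have h1 : IntegrableOn (fun ζ => ‖((π : ℂ) * (z - ζ))⁻¹‖) k := (this k hk).norm
  have h2 := h1.continuousOn_mul (g := fun ζ => f ζ * π)
    (hf.mul continuous_const).continuousOn hk
  refine h2.congr (.of_forall fun ζ => ?_)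
  simp only [norm_inv, norm_mul, norm_real, nabs, abs_of_pos Real.pi_pos]
  have := Real.pi_pos.ne'
  rcases eq_or_ne (‖z - ζ‖) 0 with h | h
  · simp [h]
  · field_simp

lemma intOn_cell {E : Type*} [NormedAddCommGroup E] {f : ℂ → E} (hf : LocallyIntegrable f)
    (m : ℤ × ℤ) : IntegrableOn f (cell m) :=
  (hf.integrableOn_isCompact (isCompact_closedBall (pt m) 1)).mono_set (cell_subset m)

/-- The auxiliary functions attached to the cells: for each lattice cell `n` two functions that behave
like `1/(z - p)` away from the cell, so that `1/(z-ζ) - (S₁+S₂) + (z-ζ) S₁ S₂` decays like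
`|z|⁻³` for `ζ` in the cell, with only mild singularities, whose `∂̄` is invisible to `U`.
For the few cells in `E` they vanish. -/
structure Cells (K ω : ℝ) (U : ℂ → ℝ) (Prot : Set ℂ) (F E : Idx)
    (S₁ S₂ : ℤ × ℤ → ℂ → ℂ) : Prop where
  smooth₁ : ∀ n, C¹ (S₁ n)
  smooth₂ : ∀ n, C¹ (S₂ n)
  prod : ∀ n z, ‖S₁ n z * S₂ n z‖ ≤ K * (‖S₁ n z‖ + ‖S₂ n z‖)
  card : (E.card : ℝ) ≤ K
  exc : ∀ n ∈ E, ∀ z, S₁ n z = 0 ∧ S₂ n z = 0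
  far₁ : ∀ n ∈ F, n ∉ E → ∀ z ζ, 400 ≤ ‖z - pt n‖ → ‖ζ - pt n‖ ≤ 1 →
    ‖1 + (ζ - z) * S₁ n z‖ ≤ K / ‖z - pt n‖
  far₂ : ∀ n ∈ F, n ∉ E → ∀ z ζ, 400 ≤ ‖z - pt n‖ → ‖ζ - pt n‖ ≤ 1 →
    ‖1 + (ζ - z) * S₂ n z‖ ≤ K / ‖z - pt n‖
  kato₁ : ∀ n y z, ∫ ζ in 𝔹 y 1, ‖S₁ n ζ‖ ^ 2 / ‖z - ζ‖ ≤ K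
  kato₂ : ∀ n y z, ∫ ζ in 𝔹 y 1, ‖S₂ n ζ‖ ^ 2 / ‖z - ζ‖ ≤ K
  err₁ : ∀ n, ∫ z, ‖(U z : ℂ) * dbar (fun w => S₁ n w + S₂ n w) z‖ ^ 2 ≤ ω
  err₂ : ∀ n, ∫ z, ‖(U z : ℂ) * dbar (fun w => S₁ n w * S₂ n w) z‖ ^ 2 ≤ ω
  prot : ∀ z ∈ Prot, ∀ n, ‖z - pt n‖ < 400 → ‖S₁ n z‖ ≤ K ∧ ‖S₂ n z‖ ≤ K

/-- The growth weight `1 + ∑ (|S₁| + |S₂|)`, summed over the nearby cells. -/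
def lam (F : Idx) (S₁ S₂ : ℤ × ℤ → ℂ → ℂ) (z : ℂ) : ℝ :=
  1 + ∑ n ∈ F with ‖z - pt n‖ < 400, (‖S₁ n z‖ + ‖S₂ n z‖)

lemma one_le_lam (F : Idx) (S₁ S₂ : ℤ × ℤ → ℂ → ℂ) (z : ℂ) : 1 ≤ lam F S₁ S₂ z := by
  have : 0 ≤ ∑ n ∈ F with ‖z - pt n‖ < 400, (‖S₁ n z‖ + ‖S₂ n z‖) := sum_nonneg fun _ _ => bpos
  rw [lam]; linarith

/-- `∫_{cell} g / |z - ζ|` is bounded uniformly when `g ≤ γ lam²`. -/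
lemma kato_lam {K : ℝ} (hK : 0 < K) : ∃ C > (0:ℝ), ∀ (ω : ℝ) (U : ℂ → ℝ) (Prot : Set ℂ)
    (F E : Idx) (S₁ S₂ : ℤ × ℤ → ℂ → ℂ), Cells K ω U Prot F E S₁ S₂ →
    ∀ (g : ℂ → ℝ) (γ : ℝ), 0 ≤ γ → Continuous g → (∀ ζ, 0 ≤ g ζ) →
      (∀ ζ, g ζ ≤ γ * lam F S₁ S₂ ζ ^ 2) → ∀ m z, ∫ ζ in cell m, g ζ / ‖z - ζ‖ ≤ C * γ := by
  -- a bound for `∫_{𝔹 y 1} 1/|z-ζ|`, obtained by comparison with the ball of radius 1 about `z`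
  have hbase : ∃ C0 > (0:ℝ), ∀ y z : ℂ, ∫ ζ in 𝔹 y 1, 1 / ‖z - ζ‖ ≤ C0 := by
    have hli : LocallyIntegrable (fun ζ : ℂ => 1 / ‖0 - ζ‖) := locInt_div continuous_const 0
    refine ⟨(∫ ζ in 𝔹 (0:ℂ) 1, 1 / ‖0 - ζ‖) + π, ?_, fun y z => ?_⟩
    · have : 0 ≤ ∫ ζ in 𝔹 (0:ℂ) 1, 1 / ‖0 - ζ‖ := integral_nonneg fun _ => bpos
      linarith [Real.pi_pos]
    · have e1 : ∫ ζ in 𝔹 z 1, 1 / ‖z - ζ‖ = ∫ ζ in 𝔹 (0:ℂ) 1, 1 / ‖0 - ζ‖ := by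
        rw [← (Measure.measurePreserving_sub_left (volume : Measure ℂ) z).setIntegral_preimage_emb
          (Homeomorph.subLeft z).measurableEmbedding]
        have : (fun x => z - x) ⁻¹' 𝔹 z 1 = 𝔹 (0:ℂ) 1 := by ext x; simp [dist_eq_norm]
        rw [this]
        simp
      have i1 : IntegrableOn (fun ζ => 1 / ‖z - ζ‖) (𝔹 y 1) :=
        (locInt_div continuous_const z).integrableOn_isCompact (isCompact_closedBall _ _)
      have i2 : Integrable ((𝔹 z 1).indicator (fun ζ => 1 / ‖z - ζ‖)) :=
        ((locInt_div continuous_const z).integrableOn_isCompact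
          (isCompact_closedBall _ _)).integrable_indicator measurableSet_closedBall
      have i3 : IntegrableOn (fun _ : ℂ => (1:ℝ)) (𝔹 y 1) :=
        continuous_const.continuousOn.integrableOn_compact (isCompact_closedBall _ _)
      rw [← e1]
      calc ∫ ζ in 𝔹 y 1, 1 / ‖z - ζ‖
          ≤ ∫ ζ in 𝔹 y 1, ((𝔹 z 1).indicator (fun ζ => 1 / ‖z - ζ‖) ζ + 1) := by
            apply integral_mono i1 (iadd i2.integrableOn i3)
            intro ζ
            by_cases h : ζ ∈ 𝔹 z 1
            · simp [Set.indicator_of_mem h]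
            · simp only [Set.indicator_of_notMem h, zero_add]
              rw [mem_cb, norm_sub_rev] at h
              push Not at h
              have h0 : (0:ℝ) < ‖z - ζ‖ := blin
              have h1 := (div_le_one h0).2 h.le
              exact h1
        _ = (∫ ζ in 𝔹 y 1, (𝔹 z 1).indicator (fun ζ => 1 / ‖z - ζ‖) ζ) +
              ∫ ζ in 𝔹 y 1, (1:ℝ) := integral_add i2.integrableOn i3
        _ ≤ (∫ ζ, (𝔹 z 1).indicator (fun ζ => 1 / ‖z - ζ‖) ζ) + π := by
            apply add_le_add
            · apply setIntegral_le_integral i2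
              exact .of_forall fun ζ => Set.indicator_nonneg (fun _ _ => bpos) ζ
            · rw [setIntegral_const, smul_eq_mul, mul_one, Measure.real, volume_closedBall]
              simp
        _ = _ := by rw [integral_indicator measurableSet_closedBall]
  obtain ⟨C0, hC0, hbase⟩ := hbase
  set c : ℝ := 8 * ((401:ℕ) + 1 : ℝ) ^ 2
  have hc0 : 0 < c := bpos
  refine ⟨(1 + 2 * c) * (C0 + 2 * c * K), bpos, ?_⟩
  intro ω U Prot F E S₁ S₂ hS g γ hγ hg hg0 hgl m z
  set F' := F.filter fun n => ‖pt m - pt n‖ ≤ (401:ℕ)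
  have hcard : (F'.card : ℝ) ≤ c := card_near (pt m) F' 401 (fun n hn => (mem_filter.1 hn).2)
  have hS1c : ∀ n, Continuous (S₁ n) := fun n => (hS.smooth₁ n).continuous
  have hS2c : ∀ n, Continuous (S₂ n) := fun n => (hS.smooth₂ n).continuous
  -- Cauchy–Schwarz for the finite sum in `lam`
  have hlam : ∀ ζ ∈ cell m, lam F S₁ S₂ ζ ^ 2 ≤
      (1 + 2 * c) * (1 + ∑ n ∈ F', (‖S₁ n ζ‖ ^ 2 + ‖S₂ n ζ‖ ^ 2)) := by
    intro ζ hζ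
    have h1 : lam F S₁ S₂ ζ ≤ 1 + ∑ n ∈ F', (‖S₁ n ζ‖ + ‖S₂ n ζ‖) := by
      rw [lam]
      apply add_le_add_right
      apply sum_le_sum_of_subset_of_nonneg
      · intro n hn
        rw [mem_filter] at hn ⊢
        refine ⟨hn.1, ?_⟩
        have h1 := norm_sub_pt_of_cell hζ
        have h2 : ‖pt m - pt n‖ ≤ ‖ζ - pt n‖ + ‖ζ - pt m‖ := by
          have := norm_sub_le (ζ - pt n) (ζ - pt m); simpa using this
        push_cast; linarith [hn.2]
      · intros; positivity
    have h2 : (∑ n ∈ F', (‖S₁ n ζ‖ + ‖S₂ n ζ‖)) ^ 2 ≤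
        2 * c * ∑ n ∈ F', (‖S₁ n ζ‖ ^ 2 + ‖S₂ n ζ‖ ^ 2) := by
      calc (∑ n ∈ F', (‖S₁ n ζ‖ + ‖S₂ n ζ‖)) ^ 2
          ≤ F'.card * ∑ n ∈ F', (‖S₁ n ζ‖ + ‖S₂ n ζ‖) ^ 2 := sq_sum_le_card_mul_sum_sq
        _ ≤ c * ∑ n ∈ F', 2 * (‖S₁ n ζ‖ ^ 2 + ‖S₂ n ζ‖ ^ 2) := by
            apply mul_le_mul hcard _ (sum_nonneg fun _ _ => bpos) hc0.le
            apply sum_le_sum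
            intro n _
            nlinarith [sq_nonneg (‖S₁ n ζ‖ - ‖S₂ n ζ‖)]
        _ = _ := by rw [← mul_sum]; ring
    set s := ∑ n ∈ F', (‖S₁ n ζ‖ + ‖S₂ n ζ‖)
    set q := ∑ n ∈ F', (‖S₁ n ζ‖ ^ 2 + ‖S₂ n ζ‖ ^ 2)
    have h3 := one_le_lam F S₁ S₂ ζ
    have h4 : lam F S₁ S₂ ζ ^ 2 ≤ (1 + s) ^ 2 := pow_le_pow_left₀ blin h1 2
    have h5 : 2 * s * (2 * c) ≤ s ^ 2 + (2 * c) ^ 2 := by nlinarith [sq_nonneg (s - 2 * c)]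
    have h6 : 2 * s ≤ q + 2 * c := by
      have : 2 * s * (2 * c) ≤ (q + 2 * c) * (2 * c) := by nlinarith
      exact le_of_mul_le_mul_right this blin
    nlinarith
  set f : ℂ → ℝ := fun ζ => γ * (1 + 2 * c) * (1 + ∑ n ∈ F', (‖S₁ n ζ‖ ^ 2 + ‖S₂ n ζ‖ ^ 2)) with hf
  have hfc : Continuous f := by
    apply continuous_const.mul (continuous_const.add _)
    exact continuous_finsetSum _ fun n _ => ((hS1c n).norm.pow 2).add ((hS2c n).norm.pow 2)
  have hf0 : ∀ ζ, 0 ≤ f ζ := fun ζ => by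
    have : 0 ≤ ∑ n ∈ F', (‖S₁ n ζ‖ ^ 2 + ‖S₂ n ζ‖ ^ 2) := sum_nonneg fun _ _ => bpos
    simp only [hf]; positivity
  have hB : ∀ {h : ℂ → ℝ}, Continuous h → IntegrableOn (fun ζ => h ζ / ‖z - ζ‖) (𝔹 (pt m) 1) :=
    fun hh => (locInt_div hh z).integrableOn_isCompact (isCompact_closedBall _ _)
  calc ∫ ζ in cell m, g ζ / ‖z - ζ‖ ≤ ∫ ζ in cell m, f ζ / ‖z - ζ‖ := by
        apply setIntegral_mono_on (intOn_cell (locInt_div hg z) m) (intOn_cell (locInt_div hfc z) m)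
          (measurableSet_cell m)
        intro ζ hζ
        apply div_le_div_of_nonneg_right _ (norm_nonneg _)
        refine (hgl ζ).trans ?_
        rw [hf]; simp only
        rw [mul_assoc]
        exact mul_le_l (hlam ζ hζ) hγ
    _ ≤ ∫ ζ in 𝔹 (pt m) 1, f ζ / ‖z - ζ‖ := by
        apply setIntegral_mono_set (hB hfc)
        · exact .of_forall fun ζ => div_nonneg (hf0 ζ) (norm_nonneg _)
        · exact (cell_subset m).eventuallyLE
    _ = γ * (1 + 2 * c) * ((∫ ζ in 𝔹 (pt m) 1, 1 / ‖z - ζ‖) +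
          ∑ n ∈ F', ((∫ ζ in 𝔹 (pt m) 1, ‖S₁ n ζ‖ ^ 2 / ‖z - ζ‖) +
            ∫ ζ in 𝔹 (pt m) 1, ‖S₂ n ζ‖ ^ 2 / ‖z - ζ‖)) := by
        have i1 : ∀ n, IntegrableOn (fun ζ => ‖S₁ n ζ‖ ^ 2 / ‖z - ζ‖) (𝔹 (pt m) 1) :=
          fun n => hB ((hS1c n).norm.pow 2)
        have i2 : ∀ n, IntegrableOn (fun ζ => ‖S₂ n ζ‖ ^ 2 / ‖z - ζ‖) (𝔹 (pt m) 1) :=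
          fun n => hB ((hS2c n).norm.pow 2)
        have i3 : IntegrableOn (fun ζ => 1 / ‖z - ζ‖) (𝔹 (pt m) 1) := hB continuous_const
        simp_rw [← fun n => integral_add (i1 n) (i2 n)]
        rw [← integral_finsetSum F' (fun n _ => iadd (i1 n) (i2 n)),
          ← integral_add i3 (isum F' fun n _ => iadd (i1 n) (i2 n)), ← icm]
        congr 1; ext ζ
        simp only [hf, sum_div, add_div, mul_div_assoc]
    _ ≤ γ * (1 + 2 * c) * (C0 + ∑ n ∈ F', (K + K)) := by
        apply mul_le_l _ bpos
        apply add_le_add (hbase _ _)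
        exact sum_le_sum fun n _ => add_le_add (hS.kato₁ n _ _) (hS.kato₂ n _ _)
    _ ≤ (1 + 2 * c) * (C0 + 2 * c * K) * γ := by
        rw [sum_const, nsmul_eq_mul]
        have : (F'.card : ℝ) * (K + K) ≤ 2 * c * K := by nlinarith
        have h2 : 0 ≤ γ * (1 + 2 * c) := bpos
        nlinarith [mul_le_l this h2]

/-! ### The modified Cauchy transform -/

local notation:max "Ker" S₁:max S₂:max m:max g:max z:max ζ:max =>
  (((π : ℂ) * (z - ζ))⁻¹ * g ζ - (S₁ m z + S₂ m z) * ((π : ℂ)⁻¹ * g ζ) +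
    S₁ m z * S₂ m z * (z * ((π : ℂ)⁻¹ * g ζ) - (π : ℂ)⁻¹ * (ζ * g ζ)))

lemma integrable_of_locInt {E : Type*} [NormedAddCommGroup E] {f : ℂ → E}
    (hf : LocallyIntegrable f) (hc : HCS f) : Integrable f := by
  rw [← integrableOn_iff_integrable_of_support_subset (subset_tsupport f)]
  exact hf.integrableOn_isCompact hc.isCompact

/-- The zeroth moment of `g` on a cell. -/
def mom₀ (g : ℂ → ℂ) (m : ℤ × ℤ) : ℂ := ∫ ζ in cell m, (π : ℂ)⁻¹ * g ζ

/-- The first moment of `g` on a cell. -/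
def mom₁ (g : ℂ → ℂ) (m : ℤ × ℤ) : ℂ := ∫ ζ in cell m, (π : ℂ)⁻¹ * (ζ * g ζ)

/-- The modified Cauchy transform, whose kernel is `1/(z-ζ) - (S₁+S₂) + (z-ζ) S₁ S₂` for `ζ` in a cell
with auxiliary functions `S₁, S₂`. -/
def modC (F : Idx) (S₁ S₂ : ℤ × ℤ → ℂ → ℂ) (g : ℂ → ℂ) (z : ℂ) : ℂ :=
  cauchy g z - ∑ m ∈ F, ((S₁ m z + S₂ m z) * mom₀ g m - S₁ m z * S₂ m z * (z * mom₀ g m - mom₁ g m))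

lemma norm_piinv : ‖(π : ℂ)⁻¹‖ ≤ 1 := by
  rw [norm_inv, norm_real, nabs, abs_of_pos Real.pi_pos]
  exact inv_le_one_of_one_le₀ (by linarith [Real.pi_gt_three])

lemma modC_eq_sum {F : Idx} (S₁ S₂ : ℤ × ℤ → ℂ → ℂ) {g : ℂ → ℂ} (hg : Continuous g)
    (hc : HCS g) (hF : ∀ z, rd z ∉ F → g z = 0) (z : ℂ) :
    modC F S₁ S₂ g z = ∑ m ∈ F, ∫ ζ in cell m, Ker S₁ S₂ m g z ζ := by
  have hi : Integrable (fun ζ => ((π : ℂ) * (z - ζ))⁻¹ * g ζ) :=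
    integrable_of_locInt (locInt_mul hg z) (hcs_of hc fun ζ h => by simp [h])
  have j0 : ∀ m, IntegrableOn (fun ζ => (π : ℂ)⁻¹ * g ζ) (cell m) := fun m =>
    intOn_cell (continuous_const.mul hg).locallyIntegrable m
  have j1 : ∀ m, IntegrableOn (fun ζ => (π : ℂ)⁻¹ * (ζ * g ζ)) (cell m) := fun m =>
    intOn_cell (continuous_const.mul (continuous_id.mul hg)).locallyIntegrable m
  rw [modC, cauchy_eq_kernel, integral_cells hi F (fun w hw => by simp [hF w hw]),
    ← sum_sub_distrib]
  apply sum_congr rfl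
  intro m _
  rw [integral_add (isub hi.integrableOn ((j0 m).const_mul _))
    ((isub ((j0 m).const_mul _) (j1 m)).const_mul _), integral_sub hi.integrableOn ((j0 m).const_mul _),
    icm (S₁ m z + S₂ m z), icm (S₁ m z * S₂ m z), integral_sub ((j0 m).const_mul z) (j1 m), icm z]
  simp only [mom₀, mom₁]; ring

/-- Mass of `g` on a cell. -/
lemma mass_cell {K : ℝ} (hK : 0 < K) : ∃ C > (0:ℝ), ∀ (ω : ℝ) (U : ℂ → ℝ) (Prot : Set ℂ)
    (F E : Idx) (S₁ S₂ : ℤ × ℤ → ℂ → ℂ), Cells K ω U Prot F E S₁ S₂ →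
    ∀ (g : ℂ → ℝ) (γ : ℝ), 0 ≤ γ → Continuous g → (∀ ζ, 0 ≤ g ζ) →
      (∀ ζ, g ζ ≤ γ * lam F S₁ S₂ ζ ^ 2) →
      ∀ m, (∫ ζ in cell m, g ζ ≤ C * γ) ∧ ∀ z, ∫ ζ in cell m, g ζ / ‖z - ζ‖ ≤ C * γ := by
  obtain ⟨C, hC, h⟩ := kato_lam hK
  refine ⟨3 * C, bpos, ?_⟩
  intro ω U Prot F E S₁ S₂ hS g γ hγ hg hg0 hgl m
  have h1 := h ω U Prot F E S₁ S₂ hS g γ hγ hg hg0 hgl m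
  constructor
  · calc ∫ ζ in cell m, g ζ ≤ ∫ ζ in cell m, 3 * (g ζ / ‖(pt m + 2) - ζ‖) := by
          apply setIntegral_mono_on (intOn_cell hg.locallyIntegrable m)
            ((intOn_cell (locInt_div hg _) m).const_mul 3) (measurableSet_cell m)
          intro ζ hζ
          have a1 := norm_sub_pt_of_cell hζ
          have e : pt m + 2 - ζ = 2 - (ζ - pt m) := by ring
          have a2 : ‖pt m + 2 - ζ‖ ≤ 3 := by
            rw [e]; refine (norm_sub_le _ _).trans ?_; norm_num; linarith
          have a3 : 1 ≤ ‖pt m + 2 - ζ‖ := by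
            rw [e]; have := norm_sub_norm_le (2:ℂ) (ζ - pt m); norm_num at this; linarith
          rw [← mul_div_assoc, le_div_iff₀ blin]
          nlinarith [hg0 ζ]
      _ = 3 * ∫ ζ in cell m, (g ζ / ‖(pt m + 2) - ζ‖) := icm _ _
      _ ≤ 3 * C * γ := by linarith [h1 (pt m + 2)]
  · intro z
    refine (h1 z).trans ?_
    nlinarith

lemma modC_bound {K : ℝ} (hK : 1 ≤ K) : ∃ C > (0:ℝ), ∀ (ω : ℝ) (U : ℂ → ℝ) (Prot : Set ℂ)
    (F E : Idx) (S₁ S₂ : ℤ × ℤ → ℂ → ℂ), Cells K ω U Prot F E S₁ S₂ →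
    ∀ (g : ℂ → ℂ) (γ : ℝ), 0 ≤ γ → Continuous g → HCS g →
      (∀ z, rd z ∉ F → g z = 0) → (∀ ζ, ‖g ζ‖ ≤ γ * lam F S₁ S₂ ζ ^ 2) →
      ∀ z, ‖modC F S₁ S₂ g z‖ ≤ C * γ * lam F S₁ S₂ z := by
  obtain ⟨C, hC, hmass⟩ := mass_cell (zero_lt_one.trans_le hK)
  set C4 : ℝ := C * (16 * K ^ 2 + (1 + 401 * K)) with hC4
  set c : ℝ := 8 * ((400:ℕ) + 1 : ℝ) ^ 2
  refine ⟨C4 * (c + 1 + 128 + K), bpos, ?_⟩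
  intro ω U Prot F E S₁ S₂ hS g γ hγ hg hgc hgF hgl z
  have hm := hmass ω U Prot F E S₁ S₂ hS (fun ζ => ‖g ζ‖) γ hγ hg.norm (fun _ => norm_nonneg _) hgl
  rw [modC_eq_sum S₁ S₂ hg hgc hgF z]
  set s : ℤ × ℤ → ℝ := fun m => ‖S₁ m z‖ + ‖S₂ m z‖ with hs
  have hs0 : ∀ m, 0 ≤ s m := fun m => by simp only [hs]; positivity
  -- estimate of the contribution of a single cell
  have key : ∀ m ∈ F, ‖∫ ζ in cell m, Ker S₁ S₂ m g z ζ‖ ≤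
      C4 * γ * ((if dpt z m < 400 then 1 + s m else 0) + (1 / (1 + dpt z m)) ^ 3 +
        (if m ∈ E then 1 else 0)) := by
    intro m hmF
    have ig : IntegrableOn (fun ζ => ‖g ζ‖) (cell m) := intOn_cell hg.norm.locallyIntegrable m
    have igd : IntegrableOn (fun ζ => ‖g ζ‖ / ‖z - ζ‖) (cell m) := intOn_cell (locInt_div hg.norm z) m
    have hfar : ∀ a : ℝ, 0 ≤ a → (∀ ζ ∈ cell m, ‖Ker S₁ S₂ m g z ζ‖ ≤ a * ‖g ζ‖) →
        ‖∫ ζ in cell m, Ker S₁ S₂ m g z ζ‖ ≤ a * (C * γ) := by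
      intro a ha hle
      calc _ ≤ ∫ ζ in cell m, a * ‖g ζ‖ := by
            apply norm_integral_le_of_norm_le (ig.const_mul a)
            exact (ae_restrict_iff' (measurableSet_cell m)).2 (.of_forall hle)
        _ = a * ∫ ζ in cell m, ‖g ζ‖ := icm _ _
        _ ≤ _ := mul_le_l (hm m).1 ha
    have hCg : 0 ≤ C * γ := bpos
    by_cases hnear : dpt z m < 400
    · rw [if_pos hnear]
      have h1 : ‖∫ ζ in cell m, Ker S₁ S₂ m g z ζ‖ ≤ C * γ + (1 + 401 * K) * s m * (C * γ) := by
        calc _ ≤ ∫ ζ in cell m, (‖g ζ‖ / ‖z - ζ‖ + (1 + 401 * K) * s m * ‖g ζ‖) := by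
              apply norm_integral_le_of_norm_le (iadd igd (ig.const_mul _))
              refine (ae_restrict_iff' (measurableSet_cell m)).2 (.of_forall fun ζ hζ => ?_)
              have a1 := norm_sub_pt_of_cell hζ
              have a2 : ‖z - ζ‖ ≤ 401 := by
                have := norm_sub_le (z - pt m) (ζ - pt m)
                rw [sub_sub_sub_cancel_right] at this; linarith
              have b1 : ‖((π : ℂ) * (z - ζ))⁻¹ * g ζ‖ ≤ ‖g ζ‖ / ‖z - ζ‖ := by
                rw [mul_inv, mul_assoc, norm_mul, norm_mul, norm_inv (z - ζ), ← div_eq_inv_mul]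
                have := norm_piinv
                exact mul_le_of_le_one_left bpos this
              have b2 : ‖(S₁ m z + S₂ m z) * ((π : ℂ)⁻¹ * g ζ)‖ ≤ s m * ‖g ζ‖ := by
                rw [norm_mul, norm_mul]
                apply mul_le_mul (norm_add_le _ _) _ bpos (hs0 m)
                exact mul_le_of_le_one_left bpos norm_piinv
              have b3 : ‖S₁ m z * S₂ m z * (z * ((π : ℂ)⁻¹ * g ζ) - (π : ℂ)⁻¹ * (ζ * g ζ))‖
                  ≤ (K * s m) * (401 * ‖g ζ‖) := by
                rw [show z * ((π : ℂ)⁻¹ * g ζ) - (π : ℂ)⁻¹ * (ζ * g ζ)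
                  = (π : ℂ)⁻¹ * ((z - ζ) * g ζ) by ring, norm_mul]
                apply mul_le_mul (hS.prod m z) _ (norm_nonneg _) (mul_nonneg blin (hs0 m))
                rw [norm_mul, norm_mul]
                refine (mul_le_of_le_one_left bpos norm_piinv).trans ?_
                exact mul_le_r a2 (norm_nonneg _)
              have t1 := norm_add_le (((π : ℂ) * (z - ζ))⁻¹ * g ζ
                - (S₁ m z + S₂ m z) * ((π : ℂ)⁻¹ * g ζ))
                (S₁ m z * S₂ m z * (z * ((π : ℂ)⁻¹ * g ζ) - (π : ℂ)⁻¹ * (ζ * g ζ)))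
              have t2 := norm_sub_le (((π : ℂ) * (z - ζ))⁻¹ * g ζ)
                ((S₁ m z + S₂ m z) * ((π : ℂ)⁻¹ * g ζ))
              nlinarith
          _ = (∫ ζ in cell m, ‖g ζ‖ / ‖z - ζ‖) + (1 + 401 * K) * s m * ∫ ζ in cell m, ‖g ζ‖ := by
              rw [integral_add igd (ig.const_mul _), icm]
          _ ≤ _ := by
              apply add_le_add ((hm m).2 z)
              exact mul_le_l (hm m).1 (mul_nonneg blin (hs0 m))
      have h2 : C * γ + (1 + 401 * K) * s m * (C * γ) ≤ C4 * γ * (1 + s m) := by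
        have : C4 * γ * (1 + s m) - (C * γ + (1 + 401 * K) * s m * (C * γ)) =
          (C * γ) * (16 * K ^ 2 * (1 + s m) + 401 * K) := by rw [hC4]; ring
        have h3 : 0 ≤ (C * γ) * (16 * K ^ 2 * (1 + s m) + 401 * K) := by have := hs0 m; positivity
        linarith
      refine (h1.trans h2).trans (mul_le_l ?_ bpos)
      have : (0:ℝ) ≤ if m ∈ E then 1 else 0 := by split_ifs <;> norm_num
      have : 0 ≤ (1 / (1 + dpt z m)) ^ 3 := bpos
      linarith
    · rw [if_neg hnear]
      push Not at hnear
      have hzζ : ∀ ζ ∈ cell m, dpt z m / 2 ≤ ‖z - ζ‖ := by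
        intro ζ hζ
        have a1 := norm_sub_pt_of_cell hζ
        have := norm_sub_le (z - ζ) (pt m - ζ)
        rw [sub_sub_sub_cancel_right, norm_sub_rev (pt m) ζ] at this
        linarith
      by_cases hmE : m ∈ E
      · rw [if_pos hmE]
        have := hfar 1 zero_le_one (by
          intro ζ hζ
          obtain ⟨e1, e2⟩ := hS.exc m hmE z
          have h3 := hzζ ζ hζ
          rw [e1, e2]
          simp only [add_zero, zero_mul, sub_zero]
          rw [mul_inv, mul_assoc, norm_mul, norm_mul, norm_inv (z - ζ), one_mul]
          refine (mul_le_of_le_one_left bpos norm_piinv).trans ?_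
          exact mul_le_of_le_one_left bpos (inv_le_one_of_one_le₀ blin))
        refine this.trans ?_
        have h4 : C * γ ≤ C4 * γ := by
          apply mul_le_r _ hγ
          rw [hC4]; nlinarith [mul_pos hC (zero_lt_one.trans_le hK), sq_nonneg K]
        have : 0 ≤ (1 / (1 + dpt z m)) ^ 3 := bpos
        nlinarith
      · rw [if_neg hmE]
        have h1 := hfar (16 * K ^ 2 * (1 / (1 + dpt z m)) ^ 3) bpos (by
          intro ζ hζ
          have h3 := hzζ ζ hζ
          have hne : z - ζ ≠ 0 := by intro h; rw [h, norm_zero] at h3; linarith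
          have hpi : (π : ℂ) ≠ 0 := by exact_mod_cast Real.pi_ne_zero
          have e : Ker S₁ S₂ m g z ζ
              = (π : ℂ)⁻¹ * (((z - ζ)⁻¹ * (1 + (ζ - z) * S₁ m z) * (1 + (ζ - z) * S₂ m z)) * g ζ) := by
            field_simp; ring
          rw [e, norm_mul]
          refine (mul_le_of_le_one_left bpos norm_piinv).trans ?_
          rw [norm_mul]
          apply mul_le_r _ (norm_nonneg _)
          rw [norm_mul, norm_mul, norm_inv]
          have f1 := hS.far₁ m hmF hmE z ζ hnear (norm_sub_pt_of_cell hζ)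
          have f2 := hS.far₂ m hmF hmE z ζ hnear (norm_sub_pt_of_cell hζ)
          set d := dpt z m
          have hd : 0 < d := blin
          have f0 : ‖z - ζ‖⁻¹ ≤ 2 / d := by rw [inv_le_comm₀ blin bpos, inv_div]; exact h3
          calc ‖z - ζ‖⁻¹ * ‖1 + (ζ - z) * S₁ m z‖ * ‖1 + (ζ - z) * S₂ m z‖
              ≤ (2 / d) * (K / d) * (K / d) := by gcongr
            _ = 2 * K ^ 2 * (1 / d) ^ 3 := by field_simp
            _ ≤ 2 * K ^ 2 * (2 * (1 / (1 + d))) ^ 3 := by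
                gcongr
                rw [mul_one_div, div_le_div_iff₀ hd blin]; linarith
            _ = _ := by ring)
        refine h1.trans ?_
        have h4 : 16 * K ^ 2 * (C * γ) ≤ C4 * γ := by
          have : C4 * γ - 16 * K ^ 2 * (C * γ) = (C * γ) * (1 + 401 * K) := by rw [hC4]; ring
          have : 0 ≤ (C * γ) * (1 + 401 * K) := bpos
          linarith
        have h5 : 0 ≤ (1 / (1 + dpt z m)) ^ 3 := bpos
        nlinarith
  refine (norm_sum_le _ _).trans ((sum_le_sum key).trans ?_)
  rw [← mul_sum, sum_add_distrib, sum_add_distrib, ← sum_filter]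
  have hL := one_le_lam F S₁ S₂ z
  have k1 : ∑ m ∈ F with dpt z m < 400, (1 + s m) ≤ c * lam F S₁ S₂ z + lam F S₁ S₂ z := by
    rw [sum_add_distrib, sum_const, nsmul_eq_mul, mul_one]
    have := card_near z (F.filter fun m => dpt z m < 400) 400
      (fun m hm => by have := (mem_filter.1 hm).2; push_cast; linarith)
    have h2 : ∑ m ∈ F with dpt z m < 400, s m = lam F S₁ S₂ z - 1 := by rw [lam]; ring
    have h3 : c ≤ c * lam F S₁ S₂ z := le_mul_of_one_le_right bpos hL
    linarith
  have k2 := sum_three z F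
  have k3 : (∑ m ∈ F, if m ∈ E then (1:ℝ) else 0) ≤ K := by
    rw [← sum_filter, sum_const, nsmul_eq_mul, mul_one]
    refine le_trans ?_ hS.card
    exact_mod_cast Finset.card_le_card (fun m hm => (mem_filter.1 hm).2)
  have h5 : 0 ≤ C4 * γ := bpos
  rw [show C4 * (c + 1 + 128 + K) * γ * lam F S₁ S₂ z = C4 * γ * ((c + 1 + 128 + K) * lam F S₁ S₂ z) by ring]
  apply mul_le_l _ h5
  have h6 : K ≤ K * lam F S₁ S₂ z := le_mul_of_one_le_right blin hL
  have h7 : (c + 1 + 128 + K) * lam F S₁ S₂ z =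
    c * lam F S₁ S₂ z + lam F S₁ S₂ z + 128 * lam F S₁ S₂ z + K * lam F S₁ S₂ z := by ring
  refine (add_le_add (add_le_add k1 k2) k3).trans ?_
  linarith

/-! ### The Riccati equation -/

section
variable {F : Idx} {S₁ S₂ : ℤ × ℤ → ℂ → ℂ} {g h : ℂ → ℂ}

lemma mom₀_int (hg : Continuous g) (m : ℤ × ℤ) :
    IntegrableOn (fun ζ => (π : ℂ)⁻¹ * g ζ) (cell m) :=
  intOn_cell (continuous_const.mul hg).locallyIntegrable m

lemma mom₁_int (hg : Continuous g) (m : ℤ × ℤ) :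
    IntegrableOn (fun ζ => (π : ℂ)⁻¹ * (ζ * g ζ)) (cell m) :=
  intOn_cell (continuous_const.mul (continuous_id.mul hg)).locallyIntegrable m

lemma cauchy_sub (hg : Continuous g) (hgc : HCS g) (hh : Continuous h)
    (hhc : HCS h) (z : ℂ) :
    cauchy (fun ζ => g ζ - h ζ) z = cauchy g z - cauchy h z := by
  rw [cauchy, cauchy, cauchy, ← integral_sub (cauchy_integrable hg hgc z) (cauchy_integrable hh hhc z)]
  congr 1; ext t; ring

lemma mom₀_sub (hg : Continuous g) (hh : Continuous h) (m : ℤ × ℤ) :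
    mom₀ (fun ζ => g ζ - h ζ) m = mom₀ g m - mom₀ h m := by
  rw [mom₀, mom₀, mom₀, ← integral_sub (mom₀_int hg m) (mom₀_int hh m)]
  congr 1; ext t; ring

lemma mom₁_sub (hg : Continuous g) (hh : Continuous h) (m : ℤ × ℤ) :
    mom₁ (fun ζ => g ζ - h ζ) m = mom₁ g m - mom₁ h m := by
  rw [mom₁, mom₁, mom₁, ← integral_sub (mom₁_int hg m) (mom₁_int hh m)]
  congr 1; ext t; ring

lemma modC_sub (hg : Continuous g) (hgc : HCS g) (hh : Continuous h)
    (hhc : HCS h) (z : ℂ) :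
    modC F S₁ S₂ (fun ζ => g ζ - h ζ) z = modC F S₁ S₂ g z - modC F S₁ S₂ h z := by
  rw [modC, modC, modC, cauchy_sub hg hgc hh hhc, sub_sub_sub_comm, ← sum_sub_distrib]
  congr 1
  apply sum_congr rfl
  intro m _
  rw [mom₀_sub hg hh, mom₁_sub hg hh]; ring

lemma modC_contDiff (h1 : ∀ n, C¹ (S₁ n)) (h2 : ∀ n, C¹ (S₂ n))
    (hg : C¹ g) (hgc : HCS g) : C¹ (modC F S₁ S₂ g) := by
  have e : modC F S₁ S₂ g = fun z => cauchy g z - ∑ m ∈ F, ((S₁ m z + S₂ m z) * mom₀ g m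
    - S₁ m z * S₂ m z * (z * mom₀ g m - mom₁ g m)) := rfl
  apply (cauchy_contDiff hg hgc).sub
  apply ContDiff.sum
  intro m _
  exact (((h1 m).add (h2 m)).mul contDiff_const).sub (((h1 m).mul (h2 m)).mul
    ((contDiff_id.mul contDiff_const).sub contDiff_const))

lemma dbar_modC (h1 : ∀ n, C¹ (S₁ n)) (h2 : ∀ n, C¹ (S₂ n))
    (hg : C¹ g) (hgc : HCS g) (z : ℂ) :
    dbar (modC F S₁ S₂ g) z = g z - ∑ m ∈ F, (dbar (fun w => S₁ m w + S₂ m w) z * mom₀ g m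
      - dbar (fun w => S₁ m w * S₂ m w) z * (z * mom₀ g m - mom₁ g m)) := by
  have d1 : ∀ m, DA (S₁ m) z := fun m => (h1 m).differentiable bnum z
  have d2 : ∀ m, DA (S₂ m) z := fun m => (h2 m).differentiable bnum z
  have hl : ∀ m, DifferentiableAt ℂ (fun w => w * mom₀ g m - mom₁ g m) z := fun m => by fun_prop
  have dl : ∀ m, DA (fun w => w * mom₀ g m - mom₁ g m) z := fun m => by fun_prop
  have e : modC F S₁ S₂ g = fun z => cauchy g z - ∑ m ∈ F, ((S₁ m z + S₂ m z) * mom₀ g m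
    - S₁ m z * S₂ m z * (z * mom₀ g m - mom₁ g m)) := rfl
  have da : ∀ m, DA (fun w => (S₁ m w + S₂ m w) * mom₀ g m) z := fun m =>
    ((d1 m).add (d2 m)).mul_const _
  have db : ∀ m, DA
      (fun w => S₁ m w * S₂ m w * (w * mom₀ g m - mom₁ g m)) z := fun m =>
    ((d1 m).mul (d2 m)).mul (dl m)
  have dc : ∀ m, DA (fun w => (S₁ m w + S₂ m w) * mom₀ g m
    - S₁ m w * S₂ m w * (w * mom₀ g m - mom₁ g m)) z := fun m => (da m).sub (db m)
  rw [e, dbar_sub ((cauchy_contDiff hg hgc).differentiable bnum z)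
    (DifferentiableAt.fun_sum fun m _ => dc m), dbar_cauchy_eq hg hgc,
    dbar_sum _ _ (fun m _ => dc m)]
  congr 1
  apply sum_congr rfl
  intro m _
  have ds : DA (fun w => S₁ m w + S₂ m w) z := (d1 m).add (d2 m)
  have dp : DA (fun w => S₁ m w * S₂ m w) z := (d1 m).mul (d2 m)
  rw [dbar_sub (da m) (db m), dbar_mul ds (differentiableAt_const _),
    dbar_mul dp (dl m), dbar_of_holo (hl m), dbar_const]
  ring

lemma modC_zero (z : ℂ) : modC F S₁ S₂ (fun _ => 0) z = 0 := by simp [modC, cauchy, mom₀, mom₁]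

end

lemma lam_bdd {F : Idx} {S₁ S₂ : ℤ × ℤ → ℂ → ℂ} (h1 : ∀ n, C¹ (S₁ n))
    (h2 : ∀ n, C¹ (S₂ n)) (r : ℝ) :
    ∃ M : ℝ, ∀ z ∈ 𝔹 (0:ℂ) r, lam F S₁ S₂ z ≤ M := by
  have hc : Continuous fun z => 1 + ∑ n ∈ F, (‖S₁ n z‖ + ‖S₂ n z‖) :=
    continuous_const.add (continuous_finsetSum _ fun n _ =>
      (h1 n).continuous.norm.add (h2 n).continuous.norm)
  obtain ⟨M, hM⟩ := (isCompact_closedBall 0 r).exists_bound_of_continuousOn hc.continuousOn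
  refine ⟨M, fun z hz => le_trans ?_ ((le_abs_self _).trans (hM z hz))⟩
  exact add_le_add le_rfl (sum_le_sum_of_subset_of_nonneg (filter_subset _ _)
    fun _ _ _ => bpos)

/-- Picard iteration for the Riccati equation `∂̄b + |b|² = W/4` up to the invisible singularities. -/
lemma riccati {K : ℝ} (hK : 1 ≤ K) : ∃ C > (0:ℝ), ∀ (ω : ℝ) (U : ℂ → ℝ) (Prot : Set ℂ)
    (F E : Idx) (S₁ S₂ : ℤ × ℤ → ℂ → ℂ), Cells K ω U Prot F E S₁ S₂ →
    ∀ δ : ℝ, 0 < δ → C * δ ^ 2 ≤ 1 → ∀ W : ℂ → ℝ, C¹ W → (∀ z, |W z| ≤ 2 * δ ^ 2) →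
    ∀ χ : ℂ → ℝ, C¹ χ → HCS χ → (∀ z, 0 ≤ χ z) → (∀ z, χ z ≤ 1) →
      (∀ z, rd z ∉ F → χ z = 0) → ∀ ε > (0:ℝ), ∀ r : ℝ,
    ∃ g : ℂ → ℂ, C¹ g ∧ HCS g ∧ (∀ z, rd z ∉ F → g z = 0) ∧
      (∀ z, ‖modC F S₁ S₂ g z‖ ≤ C * δ ^ 2 * lam F S₁ S₂ z) ∧
      (∀ z, ‖g z‖ ≤ C * δ ^ 2 * lam F S₁ S₂ z ^ 2) ∧ (∀ z ∈ 𝔹 (0:ℂ) r,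
        ‖g z - (χ z * (W z / 4 - ‖modC F S₁ S₂ g z‖ ^ 2) : ℝ)‖ ≤ ε) := by
  obtain ⟨C1, hC1, hbd⟩ := modC_bound hK
  set C : ℝ := 4 * C1 ^ 2 + C1 + 1 with hC
  refine ⟨C, bpos, ?_⟩
  intro ω U Prot F E S₁ S₂ hS δ hδ hδs W hW hWb χ hχ hχc hχ0 hχ1 hχF ε hε r
  set B : ℝ := C1 * δ ^ 2 with hB
  have hB0 : 0 < B := bpos
  set T : (ℂ → ℂ) → ℂ → ℂ := fun b z => ((χ z * (W z / 4 - ‖b z‖ ^ 2) : ℝ) : ℂ) with hT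
  obtain ⟨gs, gs0, gsS⟩ : ∃ gs : ℕ → ℂ → ℂ, gs 0 = (fun _ => 0) ∧
      ∀ n, gs (n + 1) = T (modC F S₁ S₂ (gs n)) :=
    ⟨fun n => Nat.rec (fun _ => 0) (fun _ g => T (modC F S₁ S₂ g)) n, rfl, fun n => rfl⟩
  have hTs : ∀ b, C¹ b → C¹ (T b) := fun b hb =>
    ofRealCLM.contDiff.comp (hχ.mul ((hW.div_const 4).sub (hb.norm_sq ℝ)))
  have hTc : ∀ b, HCS (T b) := fun b => hcs_of hχc fun z hz => by simp [hT, hz]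
  have hTF : ∀ b z, rd z ∉ F → T b z = 0 := fun b z hz => by simp [hT, hχF z hz]
  have hs : ∀ n, C¹ (gs n) ∧ HCS (gs n) ∧ ∀ z, rd z ∉ F → gs n z = 0 := by
    intro n
    induction n with
    | zero => rw [gs0]; exact ⟨contDiff_const, HasCompactSupport.zero, fun _ _ => rfl⟩
    | succ n ih =>
      rw [gsS]
      exact ⟨hTs _ (modC_contDiff hS.smooth₁ hS.smooth₂ ih.1 ih.2.1), hTc _, hTF _⟩
  have hL := one_le_lam F S₁ S₂
  have hTb : ∀ b : ℂ → ℂ, (∀ z, ‖b z‖ ≤ B * lam F S₁ S₂ z) →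
      ∀ z, ‖T b z‖ ≤ δ ^ 2 * lam F S₁ S₂ z ^ 2 := by
    intro b hb z
    have h1 := hL z
    have h2 := hWb z
    rw [norm_real, nabs, abs_mul, abs_of_nonneg (hχ0 z)]
    refine (mul_le_of_le_one_left (abs_nonneg _) (hχ1 z)).trans ?_
    refine (abs_sub _ _).trans ?_
    have h3 := pow_le_pow_left₀ (norm_nonneg _) (hb z) 2
    have h4 : 1 ≤ lam F S₁ S₂ z ^ 2 := one_le_pow₀ h1
    rw [abs_div, abs_of_nonneg (by positivity : 0 ≤ ‖b z‖ ^ 2)]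
    have h5 : B ^ 2 ≤ δ ^ 2 / 4 := by
      have : B ^ 2 = (C1 * B) * δ ^ 2 := by rw [hB]; ring
      nlinarith
    have h6 : (B * lam F S₁ S₂ z) ^ 2 ≤ δ ^ 2 / 4 * lam F S₁ S₂ z ^ 2 := by rw [mul_pow]; gcongr
    nlinarith
  have hb : ∀ n z, ‖modC F S₁ S₂ (gs n) z‖ ≤ B * lam F S₁ S₂ z := by
    intro n
    induction n with
    | zero => intro z; rw [gs0, modC_zero, norm_zero]; have := hL z; positivity
    | succ n ih =>
      obtain ⟨a1, a2, a3⟩ := hs (n + 1)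
      exact hbd ω U Prot F E S₁ S₂ hS _ (δ ^ 2) bpos a1.continuous a2 a3
        (by rw [gsS]; exact hTb _ ih)
  have hdT : ∀ (b b' : ℂ → ℂ) d, 0 ≤ d → (∀ z, ‖b z‖ ≤ B * lam F S₁ S₂ z) →
      (∀ z, ‖b' z‖ ≤ B * lam F S₁ S₂ z) → (∀ z, ‖b z - b' z‖ ≤ d * lam F S₁ S₂ z) →
      ∀ z, ‖T b z - T b' z‖ ≤ 2 * B * d * lam F S₁ S₂ z ^ 2 := by
    intro b b' d hd h1 h2 h3 z
    rw [← ofReal_sub, norm_real, nabs, ← mul_sub, abs_mul, abs_of_nonneg (hχ0 z)]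
    refine (mul_le_of_le_one_left (abs_nonneg _) (hχ1 z)).trans ?_
    have e : W z / 4 - ‖b z‖ ^ 2 - (W z / 4 - ‖b' z‖ ^ 2) =
      -((‖b z‖ - ‖b' z‖) * (‖b z‖ + ‖b' z‖)) := by ring
    rw [e, abs_neg, abs_mul]
    have h4 := (abs_norm_sub_norm_le (b z) (b' z)).trans (h3 z)
    have h5 : |‖b z‖ + ‖b' z‖| ≤ 2 * B * lam F S₁ S₂ z := by
      rw [abs_of_nonneg bpos]; linarith [h1 z, h2 z]
    calc _ ≤ (d * lam F S₁ S₂ z) * (2 * B * lam F S₁ S₂ z) := by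
          apply mul_le_mul h4 h5 (abs_nonneg _); have := hL z; positivity
      _ = _ := by ring
  have hd : ∀ n z, ‖modC F S₁ S₂ (gs (n + 1)) z - modC F S₁ S₂ (gs n) z‖ ≤
      B * (1 / 2) ^ n * lam F S₁ S₂ z := by
    intro n
    induction n with
    | zero =>
      intro z
      have : modC F S₁ S₂ (gs 0) z = 0 := by rw [gs0, modC_zero]
      rw [this, sub_zero, pow_zero, mul_one]; exact hb 1 z
    | succ n ih =>
      intro z
      obtain ⟨a1, a2, a3⟩ := hs (n + 1)
      obtain ⟨b1, b2, b3⟩ := hs (n + 2)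
      rw [← modC_sub b1.continuous b2 a1.continuous a2]
      have := hbd ω U Prot F E S₁ S₂ hS (fun ζ => gs (n + 2) ζ - gs (n + 1) ζ)
        (2 * B * (B * (1 / 2) ^ n)) bpos (b1.continuous.sub a1.continuous)
        (b2.sub a2) (fun z hz => by simp [a3 z hz, b3 z hz])
        (by
          have := hdT _ _ (B * (1 / 2) ^ n) bpos (hb (n + 1)) (hb n) ih
          rwa [← gsS (n + 1), ← gsS n] at this) z
      refine this.trans ?_
      apply mul_le_r _ (zero_le_one.trans (hL z))
      rw [pow_succ]
      have hp : 0 ≤ B * (1 / 2) ^ n := bpos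
      nlinarith
  obtain ⟨M, hM⟩ := lam_bdd (F := F) hS.smooth₁ hS.smooth₂ r
  obtain ⟨n, hn⟩ := exists_pow_lt_of_lt_one (x := ε / (2 * B * B * M ^ 2 + 1)) bpos
    (by norm_num : (1 / 2 : ℝ) < 1)
  obtain ⟨a1, a2, a3⟩ := hs (n + 1)
  have hCB : B ≤ C * δ ^ 2 := by rw [hB, hC]; apply mul_le_r _ bpos; nlinarith
  refine ⟨gs (n + 1), a1, a2, a3, ?_, ?_, ?_⟩
  · intro z
    exact (hb _ z).trans (mul_le_r hCB (zero_le_one.trans (hL z)))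
  · intro z
    rw [gsS]
    refine (hTb _ (hb n) z).trans (mul_le_r ?_ bpos)
    nlinarith [sq_nonneg C1]
  · intro z hz
    have h1 := hdT _ _ (B * (1 / 2) ^ n) bpos (hb n) (hb (n + 1))
      (fun z => by rw [norm_sub_rev]; exact hd n z) z
    rw [← gsS] at h1
    refine h1.trans ?_
    have h2 := pow_le_pow_left₀ (zero_le_one.trans (hL z)) (hM z hz) 2
    rw [lt_div_iff₀ bpos] at hn
    calc _ ≤ 2 * B * (B * (1 / 2) ^ n) * M ^ 2 := by gcongr
      _ = (1 / 2) ^ n * (2 * B * B * M ^ 2) := by ring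
      _ ≤ _ := by nlinarith [pow_pos (by norm_num : (0:ℝ) < 1/2) n]

/-! ### Bounds for Cauchy transforms of densities -/

lemma dbar_ofReal {u : ℂ → ℝ} {z : ℂ} (hu : DA u z) :
    dbar (fun w => (u w : ℂ)) z = (starRingEnd ℂ) (dz u z) := by
  have h : HasFDerivAt (fun w => (u w : ℂ)) (ofRealCLM.comp (fd u z)) z :=
    ofRealCLM.hasFDerivAt.comp z hu.hasFDerivAt
  rw [dbar, dz, h.fderiv]
  simp [conj_ofNat]

lemma contDiff_dz {u : ℂ → ℝ} (hu : C² u) : C¹ (dz u) := by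
  have h1 : C¹ fun z => ((fd u z 1 : ℝ) : ℂ) := ofRealCLM.contDiff.comp (contDiff1_fd hu 1)
  have h2 : C¹ fun z => ((fd u z I : ℝ) : ℂ) := ofRealCLM.contDiff.comp (contDiff1_fd hu I)
  exact (h1.sub (contDiff_const.mul h2)).div_const 2

lemma fd_swap {u : ℂ → ℝ} (hu : C² u) (z v w : ℂ) :
    fd (fun y => fd u y v) z w = fd (fun y => fd u y w) z v := by
  have hd : DA (fd u) z := (hu.fderiv_right (m := 1) bnum).differentiable bnum z
  have key : ∀ v, fd (fun y => fd u y v) z = (fd (fd u) z).flip v := by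
    intro v
    rw [fderiv_clm_apply hd (differentiableAt_const v)]
    ext; simp
  have hs := (hu.contDiffAt (x := z)).isSymmSndFDerivAt (by simp)
  rw [key, key]
  exact (hs.eq w v)

lemma dbar_dz {u : ℂ → ℝ} (hu : C² u) (z : ℂ) : dbar (dz u) z = (lap u z : ℂ) / 4 := by
  have hd : ∀ v, DA (fun z => ((fd u z v : ℝ) : ℂ)) z := fun v =>
    (ofRealCLM.contDiff.comp (contDiff1_fd hu v)).differentiable bnum z
  have he : ∀ v w, fd (fun z => ((fd u z v : ℝ) : ℂ)) z w =
      ((fd (fun z => fd u z v) z w : ℝ) : ℂ) := by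
    intro v w
    have : HasFDerivAt (fun z => ((fd u z v : ℝ) : ℂ))
        (ofRealCLM.comp (fd (fun z => fd u z v) z)) z :=
      ofRealCLM.hasFDerivAt.comp z
        ((contDiff1_fd hu v).differentiable bnum z).hasFDerivAt
    rw [this.fderiv]; simp
  have e : ∀ w, fd (dz u) z w = (((fd (fun z => fd u z 1) z w : ℝ) : ℂ)
      - I * ((fd (fun z => fd u z I) z w : ℝ) : ℂ)) / 2 := by
    intro w
    have e1 : dz u = fun z => (2:ℂ)⁻¹ * (((fd u z 1 : ℝ) : ℂ) - I * ((fd u z I : ℝ) : ℂ)) := by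
      ext z; rw [dz]; ring
    have hd2 : DA
        (fun z => ((fd u z 1 : ℝ) : ℂ) - I * ((fd u z I : ℝ) : ℂ)) z :=
      (hd 1).sub ((hd I).const_mul I)
    rw [e1, fderiv_const_mul hd2,
      fderiv_fun_sub (hd 1) ((hd I).const_mul I), fderiv_const_mul (hd I)]
    simp only [smul_apply, sub_apply, smul_eq_mul]
    rw [he, he]; ring
  rw [dbar, e, e, lap, fd_swap hu z 1 I]
  push_cast
  linear_combination (-1/4 : ℂ) * ((fd (fun z => fd u z I) z I : ℝ) : ℂ) * I_sq

lemma cauchy_cells {F : Idx} {g : ℂ → ℂ} (hg : Continuous g)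
    (hc : HCS g) (hF : ∀ z, rd z ∉ F → g z = 0) (z : ℂ) :
    cauchy g z = ∑ m ∈ F, ∫ ζ in cell m, ((π : ℂ) * (z - ζ))⁻¹ * g ζ := by
  have hi : Integrable (fun ζ => ((π : ℂ) * (z - ζ))⁻¹ * g ζ) :=
    integrable_of_locInt (locInt_mul hg z) (hcs_of hc fun ζ h => by simp [h])
  rw [cauchy_eq_kernel, integral_cells hi F (fun w hw => by simp [hF w hw])]

/-- Size and oscillation on unit scale of the Cauchy transform of a function dominated by `lam²`. -/
lemma cauchy_bounds {K : ℝ} (hK : 1 ≤ K) : ∃ C > (0:ℝ), ∀ (N : ℕ) (ω : ℝ) (U : ℂ → ℝ) (Prot : Set ℂ)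
    (E : Idx) (S₁ S₂ : ℤ × ℤ → ℂ → ℂ), Cells K ω U Prot (bx N) E S₁ S₂ →
    ∀ (g : ℂ → ℂ) (γ : ℝ), 0 ≤ γ → Continuous g → HCS g →
      (∀ z, rd z ∉ bx N → g z = 0) → (∀ ζ, ‖g ζ‖ ≤ γ * lam (bx N) S₁ S₂ ζ ^ 2) →
      (∀ z, ‖z‖ ≤ N → ‖cauchy g z‖ ≤ C * γ * (N + 1)) ∧
      (∀ z z', ‖z‖ ≤ N → ‖z - z'‖ ≤ 1 → ‖cauchy g z - cauchy g z'‖ ≤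
        C * γ * (1 + Real.log (3 * N + 1))) := by
  obtain ⟨C, hC, hmass⟩ := mass_cell (zero_lt_one.trans_le hK)
  refine ⟨C * 8000, bpos, ?_⟩
  intro N ω U Prot E S₁ S₂ hS g γ hγ hg hgc hgF hgl
  have hm := hmass ω U Prot (bx N) E S₁ S₂ hS (fun ζ => ‖g ζ‖) γ hγ hg.norm (fun _ => norm_nonneg _) hgl
  have hCg : 0 ≤ C * γ := bpos
  have hN : ∀ z : ℂ, ‖z‖ ≤ N → ∀ m ∈ bx N, dpt z m ≤ (3 * N : ℕ) := by
    intro z hz m hmm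
    have := norm_sub_le z (pt m)
    have := norm_pt_le hmm
    push_cast; linarith
  have hb1 : ∀ z ζ, ‖((π : ℂ) * (z - ζ))⁻¹ * g ζ‖ ≤ ‖g ζ‖ / ‖z - ζ‖ := by
    intro z ζ
    rw [mul_inv, mul_assoc, norm_mul, norm_mul, norm_inv (z - ζ), ← div_eq_inv_mul]
    exact mul_le_of_le_one_left bpos norm_piinv
  have hnear : ∀ z m, ‖∫ ζ in cell m, ((π : ℂ) * (z - ζ))⁻¹ * g ζ‖ ≤ C * γ := by
    intro z m
    refine le_trans ?_ ((hm m).2 z)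
    apply norm_integral_le_of_norm_le (intOn_cell (locInt_div hg.norm z) m)
    exact .of_forall fun ζ => hb1 z ζ
  have hfar : ∀ (f : ℂ → ℂ) m (a : ℝ), 0 ≤ a → (∀ ζ ∈ cell m, ‖f ζ‖ ≤ a * ‖g ζ‖) →
      ‖∫ ζ in cell m, f ζ‖ ≤ a * (C * γ) := by
    intro f m a ha hle
    have ig : IntegrableOn (fun ζ => ‖g ζ‖) (cell m) := intOn_cell hg.norm.locallyIntegrable m
    calc _ ≤ ∫ ζ in cell m, a * ‖g ζ‖ := by
          apply norm_integral_le_of_norm_le (ig.const_mul a)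
          exact (ae_restrict_iff' (measurableSet_cell m)).2 (.of_forall hle)
      _ = a * ∫ ζ in cell m, ‖g ζ‖ := icm _ _
      _ ≤ _ := mul_le_l (hm m).1 ha
  have hdist : ∀ z m ζ, ζ ∈ cell m → dpt z m - 1 ≤ ‖z - ζ‖ := by
    intro z m ζ hζ
    have a1 := norm_sub_pt_of_cell hζ
    have := norm_sub_le (z - ζ) (pt m - ζ)
    rw [sub_sub_sub_cancel_right, norm_sub_rev (pt m) ζ] at this
    linarith
  constructor
  · intro z hz
    rw [cauchy_cells hg hgc hgF]
    have key : ∀ m ∈ bx N, ‖∫ ζ in cell m, ((π : ℂ) * (z - ζ))⁻¹ * g ζ‖ ≤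
        11 * (C * γ) * (1 / (1 + dpt z m)) := by
      intro m _
      rw [mul_one_div, le_div_iff₀ bpos]
      rcases lt_or_ge dpt z m 10 with hd | hd
      · have := hnear z m
        nlinarith [norm_nonneg (z - pt m)]
      · have := hfar (fun ζ => ((π : ℂ) * (z - ζ))⁻¹ * g ζ) m (2 / dpt z m) bpos (by
          intro ζ hζ
          have h1 := hdist z m ζ hζ
          refine (hb1 z ζ).trans ?_
          rw [div_eq_inv_mul]
          apply mul_le_r _ (norm_nonneg _)
          rw [inv_le_comm₀ blin bpos, inv_div]; linarith)
        have h2 : 2 / dpt z m * (1 + dpt z m) ≤ 11 := by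
          rw [div_mul_eq_mul_div, div_le_iff₀ blin]; linarith
        calc _ ≤ 2 / dpt z m * (C * γ) * (1 + dpt z m) := mul_le_r this bpos
          _ = (2 / dpt z m * (1 + dpt z m)) * (C * γ) := by ring
          _ ≤ _ := mul_le_r h2 hCg
    refine (norm_sum_le _ _).trans ((sum_le_sum key).trans ?_)
    rw [← mul_sum]
    have := sum_one z (bx N) (3 * N) (hN z hz)
    push_cast at this
    have h0 : (0:ℝ) ≤ N := Nat.cast_nonneg N
    calc _ ≤ 11 * (C * γ) * (16 * (3 * N + 1)) := mul_le_l this bpos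
      _ ≤ _ := by nlinarith [mul_nonneg hCg h0]
  · intro z z' hz hzz
    rw [cauchy_cells hg hgc hgF, cauchy_cells hg hgc hgF, ← sum_sub_distrib]
    have key : ∀ m ∈ bx N, ‖(∫ ζ in cell m, ((π : ℂ) * (z - ζ))⁻¹ * g ζ)
        - ∫ ζ in cell m, ((π : ℂ) * (z' - ζ))⁻¹ * g ζ‖ ≤
        242 * (C * γ) * (1 / (1 + dpt z m)) ^ 2 := by
      intro m _
      rw [div_pow, one_pow, mul_one_div, le_div_iff₀ bpos]
      rcases lt_or_ge dpt z m 10 with hd | hd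
      · have h1 := hnear z m
        have h2 := hnear z' m
        have h3 := norm_sub_le (∫ ζ in cell m, ((π : ℂ) * (z - ζ))⁻¹ * g ζ)
          (∫ ζ in cell m, ((π : ℂ) * (z' - ζ))⁻¹ * g ζ)
        have h4 : (1 + dpt z m) ^ 2 ≤ 121 := by nlinarith [norm_nonneg (z - pt m)]
        calc _ ≤ (2 * (C * γ)) * 121 := mul_le_mul blin h4 bpos bpos
          _ = _ := by ring
      · have ii : ∀ w : ℂ, IntegrableOn (fun ζ => ((π : ℂ) * (w - ζ))⁻¹ * g ζ) (cell m) :=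
          fun w => intOn_cell (locInt_mul hg w) m
        rw [← integral_sub (ii z) (ii z')]
        have := hfar (fun ζ => ((π : ℂ) * (z - ζ))⁻¹ * g ζ - ((π : ℂ) * (z' - ζ))⁻¹ * g ζ)
          m ((2 / dpt z m) ^ 2) bpos (by
          intro ζ hζ
          have h1 := hdist z m ζ hζ
          have h2 : ‖z - ζ‖ - 1 ≤ ‖z' - ζ‖ := by
            have := norm_sub_le (z - z') (ζ - z')
            rw [sub_sub_sub_cancel_right, norm_sub_rev ζ z'] at this
            linarith
          have n1 : z - ζ ≠ 0 := by intro h; rw [h, norm_zero] at h1; linarith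
          have n2 : z' - ζ ≠ 0 := by intro h; rw [h, norm_zero] at h2; linarith
          have hpi : (π : ℂ) ≠ 0 := by exact_mod_cast Real.pi_ne_zero
          have e : ((π : ℂ) * (z - ζ))⁻¹ * g ζ - ((π : ℂ) * (z' - ζ))⁻¹ * g ζ
            = (π : ℂ)⁻¹ * (((z' - z) * ((z - ζ)⁻¹ * (z' - ζ)⁻¹)) * g ζ) := by
            field_simp; ring
          rw [e, norm_mul]
          refine (mul_le_of_le_one_left bpos norm_piinv).trans ?_
          rw [norm_mul]
          apply mul_le_r _ (norm_nonneg _)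
          rw [norm_mul, norm_mul, norm_inv, norm_inv, norm_sub_rev z' z]
          refine (mul_le_of_le_one_left bpos hzz).trans ?_
          rw [sq]
          apply mul_le_mul _ _ bpos bpos
          · rw [inv_le_comm₀ blin bpos, inv_div]; linarith
          · rw [inv_le_comm₀ blin bpos, inv_div]; linarith)
        have h2 : 2 / dpt z m * (1 + dpt z m) ≤ 11 := by
          rw [div_mul_eq_mul_div, div_le_iff₀ blin]; linarith
        have h3 : (2 / dpt z m * (1 + dpt z m)) ^ 2 ≤ 242 := (pow_le_pow_left₀ bpos h2 2).trans bnum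
        calc _ ≤ (2 / dpt z m) ^ 2 * (C * γ) * (1 + dpt z m) ^ 2 := mul_le_r this bpos
          _ = (2 / dpt z m * (1 + dpt z m)) ^ 2 * (C * γ) := by ring
          _ ≤ _ := mul_le_r h3 hCg
    refine (norm_sum_le _ _).trans ((sum_le_sum key).trans ?_)
    rw [← mul_sum]
    have := sum_two z (bx N) (3 * N) (hN z hz)
    push_cast at this
    have h0 : 0 ≤ Real.log (3 * N + 1) := Real.log_nonneg (by linarith [Nat.cast_nonneg (α := ℝ) N])
    calc _ ≤ 242 * (C * γ) * (32 * (1 + Real.log (3 * N + 1))) := mul_le_l this bpos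
      _ ≤ _ := by nlinarith [mul_nonneg hCg h0]

lemma exists_smooth_near {W : ℂ → ℝ} (hW : Continuous W) (hc : HCS W) {ε : ℝ}
    (hε : 0 < ε) : ∃ W' : ℂ → ℝ, C¹ W' ∧ ∀ z, |W' z - W z| ≤ ε := by
  obtain ⟨g, hg, h⟩ := (hc.uniformContinuous_of_continuous hW).exists_contDiff_dist_le hε
  exact ⟨g, hg.of_le (by norm_cast), fun z => by have := (h z).le; rwa [Real.dist_eq] at this⟩

lemma fderiv_zero_on {E : Type*} [NormedAddCommGroup E] [NormedSpace ℝ E] {f : ℂ → E} {O : Set ℂ}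
    (hO : IsOpen O) (h : ∀ z ∈ O, f z = 0) : ∀ z ∈ O, fd f z = 0 := by
  intro z hz
  have : f =ᶠ[𝓝 z] fun _ => 0 := by filter_upwards [hO.mem_nhds hz] with w hw using h w hw
  rw [this.fderiv_eq]; simp

lemma dbar_zero_on {f : ℂ → ℂ} {O : Set ℂ} (hO : IsOpen O) (h : ∀ z ∈ O, f z = 0) :
    ∀ z ∈ O, dbar f z = 0 := fun z hz => by
  rw [dbar, fderiv_zero_on hO h z hz]; simp

lemma dz_zero_on {f : ℂ → ℝ} {O : Set ℂ} (hO : IsOpen O) (h : ∀ z ∈ O, f z = 0) :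
    ∀ z ∈ O, dz f z = 0 := fun z hz => by
  rw [dz, fderiv_zero_on hO h z hz]; simp

lemma lap_zero_on {f : ℂ → ℝ} {O : Set ℂ} (hO : IsOpen O) (h : ∀ z ∈ O, f z = 0) :
    ∀ z ∈ O, lap f z = 0 := fun z hz => by
  have h1 : ∀ v, ∀ z ∈ O, fd f z v = 0 := fun v z hz => by rw [fderiv_zero_on hO h z hz]; simp
  rw [lap, fderiv_zero_on hO (h1 1) z hz, fderiv_zero_on hO (h1 I) z hz]; simp

lemma dbar_cexp {f : ℂ → ℂ} {z : ℂ} (hf : DA f z) :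
    dbar (fun w => exp (-f w)) z = -(exp (-f z) * dbar f z) := by
  have h : HasFDerivAt (fun w => exp (-f w)) (exp (-f z) • -fd f z) z := hf.hasFDerivAt.neg.cexp
  rw [dbar, h.fderiv, dbar]
  simp; ring

lemma lam_prot {K ω : ℝ} {U : ℂ → ℝ} {Prot : Set ℂ} {F E : Idx} {S₁ S₂ : ℤ × ℤ → ℂ → ℂ}
    (hS : Cells K ω U Prot F E S₁ S₂) (hK : 0 ≤ K) {z : ℂ} (hz : z ∈ Prot) :
    lam F S₁ S₂ z ≤ 1 + 8 * ((400:ℕ) + 1 : ℝ) ^ 2 * (2 * K) := by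
  have h1 := card_near z (F.filter fun m => dpt z m < 400) 400
    (fun m hm => by grind)
  apply add_le_add le_rfl
  calc _ ≤ ∑ n ∈ F with ‖z - pt n‖ < 400, 2 * K := sum_le_sum fun n hn => by
        have := hS.prot z hz n (mem_filter.1 hn).2; linarith [this.2]
    _ = ((F.filter fun m => dpt z m < 400).card : ℝ) * (2 * K) := by simp
    _ ≤ _ := mul_le_r h1 blin

lemma sum_sq_le (F : Idx) (a b : ℤ × ℤ → ℝ) :
    (∑ m ∈ F, (a m + b m)) ^ 2 ≤ 2 * F.card * ∑ m ∈ F, (a m ^ 2 + b m ^ 2) := by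
  calc _ ≤ F.card * ∑ m ∈ F, (a m + b m) ^ 2 := sq_sum_le_card_mul_sum_sq
    _ ≤ F.card * ∑ m ∈ F, 2 * (a m ^ 2 + b m ^ 2) := by
        gcongr with m _
        nlinarith [sq_nonneg (a m - b m)]
    _ = _ := by rw [← mul_sum]; ring

lemma cont_dbar {f : ℂ → ℂ} (hf : C¹ f) : Continuous (dbar f) := by
  have : dbar f = fun z => (fd f z 1 + I * fd f z I) / 2 := rfl
  exact ((cont_fd hf 1).add (continuous_const.mul (cont_fd hf I))).div_const 2

lemma alg_alpha (b G : ℂ) {s : ℝ} (hs : 0 < s) :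
    ‖-b * (starRingEnd ℂ) G ^ 2 / ((‖G‖ ^ 2 + s ^ 2 : ℝ) : ℂ)‖ ≤ ‖b‖ ∧
    ‖b * (starRingEnd ℂ) G + (-b * (starRingEnd ℂ) G ^ 2 / ((‖G‖ ^ 2 + s ^ 2 : ℝ) : ℂ)) * G‖
      ≤ ‖b‖ * s / 2 := by
  have hp : 0 < ‖G‖ ^ 2 + s ^ 2 := bpos
  constructor
  · rw [norm_div, norm_mul, norm_neg, norm_pow, norm_conj, norm_real, nabs,
      abs_of_pos hp, div_le_iff₀ hp]
    apply mul_le_l _ (norm_nonneg _)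
    nlinarith
  · have e : b * (starRingEnd ℂ) G + (-b * (starRingEnd ℂ) G ^ 2 / ((‖G‖ ^ 2 + s ^ 2 : ℝ) : ℂ)) * G
      = b * (starRingEnd ℂ) G * ((s ^ 2 / (‖G‖ ^ 2 + s ^ 2) : ℝ) : ℂ) := by
      have hne : ((‖G‖ ^ 2 + s ^ 2 : ℝ) : ℂ) ≠ 0 := by exact_mod_cast hp.ne'
      have hG : (starRingEnd ℂ) G * G = ((‖G‖ ^ 2 : ℝ) : ℂ) := by
        rw [mul_comm, mul_conj, normSq_eq_norm_sq]
      rw [ofReal_div]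
      field_simp
      have : (starRingEnd ℂ) G ^ 2 * G = (starRingEnd ℂ) G * ((‖G‖ ^ 2 : ℝ) : ℂ) := by rw [← hG]; ring
      push_cast at this ⊢
      linear_combination (-b) * this
    rw [e, norm_mul, norm_mul, norm_conj, norm_real, nabs,
      abs_of_nonneg bpos, mul_assoc, mul_div_assoc]
    apply mul_le_l _ (norm_nonneg _)
    rw [← mul_div_assoc, div_le_iff₀ hp]
    nlinarith [sq_nonneg (‖G‖ - s)]

/-! ### The gauge transformation -/

local notation:max "Cor" S₁:max S₂:max m:max g:max z:max =>
  (dbar (fun w => S₁ m w + S₂ m w) z * mom₀ g m -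
    dbar (fun w => S₁ m w * S₂ m w) z * (z * mom₀ g m - mom₁ g m))

/-- Size of the correction terms produced by the invisible singularities of `modC`. -/
lemma corr_bound {K : ℝ} (hK : 1 ≤ K) (N : ℕ) (C : ℝ) (hC : 0 < C) :
    ∃ P > (0:ℝ), ∀ (ω : ℝ) (U : ℂ → ℝ) (Prot : Set ℂ)
    (E : Idx) (S₁ S₂ : ℤ × ℤ → ℂ → ℂ), Cells K ω U Prot (bx N) E S₁ S₂ → C² U → HCS U → 0 ≤ ω →
    ∀ (g : ℂ → ℂ) (γ : ℝ), 0 ≤ γ → γ ≤ C → Continuous g →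
      (∀ ζ, ‖g ζ‖ ≤ γ * lam (bx N) S₁ S₂ ζ ^ 2) →
      ∃ q : ℂ → ℝ, Integrable q ∧ ∫ z, q z ≤ P * ω ∧ ∀ z, 0 ≤ q z ∧ (‖z‖ ≤ N →
        ‖(∑ m ∈ bx N, Cor S₁ S₂ m g z) * (U z : ℂ)‖ ^ 2 ≤ q z) := by
  obtain ⟨C2, hC2, hmass⟩ := mass_cell (zero_lt_one.trans_le hK)
  set M : ℝ := C2 * C * (3 * N + 2) with hM
  set c : ℝ := ((bx N).card : ℝ)
  refine ⟨M ^ 2 * (2 * c) * (c * 2) + 1, bpos, ?_⟩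
  intro ω U Prot E S₁ S₂ hS hU hUc hω g γ hγ hγC hg hgl
  have hm := fun m => (hmass ω U Prot (bx N) E S₁ S₂ hS (fun ζ => ‖g ζ‖) γ hγ hg.norm
    (fun _ => norm_nonneg _) hgl m).1
  have hCg : C2 * γ ≤ C2 * C := by gcongr
  have ig : ∀ m, IntegrableOn (fun ζ => ‖g ζ‖) (cell m) := fun m => intOn_cell hg.norm.locallyIntegrable m
  have hm0 : ∀ m, ‖mom₀ g m‖ ≤ C2 * C := by
    intro m
    refine le_trans ?_ ((hm m).trans hCg)
    apply norm_integral_le_of_norm_le (ig m)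
    refine .of_forall fun ζ => ?_
    rw [norm_mul]; exact mul_le_of_le_one_left (norm_nonneg _) norm_piinv
  have hm1 : ∀ m ∈ bx N, ‖mom₁ g m‖ ≤ (2 * N + 1) * (C2 * C) := by
    intro m hmN
    calc _ ≤ ∫ ζ in cell m, (2 * (N:ℝ) + 1) * ‖g ζ‖ := by
          apply norm_integral_le_of_norm_le ((ig m).const_mul _)
          refine (ae_restrict_iff' (measurableSet_cell m)).2 (.of_forall fun ζ hζ => ?_)
          rw [norm_mul, norm_mul]
          refine (mul_le_of_le_one_left bpos norm_piinv).trans ?_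
          apply mul_le_r _ (norm_nonneg _)
          have h1 := norm_sub_pt_of_cell hζ
          have h2 := norm_pt_le hmN
          have h3 := norm_sub_norm_le ζ (pt m)
          linarith
      _ = (2 * (N:ℝ) + 1) * ∫ ζ in cell m, ‖g ζ‖ := icm _ _
      _ ≤ _ := mul_le_l ((hm m).trans hCg) bpos
  set A : ℤ × ℤ → ℂ → ℂ := fun m z => (U z : ℂ) * dbar (fun w => S₁ m w + S₂ m w) z with hA
  set B : ℤ × ℤ → ℂ → ℂ := fun m z => (U z : ℂ) * dbar (fun w => S₁ m w * S₂ m w) z with hB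
  have hUcont : Continuous fun z => (U z : ℂ) := continuous_ofReal.comp hU.continuous
  have hint : ∀ f : ℂ → ℂ, C¹ f → Integrable (fun z => ‖(U z : ℂ) * dbar f z‖ ^ 2) := by
    intro f hf
    apply ((hUcont.mul (cont_dbar hf)).norm.pow 2).integ
    exact hcs_of hUc fun z hz => by simp [hz]
  have hAi : ∀ m, Integrable (fun z => ‖A m z‖ ^ 2) := fun m => hint _ ((hS.smooth₁ m).add (hS.smooth₂ m))
  have hBi : ∀ m, Integrable (fun z => ‖B m z‖ ^ 2) := fun m => hint _ ((hS.smooth₁ m).mul (hS.smooth₂ m))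
  refine ⟨fun z => M ^ 2 * (2 * c * ∑ m ∈ bx N, (‖A m z‖ ^ 2 + ‖B m z‖ ^ 2)), ?_, ?_, ?_⟩
  · exact ((isum _ fun m _ => iadd (hAi m) (hBi m)).const_mul _).const_mul _
  · rw [icm, icm, integral_finsetSum _ (fun m _ => iadd (hAi m) (hBi m))]
    have : ∑ m ∈ bx N, ∫ z, (‖A m z‖ ^ 2 + ‖B m z‖ ^ 2) ≤ c * (2 * ω) := by
      calc _ ≤ ∑ m ∈ bx N, 2 * ω := sum_le_sum fun m _ => by
            rw [integral_add (hAi m) (hBi m)]; linarith [hS.err₁ m, hS.err₂ m]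
        _ = _ := by rw [sum_const, nsmul_eq_mul]
    calc _ ≤ M ^ 2 * (2 * c * (c * (2 * ω))) := by gcongr
      _ = M ^ 2 * (2 * c) * (c * 2) * ω := by ring
      _ ≤ _ := by nlinarith
  · intro z
    refine ⟨bpos, fun hz => ?_⟩
    have h1 : ‖(∑ m ∈ bx N, Cor S₁ S₂ m g z) * (U z : ℂ)‖ ≤
        M * ∑ m ∈ bx N, (‖A m z‖ + ‖B m z‖) := by
      rw [sum_mul, mul_sum]
      refine (norm_sum_le _ _).trans (sum_le_sum fun m hmN => ?_)
      have e : Cor S₁ S₂ m g z * (U z : ℂ) =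
        A m z * mom₀ g m - B m z * (z * mom₀ g m - mom₁ g m) := by simp only [hA, hB]; ring
      rw [e]
      refine (norm_sub_le _ _).trans ?_
      rw [norm_mul (A m z), norm_mul (B m z)]
      have b1 : ‖mom₀ g m‖ ≤ M := (hm0 m).trans (by
        rw [hM]; exact le_mul_of_one_le_right bpos (by linarith [Nat.cast_nonneg (α := ℝ) N]))
      have b2 : ‖z * mom₀ g m - mom₁ g m‖ ≤ M := by
        refine (norm_sub_le _ _).trans ?_
        rw [norm_mul]
        have := mul_le_mul hz (hm0 m) (norm_nonneg _) (Nat.cast_nonneg N)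
        have := hm1 m hmN
        rw [hM]; nlinarith [mul_pos hC2 hC]
      nlinarith [norm_nonneg (A m z), norm_nonneg (B m z)]
    calc _ ≤ (M * ∑ m ∈ bx N, (‖A m z‖ + ‖B m z‖)) ^ 2 := pow_le_pow_left₀ (norm_nonneg _) h1 2
      _ = M ^ 2 * (∑ m ∈ bx N, (‖A m z‖ + ‖B m z‖)) ^ 2 := by ring
      _ ≤ _ := mul_le_l (sum_sq_le _ _ _) bpos

set_option maxHeartbeats 2000000 in
/-- The gauge transformation: `H = e^{-β} (∂U - bU)` is almost a solution of `∂̄H = e^{-β} (ΔU - D)/4`. -/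
theorem gauge {K : ℝ} (hK : 1 ≤ K) : ∃ A > (0:ℝ), ∀ N : ℕ, 4 ≤ N → ∀ ω' > (0:ℝ), ∃ ω > (0:ℝ),
    ∀ δ : ℝ, 0 < δ → A * δ ^ 2 ≤ 1 → ∀ U D : ℂ → ℝ, C² U →
    tsupport U ⊆ 𝔹 0 (N - 2) → Continuous D → (∀ z, |D z| ≤ δ ^ 2 * |U z|) →
    ∀ (Prot : Set ℂ) (E : Idx) (S₁ S₂ : ℤ × ℤ → ℂ → ℂ),
    Cells K ω U Prot (bx N) E S₁ S₂ → ∃ b β : ℂ → ℂ, C¹ b ∧ C¹ β ∧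
      (∀ z ∈ Prot, ‖b z‖ ≤ A * δ ^ 2) ∧ (∀ z, ‖z‖ ≤ N → ‖β z‖ ≤ A * δ ^ 2 * (N + 1)) ∧
      (∀ z z', ‖z‖ ≤ N → ‖z - z'‖ ≤ 1 → ‖β z - β z'‖ ≤ A * δ ^ 2 * (1 + Real.log (3 * N + 1))) ∧
      ∫ z, ‖exp (β z) * dbar (fun w => exp (-β w) * (dz U w - b w * U w)) z
        - (((lap U z - D z) / 4 : ℝ) : ℂ)‖ ^ 2 ≤ ω' := by
  obtain ⟨C, hC, hric⟩ := riccati hK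
  obtain ⟨C3, hC3, hcb⟩ := cauchy_bounds hK
  set L0 : ℝ := 1 + 8 * ((400:ℕ) + 1 : ℝ) ^ 2 * (2 * K) with hL0
  have hL01 : 1 ≤ L0 := by rw [hL0]; have : 0 ≤ K := blin
                           have : 0 ≤ 8 * ((400:ℕ) + 1 : ℝ) ^ 2 * (2 * K) := bpos
                           linarith
  have hAC : C ≤ C * L0 + C3 * C + C := by nlinarith [mul_pos hC3 hC]
  refine ⟨C * L0 + C3 * C + C, bpos, ?_⟩
  intro N hN ω' hω'
  obtain ⟨P, hP, hcorr⟩ := corr_bound hK N 1 one_pos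
  refine ⟨ω' / (4 * P), bpos, ?_⟩
  intro δ hδ hAδ U D hU hUs hD hDU Prot E S₁ S₂ hS
  have hδ2 : 0 < δ ^ 2 := bpos
  have hCδ : C * δ ^ 2 ≤ 1 := (mul_le_r hAC hδ2.le).trans hAδ
  have hUc : HCS U := (isCompact_closedBall (0:ℂ) (N - 2)).of_isClosed_subset
    (isClosed_tsupport U) hUs
  obtain ⟨MU, hMU⟩ := hUc.exists_bound_of_continuous hU.continuous
  have hMU0 : 0 ≤ MU := (norm_nonneg _).trans (hMU 0)
  set V : ℝ := volume.real (𝔹 (0:ℂ) (N - 2)) with hV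
  -- the uniform error allowed
  set e0 : ℝ := min 1 (ω' / (4 * (V + 1)))
  have e00 : 0 < e0 := lt_min one_pos bpos
  have e0sq : 2 * e0 ^ 2 * V ≤ ω' / 2 := by
    have h1 : e0 ^ 2 ≤ ω' / (4 * (V + 1)) := by
      have a1 : e0 ≤ 1 := min_le_left _ _
      have a2 : e0 ≤ ω' / (4 * (V + 1)) := min_le_right _ _
      nlinarith
    rw [le_div_iff₀ bpos] at h1
    nlinarith [sq_nonneg e0]
  -- the regularised potential
  set σ : ℝ := e0 / δ ^ 2 with hσ
  have hUσ : ∀ z, 0 < U z ^ 2 + σ ^ 2 := fun z => bpos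
  have hW0c : Continuous fun z => D z * U z / (U z ^ 2 + σ ^ 2) :=
    (hD.mul hU.continuous).div ((hU.continuous.pow 2).add continuous_const) fun z => (hUσ z).ne'
  obtain ⟨W, hW, hWW⟩ := exists_smooth_near hW0c (hcs_of hUc fun z hz => by simp [hz])
    (lt_min hδ2 (by positivity : 0 < e0 / (2 * (MU + 1))))
  have hWb : ∀ z, |W z| ≤ 2 * δ ^ 2 := by
    intro z
    have h1 := (hWW z).trans (min_le_left _ _)
    have h2 : |D z * U z / (U z ^ 2 + σ ^ 2)| ≤ δ ^ 2 := by
      rw [abs_div, abs_mul, abs_of_pos (hUσ z), div_le_iff₀ (hUσ z)]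
      have := hDU z
      nlinarith [abs_nonneg (U z), sq_abs (U z), sq_nonneg σ]
    have h3 := abs_sub_abs_le_abs_sub (W z) (D z * U z / (U z ^ 2 + σ ^ 2))
    linarith
  have hWU : ∀ z, |D z - W z * U z| ≤ e0 := by
    intro z
    have h1 := (hWW z).trans (min_le_right _ _)
    have h2 : |D z - D z * U z / (U z ^ 2 + σ ^ 2) * U z| ≤ e0 / 2 := by
      have e : D z - D z * U z / (U z ^ 2 + σ ^ 2) * U z = D z * σ ^ 2 / (U z ^ 2 + σ ^ 2) := by
        have := (hUσ z).ne'
        field_simp; ring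
      rw [e, abs_div, abs_mul, abs_of_pos (hUσ z), div_le_iff₀ (hUσ z), abs_of_nonneg (sq_nonneg σ)]
      have h3 : e0 = δ ^ 2 * σ := by rw [hσ]; field_simp
      rw [h3]
      have h4 : |U z| * σ ≤ (U z ^ 2 + σ ^ 2) / 2 := by nlinarith [sq_nonneg (|U z| - σ), sq_abs (U z)]
      calc |D z| * σ ^ 2 ≤ δ ^ 2 * |U z| * σ ^ 2 := by gcongr; exact hDU z
        _ = (δ ^ 2 * σ) * (|U z| * σ) := by ring
        _ ≤ (δ ^ 2 * σ) * ((U z ^ 2 + σ ^ 2) / 2) := by gcongr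
        _ = _ := by ring
    have h3 : |(W z - D z * U z / (U z ^ 2 + σ ^ 2)) * U z| ≤ e0 / 2 := by
      rw [abs_mul]
      have := hMU z
      rw [nabs] at this
      calc _ ≤ e0 / (2 * (MU + 1)) * (MU + 1) := by gcongr; linarith
        _ = _ := by field_simp
    have e : D z - W z * U z = (D z - D z * U z / (U z ^ 2 + σ ^ 2) * U z)
      - (W z - D z * U z / (U z ^ 2 + σ ^ 2)) * U z := by ring
    rw [e]
    refine (abs_sub _ _).trans ?_
    linarith
  -- the cutoff
  have hN4 : (4:ℝ) ≤ N := by exact_mod_cast hN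
  let χ : ContDiffBump (0:ℂ) := ⟨(N:ℝ) - 2, N - 1, blin, blin⟩
  have hχF : ∀ z, rd z ∉ bx N → χ z = 0 := by
    intro z hz
    apply χ.zero_of_le_dist
    rw [dist_zero_right]
    change (N:ℝ) - 1 ≤ ‖z‖
    by_contra h
    push Not at h
    exact hz (mem_bx_of blin)
  have hχ1 : ∀ z ∈ 𝔹 (0:ℂ) (N - 2), χ z = 1 := fun z hz => χ.one_of_mem_closedBall hz
  obtain ⟨g, hg, hgc, hgF, hgb, hgl, hge⟩ := hric _ U Prot (bx N) E S₁ S₂ hS δ hδ hCδ W hW hWb χ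
    (χ.contDiff.of_le (by norm_cast)) χ.hasCompactSupport (fun z => χ.nonneg) (fun z => χ.le_one) hχF
    (e0 / (4 * (MU + 1))) bpos (N - 2)
  have hbC : C¹ (modC (bx N) S₁ S₂ g) := modC_contDiff hS.smooth₁ hS.smooth₂ hg hgc
  have hdb := fun z => dbar_modC (F := bx N) hS.smooth₁ hS.smooth₂ hg hgc z
  set b := modC (bx N) S₁ S₂ g
  obtain ⟨Mb, hMb⟩ := (isCompact_closedBall (0:ℂ) (N - 2)).exists_bound_of_continuousOn
    hbC.continuous.continuousOn
  have hMb0 : 0 ≤ Mb := (norm_nonneg _).trans (hMb 0 (mem_closedBall_self blin))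
  set s : ℝ := e0 / (2 * (Mb + 1)) with hs
  have hs0 : 0 < s := bpos
  have hUC1 : C¹ fun z => (U z : ℂ) := ofRealCLM.contDiff.comp (hU.of_le bnum)
  set G : ℂ → ℂ := fun z => dz U z - b z * U z with hG
  have hGC : C¹ G := (contDiff_dz hU).sub (hbC.mul hUC1)
  have hG0 : ∀ z, z ∉ tsupport U → G z = 0 := by
    intro z hz
    have h1 : ∀ w ∈ (tsupport U)ᶜ, U w = 0 := fun w hw => image_eq_zero_of_notMem_tsupport hw
    have h2 := dz_zero_on (isClosed_tsupport U).isOpen_compl h1 z hz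
    simp [hG, h2, h1 z hz]
  set α : ℂ → ℂ := fun z => -b z * (starRingEnd ℂ) (G z) ^ 2 / ((‖G z‖ ^ 2 + s ^ 2 : ℝ) : ℂ) with hα
  have hαC : C¹ α := by
    have n1 : C¹ fun z => -b z * (starRingEnd ℂ) (G z) ^ 2 :=
      hbC.neg.mul ((conjCLE.contDiff.comp hGC).pow 2)
    have n2 : C¹ fun z => ‖G z‖ ^ 2 + s ^ 2 := (hGC.norm_sq ℝ).add contDiff_const
    have n3 : C¹ fun z => ((‖G z‖ ^ 2 + s ^ 2 : ℝ) : ℂ) := ofRealCLM.contDiff.comp n2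
    have n4 : ∀ z, ((‖G z‖ ^ 2 + s ^ 2 : ℝ) : ℂ) ≠ 0 := fun z => by
      have : 0 < ‖G z‖ ^ 2 + s ^ 2 := bpos
      exact ofReal_ne_zero.2 this.ne'
    simp only [hα, div_eq_mul_inv]
    exact n1.mul (n3.inv n4)
  have hα0 : ∀ z, z ∉ tsupport U → α z = 0 := fun z hz => by simp [hα, hG0 z hz]
  have hαc : HCS α := HasCompactSupport.intro hUc hα0
  have hαF : ∀ z, rd z ∉ bx N → α z = 0 := fun z hz => hα0 z fun h => by
    have := hUs h
    rw [mem_closedBall, dist_zero_right] at this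
    exact hz (mem_bx_of blin)
  have hαb : ∀ z, ‖α z‖ ≤ ‖b z‖ := fun z => (alg_alpha (b z) (G z) hs0).1
  have hαl : ∀ z, ‖α z‖ ≤ C * δ ^ 2 * lam (bx N) S₁ S₂ z ^ 2 := fun z => by
    refine (hαb z).trans ((hgb z).trans ?_)
    have h1 := one_le_lam (F := bx N) (S₁ := S₁) (S₂ := S₂) (z := z)
    exact mul_le_l (by nlinarith) bpos
  obtain ⟨cb1, cb2⟩ := hcb N _ U Prot E S₁ S₂ hS α (C * δ ^ 2) bpos hαC.continuous hαc hαF hαl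
  have hβC : C¹ (cauchy α) := cauchy_contDiff hαC hαc
  obtain ⟨q, hqi, hqP, hq⟩ := hcorr _ U Prot E S₁ S₂ hS hU hUc bpos g (C * δ ^ 2) bpos
    hCδ hg.continuous hgl
  have hA3 : C3 * (C * δ ^ 2) ≤ (C * L0 + C3 * C + C) * δ ^ 2 := by
    nlinarith [mul_pos (mul_pos hC (zero_lt_one.trans_le hL01)) hδ2, mul_pos hC hδ2]
  refine ⟨b, cauchy α, hbC, hβC, ?_, ?_, ?_, ?_⟩
  · intro z hz
    refine (hgb z).trans ?_
    have := lam_prot hS blin hz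
    have h3 := mul_le_l this (by positivity : 0 ≤ C * δ ^ 2)
    nlinarith [mul_pos (mul_pos hC3 hC) hδ2, mul_pos hC hδ2]
  · intro z hz
    exact (cb1 z hz).trans (mul_le_r hA3 bpos)
  · intro z z' hz hzz
    refine (cb2 z z' hz hzz).trans (mul_le_r hA3 ?_)
    have : 0 ≤ Real.log (3 * N + 1) := Real.log_nonneg blin
    linarith
  set corr : ℂ → ℂ := fun z => ∑ m ∈ bx N, Cor S₁ S₂ m g z with hcorrdef
  have key : ∀ z, cexp (cauchy α z) * dbar (fun w => cexp (-cauchy α w) * G w) z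
      - (((lap U z - D z) / 4 : ℝ) : ℂ) =
      ((D z : ℂ) - W z * U z) / 4 - (g z - ((W z / 4 - ‖b z‖ ^ 2 : ℝ) : ℂ)) * U z + corr z * U z
        - (b z * (starRingEnd ℂ) (G z) + α z * G z) := by
    intro z
    have d1 : DA (fun w => cexp (-cauchy α w)) z := (hβC.differentiable bnum z).neg.cexp
    have d2 : DA G z := hGC.differentiable bnum z
    have d3 : DA (dz U) z := (contDiff_dz hU).differentiable bnum z
    have d4 : DA b z := hbC.differentiable bnum z
    have d5 : DA (fun w => (U w : ℂ)) z := hUC1.differentiable bnum z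
    have d6 : DA (fun w => b w * (U w : ℂ)) z := d4.mul d5
    have d7 : DA U z := hU.differentiable bnum z
    have e1 : dbar G z = (lap U z : ℂ) / 4 - (dbar b z * U z + b z * (starRingEnd ℂ) (dz U z)) := by
      rw [hG, dbar_sub d3 d6, dbar_mul d4 d5, dbar_dz hU, dbar_ofReal d7]

    rw [dbar_mul d1 d2, dbar_cexp (hβC.differentiable bnum z), dbar_cauchy_eq hαC hαc z, e1, hdb z]
    have e2 : dz U z = G z + b z * U z := by simp [hG]
    have e3 : b z * (starRingEnd ℂ) (b z) = ((‖b z‖ ^ 2 : ℝ) : ℂ) := by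
      rw [mul_conj, normSq_eq_norm_sq]
    have e4 : cexp (cauchy α z) * cexp (-cauchy α z) = 1 := by rw [← exp_add]; simp
    rw [e2, map_add, map_mul, conj_ofReal]
    push_cast
    push_cast at e3
    simp only [hcorrdef]
    linear_combination (-(α z) * G z + (lap U z / 4 - ((g z - corr z) * U z + b z * ((starRingEnd ℂ) (G z)
      + (starRingEnd ℂ) (b z) * U z)))) * e4 - U z * e3
  have hpt : ∀ z, ‖cexp (cauchy α z) * dbar (fun w => cexp (-cauchy α w) * G w) z
      - (((lap U z - D z) / 4 : ℝ) : ℂ)‖ ^ 2 ≤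
      (𝔹 (0:ℂ) (N - 2)).indicator (fun _ => 2 * e0 ^ 2) z + 2 * q z := by
    intro z
    by_cases hz : z ∈ 𝔹 (0:ℂ) (N - 2)
    · rw [Set.indicator_of_mem hz, key z]
      have hzN : ‖z‖ ≤ N := by rw [mem_closedBall, dist_zero_right] at hz; linarith
      have q2 := (hq z).2 hzN
      have u1 : ‖((D z : ℂ) - W z * U z) / 4‖ ≤ e0 / 4 := by
        have e : ((D z : ℂ) - W z * U z) / 4 = (((D z - W z * U z) / 4 : ℝ) : ℂ) := by push_cast; ring
        rw [e, norm_real, nabs, abs_div, abs_of_pos (by norm_num : (0:ℝ) < 4)]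
        linarith [hWU z]
      have u2 : ‖(g z - ((W z / 4 - ‖b z‖ ^ 2 : ℝ) : ℂ)) * U z‖ ≤ e0 / 4 := by
        have := hge z hz
        rw [hχ1 z hz, one_mul] at this
        rw [norm_mul, norm_real]
        calc _ ≤ e0 / (4 * (MU + 1)) * (MU + 1) :=
              mul_le_mul this (by linarith [hMU z]) (norm_nonneg _) bpos
          _ = _ := by field_simp
      have u3 : ‖b z * (starRingEnd ℂ) (G z) + α z * G z‖ ≤ e0 / 4 := by
        refine (alg_alpha (b z) (G z) hs0).2.trans ?_
        calc ‖b z‖ * s / 2 ≤ (Mb + 1) * s / 2 := by gcongr; linarith [hMb z hz]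
          _ = _ := by rw [hs]; field_simp; norm_num
      set x1 := ((D z : ℂ) - W z * U z) / 4
      set x2 := (g z - ((W z / 4 - ‖b z‖ ^ 2 : ℝ) : ℂ)) * U z
      set x3 := b z * (starRingEnd ℂ) (G z) + α z * G z
      have u4 : ‖x1 - x2 + corr z * U z - x3‖ ≤ e0 + ‖corr z * U z‖ := by
        have t1 := norm_sub_le (x1 - x2 + corr z * U z) x3
        have t2 := norm_add_le (x1 - x2) (corr z * U z)
        have t3 := norm_sub_le x1 x2
        linarith
      calc _ ≤ (e0 + ‖corr z * U z‖) ^ 2 := pow_le_pow_left₀ (norm_nonneg _) u4 2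
        _ ≤ 2 * e0 ^ 2 + 2 * ‖corr z * U z‖ ^ 2 := by nlinarith [sq_nonneg (e0 - ‖corr z * U z‖)]
        _ ≤ _ := blin
    · rw [Set.indicator_of_notMem hz]
      have hzU : z ∈ (tsupport U)ᶜ := fun h => hz (hUs h)
      have hO := (isClosed_tsupport U).isOpen_compl
      have h1 : ∀ w ∈ (tsupport U)ᶜ, U w = 0 := fun w hw => image_eq_zero_of_notMem_tsupport hw
      have h2 : dbar (fun w => cexp (-cauchy α w) * G w) z = 0 :=
        dbar_zero_on hO (fun w hw => by simp [hG0 w hw]) z hzU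
      have h3 := lap_zero_on hO h1 z hzU
      have h4 : D z = 0 := by
        have := hDU z
        rw [h1 z hzU, abs_zero, mul_zero] at this
        exact abs_nonpos_iff.1 this
      rw [h2, h3, h4]
      simpa using (hq z).1
  have hVf : volume (𝔹 (0:ℂ) (N - 2)) ≠ ⊤ := measure_closedBall_lt_top.ne
  have ii : Integrable ((𝔹 (0:ℂ) (N - 2)).indicator (fun _ => 2 * e0 ^ 2)) :=
    (integrable_indicator_iff measurableSet_closedBall).2 (integrableOn_const hVf)
  calc _ ≤ ∫ z, ((𝔹 (0:ℂ) (N - 2)).indicator (fun _ => 2 * e0 ^ 2) z + 2 * q z) :=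
        integral_mono_of_nonneg (.of_forall fun z => bpos)
          (iadd ii (hqi.const_mul 2)) (.of_forall hpt)
    _ = 2 * e0 ^ 2 * V + 2 * ∫ z, q z := by
        rw [integral_add ii (hqi.const_mul 2), icm, integral_indicator measurableSet_closedBall,
          setIntegral_const, hV, smul_eq_mul]
        ring
    _ ≤ ω' / 2 + 2 * (P * (ω' / (4 * P))) := by gcongr
    _ = ω' := by field_simp; norm_num

/-! ### Averaged singularities -/

lemma locInt_rpow {E : Type*} [NormedAddCommGroup E] [NormedSpace ℝ E] [FiniteDimensional ℝ E]
    [MeasureSpace E] [BorelSpace E] [(volume : Measure E).IsAddHaarMeasure] {α : ℝ} (h0 : 0 ≤ α)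
    (h1 : α < Module.finrank ℝ E) (z : E) : LocallyIntegrable (fun ζ : E => ‖z - ζ‖ ^ (-α)) := by
  have hd : 0 < Module.finrank ℝ E := by exact_mod_cast h0.trans_lt h1
  have hm : Measurable fun x : E => ‖x‖ ^ (-α) := measurable_norm.pow_const _
  have h : LocallyIntegrable (fun x : E => ‖x‖ ^ (-α)) := by
    refine locallyIntegrable_of_norm_le_rpow (C := 1) (α := α) hd h1 ?_ hm.aestronglyMeasurable
    exact .of_forall fun x => by rw [one_mul, Real.norm_of_nonneg bpos]
  intro x
  have := (h.integrableOn_isCompact ((isCompact_closedBall x 1).image (f := fun ζ => z - ζ) (by fun_prop)))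
  refine ⟨𝔹 x 1, closedBall_mem_nhds x one_pos, ?_⟩
  have e := (Measure.measurePreserving_sub_left (volume : Measure E) z).integrableOn_image
    (Homeomorph.subLeft z).measurableEmbedding (f := fun x : E => ‖x‖ ^ (-α)) (s := 𝔹 x 1)
  exact e.1 this

lemma int_rpow {E : Type*} [NormedAddCommGroup E] [NormedSpace ℝ E] [FiniteDimensional ℝ E]
    [MeasureSpace E] [BorelSpace E] [(volume : Measure E).IsAddHaarMeasure] {α : ℝ} (h0 : 0 ≤ α)
    (h1 : α < Module.finrank ℝ E) : ∃ C > (0:ℝ), ∀ (z : E) (s : Set E), IsCompact s →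
      ∫ ζ in s, ‖z - ζ‖ ^ (-α) ≤ C + volume.real s := by
  refine ⟨(∫ ζ in 𝔹 (0:E) 1, ‖0 - ζ‖ ^ (-α)) + 1, ?_, fun z s hs => ?_⟩
  · have : 0 ≤ ∫ ζ in 𝔹 (0:E) 1, ‖0 - ζ‖ ^ (-α) := integral_nonneg fun _ => bpos
    linarith
  have e1 : ∫ ζ in 𝔹 z 1, ‖z - ζ‖ ^ (-α) = ∫ ζ in 𝔹 (0:E) 1, ‖0 - ζ‖ ^ (-α) := by
    rw [← (Measure.measurePreserving_sub_left (volume : Measure E) z).setIntegral_preimage_emb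
          (Homeomorph.subLeft z).measurableEmbedding]
    have : (fun x => z - x) ⁻¹' 𝔹 z 1 = 𝔹 (0:E) 1 := by ext x; simp [dist_eq_norm]
    rw [this]; simp
  have i1 := (locInt_rpow h0 h1 z).integrableOn_isCompact (isCompact_closedBall z 1)
  have hms := hs.measurableSet
  have hfin : volume s ≠ ⊤ := hs.measure_lt_top.ne
  have key : ∫ ζ in s, ‖z - ζ‖ ^ (-α) ≤ ∫ ζ, ((𝔹 z 1).indicator (fun ζ => ‖z - ζ‖ ^ (-α)) ζ
      + s.indicator (fun _ => (1:ℝ)) ζ) := by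
    rw [← integral_indicator hms]
    apply integral_mono_of_nonneg
    · exact .of_forall fun ζ => Set.indicator_nonneg (fun _ _ => bpos) _
    · exact iadd ((integrable_indicator_iff measurableSet_closedBall).2 i1)
        ((integrable_indicator_iff hms).2 (integrableOn_const hfin))
    · refine .of_forall fun ζ => ?_
      beta_reduce
      by_cases hζ : ζ ∈ s
      · rw [Set.indicator_of_mem hζ, Set.indicator_of_mem hζ]
        by_cases hb : ζ ∈ 𝔹 z 1
        · rw [Set.indicator_of_mem hb]; linarith
        · rw [Set.indicator_of_notMem hb]
          rw [mem_closedBall, dist_comm, dist_eq_norm] at hb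
          have := Real.rpow_le_one_of_one_le_of_nonpos (by linarith : 1 ≤ ‖z - ζ‖) (by linarith : -α ≤ 0)
          linarith
      · rw [Set.indicator_of_notMem hζ, Set.indicator_of_notMem hζ, add_zero]
        exact Set.indicator_nonneg (fun _ _ => bpos) _
  rw [integral_add ((integrable_indicator_iff measurableSet_closedBall).2 i1)
        ((integrable_indicator_iff hms).2 (integrableOn_const hfin)), integral_indicator measurableSet_closedBall,
        e1, integral_indicator hms, setIntegral_const, smul_eq_mul, mul_one] at key
  linarith

/-- A discrete average of `|s - j/J|^{-α}`, regularised at the scale `1/J`, is bounded uniformly. -/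
lemma avg_rpow {α : ℝ} (h0 : 0 ≤ α) (h1 : α < 1) : ∃ C > (0:ℝ), ∀ (J : ℕ) (s : ℝ), 0 < J →
    (J:ℝ)⁻¹ * ∑ j ∈ range J, (|s - j / J| + 1 / (4 * J)) ^ (-α) ≤ C := by
  obtain ⟨C, hC, h⟩ := int_rpow (E := ℝ) h0 (by simpa using h1)
  refine ⟨4 * (C + 1), bpos, fun J s hJ => ?_⟩
  have hli := locInt_rpow (E := ℝ) h0 (by simpa using h1) s
  have hii : ∀ a b : ℝ, IntervalIntegrable (fun τ => ‖s - τ‖ ^ (-α)) volume a b := fun a b =>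
    (hli.integrableOn_isCompact isCompact_uIcc).intervalIntegrable
  have hstep : ∀ j : ℕ, (J:ℝ)⁻¹ * (|s - j / J| + 1 / (4 * J)) ^ (-α) ≤
      4 * ∫ τ in ((j:ℝ) / J)..((j + 1 : ℕ) / J : ℝ), ‖s - τ‖ ^ (-α) := by
    intro j
    have hab : ((j + 1 : ℕ) / J : ℝ) - j / J = (J:ℝ)⁻¹ := by push_cast; field_simp; ring
    have hle : (j:ℝ) / J ≤ ((j + 1 : ℕ) / J : ℝ) := by
      have : 0 < (J:ℝ)⁻¹ := bpos
      linarith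
    have hc : (J:ℝ)⁻¹ * (|s - j / J| + 1 / (4 * J)) ^ (-α) =
        ∫ τ in ((j:ℝ) / J)..((j + 1 : ℕ) / J : ℝ), (|s - j / J| + 1 / (4 * J)) ^ (-α) := by
      rw [intervalIntegral.integral_const, hab, smul_eq_mul]
    rw [hc, ← intervalIntegral.integral_const_mul]
    apply intervalIntegral.integral_mono_ae_restrict hle (by simp) ((hii _ _).const_mul 4)
    have hne : ∀ᵐ τ ∂(volume : Measure ℝ), τ ≠ s := by rw [ae_iff]; simp
    rw [EventuallyLE, ae_restrict_iff' measurableSet_Icc]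
    filter_upwards [hne] with τ hτ hmem
    have hp : 0 < ‖s - τ‖ := norm_pos_iff.2 (sub_ne_zero.2 hτ.symm)
    have hb : ‖s - τ‖ / 4 ≤ |s - j / J| + 1 / (4 * J) := by
      have e : s - τ = (s - j / J) - (τ - j / J) := by ring
      have h1 : ‖s - τ‖ ≤ |s - j / J| + |τ - j / J| := by rw [e]; exact abs_sub _ _
      have h2 : |τ - j / J| ≤ (J:ℝ)⁻¹ := by
        rw [abs_of_nonneg (by linarith [hmem.1])]; linarith [hmem.2]
      have h3 : (1:ℝ) / (4 * J) = (J:ℝ)⁻¹ / 4 := by field_simp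
      rw [h3]
      linarith [abs_nonneg (s - j / J)]
    calc (|s - j / J| + 1 / (4 * J)) ^ (-α) ≤ (‖s - τ‖ / 4) ^ (-α) :=
          Real.rpow_le_rpow_of_nonpos bpos hb blin
      _ = ‖s - τ‖ ^ (-α) * 4 ^ α := by
          rw [Real.div_rpow hp.le bnum, Real.rpow_neg (by norm_num : (0:ℝ) ≤ 4)]
          field_simp
      _ ≤ ‖s - τ‖ ^ (-α) * 4 ^ (1:ℝ) := by gcongr; norm_num
      _ = _ := by rw [Real.rpow_one]; ring
  rw [mul_sum]
  refine (sum_le_sum fun j _ => hstep j).trans ?_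
  rw [← mul_sum, intervalIntegral.sum_integral_adjacent_intervals (fun k _ => hii _ _)]
  have e : ((J:ℕ):ℝ) / J = 1 := by field_simp
  rw [e]
  simp only [Nat.cast_zero, zero_div]
  rw [intervalIntegral.integral_of_le zero_le_one, ← integral_Icc_eq_integral_Ioc]
  have := h s (Set.Icc 0 1) isCompact_Icc
  rw [Real.volume_real_Icc_of_le zero_le_one] at this
  linarith

/-! ### Truncated poles -/

/-- A smooth truncation of `1/w`, equal to it for `1 ≤ ‖w‖`. -/
def sig (w : ℂ) : ℂ := ((sm (2 * ‖w‖ ^ 2 - 1) : ℝ) : ℂ) * w⁻¹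

lemma sig_zero {w : ℂ} (h : ‖w‖ ^ 2 ≤ 1 / 2) : sig w = 0 := by
  rw [sig, Real.smoothTransition.zero_of_nonpos blin]; simp

lemma sig_one {w : ℂ} (h : 1 ≤ ‖w‖) : sig w = w⁻¹ := by
  rw [sig, Real.smoothTransition.one_of_one_le (by nlinarith)]; simp

lemma sig_contDiff : C¹ sig := by
  rw [contDiff_iff_contDiffAt]
  intro w
  by_cases hw : w = 0
  · have : sig =ᶠ[𝓝 w] fun _ => 0 := by
      filter_upwards [ball_mem_nhds w (by norm_num : (0:ℝ) < 1 / 2)] with z hz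
      rw [hw, mem_ball, dist_zero_right] at hz
      exact sig_zero (by nlinarith [norm_nonneg z])
    exact contDiffAt_const.congr_of_eventuallyEq this
  · have h1 : C¹ fun w : ℂ => sm (2 * ‖w‖ ^ 2 - 1) :=
      Real.smoothTransition.contDiff.comp ((contDiff_const.mul (contDiff_id.norm_sq ℝ)).sub contDiff_const)
    have h2 : C¹ fun w : ℂ => ((sm (2 * ‖w‖ ^ 2 - 1) : ℝ) : ℂ) := ofRealCLM.contDiff.comp h1
    exact h2.contDiffAt.mul (contDiffAt_id.inv hw)

lemma sig_norm (w : ℂ) : ‖sig w‖ ≤ 3 / (‖w‖ + 1) := by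
  rcases le_or_gt (‖w‖ ^ 2) (1 / 2) with h | h
  · rw [sig_zero h, norm_zero]; positivity
  · have h0 : 1 / 2 ≤ ‖w‖ := by nlinarith [norm_nonneg w]
    have h1 : 0 < ‖w‖ := blin
    rw [sig, norm_mul, norm_inv, norm_real, Real.norm_of_nonneg (Real.smoothTransition.nonneg _)]
    calc _ ≤ 1 * ‖w‖⁻¹ := by gcongr; exact Real.smoothTransition.le_one _
      _ ≤ _ := by rw [one_mul, inv_eq_one_div, div_le_div_iff₀ h1 blin]; linarith

lemma dbar_sig_zero {w : ℂ} (h : 1 < ‖w‖) : dbar sig w = 0 := by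
  have h0 : w ≠ 0 := fun h0 => by rw [h0, norm_zero] at h; linarith
  have e : sig =ᶠ[𝓝 w] fun z => z⁻¹ := by
    filter_upwards [(continuous_norm.isOpen_preimage _ isOpen_Ioi).mem_nhds h] with z hz
    exact sig_one (le_of_lt hz)
  have : dbar sig w = dbar (fun z : ℂ => z⁻¹) w := by simp only [dbar, e.fderiv_eq]
  rw [this]
  exact dbar_of_holo (differentiableAt_inv h0)

lemma dbar_sig_bdd : ∃ C > (0:ℝ), ∀ w, ‖dbar sig w‖ ≤ C := by
  obtain ⟨C, hC⟩ := (isCompact_closedBall (0:ℂ) 1).exists_bound_of_continuousOn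
    (cont_dbar sig_contDiff).continuousOn
  have hC0 : 0 ≤ C := (norm_nonneg _).trans (hC 0 (by simp))
  refine ⟨C + 1, blin, fun w => ?_⟩
  rcases le_or_gt ‖w‖ 1 with h | h
  · linarith [hC w (by simpa using h)]
  · rw [dbar_sig_zero h, norm_zero]; linarith

/-- The truncation of `1/(z-p)` at distance `t` from the pole. -/
def sg (t : ℝ) (p z : ℂ) : ℂ := (t : ℂ)⁻¹ * sig (t⁻¹ • (z - p))

lemma sg_contDiff (t : ℝ) (p : ℂ) : C¹ (sg t p) :=
  contDiff_const.mul (sig_contDiff.comp ((contDiff_id.sub contDiff_const).const_smul t⁻¹))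

lemma sg_eq {t : ℝ} (ht : 0 < t) {p z : ℂ} (h : t ≤ ‖z - p‖) : sg t p z = (z - p)⁻¹ := by
  have ht' : (t:ℂ) ≠ 0 := ofReal_ne_zero.2 ht.ne'
  rw [sg, sig_one]
  · rw [real_smul]; push_cast; rw [mul_inv, inv_inv, ← mul_assoc, inv_mul_cancel₀ ht', one_mul]
  · rw [norm_smul, norm_inv, Real.norm_of_nonneg ht.le, inv_mul_eq_div, one_le_div ht]; exact h

lemma sg_norm {t : ℝ} (ht : 0 < t) (p z : ℂ) : ‖sg t p z‖ ≤ 3 * (‖z - p‖ + t)⁻¹ := by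
  rw [sg, norm_mul, norm_inv, norm_real, Real.norm_of_nonneg ht.le]
  refine (mul_le_l (sig_norm _) bpos).trans (le_of_eq ?_)
  rw [norm_smul, norm_inv, Real.norm_of_nonneg ht.le]
  have : 0 < ‖z - p‖ + t := bpos
  field_simp

lemma dbar_sg {t : ℝ} (p z : ℂ) :
    dbar (sg t p) z = (t:ℂ)⁻¹ * ((t:ℂ)⁻¹ * dbar sig (t⁻¹ • (z - p))) := by
  have h1 : HasFDerivAt (fun z : ℂ => t⁻¹ • (z - p)) (t⁻¹ • ContinuousLinearMap.id ℝ ℂ) z :=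
    ((hasFDerivAt_id z).sub_const p).const_smul t⁻¹
  have h2 := (sig_contDiff.differentiable bnum (t⁻¹ • (z - p))).hasFDerivAt
  have h3 := (h2.comp z h1).const_mul ((t:ℂ)⁻¹)
  have h4 : fd (sg t p) z = _ := h3.fderiv
  rw [dbar, h4]
  simp only [FunLike.coe_smul, Pi.smul_apply, ContinuousLinearMap.comp_apply,
    ContinuousLinearMap.id_apply, dbar]
  rw [map_smul, map_smul]
  simp only [smul_eq_mul, real_smul]
  push_cast
  ring

lemma dbar_sg_zero {t : ℝ} (ht : 0 < t) {p z : ℂ} (h : t < ‖z - p‖) : dbar (sg t p) z = 0 := by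
  rw [dbar_sg, dbar_sig_zero]; · simp
  rw [norm_smul, norm_inv, Real.norm_of_nonneg ht.le, inv_mul_eq_div, one_lt_div ht]; exact h

lemma dbar_sg_bdd : ∃ C > (0:ℝ), ∀ t : ℝ, 0 < t → ∀ p z, ‖dbar (sg t p) z‖ ≤ C / t ^ 2 := by
  obtain ⟨C, hC, h⟩ := dbar_sig_bdd
  refine ⟨C, hC, fun t ht p z => ?_⟩
  rw [dbar_sg, norm_mul, norm_mul, norm_inv, norm_real, Real.norm_of_nonneg ht.le]
  have := h (t⁻¹ • (z - p))
  calc _ ≤ t⁻¹ * (t⁻¹ * C) := by gcongr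
    _ = _ := by field_simp

/-- If the pole `p` is near the cell `n`, then `1 + (ζ - z)/(z - p)` is small far from the cell. -/
lemma sg_far {t : ℝ} (ht : 0 < t) (ht1 : t ≤ 1) {x p z ζ : ℂ} (hp : ‖p - x‖ ≤ 170) (hz : 400 ≤ ‖z - x‖)
    (hζ : ‖ζ - x‖ ≤ 1) : ‖1 + (ζ - z) * sg t p z‖ ≤ 300 / ‖z - x‖ := by
  have h1 : ‖z - x‖ * (23 / 40) ≤ ‖z - p‖ := by
    have := norm_sub_le_norm_sub_add_norm_sub z p x
    linarith
  have h0 : 0 < ‖z - p‖ := blin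
  have hne : z - p ≠ 0 := norm_pos_iff.1 h0
  rw [sg_eq ht blin]
  have e : 1 + (ζ - z) * (z - p)⁻¹ = (ζ - p) / (z - p) := by field_simp; ring
  rw [e, norm_div, div_le_div_iff₀ h0 blin]
  have h2 : ‖ζ - p‖ ≤ 171 := by
    have := norm_sub_le_norm_sub_add_norm_sub ζ x p
    rw [norm_sub_rev x p] at this
    linarith
  nlinarith [norm_nonneg (z - x)]

lemma rpow_split {A a b B : ℝ} (ha : 0 < a) (haA : a ≤ A) (hb : 0 < b) (hB0 : 0 < B) (hB : B ≤ A + b) :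
    A ^ (-(3/2) : ℝ) / b ≤ 2 * B ^ (-(3/4) : ℝ) * (a ^ (-(7/4) : ℝ) + b ^ (-(7/4) : ℝ)) := by
  have hA : 0 < A := ha.trans_le haA
  have hBB : (B / 2) ^ (-(3/4) : ℝ) ≤ 2 * B ^ (-(3/4) : ℝ) := by
    rw [Real.div_rpow hB0.le bnum, Real.rpow_neg (by norm_num : (0:ℝ) ≤ 2), div_inv_eq_mul, mul_comm]
    gcongr
    calc (2:ℝ) ^ (3/4 : ℝ) ≤ 2 ^ (1:ℝ) := Real.rpow_le_rpow_of_exponent_le bnum bnum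
      _ = 2 := Real.rpow_one 2
  have hp : 0 ≤ B ^ (-(3/4) : ℝ) := bpos
  have hpa : 0 ≤ a ^ (-(7/4) : ℝ) := bpos
  have hpb : 0 ≤ b ^ (-(7/4) : ℝ) := bpos
  have einv : A ^ (-(3/2) : ℝ) / b = A ^ (-(3/2) : ℝ) * b ^ (-1 : ℝ) := by
    rw [Real.rpow_neg_one]; rfl
  rw [einv]
  rcases le_total A b with h | h
  · have e : b ^ (-1 : ℝ) = b ^ (-(1/4) : ℝ) * b ^ (-(3/4) : ℝ) := by
      rw [← Real.rpow_add hb]; norm_num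
    have h1 : b ^ (-(1/4) : ℝ) ≤ A ^ (-(1/4) : ℝ) := Real.rpow_le_rpow_of_nonpos hA h bnum
    have h2 : b ^ (-(3/4) : ℝ) ≤ (B / 2) ^ (-(3/4) : ℝ) :=
      Real.rpow_le_rpow_of_nonpos bpos blin bnum
    have h3 : A ^ (-(3/2) : ℝ) * A ^ (-(1/4) : ℝ) = A ^ (-(7/4) : ℝ) := by
      rw [← Real.rpow_add hA]; norm_num
    have h4 : A ^ (-(7/4) : ℝ) ≤ a ^ (-(7/4) : ℝ) := Real.rpow_le_rpow_of_nonpos ha haA bnum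
    rw [e]
    calc A ^ (-(3/2) : ℝ) * (b ^ (-(1/4) : ℝ) * b ^ (-(3/4) : ℝ))
        ≤ A ^ (-(3/2) : ℝ) * (A ^ (-(1/4) : ℝ) * (2 * B ^ (-(3/4) : ℝ))) := by
          gcongr; exact h2.trans hBB
      _ = A ^ (-(3/2) : ℝ) * A ^ (-(1/4) : ℝ) * (2 * B ^ (-(3/4) : ℝ)) := by ring
      _ ≤ a ^ (-(7/4) : ℝ) * (2 * B ^ (-(3/4) : ℝ)) := by rw [h3]; gcongr
      _ ≤ _ := by nlinarith
  · have e : A ^ (-(3/2) : ℝ) = A ^ (-(3/4) : ℝ) * A ^ (-(3/4) : ℝ) := by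
      rw [← Real.rpow_add hA]; norm_num
    have h1 : A ^ (-(3/4) : ℝ) ≤ b ^ (-(3/4) : ℝ) := Real.rpow_le_rpow_of_nonpos hb h bnum
    have h2 : A ^ (-(3/4) : ℝ) ≤ (B / 2) ^ (-(3/4) : ℝ) :=
      Real.rpow_le_rpow_of_nonpos bpos blin bnum
    have h3 : b ^ (-(3/4) : ℝ) * b ^ (-1 : ℝ) = b ^ (-(7/4) : ℝ) := by
      rw [← Real.rpow_add hb]; norm_num
    rw [e]
    calc A ^ (-(3/4) : ℝ) * A ^ (-(3/4) : ℝ) * b ^ (-1 : ℝ)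
        ≤ b ^ (-(3/4) : ℝ) * (2 * B ^ (-(3/4) : ℝ)) * b ^ (-1 : ℝ) := by gcongr; exact h2.trans hBB
      _ = b ^ (-(3/4) : ℝ) * b ^ (-1 : ℝ) * (2 * B ^ (-(3/4) : ℝ)) := by ring
      _ = b ^ (-(7/4) : ℝ) * (2 * B ^ (-(3/4) : ℝ)) := by rw [h3]
      _ ≤ _ := by nlinarith

/-- The average of truncated poles. -/
def av (J : ℕ) (p : ℕ → ℂ) (z : ℂ) : ℂ := (J:ℂ)⁻¹ * ∑ j ∈ range J, sg (1 / (4 * J)) (p j) z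

lemma av_contDiff (J : ℕ) (p : ℕ → ℂ) : C¹ (av J p) :=
  contDiff_const.mul (ContDiff.sum fun _ _ => sg_contDiff _ _)

lemma av_norm {J : ℕ} (hJ : 0 < J) (p : ℕ → ℂ) (z : ℂ) :
    ‖av J p z‖ ≤ (J:ℝ)⁻¹ * ∑ j ∈ range J, 3 * (‖z - p j‖ + 1 / (4 * J))⁻¹ := by
  rw [av, norm_mul, norm_inv, norm_natCast]
  gcongr
  exact (norm_sum_le _ _).trans (sum_le_sum fun j _ => sg_norm bpos _ _)

set_option maxHeartbeats 1000000 in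
/-- The averaged pole is uniformly in the Kato class relative to `1/‖z - ζ‖`, when the poles lie on
equally spaced circles. -/
lemma kato_avg : ∃ C > (0:ℝ), ∀ (J : ℕ) (p : ℕ → ℂ) (x : ℂ) (r₀ : ℝ), 0 < J →
    (∀ j, ‖p j - x‖ = r₀ + j / J) → ∀ y z : ℂ, ∫ ζ in 𝔹 y 1, ‖av J p ζ‖ ^ 2 / ‖z - ζ‖ ≤ C := by
  obtain ⟨C1, hC1, h1⟩ := avg_rpow (α := 1 / 2) bnum bnum
  obtain ⟨C3, hC3, h3⟩ := avg_rpow (α := 3 / 4) bnum bnum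
  obtain ⟨C2, hC2, h2⟩ := int_rpow (E := ℂ) (α := 7 / 4) bnum
    bnum
  refine ⟨9 * C1 * (2 * C3 * (2 * (C2 + π))), bpos, ?_⟩
  intro J p x r₀ hJ hp y z
  set t : ℝ := 1 / (4 * J)
  have ht0 : 0 < t := bpos
  have hvol : volume.real (𝔹 y 1) = π := by rw [Measure.real, volume_closedBall]; simp
  have hdist : ∀ (w : ℂ) (j : ℕ), |(‖w - x‖ - r₀) - j / J| ≤ ‖w - p j‖ := by
    intro w j
    have := abs_norm_sub_norm_le (w - x) (p j - x)
    rw [hp j, sub_sub_sub_cancel_right] at this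
    convert this using 2; ring
  have havg : ∀ (α : ℝ) (C : ℝ), 0 ≤ α → (∀ (J : ℕ) (s : ℝ), 0 < J →
      (J:ℝ)⁻¹ * ∑ j ∈ range J, (|s - j / J| + 1 / (4 * J)) ^ (-α) ≤ C) → ∀ w : ℂ,
      (J:ℝ)⁻¹ * ∑ j ∈ range J, (‖w - p j‖ + t) ^ (-α) ≤ C := by
    intro α C hα h w
    refine le_trans ?_ (h J (‖w - x‖ - r₀) hJ)
    gcongr ?_ * ?_
    refine sum_le_sum fun j _ => ?_
    exact Real.rpow_le_rpow_of_nonpos bpos (by grind) blin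
  have a1 := havg (1/2) C1 bnum h1
  have a3 := havg (3/4) C3 bnum h3
  -- the pointwise majorant
  set q : ℂ → ℝ := fun ζ => 9 * C1 * ((J:ℝ)⁻¹ * ∑ j ∈ range J,
    2 * (‖z - p j‖ + t) ^ (-(3/4) : ℝ) * (‖p j - ζ‖ ^ (-(7/4) : ℝ) + ‖z - ζ‖ ^ (-(7/4) : ℝ))) with hq
  have li : ∀ w : ℂ, IntegrableOn (fun ζ => ‖w - ζ‖ ^ (-(7/4) : ℝ)) (𝔹 y 1) := fun w =>
    (locInt_rpow (E := ℂ) (α := 7 / 4) bnum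
      bnum w).integrableOn_isCompact (isCompact_closedBall _ _)
  have hqi : IntegrableOn q (𝔹 y 1) :=
    ((isum _ fun j _ => ((iadd (li (p j)) (li z)).const_mul _)).const_mul _).const_mul _
  have hpt : ∀ᵐ ζ ∂(volume : Measure ℂ), ‖av J p ζ‖ ^ 2 / ‖z - ζ‖ ≤ q ζ := by
    have n1 : ∀ᵐ ζ ∂(volume : Measure ℂ), ζ ≠ z := by rw [ae_iff]; simp
    have n2 : ∀ᵐ ζ ∂(volume : Measure ℂ), ∀ j, ζ ≠ p j := ae_all_iff.2 fun j => by rw [ae_iff]; simp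
    filter_upwards [n1, n2] with ζ hz hpj
    have hz0 : 0 < ‖z - ζ‖ := norm_pos_iff.2 (sub_ne_zero.2 hz.symm)
    have hA : ∀ j, 0 < ‖ζ - p j‖ + t := fun j => bpos
    have cs : ‖av J p ζ‖ ^ 2 ≤ 9 * C1 * ((J:ℝ)⁻¹ * ∑ j ∈ range J, (‖ζ - p j‖ + t) ^ (-(3/2) : ℝ)) := by
      have c1 := sum_mul_sq_le_sq_mul_sq (range J)
        (fun j => (‖ζ - p j‖ + t) ^ (-(1/4) : ℝ)) (fun j => (‖ζ - p j‖ + t) ^ (-(3/4) : ℝ))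
      have e1 : ∀ j, (‖ζ - p j‖ + t) ^ (-(1/4) : ℝ) * (‖ζ - p j‖ + t) ^ (-(3/4) : ℝ) = (‖ζ - p j‖ + t)⁻¹ := by
        intro j; rw [← Real.rpow_add (hA j), ← Real.rpow_neg_one]; norm_num
      have e2 : ∀ j, ((‖ζ - p j‖ + t) ^ (-(1/4) : ℝ)) ^ 2 = (‖ζ - p j‖ + t) ^ (-(1/2) : ℝ) := by
        intro j; rw [sq, ← Real.rpow_add (hA j)]; norm_num
      have e3 : ∀ j, ((‖ζ - p j‖ + t) ^ (-(3/4) : ℝ)) ^ 2 = (‖ζ - p j‖ + t) ^ (-(3/2) : ℝ) := by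
        intro j; rw [sq, ← Real.rpow_add (hA j)]; norm_num
      simp only [e1, e2, e3] at c1
      have c2 := a1 ζ
      have c3 := av_norm hJ p ζ
      rw [← mul_sum] at c3
      set X := ∑ j ∈ range J, (‖ζ - p j‖ + t)⁻¹
      set Y := ∑ j ∈ range J, (‖ζ - p j‖ + t) ^ (-(1/2) : ℝ)
      set Z := ∑ j ∈ range J, (‖ζ - p j‖ + t) ^ (-(3/2) : ℝ)
      calc ‖av J p ζ‖ ^ 2 ≤ ((J:ℝ)⁻¹ * (3 * X)) ^ 2 := pow_le_pow_left₀ (norm_nonneg _) c3 2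
        _ = 9 * ((J:ℝ)⁻¹ ^ 2 * X ^ 2) := by ring
        _ ≤ 9 * ((J:ℝ)⁻¹ ^ 2 * (Y * Z)) := by gcongr
        _ = 9 * ((J:ℝ)⁻¹ * Y) * ((J:ℝ)⁻¹ * Z) := by ring
        _ ≤ 9 * C1 * ((J:ℝ)⁻¹ * Z) := by gcongr
    rw [div_le_iff₀ hz0]
    refine cs.trans ?_
    rw [hq]; beta_reduce
    rw [mul_assoc (9 * C1), mul_assoc ((J:ℝ)⁻¹), sum_mul]
    gcongr 9 * C1 * (_ * ?_)
    refine sum_le_sum fun j _ => ?_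
    rw [← div_le_iff₀ hz0]
    have hpos : 0 < ‖p j - ζ‖ := norm_pos_iff.2 (sub_ne_zero.2 (hpj j).symm)
    apply rpow_split hpos (by rw [norm_sub_rev]; linarith) hz0 bpos
    have := norm_sub_le_norm_sub_add_norm_sub z ζ (p j)
    linarith
  calc ∫ ζ in 𝔹 y 1, ‖av J p ζ‖ ^ 2 / ‖z - ζ‖ ≤ ∫ ζ in 𝔹 y 1, q ζ :=
        integral_mono_of_nonneg (.of_forall fun ζ => bpos) hqi
          (ae_restrict_of_ae hpt)
    _ = 9 * C1 * ((J:ℝ)⁻¹ * ∑ j ∈ range J, 2 * (‖z - p j‖ + t) ^ (-(3/4) : ℝ) *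
          ((∫ ζ in 𝔹 y 1, ‖p j - ζ‖ ^ (-(7/4) : ℝ)) + ∫ ζ in 𝔹 y 1, ‖z - ζ‖ ^ (-(7/4) : ℝ))) := by
        rw [hq, icm, icm, integral_finsetSum _ (fun j _ => ((iadd (li (p j)) (li z)).const_mul _))]
        congr 2
        refine sum_congr rfl fun j _ => ?_
        rw [icm, integral_add (li (p j)) (li z)]
    _ ≤ 9 * C1 * ((J:ℝ)⁻¹ * ∑ j ∈ range J, 2 * (‖z - p j‖ + t) ^ (-(3/4) : ℝ) *
          (2 * (C2 + π))) := by
        gcongr 9 * C1 * (_ * ?_)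
        refine sum_le_sum fun j _ => ?_
        gcongr
        have b1 := h2 (p j) _ (isCompact_closedBall y 1)
        have b2 := h2 z _ (isCompact_closedBall y 1)
        rw [hvol] at b1 b2
        linarith
    _ = 9 * C1 * (2 * ((J:ℝ)⁻¹ * ∑ j ∈ range J, (‖z - p j‖ + t) ^ (-(3/4) : ℝ)) *
          (2 * (C2 + π))) := by
        rw [← sum_mul, ← mul_sum]; ring
    _ ≤ _ := by gcongr; exact a3 z

/-! ### Multipliers of a single cell -/

/-- The conditions on the pair of multipliers attached to a single cell centred at `x`. -/
structure CellOK (K ω : ℝ) (U : ℂ → ℝ) (Prot : Set ℂ) (x : ℂ) (s₁ s₂ : ℂ → ℂ) : Prop where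
  sm₁ : C¹ s₁
  sm₂ : C¹ s₂
  pr : ∀ z, ‖s₁ z * s₂ z‖ ≤ K * (‖s₁ z‖ + ‖s₂ z‖)
  far₁ : ∀ z ζ, 400 ≤ ‖z - x‖ → ‖ζ - x‖ ≤ 1 → ‖1 + (ζ - z) * s₁ z‖ ≤ K / ‖z - x‖
  far₂ : ∀ z ζ, 400 ≤ ‖z - x‖ → ‖ζ - x‖ ≤ 1 → ‖1 + (ζ - z) * s₂ z‖ ≤ K / ‖z - x‖
  kato₁ : ∀ y z, ∫ ζ in 𝔹 y 1, ‖s₁ ζ‖ ^ 2 / ‖z - ζ‖ ≤ K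
  kato₂ : ∀ y z, ∫ ζ in 𝔹 y 1, ‖s₂ ζ‖ ^ 2 / ‖z - ζ‖ ≤ K
  err₁ : ∫ z, ‖(U z : ℂ) * dbar (fun w => s₁ w + s₂ w) z‖ ^ 2 ≤ ω
  err₂ : ∫ z, ‖(U z : ℂ) * dbar (fun w => s₁ w * s₂ w) z‖ ^ 2 ≤ ω
  prot : ∀ z ∈ Prot, ‖s₁ z‖ ≤ K ∧ ‖s₂ z‖ ≤ K

lemma int_inv_norm : ∃ C > (0:ℝ), ∀ y z : ℂ, ∫ ζ in 𝔹 y 1, 1 / ‖z - ζ‖ ≤ C := by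
  obtain ⟨C, hC, h⟩ := int_rpow (E := ℂ) (α := 1) bnum (by rw [finrank_real_complex]; norm_num)
  refine ⟨C + π, bpos, fun y z => ?_⟩
  have hvol : volume.real (𝔹 y 1) = π := by rw [Measure.real, volume_closedBall]; simp
  have := h z _ (isCompact_closedBall y 1)
  rw [hvol] at this
  refine le_trans (le_of_eq ?_) this
  congr 1; ext ζ; rw [Real.rpow_neg_one, one_div]

lemma cell_hole : ∃ K ≥ (1:ℝ), ∀ (ω : ℝ) (U : ℂ → ℝ) (Prot : Set ℂ) (x p : ℂ), 0 < ω →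
    ‖p - x‖ ≤ 170 → (∀ z ∈ 𝔹 p (1/8), U z = 0) → ∃ s₁ s₂, CellOK K ω U Prot x s₁ s₂ := by
  obtain ⟨C, hC, h⟩ := int_inv_norm
  refine ⟨300 + 24 ^ 2 * C, by linarith [(by positivity : 0 ≤ 24 ^ 2 * C)], ?_⟩
  intro ω U Prot x p hω hp hU
  have hb : ∀ z, ‖sg (1/8) p z‖ ≤ 24 := by
    intro z
    refine (sg_norm bnum p z).trans ?_
    rw [← div_eq_mul_inv, div_le_iff₀ bpos]
    linarith [norm_nonneg (z - p)]
  have hfar : ∀ z ζ, 400 ≤ ‖z - x‖ → ‖ζ - x‖ ≤ 1 → ‖1 + (ζ - z) * sg (1/8) p z‖ ≤ (300 + 24 ^ 2 * C) / ‖z - x‖ := by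
    intro z ζ h1 h2
    refine (sg_far bnum bnum hp h1 h2).trans ?_
    gcongr; linarith
  have hk : ∀ y z, ∫ ζ in 𝔹 y 1, ‖sg (1/8) p ζ‖ ^ 2 / ‖z - ζ‖ ≤ 300 + 24 ^ 2 * C := by
    intro y z
    have hli : IntegrableOn (fun ζ => (24 ^ 2 : ℝ) / ‖z - ζ‖) (𝔹 y 1) :=
      (locInt_div continuous_const z).integrableOn_isCompact (isCompact_closedBall _ _)
    calc _ ≤ ∫ ζ in 𝔹 y 1, (24 ^ 2 : ℝ) / ‖z - ζ‖ := by
          refine integral_mono_of_nonneg (.of_forall fun ζ => bpos) hli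
            (.of_forall fun ζ => ?_)
          have := hb ζ
          beta_reduce
          gcongr
      _ = 24 ^ 2 * ∫ ζ in 𝔹 y 1, 1 / ‖z - ζ‖ := by rw [← icm]; congr 1; ext ζ; rw [mul_one_div]
      _ ≤ 24 ^ 2 * C := by gcongr; exact h y z
      _ ≤ _ := blin
  have hd : ∀ z, (U z : ℂ) * dbar (sg (1/8) p) z = 0 := by
    intro z
    rcases le_or_gt ‖z - p‖ (1/8) with h1 | h1
    · rw [hU z (by rwa [mem_cb])]; simp
    · rw [dbar_sg_zero bnum h1, mul_zero]
  have hdf : ∀ z, DA (fun w => sg (1/8) p w) z := fun z => (sg_contDiff _ _).differentiable bnum z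
  refine ⟨sg (1/8) p, sg (1/8) p, sg_contDiff _ _, sg_contDiff _ _, ?_, hfar, hfar, hk, hk, ?_, ?_, ?_⟩
  · intro z
    rw [norm_mul]
    nlinarith [hb z, norm_nonneg (sg (1/8) p z)]
  · have e : ∀ z, ‖(U z : ℂ) * dbar (fun w => sg (1/8) p w + sg (1/8) p w) z‖ ^ 2 = 0 := by
      intro z
      rw [dbar_add (hdf z) (hdf z), mul_add, hd z]; simp
    simp only [e, integral_zero]; exact hω.le
  · have e : ∀ z, ‖(U z : ℂ) * dbar (fun w => sg (1/8) p w * sg (1/8) p w) z‖ ^ 2 = 0 := by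
      intro z
      rw [dbar_mul (hdf z) (hdf z)]
      have : (U z : ℂ) * (dbar (sg (1/8) p) z * sg (1/8) p z + sg (1/8) p z * dbar (sg (1/8) p) z) = 0 := by
        linear_combination (2 * sg (1/8) p z) * hd z
      rw [this]; simp
    simp only [e, integral_zero]; exact hω.le
  · intro z _
    exact ⟨by linarith [hb z], by linarith [hb z]⟩

lemma av_le_one {J : ℕ} (hJ : 0 < J) {p : ℕ → ℂ} {z : ℂ} (h : ∀ j < J, 1 ≤ ‖z - p j‖) : ‖av J p z‖ ≤ 1 := by
  have hJ0 : (0:ℝ) < J := by exact_mod_cast hJ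
  have hJ1 : (1:ℝ) ≤ J := by exact_mod_cast hJ
  rw [av, norm_mul, norm_inv, norm_natCast, inv_mul_le_iff₀ hJ0, mul_one]
  refine (norm_sum_le _ _).trans ?_
  calc _ ≤ ∑ j ∈ range J, (1:ℝ) := sum_le_sum fun j hj => by
        have h1 := h j (mem_range.1 hj)
        rw [sg_eq bpos (le_trans _ h1), norm_inv]
        · exact inv_le_one_of_one_le₀ h1
        · rw [div_le_one bpos]; linarith
    _ = J := by simp

lemma av_far {J : ℕ} (hJ : 0 < J) {p : ℕ → ℂ} {x z ζ : ℂ} (hp : ∀ j < J, ‖p j - x‖ ≤ 170)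
    (hz : 400 ≤ ‖z - x‖) (hζ : ‖ζ - x‖ ≤ 1) : ‖1 + (ζ - z) * av J p z‖ ≤ 300 / ‖z - x‖ := by
  have hJ0 : (0:ℝ) < J := by exact_mod_cast hJ
  have hJ1 : (1:ℝ) ≤ J := by exact_mod_cast hJ
  have hJc : (J:ℂ) ≠ 0 := by exact_mod_cast hJ.ne'
  have e : 1 + (ζ - z) * av J p z = (J:ℂ)⁻¹ * ∑ j ∈ range J, (1 + (ζ - z) * sg (1 / (4 * J)) (p j) z) := by
    rw [sum_add_distrib, ← mul_sum, av]
    simp only [sum_const, Finset.card_range, nsmul_eq_mul, mul_one]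
    field_simp
  rw [e, norm_mul, norm_inv, norm_natCast, inv_mul_le_iff₀ hJ0]
  refine (norm_sum_le _ _).trans ?_
  calc _ ≤ ∑ j ∈ range J, 300 / ‖z - x‖ := sum_le_sum fun j hj => by
        refine sg_far bpos ?_ (hp j (mem_range.1 hj)) hz hζ
        rw [div_le_one bpos]; linarith
    _ = _ := by simp

/-- `∂̄` of the averaged pole, weighted by a Lipschitz function vanishing at the poles, is bounded on
the union of small discs around the poles, and vanishes elsewhere. -/
lemma dbar_av : ∃ C > (0:ℝ), ∀ (J : ℕ) (p : ℕ → ℂ) (x : ℂ) (r₀ Lip : ℝ) (U : ℂ → ℝ), 0 < J → 0 ≤ Lip →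
    (∀ j, ‖p j - x‖ = r₀ + j / J) → (∀ j < J, U (p j) = 0) → (∀ z w, |U z - U w| ≤ Lip * ‖z - w‖) →
    ∀ z, ((∀ j < J, 1 / (4 * J) < ‖z - p j‖) → dbar (av J p) z = 0) ∧
      ‖(U z : ℂ) * dbar (av J p) z‖ ≤ C * Lip := by
  obtain ⟨C, hC, h⟩ := dbar_sg_bdd
  refine ⟨4 * C, bpos, ?_⟩
  intro J p x r₀ Lip U hJ hL hp hU hLip z
  have hJ0 : (0:ℝ) < J := by exact_mod_cast hJ
  set t : ℝ := 1 / (4 * J) with ht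
  have ht0 : 0 < t := bpos
  have e : dbar (av J p) z = (J:ℂ)⁻¹ * ∑ j ∈ range J, dbar (sg t (p j)) z := by
    have d1 : DA (fun w => ∑ j ∈ range J, sg t (p j) w) z :=
      (ContDiff.sum fun _ _ => sg_contDiff _ _ : C¹ fun w =>
        ∑ j ∈ range J, sg t (p j) w).differentiable bnum z
    have d2 : DA (fun _ : ℂ => (J:ℂ)⁻¹) z := differentiableAt_const _
    have := dbar_mul d2 d1
    rw [dbar_const, zero_mul, zero_add, dbar_sum _ _ (fun j _ =>
      (sg_contDiff t (p j)).differentiable bnum z)] at this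
    exact this
  constructor
  · intro hz
    rw [e, sum_eq_zero, mul_zero]
    intro j hj
    exact dbar_sg_zero ht0 (hz j (mem_range.1 hj))
  by_cases hz : ∃ j < J, ‖z - p j‖ ≤ t
  · obtain ⟨j, hj, hzj⟩ := hz
    have h0 : ∀ i ∈ range J, i ≠ j → dbar (sg t (p i)) z = 0 := by
      intro i hi hij
      apply dbar_sg_zero ht0
      have h1 : (1:ℝ) / J ≤ |(i:ℝ) / J - j / J| := by
        rw [← sub_div, abs_div, abs_of_pos hJ0]
        gcongr
        have : (1:ℤ) ≤ |(i:ℤ) - j| := Int.one_le_abs (sub_ne_zero.2 (by exact_mod_cast hij))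
        exact_mod_cast this
      have h2 := abs_norm_sub_norm_le (p i - x) (p j - x)
      rw [hp, hp, sub_sub_sub_cancel_right, add_sub_add_left_eq_sub] at h2
      have h3 := norm_sub_le_norm_sub_add_norm_sub (p i) z (p j)
      rw [norm_sub_rev (p i) z] at h3
      have h4 : (1:ℝ) / J = 4 * t := by rw [ht]; field_simp
      linarith
    rw [e, sum_eq_single_of_mem j (mem_range.2 hj) h0, norm_mul, norm_mul, norm_inv,
      norm_natCast, norm_real, nabs]
    have hUz : |U z| ≤ Lip * t := by
      have := hLip z (p j)
      rw [hU j hj, sub_zero] at this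
      exact this.trans (by gcongr)
    calc |U z| * ((J:ℝ)⁻¹ * ‖dbar (sg t (p j)) z‖) ≤ Lip * t * ((J:ℝ)⁻¹ * (C / t ^ 2)) := by
          gcongr; exact h t ht0 _ _
      _ = _ := by
        have : (J:ℝ)⁻¹ = 4 * t := by rw [ht]; field_simp
        rw [this]; field_simp
  · push Not at hz
    rw [e, sum_eq_zero (fun j hj => dbar_sg_zero ht0 (hz j (mem_range.1 hj)))]
    simp only [mul_zero, norm_zero]; positivity

lemma vol_union (J : ℕ) (p : ℕ → ℂ) (t : ℝ) (ht : 0 ≤ t) :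
    volume.real (⋃ j ∈ range J, 𝔹 (p j) t) ≤ J * (π * t ^ 2) := by
  refine (measureReal_biUnion_finset_le _ _).trans (le_of_eq ?_)
  have : ∀ j, volume.real (𝔹 (p j) t) = π * t ^ 2 := fun j => by
    rw [Measure.real, volume_closedBall]; simp [ht, mul_comm]
  simp [this]

set_option maxHeartbeats 1000000 in
lemma cell_deep : ∃ K ≥ (1:ℝ), ∀ (ω Lip : ℝ) (U : ℂ → ℝ) (Prot : Set ℂ) (x : ℂ), 0 < ω → 0 ≤ Lip →
    (∀ z w, |U z - U w| ≤ Lip * ‖z - w‖) →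
    (∀ t, 9 ≤ t → t ≤ 13 → ∃ p, ‖p - x‖ = t ∧ U p = 0) → (∀ z ∈ Prot, 14 ≤ ‖z - x‖) →
    ∃ s₁ s₂, CellOK K ω U Prot x s₁ s₂ := by
  obtain ⟨C, hC, hk⟩ := kato_avg
  obtain ⟨C', hC', hd⟩ := dbar_av
  refine ⟨300 + C, blin, ?_⟩
  intro ω Lip U Prot x hω hL hLip hzero hProt
  set M := C' * Lip
  have hM0 : 0 ≤ M := bpos
  obtain ⟨J0, hJ0⟩ := exists_nat_gt (M ^ 2 * π / (2 * ω))
  set J := J0 + 1 with hJdef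
  have hJ : 0 < J := Nat.succ_pos _
  have hJr : (0:ℝ) < J := by exact_mod_cast hJ
  have hJ1 : (1:ℝ) ≤ J := by exact_mod_cast hJ
  have hJw : M ^ 2 * π / (2 * J) ≤ ω := by
    have : M ^ 2 * π / (2 * ω) ≤ J := by rw [hJdef]; push_cast; linarith
    rw [div_le_iff₀ bpos] at this ⊢
    linarith
  have hpts : ∀ r₀ : ℝ, 9 ≤ r₀ → r₀ ≤ 12 → ∃ p : ℕ → ℂ, (∀ j, ‖p j - x‖ = r₀ + j / J) ∧ ∀ j < J, U (p j) = 0 := by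
    intro r₀ h1 h2
    have : ∀ j : ℕ, ∃ p : ℂ, ‖p - x‖ = r₀ + j / J ∧ (j < J → U p = 0) := by
      intro j
      by_cases hj : j < J
      · have hj1 : (j:ℝ) / J ≤ 1 := by rw [div_le_one hJr]; exact_mod_cast hj.le
        have hj0 : 0 ≤ (j:ℝ) / J := bpos
        obtain ⟨p, hp1, hp2⟩ := hzero (r₀ + j / J) blin blin
        exact ⟨p, hp1, fun _ => hp2⟩
      · refine ⟨x + ((r₀ + j / J : ℝ) : ℂ), ?_, fun h => absurd h hj⟩
        rw [add_sub_cancel_left, norm_real, Real.norm_of_nonneg bpos]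
    choose p h1 h2 using this
    exact ⟨p, h1, h2⟩
  obtain ⟨p, hp, hpU⟩ := hpts 9 le_rfl bnum
  obtain ⟨p', hp', hpU'⟩ := hpts 12 bnum le_rfl
  have hjJ : ∀ j < J, (0:ℝ) ≤ (j:ℝ) / J ∧ (j:ℝ) / J ≤ 1 := fun j hj =>
    ⟨bpos, by rw [div_le_one hJr]; exact_mod_cast hj.le⟩
  set t : ℝ := 1 / (4 * J) with ht
  have ht0 : 0 < t := bpos
  have ht1 : t ≤ 1 / 4 := by rw [ht]; apply div_le_div_of_nonneg_left <;> linarith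
  have le1 : ∀ z, ‖z - x‖ ≤ 11 → ‖av J p' z‖ ≤ 1 := by
    intro z hz
    refine av_le_one hJ fun j hj => ?_
    have := norm_sub_le_norm_sub_add_norm_sub (p' j) z x
    rw [hp', norm_sub_rev] at this
    linarith [(hjJ j hj).1]
  have le2 : ∀ z, 11 ≤ ‖z - x‖ → ‖av J p z‖ ≤ 1 := by
    intro z hz
    refine av_le_one hJ fun j hj => ?_
    have := norm_sub_le_norm_sub_add_norm_sub z (p j) x
    rw [hp] at this
    linarith [(hjJ j hj).2]
  have h170 : ∀ j < J, ‖p j - x‖ ≤ 170 := fun j hj => by rw [hp]; linarith [(hjJ j hj).2]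
  have h170' : ∀ j < J, ‖p' j - x‖ ≤ 170 := fun j hj => by rw [hp']; linarith [(hjJ j hj).2]
  have D1 := hd J p x 9 Lip U hJ hL hp hpU hLip
  have D2 := hd J p' x 12 Lip U hJ hL hp' hpU' hLip
  set T1 : Set ℂ := ⋃ j ∈ range J, 𝔹 (p j) t with hT1
  set T2 : Set ℂ := ⋃ j ∈ range J, 𝔹 (p' j) t with hT2
  have z1 : ∀ z, z ∉ T1 → dbar (av J p) z = 0 := by
    intro z hz
    refine (D1 z).1 fun j hj => ?_
    by_contra h
    push Not at h
    exact hz (Set.mem_biUnion (mem_coe.2 (mem_range.2 hj)) (by rwa [mem_cb]))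
  have z2 : ∀ z, z ∉ T2 → dbar (av J p') z = 0 := by
    intro z hz
    refine (D2 z).1 fun j hj => ?_
    by_contra h
    push Not at h
    exact hz (Set.mem_biUnion (mem_coe.2 (mem_range.2 hj)) (by rwa [mem_cb]))
  have loc1 : ∀ z ∈ T1, ‖z - x‖ ≤ 11 := by
    intro z hz
    simp only [hT1, Set.mem_iUnion, mem_range, exists_prop] at hz
    obtain ⟨j, hj, hz⟩ := hz
    rw [mem_cb] at hz
    have := norm_sub_le_norm_sub_add_norm_sub z (p j) x
    rw [hp] at this
    linarith [(hjJ j hj).2]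
  have loc2 : ∀ z ∈ T2, 11 ≤ ‖z - x‖ := by
    intro z hz
    simp only [hT2, Set.mem_iUnion, mem_range, exists_prop] at hz
    obtain ⟨j, hj, hz⟩ := hz
    rw [mem_cb] at hz
    have := norm_sub_le_norm_sub_add_norm_sub (p' j) z x
    rw [hp', norm_sub_rev] at this
    linarith [(hjJ j hj).1]
  have b1 : ∀ z, ‖(U z : ℂ) * dbar (av J p) z‖ ≤ T1.indicator (fun _ => M) z := by
    intro z
    by_cases hz : z ∈ T1
    · rw [Set.indicator_of_mem hz]; exact (D1 z).2
    · rw [Set.indicator_of_notMem hz, z1 z hz]; simp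
  have b2 : ∀ z, ‖(U z : ℂ) * dbar (av J p') z‖ ≤ T2.indicator (fun _ => M) z := by
    intro z
    by_cases hz : z ∈ T2
    · rw [Set.indicator_of_mem hz]; exact (D2 z).2
    · rw [Set.indicator_of_notMem hz, z2 z hz]; simp
  have mT : ∀ q : ℕ → ℂ, MeasurableSet (⋃ j ∈ range J, 𝔹 (q j) t) := fun q =>
    measurableSet_biUnion _ fun j _ => measurableSet_closedBall
  have fT : ∀ q : ℕ → ℂ, volume (⋃ j ∈ range J, 𝔹 (q j) t) ≠ ⊤ := fun q =>
    ((measure_biUnion_lt_top (finite_toSet _) fun j _ => measure_closedBall_lt_top)).ne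
  have iT : ∀ q : ℕ → ℂ, Integrable ((⋃ j ∈ range J, 𝔹 (q j) t).indicator (fun _ => 2 * M ^ 2)) :=
    fun q => (integrable_indicator_iff (mT q)).2 (integrableOn_const (fT q))
  -- any function dominated by the two bounds has small square integral
  have key : ∀ F : ℂ → ℂ, (∀ z, ‖F z‖ ≤ T1.indicator (fun _ => M) z + T2.indicator (fun _ => M) z) →
      ∫ z, ‖F z‖ ^ 2 ≤ ω := by
    intro F hF
    calc ∫ z, ‖F z‖ ^ 2 ≤ ∫ z, (T1.indicator (fun _ => 2 * M ^ 2) z + T2.indicator (fun _ => 2 * M ^ 2) z) := by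
          refine integral_mono_of_nonneg (.of_forall fun z => bpos)
            (iadd (iT p) (iT p')) (.of_forall fun z => ?_)
          beta_reduce
          refine (pow_le_pow_left₀ (norm_nonneg _) (hF z) 2).trans ?_
          by_cases h1 : z ∈ T1 <;> by_cases h2 : z ∈ T2 <;> simp [h1, h2] <;> nlinarith [sq_nonneg M]
      _ = volume.real T1 * (2 * M ^ 2) + volume.real T2 * (2 * M ^ 2) := by
          rw [integral_add (iT p) (iT p'), integral_indicator (mT p), integral_indicator (mT p'),
            setIntegral_const, setIntegral_const, smul_eq_mul, smul_eq_mul]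
      _ ≤ J * (π * t ^ 2) * (2 * M ^ 2) + J * (π * t ^ 2) * (2 * M ^ 2) := by
          gcongr
          · exact vol_union J p t ht0.le
          · exact vol_union J p' t ht0.le
      _ = M ^ 2 * π / (2 * J) / 2 := by rw [ht]; field_simp; ring
      _ ≤ ω := blin
  have hdf : ∀ z, DA (fun w => av J p w) z := fun z => (av_contDiff _ _).differentiable bnum z
  have hdf' : ∀ z, DA (fun w => av J p' w) z := fun z => (av_contDiff _ _).differentiable bnum z
  refine ⟨av J p, av J p', av_contDiff _ _, av_contDiff _ _, ?_, ?_, ?_, ?_, ?_, ?_, ?_, ?_⟩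
  · intro z
    rw [norm_mul]
    have n1 := norm_nonneg (av J p z)
    have n2 := norm_nonneg (av J p' z)
    rcases le_total ‖z - x‖ 11 with h | h
    · nlinarith [le1 z h]
    · nlinarith [le2 z h]
  · intro z ζ h1 h2
    refine (av_far hJ h170 h1 h2).trans ?_
    gcongr; linarith
  · intro z ζ h1 h2
    refine (av_far hJ h170' h1 h2).trans ?_
    gcongr; linarith
  · intro y z; linarith [hk J p x 9 hJ hp y z]
  · intro y z; linarith [hk J p' x 12 hJ hp' y z]
  · apply key
    intro z
    rw [dbar_add (hdf z) (hdf' z), mul_add]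
    exact (norm_add_le _ _).trans (add_le_add (b1 z) (b2 z))
  · apply key
    intro z
    rw [dbar_mul (hdf z) (hdf' z)]
    have e : (U z : ℂ) * (dbar (fun w => av J p w) z * av J p' z + av J p z * dbar (fun w => av J p' w) z) =
      (U z : ℂ) * dbar (av J p) z * av J p' z + av J p z * ((U z : ℂ) * dbar (av J p') z) := by ring
    rw [e]
    refine (norm_add_le _ _).trans (add_le_add ?_ ?_)
    · rw [norm_mul ((U z : ℂ) * dbar (av J p) z)]
      by_cases h : z ∈ T1
      · exact (mul_le_of_le_one_right (norm_nonneg _) (le1 z (loc1 z h))).trans (b1 z)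
      · rw [z1 z h, mul_zero, norm_zero, zero_mul]; exact Set.indicator_nonneg (fun _ _ => hM0) _
    · rw [norm_mul (av J p z)]
      by_cases h : z ∈ T2
      · exact (mul_le_of_le_one_left (norm_nonneg _) (le2 z (loc2 z h))).trans (b2 z)
      · rw [z2 z h, mul_zero, norm_zero, mul_zero]; exact Set.indicator_nonneg (fun _ _ => hM0) _
  · intro z hz
    have h14 := hProt z hz
    constructor
    · linarith [le2 z blin]
    · have : ‖av J p' z‖ ≤ 1 := by
        refine av_le_one hJ fun j hj => ?_
        have := norm_sub_le_norm_sub_add_norm_sub z (p' j) x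
        rw [hp'] at this
        linarith [(hjJ j hj).2]
      linarith

/-- Every configuration in which each non-exceptional lattice cell either is close to a disc where `U`
vanishes, or sees zeros of `U` on many circles, carries an admissible family of multipliers. -/
theorem cells_exist : ∃ K ≥ (1:ℝ), ∀ (N : ℕ) (ω Lip : ℝ) (U : ℂ → ℝ) (Prot : Set ℂ) (E : Idx),
    0 < ω → 0 ≤ Lip → (∀ z w, |U z - U w| ≤ Lip * ‖z - w‖) → (E.card : ℝ) ≤ 10 ^ 6 →
    (∀ n ∈ bx N, n ∉ E → (∃ p, ‖p - pt n‖ ≤ 170 ∧ ∀ z ∈ 𝔹 p (1/8), U z = 0) ∨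
      ((∀ t, 9 ≤ t → t ≤ 13 → ∃ p, ‖p - pt n‖ = t ∧ U p = 0) ∧ ∀ z ∈ Prot, 14 ≤ ‖z - pt n‖)) →
    ∃ S₁ S₂, Cells K ω U Prot (bx N) E S₁ S₂ := by
  obtain ⟨K1, hK1, h1⟩ := cell_hole
  obtain ⟨K2, hK2, h2⟩ := cell_deep
  refine ⟨10 ^ 6 + K1 + K2, blin, ?_⟩
  intro N ω Lip U Prot E hω hL hLip hE hcl
  set K := 10 ^ 6 + K1 + K2 with hK
  have hK0 : 0 ≤ K := by rw [hK]; linarith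
  have mono : ∀ K' : ℝ, K' ≤ K → ∀ x s₁ s₂, CellOK K' ω U Prot x s₁ s₂ → CellOK K ω U Prot x s₁ s₂ := by
    intro K' hKK x s₁ s₂ h
    refine ⟨h.sm₁, h.sm₂, fun z => (h.pr z).trans (by gcongr), fun z ζ a b => (h.far₁ z ζ a b).trans (by gcongr),
      fun z ζ a b => (h.far₂ z ζ a b).trans (by gcongr), fun y z => (h.kato₁ y z).trans hKK,
      fun y z => (h.kato₂ y z).trans hKK, h.err₁, h.err₂, fun z hz =>
      ⟨(h.prot z hz).1.trans hKK, (h.prot z hz).2.trans hKK⟩⟩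
  have hex : ∀ n : ℤ × ℤ, ∃ s₁ s₂ : ℂ → ℂ, ((n ∈ bx N ∧ n ∉ E) → CellOK K ω U Prot (pt n) s₁ s₂) ∧
      (¬ (n ∈ bx N ∧ n ∉ E) → s₁ = 0 ∧ s₂ = 0) := by
    intro n
    by_cases hn : n ∈ bx N ∧ n ∉ E
    · rcases hcl n hn.1 hn.2 with ⟨p, hp1, hp2⟩ | ⟨ha, hb⟩
      · obtain ⟨s₁, s₂, hs⟩ := h1 ω U Prot (pt n) p hω hp1 hp2
        exact ⟨s₁, s₂, fun _ => mono K1 (by rw [hK]; linarith) _ _ _ hs, fun h => absurd hn h⟩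
      · obtain ⟨s₁, s₂, hs⟩ := h2 ω Lip U Prot (pt n) hω hL hLip ha hb
        exact ⟨s₁, s₂, fun _ => mono K2 (by rw [hK]; linarith) _ _ _ hs, fun h => absurd hn h⟩
    · exact ⟨0, 0, fun h => absurd h hn, fun _ => ⟨rfl, rfl⟩⟩
  choose S₁ S₂ hS hS0 using hex
  have hz : ∀ n, ¬ (n ∈ bx N ∧ n ∉ E) → (∀ z, S₁ n z = 0) ∧ ∀ z, S₂ n z = 0 := fun n hn =>
    ⟨fun z => by rw [(hS0 n hn).1]; rfl, fun z => by rw [(hS0 n hn).2]; rfl⟩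
  have hc0 : ∀ z, dbar (fun _ : ℂ => (0:ℂ)) z = 0 := fun z => dbar_const 0
  refine ⟨S₁, S₂, ?_, ?_, ?_, ?_, ?_, ?_, ?_, ?_, ?_, ?_, ?_, ?_⟩
  · intro n
    by_cases hn : n ∈ bx N ∧ n ∉ E
    · exact (hS n hn).sm₁
    · rw [(hS0 n hn).1]; exact contDiff_const
  · intro n
    by_cases hn : n ∈ bx N ∧ n ∉ E
    · exact (hS n hn).sm₂
    · rw [(hS0 n hn).2]; exact contDiff_const
  · intro n z
    by_cases hn : n ∈ bx N ∧ n ∉ E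
    · exact (hS n hn).pr z
    · rw [(hz n hn).1, (hz n hn).2]; simp
  · rw [hK]; linarith
  · intro n hn z
    have : ¬ (n ∈ bx N ∧ n ∉ E) := fun h => h.2 hn
    exact ⟨(hz n this).1 z, (hz n this).2 z⟩
  · intro n hn hE; exact (hS n ⟨hn, hE⟩).far₁
  · intro n hn hE; exact (hS n ⟨hn, hE⟩).far₂
  · intro n y z
    by_cases hn : n ∈ bx N ∧ n ∉ E
    · exact (hS n hn).kato₁ y z
    · simp only [(hz n hn).1]; simpa using hK0
  · intro n y z
    by_cases hn : n ∈ bx N ∧ n ∉ E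
    · exact (hS n hn).kato₂ y z
    · simp only [(hz n hn).2]; simpa using hK0
  · intro n
    by_cases hn : n ∈ bx N ∧ n ∉ E
    · exact (hS n hn).err₁
    · simp only [(hz n hn).1, (hz n hn).2, add_zero, hc0, mul_zero, norm_zero]; simpa using hω.le
  · intro n
    by_cases hn : n ∈ bx N ∧ n ∉ E
    · exact (hS n hn).err₂
    · simp only [(hz n hn).1, (hz n hn).2, mul_zero, hc0, norm_zero]; simpa using hω.le
  · intro z hzP n _
    by_cases hn : n ∈ bx N ∧ n ∉ E
    · exact (hS n hn).prot z hzP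
    · rw [(hz n hn).1, (hz n hn).2]; simpa using hK0

/-! ### Mean values -/

lemma hasDerivAt_pospow (n : ℕ) (s : ℝ) :
    HasDerivAt (fun s : ℝ => (max s 0) ^ (n + 2)) (((n + 2 : ℕ) : ℝ) * (max s 0) ^ (n + 1)) s := by
  rcases lt_trichotomy s 0 with h | h | h
  · rw [max_eq_right h.le]
    have : (fun s : ℝ => (max s 0) ^ (n + 2)) =ᶠ[𝓝 s] fun _ => 0 := by
      filter_upwards [Iio_mem_nhds h] with t ht
      rw [max_eq_right (le_of_lt ht)]; simp
    simpa using (hasDerivAt_const s (0 : ℝ)).congr_of_eventuallyEq this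
  · subst h
    have : HasDerivAt (fun s : ℝ => (max s 0) ^ (n + 2)) 0 0 := by
      rw [hasDerivAt_iff_isLittleO]
      simp only [max_self, ne_eq, Nat.add_eq_zero_iff, OfNat.ofNat_ne_zero, and_false,
        not_false_eq_true, zero_pow, sub_zero, smul_eq_mul, mul_zero]
      have h2 : (fun s : ℝ => s ^ (n + 2)) =o[𝓝 0] fun s : ℝ => s := by
        simpa using Asymptotics.isLittleO_pow_pow (𝕜 := ℝ) (m := 1) (n := n + 2) (by omega)
      refine Asymptotics.IsBigO.trans_isLittleO (Asymptotics.IsBigO.of_bound 1 ?_) h2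
      filter_upwards with t
      rw [one_mul, norm_pow, norm_pow]
      refine pow_le_pow_left₀ (norm_nonneg _) ?_ _
      rw [nabs, nabs, abs_of_nonneg (le_max_right _ _)]
      exact max_le (le_abs_self _) (abs_nonneg _)
    simpa using this
  · rw [max_eq_left h.le]
    have : (fun s : ℝ => (max s 0) ^ (n + 2)) =ᶠ[𝓝 s] fun s => s ^ (n + 2) := by
      filter_upwards [Ioi_mem_nhds h] with t ht
      rw [max_eq_left (le_of_lt ht)]
    exact (hasDerivAt_pow (n + 2) s).congr_of_eventuallyEq this

lemma deriv_pospow (n : ℕ) : deriv (fun s : ℝ => (max s 0) ^ (n + 2)) =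
    fun s : ℝ => ((n + 2 : ℕ) : ℝ) * (max s 0) ^ (n + 1) :=
  funext fun s => (hasDerivAt_pospow n s).deriv

lemma contDiff_pospow_one (n : ℕ) : C¹ fun s : ℝ => (max s 0) ^ (n + 2) := by
  rw [contDiff_one_iff_deriv, deriv_pospow]
  exact ⟨fun s => (hasDerivAt_pospow n s).differentiableAt, by fun_prop⟩

lemma contDiff_pospow_two (n : ℕ) : C² fun s : ℝ => (max s 0) ^ (n + 3) := by
  rw [show (2 : WithTop ℕ∞) = 1 + 1 by norm_num, contDiff_succ_iff_deriv]
  refine ⟨fun s => (hasDerivAt_pospow (n + 1) s).differentiableAt, by simp, ?_⟩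
  rw [deriv_pospow (n + 1)]
  exact contDiff_const.mul (contDiff_pospow_one n)

/-- The radial bump `(1 - |z|²)₊ⁿ`. -/
def bp (n : ℕ) (z : ℂ) : ℝ := (max (1 - ‖z‖ ^ 2) 0) ^ n

lemma bp_nonneg (n : ℕ) (z : ℂ) : 0 ≤ bp n z := pow_nonneg (le_max_right _ _) _

lemma bp_le_one (n : ℕ) (z : ℂ) : bp n z ≤ 1 :=
  pow_le_one₀ (le_max_right _ _) (max_le (by nlinarith [norm_nonneg z]) zero_le_one)

lemma bp_zero {n : ℕ} (hn : n ≠ 0) {z : ℂ} (hz : 1 ≤ ‖z‖) : bp n z = 0 := by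
  rw [bp, max_eq_right (by nlinarith), zero_pow hn]

lemma bp_succ_le (n : ℕ) (z : ℂ) : bp (n + 1) z ≤ bp n z := by
  have h1 : max (1 - ‖z‖ ^ 2) 0 ≤ 1 := max_le (by nlinarith [norm_nonneg z]) zero_le_one
  exact pow_le_pow_of_le_one (le_max_right _ _) h1 (by omega)

lemma bp_cont (n : ℕ) : Continuous (bp n) := by unfold bp; fun_prop

lemma bp_hcs {n : ℕ} (hn : n ≠ 0) : HCS (bp n) :=
  HasCompactSupport.intro (isCompact_closedBall (0 : ℂ) 1) fun z hz => bp_zero hn (by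
    rw [mem_closedBall, dist_zero_right, not_le] at hz; exact hz.le)

lemma bp_contDiff_two : C¹ (bp 2) :=
  (contDiff_pospow_one 0).comp (contDiff_const.sub (contDiff_norm_sq ℝ))

lemma bp_contDiff_three : C² (bp 3) :=
  (contDiff_pospow_two 0).comp (contDiff_const.sub (contDiff_norm_sq ℝ))

lemma bp_fderiv (z v : ℂ) : fd (bp 3) z v = -6 * bp 2 z * (z.re * v.re + z.im * v.im) := by
  have h1 : HasFDerivAt (fun z : ℂ => 1 - ‖z‖ ^ 2) (-(2 • innerSL ℝ z)) z := by
    simpa using (hasStrictFDerivAt_norm_sq z).hasFDerivAt.const_sub 1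
  have h2 := (hasDerivAt_pospow 1 (1 - ‖z‖ ^ 2)).comp_hasFDerivAt z h1
  have h3 : fd (bp 3) z = _ := h2.fderiv
  rw [h3]
  simp [bp, inner]
  ring

/-- Weighted average of `g` over the disc of centre `x` and radius `|t|`. -/
def mav (φ g : ℂ → ℝ) (x : ℂ) (t : ℝ) : ℝ := ∫ z, φ z * g (x + t * z)

lemma mav_hasDerivAt {φ g : ℂ → ℝ} (hφ : Continuous φ) (hc : HCS φ)
    (hg : C¹ g) (x : ℂ) (t : ℝ) :
    HasDerivAt (mav φ g x) (∫ z, φ z * fd g (x + t * z) z) t := by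
  have hG : Continuous fun p : ℝ × ℂ => φ p.2 * fd g (x + p.1 * p.2) p.2 := by
    have h1 : Continuous fun p : ℝ × ℂ => fd g (x + p.1 * p.2) :=
      (hg.continuous_fderiv bnum).comp (by fun_prop)
    exact (hφ.comp continuous_snd).mul (h1.clm_apply continuous_snd)
  obtain ⟨C, hC⟩ := ((isCompact_Icc (a := t - 1) (b := t + 1)).prod hc.isCompact).exists_bound_of_continuousOn
    hG.continuousOn
  have hn : Set.Icc (t - 1) (t + 1) ∈ 𝓝 t := Icc_mem_nhds blin blin
  refine (hasDerivAt_integral_of_dominated_loc_of_deriv_le (μ := volume)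
    (F := fun (s : ℝ) z => φ z * g (x + s * z))
    (F' := fun (s : ℝ) z => φ z * fd g (x + s * z) z)
    (bound := (tsupport φ).indicator fun _ => C) hn ?_ ?_ ?_ ?_ ?_ ?_).2
  · exact .of_forall fun s => by
      have : Continuous fun z => φ z * g (x + s * z) := hφ.mul (hg.continuous.comp (by fun_prop))
      exact this.aestronglyMeasurable
  · have : Continuous fun z => φ z * g (x + t * z) := hφ.mul (hg.continuous.comp (by fun_prop))
    exact this.integ hc.mul_right
  · exact (hG.comp (by fun_prop : Continuous fun z : ℂ => (t, z))).aestronglyMeasurable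
  · refine .of_forall fun z s hs => ?_
    by_cases hz : z ∈ tsupport φ
    · rw [Set.indicator_of_mem hz]
      exact hC (s, z) ⟨hs, hz⟩
    · rw [Set.indicator_of_notMem hz, image_eq_zero_of_notMem_tsupport hz]; simp
  · rw [integrable_indicator_iff hc.isCompact.measurableSet]
    exact integrableOn_const hc.isCompact.measure_lt_top.ne
  · refine .of_forall fun z s _ => ?_
    have h1 : HasDerivAt (fun s : ℝ => x + (s : ℂ) * z) z s := by
      simpa using ((ofRealCLM.hasDerivAt (x := s)).mul_const z).const_add x
    have h2 := ((hg.differentiable bnum) (x + s * z)).hasFDerivAt.comp_hasDerivAt s h1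
    exact h2.const_mul (φ z)

lemma fd_comp {g : ℂ → ℝ} (hg : Differentiable ℝ g) (x : ℂ) (t : ℝ) (z v : ℂ) :
    fd (fun z => g (x + t * z)) z v = t * fd g (x + t * z) v := by
  have h1 : HasFDerivAt (fun z : ℂ => x + (t : ℂ) * z) ((t : ℂ) • ContinuousLinearMap.id ℝ ℂ) z :=
    ((hasFDerivAt_id z).const_mul (t : ℂ)).const_add x
  have h2 := (hg (x + t * z)).hasFDerivAt.comp z h1
  have h3 : fd (fun z => g (x + t * z)) z = _ := h2.fderiv
  rw [h3]
  simp only [ContinuousLinearMap.comp_apply, FunLike.coe_smul, Pi.smul_apply,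
    ContinuousLinearMap.id_apply, smul_eq_mul]
  rw [← real_smul (x := t) (z := v), map_smul, smul_eq_mul]

lemma contDiff_aff {g : ℂ → ℝ} {n : WithTop ℕ∞} (hg : ContDiff ℝ n g) (x : ℂ) (t : ℝ) :
    ContDiff ℝ n fun z => g (x + t * z) :=
  hg.comp (contDiff_const.add (contDiff_const.mul contDiff_id))

lemma fd_dir (g : ℂ → ℝ) (y z : ℂ) :
    fd g y z = z.re * fd g y 1 + z.im * fd g y I := by
  conv_lhs => rw [← re_add_im z]
  rw [map_add, ← mul_one (z.re : ℂ), ← real_smul, ← real_smul, map_smul, map_smul]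
  rfl

/-- Radial monotonicity formula: the derivative in the radius of the weighted mean of `u` is a
weighted mean of `Δu`. -/
lemma mav_bp_deriv {u : ℂ → ℝ} (hu : C² u) (x : ℂ) (t : ℝ) :
    HasDerivAt (mav (bp 2) u x) (t / 6 * mav (bp 3) (lap u) x t) t := by
  have hu1 : C¹ u := hu.of_le bnum
  refine (mav_hasDerivAt (bp_cont 2) (bp_hcs bnum) hu1 x t).congr_deriv ?_
  have hv : ∀ v : ℂ, C¹ fun z => fd u (x + t * z) v := fun v => contDiff_aff (contDiff1_fd hu v) x t
  have b3 : C¹ (bp 3) := bp_contDiff_three.of_le bnum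
  have key : ∀ v : ℂ, ∫ z, -(fd (bp 3) z v) * fd u (x + t * z) v =
      ∫ z, bp 3 z * (t * fd (fun w => fd u w v) (x + t * z) v) := by
    intro v
    have h := ibp b3 (hv v) (bp_hcs bnum) v
    simp_rw [fd_comp ((contDiff1_fd hu v).differentiable bnum)] at h
    rw [h, ← integral_neg]
    congr 1; ext z; ring
  have iA : ∀ v : ℂ, Integrable fun z => -(fd (bp 3) z v) * fd u (x + t * z) v :=
    fun v => ((cont_fd b3 v).neg.mul (hv v).continuous).integ
      (hcs_of (hcs_fd (bp_hcs (by norm_num : 3 ≠ 0)) v) fun z hz => by simp [hz])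
  have iB : ∀ v : ℂ, Integrable fun z =>
      bp 3 z * (t * fd (fun w => fd u w v) (x + t * z) v) := fun v => by
    have : Continuous fun z => fd (fun w => fd u w v) (x + t * z) v :=
      (cont_fd (contDiff1_fd hu v) v).comp (by fun_prop)
    exact ((bp_cont 3).mul (continuous_const.mul this)).integ
      (bp_hcs bnum).mul_right
  have e1 : ∀ z, bp 2 z * fd u (x + t * z) z = (1 / 6) * (-(fd (bp 3) z 1) * fd u (x + t * z) 1 +
        -(fd (bp 3) z I) * fd u (x + t * z) I) := by
    intro z
    rw [fd_dir u _ z, bp_fderiv, bp_fderiv]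
    simp
    ring
  simp_rw [e1]
  rw [icm, integral_add (iA 1) (iA I), key, key, ← integral_add (iB 1) (iB I), mav, ← icm, ← icm]
  congr 1; ext z; rw [lap]; ring

/-! ### Gradient and sign estimates -/

lemma bp_int_pos : 0 < ∫ z, bp 2 z := by
  refine (integral_pos_iff_support_of_nonneg (bp_nonneg 2)
    ((bp_cont 2).integ (bp_hcs bnum))).2 ?_
  refine lt_of_lt_of_le (measure_ball_pos volume (0 : ℂ) (one_pos)) (measure_mono fun z hz => ?_)
  rw [mem_ball, dist_zero_right] at hz
  have : 0 < 1 - ‖z‖ ^ 2 := by nlinarith [norm_nonneg z]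
  simp only [Function.mem_support, bp]
  rw [max_eq_left this.le]; positivity

lemma mav_zero (φ g : ℂ → ℝ) (x : ℂ) : mav φ g x 0 = (∫ z, φ z) * g x := by
  simp [mav, integral_mul_const]

lemma mav_int {n : ℕ} (hn : n ≠ 0) {g : ℂ → ℝ} (hg : Continuous g) (x : ℂ) (t : ℝ) :
    Integrable fun z => bp n z * g (x + t * z) :=
  ((bp_cont n).mul (hg.comp (by fun_prop))).integ (bp_hcs hn).mul_right

lemma lap_cont {p : ℂ → ℝ} (hp : C² p) : Continuous (lap p) :=
  (cont_fd (contDiff1_fd hp 1) 1).add (cont_fd (contDiff1_fd hp I) I)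

lemma mem_aff {x z : ℂ} {t T : ℝ} (ht : 0 ≤ t) (hT : t ≤ T) (hz : ‖z‖ ≤ 1) :
    x + t * z ∈ 𝔹 x T := by
  rw [mem_cb, add_sub_cancel_left, norm_mul, norm_real, nabs, abs_of_nonneg ht]
  nlinarith [norm_nonneg z]

lemma bp_mono_int {n : ℕ} (hn : n ≠ 0) {x : ℂ} {t T : ℝ} (ht : 0 ≤ t) (hT : t ≤ T)
    {f g : ℂ → ℝ} (hf : Continuous f) (hg : Continuous g) (h : ∀ y ∈ 𝔹 x T, f y ≤ g y) :
    mav (bp n) f x t ≤ mav (bp n) g x t := by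
  refine integral_mono (mav_int hn hf x t) (mav_int hn hg x t) fun z => ?_
  by_cases hz : ‖z‖ ≤ 1
  · exact mul_le_l (h _ (mem_aff ht hT hz)) (bp_nonneg n z)
  · rw [not_le] at hz
    simp [bp_zero hn hz.le]

lemma mav_three_le {x : ℂ} {t T : ℝ} (ht : 0 ≤ t) (hT : t ≤ T)
    {p : ℂ → ℝ} (hp : Continuous p) (h : ∀ y ∈ 𝔹 x T, 0 ≤ p y) :
    mav (bp 3) p x t ≤ mav (bp 2) p x t := by
  refine integral_mono (mav_int bnum hp x t) (mav_int bnum hp x t) fun z => ?_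
  by_cases hz : ‖z‖ ≤ 1
  · exact mul_le_r (bp_succ_le 2 z) (h _ (mem_aff ht hT hz))
  · rw [not_le] at hz
    simp [bp_zero _ hz.le]

lemma mav_nonneg {n : ℕ} (hn : n ≠ 0) {x : ℂ} {t T : ℝ} (ht : 0 ≤ t) (hT : t ≤ T)
    {p : ℂ → ℝ} (h : ∀ y ∈ 𝔹 x T, 0 ≤ p y) : 0 ≤ mav (bp n) p x t := by
  refine integral_nonneg fun z => ?_
  by_cases hz : ‖z‖ ≤ 1
  · exact mul_nonneg (bp_nonneg n z) (h _ (mem_aff ht hT hz))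
  · rw [not_le] at hz
    simp [bp_zero hn hz.le]

lemma exp_half_le : rexp (1 / 6) ≤ 2 := by
  have := Real.exp_bound_div_one_sub_of_interval (x := 1 / 6) bnum bnum
  exact this.trans bnum

lemma mv_sub {p : ℂ → ℝ} (hp : C² p) {x : ℂ} {T κ : ℝ} (hT : 0 ≤ T) (hκ : 0 ≤ κ)
    (hk : κ * T ^ 2 ≤ 1) (h0 : ∀ y ∈ 𝔹 x T, 0 ≤ p y)
    (h1 : ∀ y ∈ 𝔹 x T, -(κ * p y) ≤ lap p y) :
    (∫ z, bp 2 z) * p x ≤ 2 * mav (bp 2) p x T := by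
  set c := T * κ / 6
  have hd : ∀ t, HasDerivAt (fun t => mav (bp 2) p x t * rexp (c * t)) _ t := fun t =>
    (mav_bp_deriv hp x t).mul (((hasDerivAt_id t).const_mul c).exp)
  have mono : MonotoneOn (fun t => mav (bp 2) p x t * rexp (c * t)) (Set.Icc 0 T) := by
    refine monotoneOn_of_deriv_nonneg (convex_Icc 0 T)
      (fun t _ => (hd t).continuousAt.continuousWithinAt)
      (fun t _ => (hd t).differentiableAt.differentiableWithinAt) fun t ht => ?_
    rw [interior_Icc] at ht
    rw [(hd t).deriv]
    have a1 := mav_three_le ht.1.le ht.2.le hp.continuous h0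
    have a2 := bp_mono_int (n := 3) bnum ht.1.le ht.2.le
      (f := fun y => -κ * p y) (g := lap p) (continuous_const.mul hp.continuous) (lap_cont hp)
      (fun y hy => by linarith [h1 y hy])
    have a3 : mav (bp 3) (fun y => -κ * p y) x t = -κ * mav (bp 3) p x t := by
      rw [mav, mav, ← icm]; congr 1; ext z; ring
    rw [a3] at a2
    have b1 : t / 6 * (-κ * mav (bp 3) p x t) ≤ t / 6 * mav (bp 3) (lap p) x t :=
      mul_le_l a2 (by linarith [ht.1])
    have b2 : t / 6 * κ * mav (bp 3) p x t ≤ c * mav (bp 2) p x t := by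
      refine mul_le_mul ?_ a1 (mav_nonneg bnum ht.1.le ht.2.le h0) bpos
      have : t * κ ≤ T * κ := mul_le_r ht.2.le hκ
      simp only [c]; linarith
    have : 0 ≤ t / 6 * mav (bp 3) (lap p) x t + c * mav (bp 2) p x t := by nlinarith
    have := mul_nonneg this (Real.exp_pos (c * t)).le
    simp only [id, mul_one]
    nlinarith
  have m := mono (Set.left_mem_Icc.2 hT) (Set.right_mem_Icc.2 hT) hT
  simp only [mul_zero, Real.exp_zero, mul_one, mav_zero] at m
  refine m.trans ?_
  rw [mul_comm 2]
  refine mul_le_l ?_ (mav_nonneg bnum hT le_rfl h0)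
  refine (Real.exp_le_exp.2 ?_).trans exp_half_le
  simp only [c]; nlinarith

lemma mv_sup {p : ℂ → ℝ} (hp : C² p) {x : ℂ} {T κ : ℝ} (hT : 0 ≤ T) (hκ : 0 ≤ κ)
    (hk : κ * T ^ 2 ≤ 1) (h0 : ∀ y ∈ 𝔹 x T, 0 ≤ p y)
    (h1 : ∀ y ∈ 𝔹 x T, lap p y ≤ κ * p y) :
    mav (bp 2) p x T ≤ 2 * ((∫ z, bp 2 z) * p x) := by
  set c := T * κ / 6
  have hd : ∀ t, HasDerivAt (fun t => mav (bp 2) p x t * rexp (-c * t)) _ t := fun t =>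
    (mav_bp_deriv hp x t).mul (((hasDerivAt_id t).const_mul (-c)).exp)
  have mono : AntitoneOn (fun t => mav (bp 2) p x t * rexp (-c * t)) (Set.Icc 0 T) := by
    refine antitoneOn_of_deriv_nonpos (convex_Icc 0 T)
      (fun t _ => (hd t).continuousAt.continuousWithinAt)
      (fun t _ => (hd t).differentiableAt.differentiableWithinAt) fun t ht => ?_
    rw [interior_Icc] at ht
    rw [(hd t).deriv]
    have a1 := mav_three_le ht.1.le ht.2.le hp.continuous h0
    have a2 := bp_mono_int (n := 3) bnum ht.1.le ht.2.le
      (f := lap p) (g := fun y => κ * p y) (lap_cont hp) (continuous_const.mul hp.continuous) h1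
    have a3 : mav (bp 3) (fun y => κ * p y) x t = κ * mav (bp 3) p x t := by
      rw [mav, mav, ← icm]; congr 1; ext z; ring
    rw [a3] at a2
    have b1 : t / 6 * mav (bp 3) (lap p) x t ≤ t / 6 * (κ * mav (bp 3) p x t) :=
      mul_le_l a2 (by linarith [ht.1])
    have b2 : t / 6 * κ * mav (bp 3) p x t ≤ c * mav (bp 2) p x t := by
      refine mul_le_mul ?_ a1 (mav_nonneg bnum ht.1.le ht.2.le h0) bpos
      have : t * κ ≤ T * κ := mul_le_r ht.2.le hκ
      simp only [c]; linarith
    have : 0 ≤ c * mav (bp 2) p x t - t / 6 * mav (bp 3) (lap p) x t := by nlinarith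
    have := mul_nonneg this (Real.exp_pos (-c * t)).le
    simp only [id, mul_one]
    nlinarith
  have m := mono (Set.left_mem_Icc.2 hT) (Set.right_mem_Icc.2 hT) hT
  simp only [mul_zero, Real.exp_zero, mul_one, mav_zero] at m
  have e1 : rexp (-c * T) * rexp (c * T) = 1 := by rw [← Real.exp_add]; simp
  have e2 : rexp (c * T) ≤ 2 := by
    refine (Real.exp_le_exp.2 ?_).trans exp_half_le
    simp only [c]; nlinarith
  have hn : 0 ≤ (∫ z, bp 2 z) * p x := mul_nonneg bp_int_pos.le (h0 x (mem_closedBall_self hT))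
  calc mav (bp 2) p x T = mav (bp 2) p x T * rexp (-c * T) * rexp (c * T) := by
        rw [mul_assoc, e1, mul_one]
    _ ≤ (∫ z, bp 2 z) * p x * 2 := mul_le_mul m e2 (Real.exp_pos _).le hn
    _ = _ := by ring

lemma lap_sq {u : ℂ → ℝ} (hu : C² u) (z : ℂ) :
    lap (fun w => u w ^ 2) z = 2 * (fd u z 1 ^ 2 + fd u z I ^ 2) + 2 * (u z * lap u z) := by
  have hd := hu.differentiable bnum
  have h1 : ∀ y v, fd (fun w => u w ^ 2) y v = 2 * (u y * fd u y v) := fun y v => by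
    rw [((hd y).hasFDerivAt.pow 2).fderiv]; simp; ring
  have h2 : ∀ v, fd (fun y => 2 * (u y * fd u y v)) z v =
      2 * (fd u z v ^ 2 + u z * fd (fun y => fd u y v) z v) := fun v => by
    have d2 := (contDiff1_fd hu v).differentiable bnum z
    have h3 : fd (fun y => 2 * (u y * fd u y v)) z = _ :=
      (((hd z).hasFDerivAt.mul d2.hasFDerivAt).const_mul 2).fderiv
    rw [h3]
    simp; ring
  rw [lap]; simp_rw [h1]; rw [h2, h2, lap]; ring

/-- Interior gradient estimate. -/
lemma grad_est : ∃ C > 0, ∀ (u : ℂ → ℝ) (x : ℂ) (M : ℝ), C² u →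
    (∀ y ∈ 𝔹 x 1, |u y| ≤ M) → (∀ y ∈ 𝔹 x 1, |lap u y| ≤ M) →
    |fd u x 1| ≤ C * M ∧ |fd u x I| ≤ C * M := by
  have b3 : C¹ (bp 3) := bp_contDiff_three.of_le bnum
  have c3 : HCS (bp 3) := bp_hcs bnum
  have c2 : HCS (bp 2) := bp_hcs bnum
  have i3 : ∀ v, Integrable fun z => |fd (bp 3) z v| := fun v =>
    ((cont_fd b3 v).integ (hcs_fd c3 v)).abs
  have i2 : ∀ v, Integrable fun z => |fd (bp 2) z v| := fun v =>
    ((cont_fd bp_contDiff_two v).integ (hcs_fd c2 v)).abs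
  have main : ∀ v : ℂ, ∃ C > 0, ∀ (u : ℂ → ℝ) (x : ℂ) (M : ℝ), C² u →
      (∀ y ∈ 𝔹 x 1, |u y| ≤ M) → (∀ y ∈ 𝔹 x 1, |lap u y| ≤ M) →
      |fd u x v| ≤ C * M := by
    intro v
    refine ⟨((∫ z, |fd (bp 3) z v|) + (∫ z, |fd (bp 2) z v|) + 1) / ∫ z, bp 2 z, div_pos (by
        have : 0 ≤ ∫ z, |fd (bp 3) z v| := integral_nonneg fun z => abs_nonneg _
        have : 0 ≤ ∫ z, |fd (bp 2) z v| := integral_nonneg fun z => abs_nonneg _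
        linarith) bp_int_pos, fun u x M hu h1 h2 => ?_⟩
    have hM : 0 ≤ M := (abs_nonneg _).trans (h1 x (mem_closedBall_self bnum))
    have hg : C¹ fun y => fd u y v := contDiff1_fd hu v
    have hsupp : ∀ n : ℕ, n ≠ 0 → C¹ (bp n) → ∀ z, 1 < ‖z‖ → fd (bp n) z v = 0 :=
      fun n hn _ z hz => fderiv_zero_on (O := {z : ℂ | 1 < ‖z‖})
        (isOpen_lt continuous_const continuous_norm) (fun w hw => bp_zero hn (le_of_lt hw)) z hz ▸ rfl
    have hder : ∀ t : ℝ, HasDerivAt (mav (bp 2) (fun y => fd u y v) x)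
        (-(1 / 6) * ∫ z, fd (bp 3) z v * lap u (x + t * z)) t := by
      intro t
      refine (mav_hasDerivAt (bp_cont 2) c2 hg x t).congr_deriv ?_
      have e1 : ∀ z, bp 2 z * fd (fun y => fd u y v) (x + t * z) z =
          -(1 / 6) * (fd (bp 3) z 1 * fd (fun y => fd u y v) (x + t * z) 1 +
            fd (bp 3) z I * fd (fun y => fd u y v) (x + t * z) I) := by
        intro z
        rw [fd_dir _ _ z, bp_fderiv, bp_fderiv]
        simp
        ring
      have hj : ∀ j : ℂ, Continuous fun z => fd (fun y => fd u y v) (x + t * z) j :=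
        fun j => (cont_fd hg j).comp (by fun_prop)
      have hjj : ∀ j : ℂ, Continuous fun z => fd (fun y => fd u y j) (x + t * z) j :=
        fun j => (cont_fd (contDiff1_fd hu j) j).comp (by fun_prop)
      have int1 : ∀ j, Integrable fun z =>
          fd (bp 3) z j * fd (fun y => fd u y v) (x + t * z) j := fun j =>
        ((cont_fd b3 j).mul (hj j)).integ (hcs_fd c3 j).mul_right
      have int2 : ∀ j, Integrable fun z =>
          fd (bp 3) z v * fd (fun y => fd u y j) (x + t * z) j := fun j =>
        ((cont_fd b3 v).mul (hjj j)).integ (hcs_fd c3 v).mul_right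
      have key : ∀ j, ∫ z, fd (bp 3) z j * fd (fun y => fd u y v) (x + t * z) j =
          ∫ z, fd (bp 3) z v * fd (fun y => fd u y j) (x + t * z) j := by
        intro j
        rcases eq_or_ne t 0 with rfl | ht
        · simp only [ofReal_zero, zero_mul, add_zero]
          have z0 : ∀ j, ∫ z, fd (bp 3) z j = 0 := fun j => by
            have := ibp b3 (contDiff_const (c := (1 : ℝ))) c3 j
            simpa using this.symm
          rw [integral_mul_const, integral_mul_const, z0, z0]; simp
        · have hgj : C¹ fun z => fd u (x + t * z) j := contDiff_aff (contDiff1_fd hu j) x t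
          have dj := (contDiff1_fd hu j).differentiable bnum
          have q1 := ibp (contDiff1_fd bp_contDiff_three j) hgj (hcs_fd c3 j) v
          have q2 := ibp (contDiff1_fd bp_contDiff_three v) hgj (hcs_fd c3 v) j
          simp_rw [fd_comp dj] at q1 q2
          simp_rw [fd_swap bp_contDiff_three _ j v] at q1
          rw [← q2] at q1
          have : ∀ a b : ℂ, ∫ z, fd (bp 3) z a * (t * fd (fun y => fd u y j) (x + t * z) b)
              = t * ∫ z, fd (bp 3) z a * fd (fun y => fd u y j) (x + t * z) b := by
            intro a b
            rw [← icm]; congr 1; ext z; ring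
          rw [this, this] at q1
          simp_rw [fd_swap hu _ v j]
          exact mul_left_cancel₀ ht q1
      simp_rw [e1]
      rw [icm, integral_add (int1 1) (int1 I), key, key, ← integral_add (int2 1) (int2 I)]
      congr 2; ext z; rw [lap]; ring
    have hbd : ∀ t ∈ Set.Ico (0 : ℝ) 1, ‖-(1 / 6) * ∫ z, fd (bp 3) z v * lap u (x + t * z)‖ ≤
        (∫ z, |fd (bp 3) z v|) * M := by
      intro t ht
      have a1 : ‖∫ z, fd (bp 3) z v * lap u (x + t * z)‖ ≤ ∫ z, |fd (bp 3) z v| * M := by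
        refine norm_integral_le_of_norm_le ((i3 v).mul_const M) (.of_forall fun z => ?_)
        by_cases hz : ‖z‖ ≤ 1
        · rw [norm_mul, nabs, nabs]
          exact mul_le_l (h2 _ (mem_aff ht.1 ht.2.le hz)) (abs_nonneg _)
        · rw [hsupp 3 bnum b3 z (not_le.1 hz)]; simp
      rw [norm_mul, ← integral_mul_const]
      have : ‖(-(1 / 6) : ℝ)‖ ≤ 1 := by norm_num [abs_of_pos]
      have n0 := norm_nonneg (∫ z, fd (bp 3) z v * lap u (x + t * z))
      nlinarith
    have diff := norm_image_sub_le_of_norm_deriv_le_segment_01'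
      (fun t _ => (hder t).hasDerivWithinAt) hbd
    have one : |mav (bp 2) (fun y => fd u y v) x 1| ≤ (∫ z, |fd (bp 2) z v|) * M := by
      have q := ibp bp_contDiff_two (contDiff_aff (hu.of_le bnum : C¹ u) x 1) c2 v
      simp_rw [fd_comp (hu.differentiable bnum)] at q
      have : mav (bp 2) (fun y => fd u y v) x 1 = -∫ z, fd (bp 2) z v * u (x + (1 : ℝ) * z) := by
        rw [← q, mav]; congr 1; ext z; ring
      rw [this, abs_neg, ← integral_mul_const, ← nabs]
      refine norm_integral_le_of_norm_le ((i2 v).mul_const M) (.of_forall fun z => ?_)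
      by_cases hz : ‖z‖ ≤ 1
      · rw [norm_mul, nabs, nabs]
        exact mul_le_l (h1 _ (mem_aff zero_le_one le_rfl hz)) (abs_nonneg _)
      · rw [hsupp 2 bnum bp_contDiff_two z (not_le.1 hz)]; simp
    rw [mav_zero, nabs] at diff
    rw [div_mul_eq_mul_div, le_div_iff₀ bp_int_pos]
    have e : |fd u x v| * ∫ z, bp 2 z = |(∫ z, bp 2 z) * fd u x v| := by
      rw [abs_mul, abs_of_pos bp_int_pos, mul_comm]
    rw [e]
    rw [abs_le] at *
    constructor <;> nlinarith [diff.1, diff.2, one.1, one.2]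
  obtain ⟨C, hC, h⟩ := main 1
  obtain ⟨C', hC', h'⟩ := main I
  refine ⟨C + C', bpos, fun u x M hu h1 h2 => ?_⟩
  have hM : 0 ≤ M := (abs_nonneg _).trans (h1 x (mem_closedBall_self bnum))
  exact ⟨(h u x M hu h1 h2).trans (by nlinarith), (h' u x M hu h1 h2).trans (by nlinarith)⟩

lemma mav_one (p : ℂ → ℝ) (y : ℂ) : mav (bp 2) p y 1 = ∫ w, bp 2 (w - y) * p w := by
  rw [mav, ← integral_add_left_eq_self (fun w => bp 2 (w - y) * p w) y]
  simp

lemma mav_scale (p : ℂ → ℝ) (y : ℂ) {t : ℝ} (ht : 0 < t) :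
    mav (bp 2) p y t = (t ^ 2)⁻¹ * ∫ w, bp 2 ((t⁻¹ : ℝ) * (w - y)) * p w := by
  rw [mav, ← integral_add_left_eq_self (fun w => bp 2 ((t⁻¹ : ℝ) * (w - y)) * p w) y]
  have h := Measure.integral_comp_smul (μ := (volume : Measure ℂ))
    (fun z => bp 2 ((t⁻¹ : ℝ) * (y + z - y)) * p (y + z)) t
  rw [finrank_real_complex, abs_of_pos bpos, smul_eq_mul] at h
  rw [← h]
  congr 1; ext z
  rw [add_sub_cancel_left, real_smul, ← mul_assoc, ← ofReal_mul, inv_mul_cancel₀ ht.ne']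
  simp

lemma harnack_pos {u : ℂ → ℝ} (hu : C² u) {y z : ℂ} {κ : ℝ} (hκ : 0 ≤ κ)
    (hk : κ ≤ 1 / 16) (h0 : ∀ w ∈ 𝔹 y 4, 0 ≤ u w)
    (h1 : ∀ w ∈ 𝔹 y 4, |lap u w| ≤ κ * u w) (hz : z ∈ 𝔹 y 1) :
    u z ≤ 256 * u y := by
  rw [mem_cb] at hz
  have hsub : 𝔹 z 1 ⊆ 𝔹 y 4 := fun w hw => by
    rw [mem_cb] at *
    calc ‖w - y‖ = ‖(w - z) + (z - y)‖ := by ring_nf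
      _ ≤ _ := (norm_add_le _ _).trans blin
  have a1 := mv_sub hu (x := z) (T := 1) zero_le_one hκ blin
    (fun w hw => h0 w (hsub hw)) (fun w hw => (abs_le.1 (h1 w (hsub hw))).1)
  have a2 := mv_sup hu (x := y) (T := 4) bnum hκ blin h0
    (fun w hw => (abs_le.1 (h1 w hw)).2)
  rw [mav_one] at a1
  rw [mav_scale _ _ bnum] at a2
  have cb : ∀ (t : ℝ) (c : ℂ), Continuous fun w => bp 2 ((t : ℂ) * (w - c)) := fun t c =>
    (bp_cont 2).comp (by fun_prop)
  have a3 : ∫ w, bp 2 (w - z) * u w ≤ ∫ w, 4 * (bp 2 (((4 : ℝ)⁻¹ : ℝ) * (w - y)) * u w) := by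
    refine integral_mono ?_ ?_ fun w => ?_
    · have : Continuous fun w => bp 2 (w - z) := (bp_cont 2).comp (by fun_prop)
      refine (this.mul hu.continuous).integ
        (HasCompactSupport.intro (isCompact_closedBall z 1) fun w hw => ?_)
      rw [mem_cb, not_le] at hw
      simp only [Pi.mul_apply]; rw [bp_zero bnum hw.le, zero_mul]
    · refine (continuous_const.mul ((cb _ y).mul hu.continuous)).integ
        (HasCompactSupport.intro (isCompact_closedBall y 4) fun w hw => ?_)
      rw [mem_cb, not_le] at hw
      have : 1 ≤ ‖(((4 : ℝ)⁻¹ : ℝ) : ℂ) * (w - y)‖ := by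
        rw [norm_mul, norm_real, nabs, abs_of_pos bnum]
        linarith
      simp only [Pi.mul_apply]; rw [bp_zero bnum this, zero_mul, mul_zero]
    · beta_reduce
      by_cases hw : ‖w - z‖ ≤ 1
      · have hu0 := h0 w (hsub (by rwa [mem_cb]))
        have e1 : ‖w - y‖ ≤ 2 := by
          calc ‖w - y‖ = ‖(w - z) + (z - y)‖ := by ring_nf
            _ ≤ _ := (norm_add_le _ _).trans blin
        have e2 : ‖(((4 : ℝ)⁻¹ : ℝ) : ℂ) * (w - y)‖ ≤ 1 / 2 := by
          rw [norm_mul, norm_real, nabs, abs_of_pos bnum]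
          linarith
        have e3 : 1 ≤ 4 * bp 2 ((((4 : ℝ)⁻¹ : ℝ) : ℂ) * (w - y)) := by
          have : 1 / 2 ≤ max (1 - ‖(((4 : ℝ)⁻¹ : ℝ) : ℂ) * (w - y)‖ ^ 2) 0 := by
            refine le_trans ?_ (le_max_left _ _)
            nlinarith [norm_nonneg ((((4 : ℝ)⁻¹ : ℝ) : ℂ) * (w - y))]
          rw [bp]; nlinarith
        rw [← mul_assoc]
        exact mul_le_r ((bp_le_one _ _).trans e3) hu0
      · rw [bp_zero bnum (not_le.1 hw).le, zero_mul]
        by_cases hy : ‖w - y‖ ≤ 4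
        · have := h0 w (by rwa [mem_cb])
          have := bp_nonneg 2 ((((4 : ℝ)⁻¹ : ℝ) : ℂ) * (w - y))
          positivity
        · have : 1 ≤ ‖(((4 : ℝ)⁻¹ : ℝ) : ℂ) * (w - y)‖ := by
            rw [norm_mul, norm_real, nabs, abs_of_pos bnum]
            linarith
          rw [bp_zero bnum this]; simp
  rw [icm] at a3
  have hc := bp_int_pos
  have : (∫ w, bp 2 w) * u z ≤ (∫ w, bp 2 w) * (256 * u y) := by
    norm_num at a2 a3 ⊢
    linarith
  exact le_of_mul_le_mul_left this hc

/-- Where a solution keeps its sign, its gradient is controlled by its value at the same point. -/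
lemma hole_grad : ∃ C > 0, ∀ (u : ℂ → ℝ) (y : ℂ) (κ : ℝ), C² u → 0 ≤ κ → κ ≤ 1 / 16 →
    (∀ w ∈ 𝔹 y 4, u w ≠ 0) → (∀ w ∈ 𝔹 y 4, |lap u w| ≤ κ * |u w|) →
    |fd u y 1| ≤ C * |u y| ∧ |fd u y I| ≤ C * |u y| := by
  obtain ⟨C, hC, h⟩ := grad_est
  have hpos : ∀ (u : ℂ → ℝ) (y : ℂ) (κ : ℝ), C² u → 0 ≤ κ → κ ≤ 1 / 16 →
    (∀ w ∈ 𝔹 y 4, 0 < u w) → (∀ w ∈ 𝔹 y 4, |lap u w| ≤ κ * |u w|) →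
    |fd u y 1| ≤ C * 256 * |u y| ∧ |fd u y I| ≤ C * 256 * |u y| := by
    intro u y κ hu h0 h1 h2 h3
    have hs : 𝔹 y 1 ⊆ 𝔹 y 4 := closedBall_subset_closedBall bnum
    have hb : ∀ w ∈ 𝔹 y 1, |u w| ≤ 256 * |u y| := fun w hw => by
      rw [abs_of_pos (h2 w (hs hw)), abs_of_pos (h2 y (mem_closedBall_self bnum))]
      exact harnack_pos hu h0 h1 (fun w hw => (h2 w hw).le)
        (fun w hw => by have := h3 w hw; rwa [abs_of_pos (h2 w hw)] at this) hw
    have := h u y (256 * |u y|) hu hb fun w hw => (h3 w (hs hw)).trans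
      ((mul_le_of_le_one_left (abs_nonneg _) blin).trans (hb w hw))
    simpa [mul_assoc] using this
  refine ⟨C * 256, bpos, fun u y κ hu h0 h1 h2 h3 => ?_⟩
  have hsign : (∀ w ∈ 𝔹 y 4, 0 < u w) ∨ (∀ w ∈ 𝔹 y 4, u w < 0) := by
    have hpc : IsPreconnected (𝔹 y 4) := (convex_closedBall y 4).isPreconnected
    by_contra! hcon
    obtain ⟨⟨a, ha, ha'⟩, b, hb, hb'⟩ := hcon
    obtain ⟨c, hc, hc'⟩ := hpc.intermediate_value ha hb hu.continuous.continuousOn ⟨ha', hb'⟩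
    exact h2 c hc hc'
  rcases hsign with hs | hs
  · exact hpos u y κ hu h0 h1 hs h3
  · have e1 : ∀ z v, fd (fun w => -u w) z v = -fd u z v := fun z v => by rw [fderiv_fun_neg]; rfl
    have e2 : ∀ z, lap (fun w => -u w) z = -lap u z := fun z => by
      rw [lap]; simp_rw [e1]; rw [fderiv_fun_neg, fderiv_fun_neg, lap]
      simp; ring
    have := hpos (fun w => -u w) y κ hu.neg h0 h1 (fun w hw => neg_pos.2 (hs w hw))
      (fun w hw => by rw [e2, abs_neg, abs_neg]; exact h3 w hw)
    simpa [e1] using this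

lemma point_est {u : ℂ → ℝ} (hu : C² u) {x : ℂ} {κ : ℝ} (hκ : 0 ≤ κ)
    (hk : κ ≤ 1 / 2) (h1 : ∀ w ∈ 𝔹 x 1, |lap u w| ≤ κ * |u w|) :
    (∫ z, bp 2 z) * u x ^ 2 ≤ 2 * ∫ w, bp 2 (w - x) * u w ^ 2 := by
  rw [← mav_one (fun w => u w ^ 2)]
  refine mv_sub (p := fun w => u w ^ 2) (κ := 2 * κ) (hu.pow 2) zero_le_one bpos
    blin (fun w _ => sq_nonneg _) fun w hw => ?_
  rw [lap_sq hu]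
  have a := h1 w hw
  have b : |u w * lap u w| ≤ κ * u w ^ 2 := by
    rw [abs_mul, ← sq_abs (u w)]
    nlinarith [abs_nonneg (u w)]
  nlinarith [(abs_le.1 b).1, sq_nonneg (fd u w 1), sq_nonneg (fd u w I)]

lemma lap_nonneg_min {f : ℂ → ℝ} (hf : C² f) {p : ℂ} (h0 : f p = 0)
    (h : ∀ᶠ y in 𝓝 p, 0 ≤ f y) : 0 ≤ lap f p := by
  by_contra! hneg
  have h2 : ∀ᶠ y in 𝓝 p, lap f y < 0 := (lap_cont hf).continuousAt.eventually_lt_const hneg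
  obtain ⟨ε, hε, hb⟩ := Metric.eventually_nhds_iff_ball.1 (h.and h2)
  have hs : 𝔹 p (ε / 2) ⊆ ball p ε := closedBall_subset_ball blin
  have a := mv_sup hf (x := p) (T := ε / 2) (κ := 0) blin le_rfl (by simp)
    (fun y hy => (hb y (hs hy)).1) (fun y hy => by linarith [(hb y (hs hy)).2])
  rw [h0, mul_zero, mul_zero] at a
  have hz : ∀ y ∈ ball p (ε / 2), f y = 0 := by
    intro y hy
    by_contra hne
    have hcont : Continuous fun z : ℂ => bp 2 z * f (p + ((ε / 2 : ℝ) : ℂ) * z) :=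
      (bp_cont 2).mul (hf.continuous.comp (by fun_prop))
    have hpos : 0 < mav (bp 2) f p (ε / 2) := by
      refine hcont.integral_pos_of_hasCompactSupport_nonneg_nonzero
        (bp_hcs bnum).mul_right (fun z => ?_) (x := ((ε / 2 : ℝ) : ℂ)⁻¹ * (y - p)) ?_
      · by_cases hz : ‖z‖ ≤ 1
        · exact mul_nonneg (bp_nonneg 2 z) (hb _ (hs (mem_aff blin le_rfl hz))).1
        · rw [bp_zero bnum (not_le.1 hz).le]; simp
      · have e0 : ((ε / 2 : ℝ) : ℂ) ≠ 0 := by rw [ofReal_ne_zero]; positivity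
        rw [mul_inv_cancel_left₀ e0, add_sub_cancel]
        refine mul_ne_zero ?_ hne
        have : ‖((ε / 2 : ℝ) : ℂ)⁻¹ * (y - p)‖ < 1 := by
          rw [norm_mul, norm_inv, norm_real, nabs, abs_of_pos blin,
            inv_mul_lt_iff₀ blin, mul_one, ← dist_eq_norm]
          exact hy
        have h3 : 0 < 1 - ‖((ε / 2 : ℝ) : ℂ)⁻¹ * (y - p)‖ ^ 2 := by
          nlinarith [norm_nonneg (((ε / 2 : ℝ) : ℂ)⁻¹ * (y - p))]
        rw [bp, max_eq_left h3.le]; positivity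
    linarith
  have := lap_zero_on isOpen_ball hz p (mem_ball_self blin)
  linarith

lemma lap_sub_quad {u : ℂ → ℝ} (hu : C² u) (c : ℂ) (α β : ℝ) (z : ℂ) :
    lap (fun z => u z - (α + β * ‖z - c‖ ^ 2)) z = lap u z - 4 * β := by
  have hd := hu.differentiable bnum
  have hq : ∀ y : ℂ, ℂ → HasFDerivAt (fun z : ℂ => ‖z - c‖ ^ 2) (2 • innerSL ℝ (y - c)) y :=
    fun y _ => by
      have h := (hasStrictFDerivAt_norm_sq (y - c)).hasFDerivAt.comp y
        ((hasFDerivAt_id y).sub_const c)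
      rw [ContinuousLinearMap.comp_id] at h
      exact h
  have h1 : ∀ y v, fd (fun z => u z - (α + β * ‖z - c‖ ^ 2)) y v =
      fd u y v - 2 * β * ((y.re - c.re) * v.re + (y.im - c.im) * v.im) := fun y v => by
    rw [((hd y).hasFDerivAt.fun_sub (((hq y v).const_mul β).const_add α)).fderiv]
    simp [inner]
    ring
  have r1 : HasFDerivAt (fun y : ℂ => 2 * β * (y.re - c.re)) ((2 * β) • reCLM) z :=
    ((reCLM.hasFDerivAt (x := z)).sub_const c.re).const_mul (2 * β)
  have r2 : HasFDerivAt (fun y : ℂ => 2 * β * (y.im - c.im)) ((2 * β) • imCLM) z :=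
    ((imCLM.hasFDerivAt (x := z)).sub_const c.im).const_mul (2 * β)
  rw [lap]; simp_rw [h1]
  simp only [one_re, one_im, I_re, I_im, mul_one, mul_zero, add_zero, zero_add]
  have d1 := (contDiff1_fd hu 1).differentiable bnum z
  have d2 := (contDiff1_fd hu I).differentiable bnum z
  rw [(d1.hasFDerivAt.fun_sub r1).fderiv, (d2.hasFDerivAt.fun_sub r2).fderiv, lap]
  simp
  ring

/-- A solution with a zero in a small disc has a zero on the boundary circle. -/
lemma zero_circle {u : ℂ → ℝ} (hu : C² u) {c : ℂ} {τ κ : ℝ} (hτ : 0 < τ) (hκ : 0 < κ)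
    (hk : κ * τ ^ 2 ≤ 1 / 4) (h1 : ∀ w ∈ 𝔹 c τ, |lap u w| ≤ κ * |u w|)
    (h0 : ∃ z ∈ 𝔹 c τ, u z = 0) : ∃ z, ‖z - c‖ = τ ∧ u z = 0 := by
  have hpos : ∀ u : ℂ → ℝ, C² u → (∀ w ∈ 𝔹 c τ, |lap u w| ≤ κ * |u w|) →
      (∃ z ∈ 𝔹 c τ, u z = 0) → ¬ ∀ z ∈ sphere c τ, 0 < u z := by
    rintro u hu h1 ⟨z0, hz0, hz0'⟩ hs
    obtain ⟨q, hq, hqm⟩ := (isCompact_sphere c τ).exists_isMinOn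
      (NormedSpace.sphere_nonempty.2 hτ.le) hu.continuous.continuousOn
    set l := u q / 2 with hl
    have hl0 : 0 < l := by have := hs q hq; positivity
    have hφ : ∀ z ∈ 𝔹 c τ, κ * ‖z - c‖ ^ 2 ≤ 1 / 4 := fun z hz => by
      rw [mem_cb] at hz
      have : ‖z - c‖ ^ 2 ≤ τ ^ 2 := pow_le_pow_left₀ (norm_nonneg _) hz 2
      nlinarith
    have hkn : ∀ z, 0 ≤ κ * ‖z - c‖ ^ 2 := fun z => bpos
    obtain ⟨p, hp, hpm⟩ := (isCompact_closedBall c τ).exists_isMinOn ⟨z0, hz0⟩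
      (f := fun z => (u z - l * (1 + κ * ‖z - c‖ ^ 2)) / (2 - κ * ‖z - c‖ ^ 2))
      (ContinuousOn.div (by have := hu.continuous; fun_prop) (by fun_prop) fun z hz => by
        have := hφ z hz; linarith)
    set m := (u p - l * (1 + κ * ‖p - c‖ ^ 2)) / (2 - κ * ‖p - c‖ ^ 2) with hm
    have hge : ∀ z ∈ 𝔹 c τ,
        m * (2 - κ * ‖z - c‖ ^ 2) ≤ u z - l * (1 + κ * ‖z - c‖ ^ 2) := fun z hz => by
      have h3 : m ≤ (u z - l * (1 + κ * ‖z - c‖ ^ 2)) / (2 - κ * ‖z - c‖ ^ 2) := hpm hz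
      rwa [le_div_iff₀ (by have := hφ z hz; linarith)] at h3
    have hpe : m * (2 - κ * ‖p - c‖ ^ 2) = u p - l * (1 + κ * ‖p - c‖ ^ 2) := by
      rw [hm, div_mul_cancel₀]; have := hφ p hp; linarith
    have hm0 : m < 0 := by
      by_contra! hcon
      have a := hge z0 hz0
      rw [hz0'] at a
      have b := hφ z0 hz0
      have := hkn z0
      nlinarith [mul_nonneg hcon (by linarith : 0 ≤ 2 - κ * ‖z0 - c‖ ^ 2)]
    have hpb : p ∈ ball c τ := by
      by_contra hcon
      have hps : p ∈ sphere c τ := by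
        rw [mem_sphere]; rw [mem_ball, not_lt] at hcon
        exact le_antisymm hp hcon
      have a : u q ≤ u p := hqm hps
      have b := hφ p hp
      have : u q = 2 * l := by rw [hl]; ring
      nlinarith
    have hf : C² fun z => u z - ((l + 2 * m) + (l * κ - m * κ) * ‖z - c‖ ^ 2) :=
      hu.sub (contDiff_const.add (contDiff_const.mul ((contDiff_id.sub contDiff_const).norm_sq ℝ)))
    have hmin := lap_nonneg_min hf (p := p) blin (by
      filter_upwards [isOpen_ball.mem_nhds hpb] with z hz
      have := hge z (ball_subset_closedBall hz)
      linarith)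
    rw [lap_sub_quad hu] at hmin
    have a := (abs_le.1 (h1 p hp)).2
    have b := hφ p hp
    have b' := hkn p
    have e : |u p| ≤ 2 * l - 2 * m := by
      have : u p = l * (1 + κ * ‖p - c‖ ^ 2) + m * (2 - κ * ‖p - c‖ ^ 2) := blin
      rw [this, abs_le]
      constructor <;> nlinarith
    nlinarith
  by_contra! hcon
  have hpc : IsPreconnected (sphere c τ) := isPreconnected_sphere (by simp) c τ
  have hsign : (∀ w ∈ sphere c τ, 0 < u w) ∨ (∀ w ∈ sphere c τ, u w < 0) := by
    by_contra! hc2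
    obtain ⟨⟨a, ha, ha'⟩, b, hb, hb'⟩ := hc2
    obtain ⟨d, hd, hd'⟩ := hpc.intermediate_value ha hb hu.continuous.continuousOn ⟨ha', hb'⟩
    exact hcon d (by rwa [mem_sphere, dist_eq_norm] at hd) hd'
  rcases hsign with hs | hs
  · exact hpos u hu h1 h0 hs
  · have e1 : ∀ z v, fd (fun w => -u w) z v = -fd u z v := fun z v => by rw [fderiv_fun_neg]; rfl
    have e2 : ∀ z, lap (fun w => -u w) z = -lap u z := fun z => by
      rw [lap]; simp_rw [e1]; rw [fderiv_fun_neg, fderiv_fun_neg, lap]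
      simp; ring
    refine hpos (fun w => -u w) hu.neg (fun w hw => ?_) ?_ fun w hw => neg_pos.2 (hs w hw)
    · rw [e2, abs_neg, abs_neg]; exact h1 w hw
    · obtain ⟨z, hz, hz'⟩ := h0
      exact ⟨z, hz, by rw [hz', neg_zero]⟩

/-! ### Radial cutoffs -/

lemma st_contDiff {n : ℕ∞} : ContDiff ℝ n sm := Real.smoothTransition.contDiff

lemma st_mem (x : ℝ) : 0 ≤ sm x ∧ sm x ≤ 1 :=
  ⟨Real.smoothTransition.nonneg x, Real.smoothTransition.le_one x⟩

lemma st_contDiff' : C¹ (deriv sm) :=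
  ((contDiff_succ_iff_deriv (n := 1)).1 (st_contDiff (n := 2))).2.2

/-- At a point where the smooth step takes one of its extreme values its first two derivatives
vanish. -/
lemma st_deriv_zero {x : ℝ} (hx : x ≤ 0 ∨ 1 ≤ x) :
    deriv sm x = 0 ∧ deriv (deriv sm) x = 0 := by
  have h1 : ∀ x : ℝ, x ≤ 0 ∨ 1 ≤ x → deriv sm x = 0 := by
    rintro x (hx | hx)
    · refine IsLocalMin.deriv_eq_zero (.of_forall fun y => ?_)
      rw [Real.smoothTransition.zero_of_nonpos hx]
      exact (st_mem y).1
    · refine IsLocalMax.deriv_eq_zero (.of_forall fun y => ?_)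
      rw [Real.smoothTransition.one_of_one_le hx]
      exact (st_mem y).2
  have hmono : Monotone sm := by exact Real.smoothTransition.monotone
  refine ⟨h1 x hx, IsLocalMin.deriv_eq_zero (.of_forall fun y => ?_)⟩
  rw [h1 x hx]
  exact hmono.deriv_nonneg

lemma st_bound : ∃ C : ℝ, 1 ≤ C ∧ ∀ x, |deriv sm x| ≤ C ∧
    |deriv (deriv sm) x| ≤ C := by
  have hc : HCS (deriv sm) :=
    HasCompactSupport.intro (isCompact_Icc (a := (0 : ℝ)) (b := 1)) fun x hx => by
      refine (st_deriv_zero ?_).1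
      rw [Set.mem_Icc, not_and_or] at hx
      rcases hx with h | h
      · exact .inl (not_le.1 h).le
      · exact .inr (not_le.1 h).le
  have hc2 : HCS (deriv (deriv sm)) := hc.deriv
  obtain ⟨C1, h1⟩ := hc.exists_bound_of_continuous st_contDiff'.continuous
  obtain ⟨C2, h2⟩ := hc2.exists_bound_of_continuous
    (st_contDiff'.continuous_deriv le_rfl)
  refine ⟨max 1 (max C1 C2), le_max_left _ _, fun x => ⟨(h1 x).trans ?_, (h2 x).trans ?_⟩⟩ <;> simp

/-- Radial smooth cutoff about `x`: it equals `1` where `α - β r² ≥ 1` and `0` where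
`α - β r² ≤ 0`. -/
def ct (α β : ℝ) (x z : ℂ) : ℝ := sm (α - β * ‖z - x‖ ^ 2)

lemma hasFDerivAt_nsq (x z : ℂ) :
    HasFDerivAt (fun z : ℂ => ‖z - x‖ ^ 2) (2 • innerSL ℝ (z - x)) z := by
  have h := (hasStrictFDerivAt_norm_sq (z - x)).hasFDerivAt.comp z ((hasFDerivAt_id z).sub_const x)
  rw [ContinuousLinearMap.comp_id] at h
  exact h

lemma contDiff_nsq {n : ℕ∞} (x : ℂ) : ContDiff ℝ n fun z : ℂ => ‖z - x‖ ^ 2 :=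
  (contDiff_id.sub contDiff_const).norm_sq ℝ

lemma ipr (x z v : ℂ) : (2 • innerSL ℝ (z - x) : ℂ →L[ℝ] ℝ) v =
    2 * ((z.re - x.re) * v.re + (z.im - x.im) * v.im) := by
  simp [inner]; ring

lemma ipr' (x z v : ℂ) : innerSL ℝ (z - x) v = (z.re - x.re) * v.re + (z.im - x.im) * v.im := by
  simp [inner]; ring

/-- Derivatives of a radial function `φ(‖z - x‖²)`. -/
lemma radial_fderiv {φ φ' : ℝ → ℝ} (x z v : ℂ) (h : ∀ t, 0 ≤ t → HasDerivAt φ (φ' t) t) :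
    fd (fun z : ℂ => φ (‖z - x‖ ^ 2)) z v =
      φ' (‖z - x‖ ^ 2) * (2 * ((z.re - x.re) * v.re + (z.im - x.im) * v.im)) := by
  have h3 := ((h (‖z - x‖ ^ 2) (sq_nonneg _)).comp_hasFDerivAt z (hasFDerivAt_nsq x z)).fderiv
  have h4 : fd (fun z : ℂ => φ (‖z - x‖ ^ 2)) z = _ := h3
  rw [h4, smul_apply, ipr, smul_eq_mul]

lemma radial_lap {φ φ' φ'' : ℝ → ℝ} (x z : ℂ) (h : ∀ t, 0 ≤ t → HasDerivAt φ (φ' t) t)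
    (h' : ∀ t, 0 ≤ t → HasDerivAt φ' (φ'' t) t) :
    lap (fun z : ℂ => φ (‖z - x‖ ^ 2)) z =
      4 * ‖z - x‖ ^ 2 * φ'' (‖z - x‖ ^ 2) + 4 * φ' (‖z - x‖ ^ 2) := by
  have hp := (h' (‖z - x‖ ^ 2) (sq_nonneg _)).comp_hasFDerivAt z (hasFDerivAt_nsq x z)
  have r1 : HasFDerivAt (fun y : ℂ => 2 * (y.re - x.re)) ((2 : ℝ) • reCLM) z :=
    ((reCLM.hasFDerivAt (x := z)).sub_const x.re).const_mul 2
  have r2 : HasFDerivAt (fun y : ℂ => 2 * (y.im - x.im)) ((2 : ℝ) • imCLM) z :=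
    ((imCLM.hasFDerivAt (x := z)).sub_const x.im).const_mul 2
  rw [lap]
  simp_rw [fun y v => radial_fderiv x y v h]
  simp only [one_re, one_im, I_re, I_im, mul_one, mul_zero, add_zero, zero_add]
  have e1 : fd (fun w : ℂ => φ' (‖w - x‖ ^ 2) * (2 * (w.re - x.re))) z = _ := (hp.fun_mul r1).fderiv
  have e2 : fd (fun w : ℂ => φ' (‖w - x‖ ^ 2) * (2 * (w.im - x.im))) z = _ := (hp.fun_mul r2).fderiv
  rw [e1, e2]
  simp only [add_apply, smul_apply, ipr', smul_eq_mul, nsmul_eq_mul,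
    reCLM_apply, imCLM_apply, one_re, one_im, I_re, I_im, Function.comp_apply]
  push_cast
  have e3 : ‖z - x‖ ^ 2 = (z.re - x.re) ^ 2 + (z.im - x.im) ^ 2 := by
    rw [← normSq_eq_norm_sq, normSq_apply]; simp; ring
  rw [e3]; ring

lemma ct_contDiff {n : ℕ∞} (α β : ℝ) (x : ℂ) : ContDiff ℝ n (ct α β x) :=
  st_contDiff.comp (contDiff_const.sub (contDiff_const.mul (contDiff_nsq x)))

lemma ct_mem (α β : ℝ) (x z : ℂ) : 0 ≤ ct α β x z ∧ ct α β x z ≤ 1 := st_mem _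

lemma ct_one {α β : ℝ} {x z : ℂ} (h : 1 ≤ α - β * ‖z - x‖ ^ 2) : ct α β x z = 1 :=
  Real.smoothTransition.one_of_one_le h

lemma ct_zero {α β : ℝ} {x z : ℂ} (h : α - β * ‖z - x‖ ^ 2 ≤ 0) : ct α β x z = 0 :=
  Real.smoothTransition.zero_of_nonpos h

lemma abs_ip_le (x z v : ℂ) (hv : v = 1 ∨ v = I) :
    |2 * ((z.re - x.re) * v.re + (z.im - x.im) * v.im)| ≤ 2 * ‖z - x‖ := by
  have h1 := abs_re_le_norm (z - x)
  have h2 := abs_im_le_norm (z - x)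
  rw [sub_re] at h1
  rw [sub_im] at h2
  rcases hv with rfl | rfl <;> simp [abs_mul] <;> linarith

lemma st_aff (α β t : ℝ) : HasDerivAt (fun t => sm (α - β * t))
    (-β * deriv sm (α - β * t)) t := by
  have h1 : HasDerivAt (fun t : ℝ => α - β * t) (-β) t := by
    simpa using ((hasDerivAt_id t).const_mul β).const_sub α
  have h2 : HasDerivAt sm (deriv sm (α - β * t)) (α - β * t) :=
    ((st_contDiff (n := 1)).differentiable bnum _).hasDerivAt
  have h3 := h2.comp t h1
  rw [mul_comm] at h3
  exact h3

lemma st_aff' (α β t : ℝ) :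
    HasDerivAt (fun t => -β * deriv sm (α - β * t))
    (β ^ 2 * deriv (deriv sm) (α - β * t)) t := by
  have h1 : HasDerivAt (fun t : ℝ => α - β * t) (-β) t := by
    simpa using ((hasDerivAt_id t).const_mul β).const_sub α
  have h2 : HasDerivAt (deriv sm)
      (deriv (deriv sm) (α - β * t)) (α - β * t) :=
    (st_contDiff'.differentiable bnum _).hasDerivAt
  exact ((h2.comp t h1).const_mul (-β)).congr_deriv (by ring)

lemma ct_flat {α β : ℝ} {x z : ℂ} (h : α - β * ‖z - x‖ ^ 2 ≤ 0 ∨ 1 ≤ α - β * ‖z - x‖ ^ 2) :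
    (∀ v, fd (ct α β x) z v = 0) ∧ lap (ct α β x) z = 0 := by
  have h0 := st_deriv_zero h
  refine ⟨fun v => ?_, ?_⟩
  · have := radial_fderiv x z v (fun t _ => st_aff α β t)
    rw [h0.1, mul_zero, zero_mul] at this
    exact this
  · have := radial_lap x z (fun t _ => st_aff α β t) (fun t _ => st_aff' α β t)
    rw [h0.1, h0.2, mul_zero, mul_zero, mul_zero, mul_zero, add_zero] at this
    exact this

/-- Uniform derivative bounds for the radial cutoffs. -/
lemma ct_bound : ∃ C : ℝ, 1 ≤ C ∧ ∀ (α β : ℝ) (x z : ℂ), 0 ≤ β →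
    (∀ v, v = 1 ∨ v = I → |fd (ct α β x) z v| ≤ C * (β * ‖z - x‖)) ∧
    |lap (ct α β x) z| ≤ C * (β ^ 2 * ‖z - x‖ ^ 2 + β) := by
  obtain ⟨C, hC, hb⟩ := st_bound
  refine ⟨4 * C, blin, fun α β x z hβ => ⟨fun v hv => ?_, ?_⟩⟩
  · have := radial_fderiv x z v (fun t _ => st_aff α β t)
    have e : fd (ct α β x) z v = _ := this
    rw [e, abs_mul, abs_mul, abs_neg, abs_of_nonneg hβ]
    have h1 := (hb (α - β * ‖z - x‖ ^ 2)).1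
    have h2 := abs_ip_le x z v hv
    calc _ ≤ β * C * (2 * ‖z - x‖) := by gcongr
      _ ≤ _ := by nlinarith [mul_nonneg (mul_nonneg (by linarith : 0 ≤ C) hβ) (norm_nonneg (z - x))]
  · have := radial_lap x z (fun t _ => st_aff α β t) (fun t _ => st_aff' α β t)
    have e : lap (ct α β x) z = _ := this
    rw [e]
    have h1 := hb (α - β * ‖z - x‖ ^ 2)
    refine (abs_add_le _ _).trans ?_
    rw [abs_mul, abs_mul, abs_mul, abs_mul, abs_mul, abs_neg, abs_of_nonneg hβ, abs_pow, abs_norm,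
      abs_of_nonneg (sq_nonneg β), abs_of_pos (by norm_num : (0:ℝ) < 4)]
    calc _ ≤ 4 * ‖z - x‖ ^ 2 * (β ^ 2 * C) + 4 * (β * C) := by
          gcongr
          exacts [h1.2, h1.1]
      _ = _ := by ring

/-- Product rule for the Laplacian. -/
lemma lap_mul {f g : ℂ → ℝ} (hf : C² f) (hg : C² g) (z : ℂ) :
    lap (fun w => f w * g w) z = f z * lap g z + g z * lap f z +
      2 * (fd f z 1 * fd g z 1 + fd f z I * fd g z I) := by
  have df := hf.differentiable bnum
  have dg := hg.differentiable bnum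
  have h1 : ∀ y v, fd (fun w => f w * g w) y v = f y * fd g y v + g y * fd f y v := fun y v => by
    have := ((df y).hasFDerivAt.fun_mul (dg y).hasFDerivAt).fderiv
    rw [this]; simp
  have h2 : ∀ v, fd (fun y => f y * fd g y v + g y * fd f y v) z v =
      f z * fd (fun y => fd g y v) z v + g z * fd (fun y => fd f y v) z v
       + 2 * (fd f z v * fd g z v) := fun v => by
    have a := (contDiff1_fd hf v).differentiable bnum z
    have b := (contDiff1_fd hg v).differentiable bnum z
    have := (((df z).hasFDerivAt.fun_mul b.hasFDerivAt).fun_add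
      ((dg z).hasFDerivAt.fun_mul a.hasFDerivAt)).fderiv
    rw [this]; simp; ring
  rw [lap]; simp_rw [h1]
  rw [h2, h2, lap, lap]; ring

lemma fd_mul {f g : ℂ → ℝ} (hf : C¹ f) (hg : C¹ g) (z v : ℂ) :
    fd (fun w => f w * g w) z v = f z * fd g z v + g z * fd f z v := by
  have := ((hf.differentiable bnum z).hasFDerivAt.fun_mul
    (hg.differentiable bnum z).hasFDerivAt).fderiv
  rw [this]; simp

lemma lap_add {f g : ℂ → ℝ} (hf : C² f) (hg : C² g) (z : ℂ) :
    lap (fun w => f w + g w) z = lap f z + lap g z := by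
  have df := hf.differentiable bnum
  have dg := hg.differentiable bnum
  rw [lap]
  have h1 : ∀ y v, fd (fun w => f w + g w) y v = fd f y v + fd g y v := fun y v => by
      have := ((df y).hasFDerivAt.fun_add (dg y).hasFDerivAt).fderiv
      rw [this]; simp
  simp_rw [h1]
  have h2 : ∀ v, fd (fun y => fd f y v + fd g y v) z v =
      fd (fun y => fd f y v) z v + fd (fun y => fd g y v) z v := fun v => by
    have a := (contDiff1_fd hf v).differentiable bnum z
    have b := (contDiff1_fd hg v).differentiable bnum z
    have := (a.hasFDerivAt.fun_add b.hasFDerivAt).fderiv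
    rw [this]; simp
  rw [h2, h2, lap, lap]; ring

lemma lap_sum {ι : Type*} (F : Finset ι) {f : ι → ℂ → ℝ} (hf : ∀ i ∈ F, C² (f i))
    (z : ℂ) : lap (fun w => ∑ i ∈ F, f i w) z = ∑ i ∈ F, lap (f i) z := by
  classical
  induction F using Finset.induction_on with
  | empty => simp [lap]
  | insert a s ha ih =>
    simp_rw [sum_insert ha]
    rw [lap_add (hf a (mem_insert_self _ _))
      (ContDiff.sum fun i hi => hf i (mem_insert_of_mem hi)),
      ih fun i hi => hf i (mem_insert_of_mem hi)]

lemma fd_sum {ι : Type*} (F : Finset ι) {f : ι → ℂ → ℝ} (hf : ∀ i ∈ F, C¹ (f i))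
    (z v : ℂ) : fd (fun w => ∑ i ∈ F, f i w) z v = ∑ i ∈ F, fd (f i) z v := by
  have := (HasFDerivAt.fun_sum fun i hi => ((hf i hi).differentiable bnum z).hasFDerivAt).fderiv
  rw [this]; simp

/-! ### The Carleman weight -/

def lw (p z : ℂ) : ℝ := Real.log (1 + ‖z - p‖ ^ 2)

def pw (p z : ℂ) : ℝ := ((‖z - p‖ ^ 2 + 1 / 64) ^ 2)⁻¹

lemma lw_d1 (t : ℝ) (ht : 0 ≤ t) : HasDerivAt (fun t : ℝ => Real.log (1 + t)) ((1 + t)⁻¹) t := by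
  have := ((hasDerivAt_id t).const_add 1).log (by simp only [id]; linarith)
  simpa using this

lemma lw_d2 (t : ℝ) (ht : 0 ≤ t) : HasDerivAt (fun t : ℝ => (1 + t)⁻¹) (-((1 + t) ^ 2)⁻¹) t := by
  have := ((hasDerivAt_id t).const_add 1).inv (by simp only [id]; linarith)
  refine HasDerivAt.congr_deriv this ?_
  simp [neg_div]

lemma pw_d1 (t : ℝ) (ht : 0 ≤ t) : HasDerivAt (fun t : ℝ => ((t + 1 / 64) ^ 2)⁻¹)
    (-2 * ((t + 1 / 64) ^ 3)⁻¹) t := by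
  have h0 : t + 1 / 64 ≠ 0 := blin
  have := (((hasDerivAt_id t).add_const (1 / 64)).pow 2).inv (pow_ne_zero 2 h0)
  refine HasDerivAt.congr_deriv this ?_
  simp only [id, Pi.pow_apply]
  field_simp
  norm_num
  ring

lemma pw_d2 (t : ℝ) (ht : 0 ≤ t) : HasDerivAt (fun t : ℝ => -2 * ((t + 1 / 64) ^ 3)⁻¹)
    (6 * ((t + 1 / 64) ^ 4)⁻¹) t := by
  have h0 : t + 1 / 64 ≠ 0 := blin
  have := ((((hasDerivAt_id t).add_const (1 / 64)).pow 3).inv (pow_ne_zero 3 h0)).const_mul (-2)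
  refine HasDerivAt.congr_deriv this ?_
  simp only [id, Pi.pow_apply]
  field_simp
  norm_num
  ring

lemma lw_contDiff (p : ℂ) : C² (lw p) :=
  (contDiff_const.add (contDiff_nsq (n := 2) p)).log fun z => bpos

lemma pw_contDiff (p : ℂ) : C² (pw p) :=
  (((contDiff_nsq (n := 2) p).add contDiff_const).pow 2).inv fun z => bpos

lemma lw_lap (p z : ℂ) : lap (lw p) z = 4 * ((1 + ‖z - p‖ ^ 2) ^ 2)⁻¹ := by
  have e : lap (lw p) z = _ := radial_lap p z lw_d1 lw_d2
  rw [e]; field_simp; ring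

lemma pw_lap (p z : ℂ) :
    lap (pw p) z = 8 * (2 * ‖z - p‖ ^ 2 - 1 / 64) * ((‖z - p‖ ^ 2 + 1 / 64) ^ 4)⁻¹ := by
  have e : lap (pw p) z = _ := radial_lap p z pw_d1 pw_d2
  rw [e]
  have : ‖z - p‖ ^ 2 + 1 / 64 ≠ 0 := bpos
  field_simp; ring

lemma lw_nonneg (p z : ℂ) : 0 ≤ lw p z := Real.log_nonneg (by nlinarith [sq_nonneg ‖z - p‖])
lemma pw_nonneg (p z : ℂ) : 0 ≤ pw p z := by unfold pw; positivity

lemma lw_grad (p z v : ℂ) (hv : v = 1 ∨ v = I) : |fd (lw p) z v| ≤ 1 := by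
  have e : fd (lw p) z v = _ := radial_fderiv p z v lw_d1
  rw [e, abs_mul, abs_of_pos bpos, inv_mul_le_iff₀ bpos, mul_one]
  nlinarith [abs_ip_le p z v hv, sq_nonneg (‖z - p‖ - 1)]

lemma inv_le_aux (r : ℝ) (hr : 0 ≤ r) : (r ^ 2 + 1 / 64)⁻¹ ≤ 128 * (1 / (1 + r)) ^ 2 := by
  rw [div_pow, one_pow, mul_one_div, inv_le_comm₀ bpos bpos, inv_div, div_le_iff₀ bnum]
  nlinarith [sq_nonneg (r - 1)]

lemma one_div_le_aux (r : ℝ) (hr : 0 ≤ r) : 0 ≤ 1 / (1 + r) ∧ 1 / (1 + r) ≤ 1 :=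
  ⟨bpos, by rw [div_le_one blin]; linarith⟩

lemma pw_le (p z : ℂ) : pw p z ≤ 128 ^ 2 * (1 / (1 + ‖z - p‖)) ^ 3 := by
  have h := inv_le_aux ‖z - p‖ (norm_nonneg _)
  obtain ⟨h1, h2⟩ := one_div_le_aux ‖z - p‖ (norm_nonneg _)
  rw [pw, ← inv_pow]
  calc _ ≤ (128 * (1 / (1 + ‖z - p‖)) ^ 2) ^ 2 := by gcongr
    _ = 128 ^ 2 * (1 / (1 + ‖z - p‖)) ^ 4 := by ring
    _ ≤ _ := by
      gcongr 128 ^ 2 * ?_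
      exact pow_le_pow_of_le_one h1 h2 bnum

lemma pw_grad (p z v : ℂ) (hv : v = 1 ∨ v = I) :
    |fd (pw p) z v| ≤ 4 * 128 ^ 3 * (1 / (1 + ‖z - p‖)) ^ 3 := by
  have e : fd (pw p) z v = _ := radial_fderiv p z v pw_d1
  have h := inv_le_aux ‖z - p‖ (norm_nonneg _)
  obtain ⟨h1, h2⟩ := one_div_le_aux ‖z - p‖ (norm_nonneg _)
  rw [e, abs_mul, abs_mul, abs_neg, abs_of_pos (by norm_num : (0:ℝ) < 2), ← inv_pow,
    abs_of_pos bpos]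
  have h3 := abs_ip_le p z v hv
  calc _ ≤ 2 * (128 * (1 / (1 + ‖z - p‖)) ^ 2) ^ 3 * (2 * (1 + ‖z - p‖)) := by
        gcongr; exact h3.trans blin
    _ = 4 * 128 ^ 3 * ((1 / (1 + ‖z - p‖)) ^ 5 * (1 / (1 + ‖z - p‖) * (1 + ‖z - p‖))) := by ring
    _ ≤ _ := by
      rw [one_div_mul_cancel bpos, mul_one]
      gcongr 4 * 128 ^ 3 * ?_
      exact pow_le_pow_of_le_one h1 h2 bnum

lemma lip_of_grad {f : ℂ → ℝ} (hf : C¹ f) {C : ℝ}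
    (h : ∀ z v, v = 1 ∨ v = I → |fd f z v| ≤ C) (z z' : ℂ) :
    |f z - f z'| ≤ 2 * C * ‖z - z'‖ := by
  have hC : 0 ≤ C := (abs_nonneg _).trans (h 0 1 (.inl rfl))
  refine Convex.norm_image_sub_le_of_norm_fderiv_le (𝕜 := ℝ) (s := Set.univ)
    (fun x _ => hf.differentiable bnum x) (fun x _ => ?_) convex_univ trivial trivial
  refine ContinuousLinearMap.opNorm_le_bound _ bpos fun v => ?_
  rw [fd_dir, nabs]
  refine (abs_add_le _ _).trans ?_
  rw [abs_mul, abs_mul]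
  have h1 := h x 1 (.inl rfl)
  have h2 := h x I (.inr rfl)
  have h3 := abs_re_le_norm v
  have h4 := abs_im_le_norm v
  calc _ ≤ ‖v‖ * C + ‖v‖ * C := by gcongr
    _ = _ := by ring

/-- The Carleman weight: logarithmic weights centred at `0` and `z1`, and a bump at each hole. -/
def wt (z1 : ℂ) (F : Idx) (z : ℂ) : ℝ := lw 0 z + lw z1 z + ∑ m ∈ F, pw (pt m) z

lemma wt_contDiff (z1 : ℂ) (F : Idx) : C² (wt z1 F) :=
  ((lw_contDiff 0).add (lw_contDiff z1)).add (ContDiff.sum fun m _ => pw_contDiff (pt m))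

lemma wt_nonneg (z1 : ℂ) (F : Idx) (z : ℂ) : 0 ≤ wt z1 F z :=
  add_nonneg (add_nonneg (lw_nonneg _ _) (lw_nonneg _ _)) (sum_nonneg fun _ _ => pw_nonneg _ _)

/-- A point lies within distance `R` of `0`, `z1` or one of the lattice points indexed by `F`. -/
def near (z1 : ℂ) (F : Idx) (R : ℝ) (z : ℂ) : Prop := ‖z‖ ≤ R ∨ ‖z - z1‖ ≤ R ∨ ∃ m ∈ F, dpt z m ≤ R

lemma wt_props : ∃ C : ℝ, 1 ≤ C ∧ ∃ κ : ℝ, 0 < κ ∧ ∀ (z1 : ℂ) (F : Idx),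
    (∀ z, wt z1 F z ≤ Real.log (1 + ‖z‖ ^ 2) + Real.log (1 + ‖z - z1‖ ^ 2) + C) ∧
    (∀ z v, v = 1 ∨ v = I → |fd (wt z1 F) z v| ≤ C) ∧
    (∀ z z', |wt z1 F z - wt z1 F z'| ≤ C * ‖z - z'‖) ∧
    (∀ z, (∀ m ∈ F, 1 / 8 ≤ dpt z m) → 0 ≤ lap (wt z1 F) z) ∧
    (∀ z, (∀ m ∈ F, 1 / 8 ≤ dpt z m) → near z1 F 150 z → 2 * κ ≤ lap (wt z1 F) z) := by
  have hg : ∀ (z1 : ℂ) (F : Idx) z v, v = 1 ∨ v = I →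
      |fd (wt z1 F) z v| ≤ 2 + 4 * 128 ^ 4 := by
    intro z1 F z v hv
    have d0 := (lw_contDiff 0).differentiable bnum z
    have d1 := (lw_contDiff z1).differentiable bnum z
    have d2 : DA (fun w => ∑ m ∈ F, pw (pt m) w) z :=
      (ContDiff.sum (n := 2) fun m _ => pw_contDiff (pt m)).differentiable bnum z
    have e : fd (wt z1 F) z = _ :=
      ((d0.hasFDerivAt.fun_add d1.hasFDerivAt).fun_add d2.hasFDerivAt).fderiv
    rw [e, add_apply, add_apply, fd_sum F fun m _ => (pw_contDiff (pt m)).of_le bnum]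
    refine (abs_add_le _ _).trans (add_le_add ((abs_add_le _ _).trans ?_) ?_)
    · linarith [lw_grad 0 z v hv, lw_grad z1 z v hv]
    · refine (abs_sum_le_sum_abs _ _).trans ?_
      refine (sum_le_sum fun m _ => pw_grad (pt m) z v hv).trans ?_
      rw [← mul_sum]
      nlinarith [sum_three z F]
  have hl : ∀ (z1 : ℂ) (F : Idx) z, lap (wt z1 F) z =
      4 * ((1 + ‖z - 0‖ ^ 2) ^ 2)⁻¹ + 4 * ((1 + ‖z - z1‖ ^ 2) ^ 2)⁻¹ + ∑ m ∈ F,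
        8 * (2 * dpt z m ^ 2 - 1 / 64) * ((dpt z m ^ 2 + 1 / 64) ^ 4)⁻¹ := by
    intro z1 F z
    have e : lap (wt z1 F) z = _ := lap_add ((lw_contDiff 0).add (lw_contDiff z1))
      (ContDiff.sum (s := F) fun m _ => pw_contDiff (pt m)) z
    have e2 : lap (fun w => lw 0 w + lw z1 w) z = _ := lap_add (lw_contDiff 0) (lw_contDiff z1) z
    rw [e]
    erw [e2]
    rw [lap_sum F fun m _ => pw_contDiff (pt m), lw_lap, lw_lap]
    congr 1
    exact sum_congr rfl fun m _ => pw_lap _ _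
  have hn : ∀ (F : Idx) z, (∀ m ∈ F, 1 / 8 ≤ dpt z m) → ∀ m ∈ F,
      1 / 8 * ((dpt z m ^ 2 + 1 / 64) ^ 4)⁻¹ ≤
        8 * (2 * dpt z m ^ 2 - 1 / 64) * ((dpt z m ^ 2 + 1 / 64) ^ 4)⁻¹ := by
    intro F z h m hm
    have := h m hm
    gcongr
    nlinarith
  have hp : ∀ (F : Idx) z, (∀ m ∈ F, 1 / 8 ≤ dpt z m) → 0 ≤ ∑ m ∈ F,
        8 * (2 * dpt z m ^ 2 - 1 / 64) * ((dpt z m ^ 2 + 1 / 64) ^ 4)⁻¹ := fun F z h =>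
    sum_nonneg fun m hm => (by positivity : (0 : ℝ) ≤ _).trans (hn F z h m hm)
  refine ⟨2 * (2 + 4 * 128 ^ 4), bnum,
    1 / 16 * ((150 ^ 2 + 1) ^ 4)⁻¹, bpos, fun z1 F => ⟨fun z => ?_,
      fun z v hv => (hg z1 F z v hv).trans bnum,
      lip_of_grad ((wt_contDiff z1 F).of_le bnum) (hg z1 F), fun z h => ?_, fun z h hz => ?_⟩⟩
  · rw [wt, lw, lw, sub_zero]
    refine add_le_add_right ?_ _
    refine (sum_le_sum fun m _ => pw_le (pt m) z).trans ?_
    rw [← mul_sum]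
    nlinarith [sum_three z F]
  · rw [hl]
    have := hp F z h
    positivity
  · rw [hl]
    have h0 := hp F z h
    have p1 : 0 ≤ 4 * ((1 + ‖z - 0‖ ^ 2) ^ 2)⁻¹ := bpos
    have p2 : 0 ≤ 4 * ((1 + ‖z - z1‖ ^ 2) ^ 2)⁻¹ := bpos
    have key : ∀ p : ℂ, ‖z - p‖ ≤ 150 →
        2 * (1 / 16 * (((150 : ℝ) ^ 2 + 1) ^ 4)⁻¹) ≤ 4 * ((1 + ‖z - p‖ ^ 2) ^ 2)⁻¹ := fun p hp => by
      have : ((150 : ℝ) ^ 2 + 1) ^ 2 ≥ (1 + ‖z - p‖ ^ 2) ^ 2 := by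
        have : ‖z - p‖ ^ 2 ≤ 150 ^ 2 := by gcongr
        exact pow_le_pow_left₀ bpos blin 2
      calc _ ≤ 4 * (((150 : ℝ) ^ 2 + 1) ^ 2)⁻¹ := bnum
        _ ≤ _ := by gcongr
    rcases hz with hz | hz | ⟨m, hm, hz⟩
    · have := key 0 (by simpa using hz); linarith
    · have := key z1 hz; linarith
    · have h1 := single_le_sum (fun m hm => (by positivity : (0 : ℝ) ≤ _).trans (hn F z h m hm)) hm
      have h2 := hn F z h m hm
      have h3 : 2 * (1 / 16 * (((150 : ℝ) ^ 2 + 1) ^ 4)⁻¹) ≤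
          1 / 8 * ((dpt z m ^ 2 + 1 / 64) ^ 4)⁻¹ := by
        rw [← mul_assoc]
        have : dpt z m ^ 2 ≤ 150 ^ 2 := by gcongr
        gcongr
        · norm_num
        · norm_num
      linarith

/-! ### The weighted inequality for the gauged derivative -/

/-- The gauged first-order quantity, divided by `z ^ k`. -/
def Hf (U : ℂ → ℝ) (b β : ℂ → ℂ) (k : ℕ) (z : ℂ) : ℂ :=
  cexp (-β z) * (dz U z - b z * U z) * (z ^ k)⁻¹

/-- The density controlled by the Carleman inequality with weight `w`. -/
def Ph (w : ℂ → ℝ) (H : ℂ → ℂ) (z : ℂ) : ℝ := (1 / 2) * lap w z * (‖H z‖ ^ 2 * rexp (2 * w z))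

def Th (w : ℂ → ℝ) (β : ℂ → ℂ) (k : ℕ) (z : ℂ) : ℝ :=
  (‖z‖ ^ (2 * k))⁻¹ * rexp (2 * w z - 2 * (β z).re)

lemma Hf_zero_on {U : ℂ → ℝ} {O : Set ℂ} (hO : IsOpen O) (h : ∀ z ∈ O, U z = 0) (b β : ℂ → ℂ)
    (k : ℕ) : ∀ z ∈ O, Hf U b β k z = 0 := fun z hz => by
  rw [Hf, dz_zero_on hO h z hz, h z hz]; simp

lemma level1 {U D : ℂ → ℝ} {b β : ℂ → ℂ} {w B : ℂ → ℝ} {σ r0 M ω' : ℝ} (k : ℕ)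
    (hU : C² U) (hs : ∀ z, r0 < ‖z‖ → U z = 0) (h0 : ∀ z ∈ ball (0 : ℂ) σ, U z = 0)
    (hσ : 0 < σ) (hD : Continuous D) (hDU : ∀ z, U z = 0 → D z = 0) (hb : C¹ b)
    (hβ : C¹ β) (hw : C² w)
    (herr : ∫ z, ‖cexp (β z) * dbar (fun w => cexp (-β w) * (dz U w - b w * U w)) z -
      (((lap U z - D z) / 4 : ℝ) : ℂ)‖ ^ 2 ≤ ω')
    (hM0 : 0 ≤ M) (hM : ∀ z, σ ≤ ‖z‖ → ‖z‖ ≤ r0 → Th w β k z ≤ M)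
    (hB : Integrable B) (hB0 : ∀ z, 0 ≤ B z)
    (hBE : ∀ z, σ ≤ ‖z‖ → ‖z‖ ≤ r0 → 2 * Th w β k z * ((lap U z - D z) / 4) ^ 2 ≤ B z) :
    C¹ (Hf U b β k) ∧ HCS (Hf U b β k) ∧ ∫ z, Ph w (Hf U b β k) z ≤ 2 * M * ω' + ∫ z, B z := by
  have hO : IsOpen {z : ℂ | r0 < ‖z‖} := isOpen_lt continuous_const continuous_norm
  set G : ℂ → ℂ := fun w => cexp (-β w) * (dz U w - b w * U w) with hG
  have hUc : C¹ fun z => (U z : ℂ) := ofRealCLM.contDiff.comp (hU.of_le bnum)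
  have hGc : C¹ G := (hβ.neg.cexp).mul ((contDiff_dz hU).sub (hb.mul hUc))
  have hinv : ∀ z : ℂ, z ≠ 0 → ContDiffAt ℝ 1 (fun w : ℂ => (w ^ k)⁻¹) z := fun z hz =>
    (contDiff_id.pow k).contDiffAt.inv (pow_ne_zero k hz)
  have hHc : C¹ (Hf U b β k) := by
    rw [contDiff_iff_contDiffAt]
    intro z
    by_cases hz : z = 0
    · refine (contDiffAt_const (c := (0 : ℂ))).congr_of_eventuallyEq ?_
      filter_upwards [isOpen_ball.mem_nhds (by rw [hz]; exact mem_ball_self hσ)] with y hy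
      exact Hf_zero_on isOpen_ball h0 b β k y hy
    · exact hGc.contDiffAt.mul (hinv z hz)
  have hcU : ∀ {E : Type} [inst : Zero E] (f : ℂ → E), (∀ z, r0 < ‖z‖ → f z = 0) →
      HCS f := fun f hf =>
    HasCompactSupport.intro (isCompact_closedBall (0 : ℂ) r0) fun z hz => hf z (by
      rw [mem_closedBall, dist_zero_right, not_le] at hz; exact hz)
  have hHs : HCS (Hf U b β k) := hcU _ (Hf_zero_on hO hs b β k)
  refine ⟨hHc, hHs, ?_⟩
  set err : ℂ → ℂ := fun z => cexp (β z) * dbar G z - (((lap U z - D z) / 4 : ℝ) : ℂ) with herr'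
  have hec : Continuous err := (hβ.continuous.cexp.mul (cont_dbar hGc)).sub
      (continuous_ofReal.comp (((lap_cont hU).sub hD).div_const 4))
  have hes : HCS err := hcU _ fun z hz => by
    have e1 : dbar G z = 0 := dbar_zero_on hO (fun y hy => by
      simp only [hG]; rw [dz_zero_on hO hs y hy, hs y hy]; simp) z hz
    simp only [herr']
    rw [e1, lap_zero_on hO hs z hz, hDU z (hs z hz)]; simp
  have hei : Integrable fun z => ‖err z‖ ^ 2 :=
    (by fun_prop : Continuous fun z => ‖err z‖ ^ 2).integ
      (hcs_of hes fun z hz => by simp [hz])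
  calc _ ≤ ∫ z, ‖dbar (Hf U b β k) z‖ ^ 2 * rexp (2 * w z) := carleman hHc hHs hw
    _ ≤ ∫ z, (2 * M * ‖err z‖ ^ 2 + B z) := by
      refine integral_mono_of_nonneg (.of_forall fun z => bpos)
        (iadd (hei.const_mul _) hB) (.of_forall fun z => ?_)
      beta_reduce
      by_cases h1 : ‖z‖ < σ
      · rw [dbar_zero_on isOpen_ball (Hf_zero_on isOpen_ball h0 b β k) z (by simpa using h1)]
        have := hB0 z
        simp only [norm_zero, ne_eq, OfNat.ofNat_ne_zero, not_false_eq_true, zero_pow, zero_mul]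
        positivity
      by_cases h2 : r0 < ‖z‖
      · rw [dbar_zero_on hO (Hf_zero_on hO hs b β k) z h2]
        have := hB0 z
        simp only [norm_zero, ne_eq, OfNat.ofNat_ne_zero, not_false_eq_true, zero_pow, zero_mul]
        positivity
      rw [not_lt] at h1 h2
      have hz : z ≠ 0 := norm_pos_iff.1 (hσ.trans_le h1)
      have e1 : dbar (Hf U b β k) z = dbar G z * (z ^ k)⁻¹ := by
        have d1 : DA G z := hGc.differentiable bnum z
        have d2 : DifferentiableAt ℂ (fun w : ℂ => (w ^ k)⁻¹) z :=
          (differentiableAt_id.pow k).inv (pow_ne_zero k hz)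
        have := dbar_mul d1 (d2.restrictScalars ℝ)
        rw [dbar_of_holo d2] at this
        rw [mul_zero, add_zero] at this
        exact this
      have e2 : dbar G z = cexp (-β z) * (err z + (((lap U z - D z) / 4 : ℝ) : ℂ)) := by
        simp only [herr']
        rw [sub_add_cancel, ← mul_assoc, ← exp_add, neg_add_cancel, exp_zero, one_mul]
      have e3 : ‖dbar (Hf U b β k) z‖ ^ 2 * rexp (2 * w z) =
          Th w β k z * ‖err z + (((lap U z - D z) / 4 : ℝ) : ℂ)‖ ^ 2 := by
        rw [e1, e2, norm_mul, norm_mul, norm_exp, norm_inv, norm_pow, Th, neg_re,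
          show 2 * w z - 2 * (β z).re = 2 * w z + (-(β z).re + -(β z).re) by ring,
          Real.exp_add, Real.exp_add, pow_mul']
        ring
      rw [e3]
      have hT : 0 ≤ Th w β k z := by unfold Th; positivity
      have e4 : ‖err z + (((lap U z - D z) / 4 : ℝ) : ℂ)‖ ^ 2 ≤
          2 * ‖err z‖ ^ 2 + 2 * ((lap U z - D z) / 4) ^ 2 := by
        have := norm_add_le (err z) (((lap U z - D z) / 4 : ℝ) : ℂ)
        rw [norm_real, nabs] at this
        rw [← sq_abs ((lap U z - D z) / 4)]
        nlinarith [norm_nonneg (err z + (((lap U z - D z) / 4 : ℝ) : ℂ)),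
          sq_nonneg (‖err z‖ - |(lap U z - D z) / 4|)]
      calc _ ≤ Th w β k z * (2 * ‖err z‖ ^ 2 + 2 * ((lap U z - D z) / 4) ^ 2) := by gcongr
        _ = 2 * Th w β k z * ‖err z‖ ^ 2 + 2 * Th w β k z * ((lap U z - D z) / 4) ^ 2 := by ring
        _ ≤ _ := by
          have := hM z h1 h2
          exact add_le_add (by gcongr) (hBE z h1 h2)
    _ ≤ _ := by
      rw [integral_add (hei.const_mul _) hB, icm]
      gcongr

/-! ### Mollification -/

/-- A function oscillating by at most `1` at unit distance has a C¹ approximation, within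
distance `1`, with bounded gradient. -/
lemma mollify : ∃ C : ℝ, 1 ≤ C ∧ ∀ (f : ℂ → ℝ) (N : ℝ), Continuous f →
    (∀ z z', ‖z‖ ≤ N → ‖z - z'‖ ≤ 1 → |f z - f z'| ≤ 1) →
    ∃ g : ℂ → ℝ, C¹ g ∧ (∀ z, ‖z‖ ≤ N → |g z - f z| ≤ 1) ∧
      (∀ z v, ‖z‖ ≤ N → v = 1 ∨ v = I → |fd g z v| ≤ C) := by
  set c : ℝ := ∫ z, bp 2 z with hc
  have hc0 : 0 < c := bp_int_pos
  have hcs : HCS (bp 2) := bp_hcs bnum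
  have hint : ∀ v, Integrable fun z => |fd (bp 2) z v| := fun v =>
    ((cont_fd bp_contDiff_two v).integ (hcs_fd hcs v)).abs
  have hz0 : ∀ v, ∫ z, fd (bp 2) z v = 0 := fun v => by
    have := ibp (g := fun _ => 1) bp_contDiff_two contDiff_const hcs v
    simpa using this
  refine ⟨max 1 (c⁻¹ * ((∫ z, |fd (bp 2) z 1|) + ∫ z, |fd (bp 2) z I|)),
    le_max_left _ _, fun f N hf hosc => ?_⟩
  have hfl : LocallyIntegrable f := hf.locallyIntegrable
  -- if `φ` is supported in the unit disc, its convolution with `f - f x` at `x` is at most `∫ |φ|`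
  have key : ∀ φ : ℂ → ℝ, Continuous φ → HCS φ → (∀ z, 1 < ‖z‖ → φ z = 0) →
      ∀ x, ‖x‖ ≤ N → |(∫ t, f t * φ (x - t)) - f x * ∫ z, φ z| ≤ ∫ z, |φ z| := by
    intro φ hφ hφs hφ0 x hx
    have hs : HCS fun t => φ (x - t) := hφs.comp_homeomorph (Homeomorph.subLeft x)
    have hcφ : Continuous fun t => φ (x - t) := hφ.comp (by fun_prop)
    have i1 : Integrable fun t => f t * φ (x - t) := (hf.mul hcφ).integ hs.mul_left
    have i2 : Integrable fun t => φ (x - t) := hcφ.integ hs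
    rw [← integral_sub_left_eq_self φ volume x, ← icm, ← integral_sub i1 (i2.const_mul _), ← nabs,
      ← integral_sub_left_eq_self (fun z => |φ z|) volume x]
    refine norm_integral_le_of_norm_le i2.abs (.of_forall fun t => ?_)
    rw [nabs, ← sub_mul, abs_mul]
    by_cases ht : ‖x - t‖ ≤ 1
    · have := hosc x t hx ht
      rw [abs_sub_comm] at this
      exact mul_le_of_le_one_left (abs_nonneg _) this
    · rw [hφ0 _ (not_le.1 ht)]; simp
  set L := ContinuousLinearMap.mul ℝ ℝ
  set g0 : ℂ → ℝ := convolution f (bp 2) L volume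
  have e0 : ∀ x, g0 x = ∫ t, f t * bp 2 (x - t) := fun x => rfl
  have hg0c : C¹ g0 := hcs.contDiff_convolution_right L hfl bp_contDiff_two
  have e1 : ∀ x v, fd g0 x v = ∫ t, f t * fd (bp 2) (x - t) v := fun x v => by
    rw [(hcs.hasFDerivAt_convolution_right L hfl bp_contDiff_two x).fderiv,
      convolution_precompR_apply L hfl (hcs.fderiv ℝ)
        (bp_contDiff_two.continuous_fderiv bnum)]
    rfl
  refine ⟨fun z => c⁻¹ * g0 z, contDiff_const.mul hg0c, fun z hz => ?_, fun z v hz hv => ?_⟩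
  · have h := key (bp 2) (bp_cont 2) hcs (fun z hz => bp_zero bnum hz.le) z hz
    rw [← e0, ← hc] at h
    have e2 : ∫ z, |bp 2 z| = c := by simp_rw [abs_of_nonneg (bp_nonneg 2 _)]; rfl
    rw [e2] at h
    have e3 : c⁻¹ * g0 z - f z = c⁻¹ * (g0 z - f z * c) := by field_simp
    rw [e3, abs_mul, abs_of_pos bpos, inv_mul_le_iff₀ hc0, mul_one]
    exact h
  · have h := key (fun z => fd (bp 2) z v) (cont_fd bp_contDiff_two v) (hcs_fd hcs v)
      (fun z hz => by
        have hO : IsOpen {z : ℂ | 1 < ‖z‖} := isOpen_lt continuous_const continuous_norm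
        rw [fderiv_zero_on hO (fun y (hy : 1 < ‖y‖) => bp_zero bnum hy.le) z hz]; rfl) z hz
    rw [hz0, mul_zero, sub_zero, ← e1] at h
    have e2 : fd (fun z => c⁻¹ * g0 z) z v = c⁻¹ * fd g0 z v := by
      have := ((hg0c.differentiable bnum z).hasFDerivAt.const_mul c⁻¹).fderiv
      rw [this]; simp
    rw [e2, abs_mul, abs_of_pos (by positivity : 0 < c⁻¹)]
    refine le_max_of_le_right ?_
    gcongr
    refine h.trans ?_
    have p1 : 0 ≤ ∫ z, |fd (bp 2) z 1| := integral_nonneg fun _ => abs_nonneg _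
    have p2 : 0 ≤ ∫ z, |fd (bp 2) z I| := integral_nonneg fun _ => abs_nonneg _
    rcases hv with rfl | rfl <;> linarith

/-- Lipschitz bound on a ball from a gradient bound there. -/
lemma lip_on_ball {f : ℂ → ℝ} (hf : C¹ f) {C N : ℝ} (hC : 0 ≤ C)
    (h : ∀ z v, ‖z‖ ≤ N → v = 1 ∨ v = I → |fd f z v| ≤ C) (z z' : ℂ) (hz : ‖z‖ ≤ N)
    (hz' : ‖z'‖ ≤ N) : |f z - f z'| ≤ 2 * C * ‖z - z'‖ := by
  refine Convex.norm_image_sub_le_of_norm_fderiv_le (𝕜 := ℝ) (s := 𝔹 0 N)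
    (fun x _ => hf.differentiable bnum x) (fun x hx => ?_) (convex_closedBall _ _)
    (by simpa using hz') (by simpa using hz)
  rw [mem_closedBall, dist_zero_right] at hx
  refine ContinuousLinearMap.opNorm_le_bound _ bpos fun v => ?_
  rw [fd_dir, nabs]
  refine (abs_add_le _ _).trans ?_
  rw [abs_mul, abs_mul]
  have h1 := h x 1 hx (.inl rfl)
  have h2 := h x I hx (.inr rfl)
  have h3 := abs_re_le_norm v
  have h4 := abs_im_le_norm v
  calc _ ≤ ‖v‖ * C + ‖v‖ * C := by gcongr
    _ = _ := by ring

/-! ### Radial Poincaré inequality -/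

/-- The weight `|z|^{-2k} e^{2q}`. -/
def Wq (k : ℕ) (q : ℂ → ℝ) (z : ℂ) : ℝ := (‖z‖ ^ (2 * k))⁻¹ * rexp (2 * q z)

local notation:max "Wg" k:max z1:max F:max g:max => Wq k (fun z => wt z1 F z - g z)

lemma Wq_nonneg (k : ℕ) (q : ℂ → ℝ) (z : ℂ) : 0 ≤ Wq k q z := by unfold Wq; positivity

lemma Wq_contDiffAt (k : ℕ) {q : ℂ → ℝ} (hq : C¹ q) {z : ℂ} (hz : z ≠ 0) :
    ContDiffAt ℝ 1 (Wq k q) z := by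
  refine ContDiffAt.mul ?_ (Real.contDiff_exp.comp (contDiff_const.mul hq)).contDiffAt
  have : C¹ fun z : ℂ => ‖z‖ ^ (2 * k) := by
    simp_rw [pow_mul]
    exact (contDiff_id.norm_sq ℝ).pow k
  exact this.contDiffAt.inv (pow_ne_zero _ (norm_ne_zero_iff.2 hz))

lemma Wq_radial (k : ℕ) {q : ℂ → ℝ} (hq : C¹ q) {z : ℂ} (hz : z ≠ 0) :
    fd (Wq k q) z z = (2 * fd q z z - 2 * k) * Wq k q z := by
  have hz2 : ‖z‖ ^ 2 ≠ 0 := by simpa using hz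
  have h1 := hasFDerivAt_nsq 0 z
  simp only [sub_zero] at h1
  have h2 : HasDerivAt (fun t : ℝ => (t ^ k)⁻¹)
      (-(k * (‖z‖ ^ 2) ^ (k - 1)) / ((‖z‖ ^ 2) ^ k) ^ 2) (‖z‖ ^ 2) :=
    (hasDerivAt_pow k _).fun_inv (pow_ne_zero k hz2)
  have h3 := h2.comp_hasFDerivAt z h1
  have h4 := ((hq.differentiable bnum z).hasFDerivAt.const_mul 2).exp
  have e0 : Wq k q = fun z => ((fun t : ℝ => (t ^ k)⁻¹) ∘ fun z : ℂ => ‖z‖ ^ 2) z *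
      rexp (2 * q z) := by
    ext z; rw [Wq, pow_mul]; rfl
  have h6 := (h3.fun_mul h4).fderiv
  rw [← e0] at h6
  have h5 : fd (Wq k q) z = _ := h6
  have e1 : innerSL ℝ z z = ‖z‖ ^ 2 := by rw [innerSL_apply_apply, real_inner_self_eq_norm_sq]
  rw [h5, Wq, pow_mul]
  simp only [Function.comp_apply, add_apply, smul_apply, smul_eq_mul, e1, nsmul_eq_mul]
  push_cast
  rcases Nat.eq_zero_or_pos k with rfl | hk
  · simp
    ring
  · obtain ⟨j, rfl⟩ := Nat.exists_eq_add_of_le hk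
    simp only [Nat.add_sub_cancel_left]
    have : ‖z‖ ≠ 0 := norm_ne_zero_iff.2 hz
    field_simp
    ring

/-- Radial Poincaré inequality with a singular weight. -/
lemma poincare {V q : ℂ → ℝ} {k : ℕ} {ρ' σ : ℝ} (hk : 4 ≤ k) (hσ : 0 < σ)
    (hV : C¹ V) (h0 : ∀ z ∈ ball (0 : ℂ) σ, V z = 0) (hs : ∀ z, ρ' < ‖z‖ → V z = 0)
    (hq : C¹ q) (hqg : ∀ z, ‖z‖ ≤ ρ' → fd q z z ≤ k / 4) :
    Integrable (fun z => V z ^ 2 * Wq k q z) ∧ ∀ B : ℂ → ℝ, Integrable B →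
    (∀ z, (fd V z 1 ^ 2 + fd V z I ^ 2) * Wq k q z ≤ B z) →
    ∫ z, V z ^ 2 * Wq k q z ≤ (2 * ρ' / k) ^ 2 * ∫ z, B z := by
  set f : ℂ → ℝ := fun z => V z ^ 2 * Wq k q z with hf
  have hf0 : ∀ z ∈ ball (0 : ℂ) σ, f z = 0 := fun z hz => by simp [hf, h0 z hz]
  have hfc : C¹ f := by
    rw [contDiff_iff_contDiffAt]
    intro z
    by_cases hz : z = 0
    · refine (contDiffAt_const (c := (0 : ℝ))).congr_of_eventuallyEq ?_
      filter_upwards [isOpen_ball.mem_nhds (by rw [hz]; exact mem_ball_self hσ)] with y hy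
      exact hf0 y hy
    · exact (hV.pow 2).contDiffAt.mul (Wq_contDiffAt k hq hz)
  have hfs : HCS f := HasCompactSupport.intro (isCompact_closedBall (0 : ℂ) ρ') fun z hz => by
      rw [mem_closedBall, dist_zero_right, not_le] at hz
      simp [hf, hs z hz]
  have hfi : Integrable f := hfc.continuous.integ hfs
  refine ⟨hfi, fun B hB hVB => ?_⟩
  have r1 : ∀ z v, fd (fun z : ℂ => z.re) z v = v.re := fun z v => by
    rw [show (fun z : ℂ => z.re) = reCLM from rfl, reCLM.fderiv]; rfl
  have r2 : ∀ z v, fd (fun z : ℂ => z.im) z v = v.im := fun z v => by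
    rw [show (fun z : ℂ => z.im) = imCLM from rfl, imCLM.fderiv]; rfl
  have i1 := ibp (g := fun z : ℂ => z.re) hfc (reCLM.contDiff : C¹ fun z : ℂ => z.re) hfs 1
  have i2 := ibp (g := fun z : ℂ => z.im) hfc (imCLM.contDiff : C¹ fun z : ℂ => z.im) hfs I
  simp_rw [r1, one_re, mul_one] at i1
  simp_rw [r2, I_im, mul_one] at i2
  have j1 : Integrable fun z : ℂ => fd f z 1 * z.re :=
    ((cont_fd hfc 1).mul continuous_re).integ (hcs_fd hfs 1).mul_right
  have j2 : Integrable fun z : ℂ => fd f z I * z.im :=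
    ((cont_fd hfc I).mul continuous_im).integ (hcs_fd hfs I).mul_right
  have hk0 : (4 : ℝ) ≤ k := by exact_mod_cast hk
  have hpt : ∀ z, 2 * f z + (fd f z 1 * z.re + fd f z I * z.im) + k / 2 * f z ≤
      2 / k * ρ' ^ 2 * B z := by
    intro z
    have hBz : 0 ≤ B z := le_trans (mul_nonneg bpos (Wq_nonneg _ _ _)) (hVB z)
    by_cases h1 : ‖z‖ < σ
    · have hz : z ∈ ball (0 : ℂ) σ := by simpa using h1
      rw [fderiv_zero_on isOpen_ball hf0 z hz, hf0 z hz]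
      simp; positivity
    by_cases h2 : ρ' < ‖z‖
    · have hO : IsOpen {z : ℂ | ρ' < ‖z‖} := isOpen_lt continuous_const continuous_norm
      have hf1 : ∀ z ∈ {z : ℂ | ρ' < ‖z‖}, f z = 0 := fun z hz => by simp [hf, hs z hz]
      rw [fderiv_zero_on hO hf1 z h2, hf1 z h2]
      simp; positivity
    rw [not_lt] at h1 h2
    have hz : z ≠ 0 := norm_pos_iff.1 (hσ.trans_le h1)
    have e1 : fd f z 1 * z.re + fd f z I * z.im = fd f z z := by rw [fd_dir f z z]; ring
    have e2 : fd f z = _ := (((hV.differentiable bnum z).hasFDerivAt.pow 2).fun_mul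
      ((Wq_contDiffAt k hq hz).differentiableAt bnum).hasFDerivAt).fderiv
    have e3 : fd f z z = (2 * V z * fd V z z + V z ^ 2 * (2 * fd q z z - 2 * k)) * Wq k q z := by
      rw [e2]
      simp only [add_apply, smul_apply, smul_eq_mul, Wq_radial k hq hz, nsmul_eq_mul]
      push_cast; ring
    have e4 : fd V z z ^ 2 ≤ ρ' ^ 2 * (fd V z 1 ^ 2 + fd V z I ^ 2) := by
      have : ‖z‖ ^ 2 ≤ ρ' ^ 2 := by gcongr
      have e5 : ‖z‖ ^ 2 = z.re ^ 2 + z.im ^ 2 := by rw [← normSq_eq_norm_sq, normSq_apply]; ring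
      rw [fd_dir V z z]
      calc _ ≤ (z.re ^ 2 + z.im ^ 2) * (fd V z 1 ^ 2 + fd V z I ^ 2) := by
            nlinarith [sq_nonneg (z.re * fd V z I - z.im * fd V z 1)]
        _ ≤ _ := by rw [← e5]; gcongr
    have e6 : 2 * V z * fd V z z ≤ k / 2 * V z ^ 2 + 2 / k * fd V z z ^ 2 := by
      have h3 : 0 ≤ (k / 2 * V z - fd V z z) ^ 2 * (2 / k) := bpos
      have h4 : (k / 2 * V z - fd V z z) ^ 2 * (2 / k) =
          k / 2 * V z ^ 2 + 2 / k * fd V z z ^ 2 - 2 * V z * fd V z z := by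
        field_simp; ring
      linarith
    have e7 := hqg z h2
    rw [e1, e3]
    have hW := Wq_nonneg k q z
    calc 2 * f z + (2 * V z * fd V z z + V z ^ 2 * (2 * fd q z z - 2 * k)) * Wq k q z + k / 2 * f z
        = (2 * V z * fd V z z + V z ^ 2 * (2 + 2 * fd q z z - 3 / 2 * k)) * Wq k q z := by
          simp only [hf]; ring
      _ ≤ (2 / k * (ρ' ^ 2 * (fd V z 1 ^ 2 + fd V z I ^ 2))) * Wq k q z := by
          gcongr
          have h5 : V z ^ 2 * (2 + 2 * fd q z z - 3 / 2 * k) ≤ V z ^ 2 * (-(k / 2)) := by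
            gcongr; linarith
          have h6 : 2 / k * fd V z z ^ 2 ≤
            2 / k * (ρ' ^ 2 * (fd V z 1 ^ 2 + fd V z I ^ 2)) := by gcongr
          linarith
      _ = 2 / k * ρ' ^ 2 * ((fd V z 1 ^ 2 + fd V z I ^ 2) * Wq k q z) := by ring
      _ ≤ _ := by
        have := hVB z
        gcongr
  have hI := integral_mono (iadd (iadd (hfi.const_mul 2) (iadd j1 j2)) (hfi.const_mul (k / 2 : ℝ)))
    (hB.const_mul (2 / k * ρ' ^ 2)) hpt
  rw [integral_add (iadd (hfi.const_mul 2) (iadd j1 j2)) (hfi.const_mul _),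
    integral_add (hfi.const_mul 2) (iadd j1 j2), integral_add j1 j2, icm, icm, icm] at hI
  have h8 : (k : ℝ) / 2 * ∫ z, f z ≤ 2 / k * ρ' ^ 2 * ∫ z, B z := blin
  have h9 : ∫ z, f z = 2 / k * ((k : ℝ) / 2 * ∫ z, f z) := by field_simp
  rw [h9]
  calc _ ≤ 2 / k * (2 / k * ρ' ^ 2 * ∫ z, B z) := by gcongr
    _ = _ := by ring

/-! ### Propagation from zeros -/

lemma gronwall_sup {f g : ℝ → ℝ} {a c ε : ℝ} (hac : a ≤ c) (hf : C¹ f)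
    (hg : ContinuousOn g (Set.Icc a c)) (hε : 0 ≤ ε) (hεc : ε * (c - a) ≤ 1 / 2)
    (h : ∀ t ∈ Set.Icc a c, |deriv f t| ≤ g t + ε * |f t|) {t t0 : ℝ} (ht : t ∈ Set.Icc a c)
    (ht0 : t0 ∈ Set.Icc a c) : |f t| ≤ 2 * (|f t0| + ∫ s in a..c, g s) := by
  obtain ⟨p, hp, hpm⟩ := (isCompact_Icc (a := a) (b := c)).exists_isMaxOn ⟨t, ht⟩
    (f := fun t => |f t|) hf.continuous.abs.continuousOn
  have hd : Continuous (deriv f) := hf.continuous_deriv le_rfl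
  have hgi : IntegrableOn g (Set.Ioc a c) :=
    (hg.integrableOn_compact isCompact_Icc).mono_set Set.Ioc_subset_Icc_self
  have h1 : f p - f t0 = ∫ s in t0..p, deriv f s :=
    (intervalIntegral.integral_deriv_eq_sub (fun x _ => hf.differentiable bnum x)
      (hd.intervalIntegrable _ _)).symm
  have hdi : IntegrableOn (fun s => |deriv f s|) (Set.Ioc a c) :=
    (hd.abs.integrableOn_Icc).mono_set Set.Ioc_subset_Icc_self
  have h2 : |f p - f t0| ≤ ∫ s in Set.Ioc a c, |deriv f s| := by
    rw [h1]
    have h0 : |∫ s in t0..p, deriv f s| ≤ ∫ s in Set.uIoc t0 p, |deriv f s| := by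
      simpa only [nabs] using
        intervalIntegral.norm_integral_le_integral_norm_uIoc (f := deriv f) (a := t0) (b := p)
          (μ := volume)
    refine h0.trans ?_
    refine setIntegral_mono_set hdi (.of_forall fun _ => abs_nonneg _)
      (.of_forall ?_)
    refine Set.Ioc_subset_Ioc ?_ ?_
    · exact le_min ht0.1 hp.1
    · exact max_le ht0.2 hp.2
  have h3 : ∫ s in Set.Ioc a c, |deriv f s| ≤ ∫ s in Set.Ioc a c, (g s + ε * |f p|) := by
    refine setIntegral_mono_on hdi (hgi.add (integrable_const _)) measurableSet_Ioc fun s hs => ?_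
    have hs' := Set.Ioc_subset_Icc_self hs
    have : |f s| ≤ |f p| := hpm hs'
    exact (h s hs').trans (by gcongr)
  have h4 : ∫ s in Set.Ioc a c, (g s + ε * |f p|) = (∫ s in a..c, g s) + ε * (c - a) * |f p| := by
    rw [integral_add hgi (integrable_const _), intervalIntegral.integral_of_le hac]
    simp [Measure.real, hac]
    ring
  have h5 : |f t| ≤ |f p| := hpm ht
  have h6 : |f p| ≤ |f t0| + |f p - f t0| := by
    have := abs_add_le (f t0) (f p - f t0); rwa [add_sub_cancel] at this
  have h7 : ε * (c - a) * |f p| ≤ 1 / 2 * |f p| := by gcongr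
  linarith

lemma interval_cs {g : ℝ → ℝ} {a c : ℝ} (hac : a < c) (hg : Continuous g) :
    (∫ s in a..c, g s) ^ 2 ≤ (c - a) * ∫ s in a..c, g s ^ 2 := by
  set I := ∫ s in a..c, g s with hI
  have hca : 0 < c - a := blin
  have h0 : 0 ≤ ∫ s in a..c, (g s - I / (c - a)) ^ 2 :=
    intervalIntegral.integral_nonneg hac.le fun _ _ => sq_nonneg _
  have e : ∫ s in a..c, (g s - I / (c - a)) ^ 2 = (∫ s in a..c, g s ^ 2) - I ^ 2 / (c - a) := by
    have e1 : ∀ s, (g s - I / (c - a)) ^ 2 =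
        (g s ^ 2 - 2 * (I / (c - a)) * g s) + (I / (c - a)) ^ 2 := fun s => by ring
    simp_rw [e1]
    rw [intervalIntegral.integral_add (by apply Continuous.intervalIntegrable; fun_prop) (by simp),
      intervalIntegral.integral_sub (by apply Continuous.intervalIntegrable; fun_prop)
        (by apply Continuous.intervalIntegrable; fun_prop),
      intervalIntegral.integral_const_mul, intervalIntegral.integral_const, ← hI, smul_eq_mul]
    field_simp
    ring
  rw [e, sub_nonneg, div_le_iff₀ hca] at h0
  linarith

lemma norm_dz_sq (u : ℂ → ℝ) (z : ℂ) :
    4 * ‖dz u z‖ ^ 2 = fd u z 1 ^ 2 + fd u z I ^ 2 := by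
  rw [dz, ← normSq_eq_norm_sq, normSq_apply]
  simp; ring

lemma fderiv_le_dz (u : ℂ → ℝ) (z w : ℂ) : |fd u z w| ≤ 2 * ‖dz u z‖ * ‖w‖ := by
  refine abs_le_of_sq_le_sq ?_ bpos
  have h := norm_dz_sq u z
  have e5 : ‖w‖ ^ 2 = w.re ^ 2 + w.im ^ 2 := by rw [← normSq_eq_norm_sq, normSq_apply]; ring
  rw [mul_pow, mul_pow, show (2 : ℝ) ^ 2 = 4 by norm_num, h, e5, fd_dir]
  nlinarith [sq_nonneg (w.re * fd u z I - w.im * fd u z 1)]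

lemma path_est {u : ℂ → ℝ} {b : ℂ → ℂ} {γ : ℝ → ℂ} {a c ℓ b0 : ℝ} (hac : a < c)
    (hu : C² u) (hb : Continuous b) (hγ : C¹ γ) (hℓ : ∀ t, ‖deriv γ t‖ ≤ ℓ)
    (hb0 : ∀ t ∈ Set.Icc a c, ‖b (γ t)‖ ≤ b0) (hε : 2 * ℓ * b0 * (c - a) ≤ 1 / 2) {t t0 : ℝ}
    (ht : t ∈ Set.Icc a c) (ht0 : t0 ∈ Set.Icc a c) :
    u (γ t) ^ 2 ≤ 8 * u (γ t0) ^ 2 +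
      32 * ℓ ^ 2 * (c - a) * ∫ s in a..c, ‖dz u (γ s) - b (γ s) * u (γ s)‖ ^ 2 := by
  have hℓ0 : 0 ≤ ℓ := (norm_nonneg _).trans (hℓ 0)
  have hb00 : 0 ≤ b0 := (norm_nonneg _).trans (hb0 t ht)
  set g : ℝ → ℝ := fun s => 2 * ℓ * ‖dz u (γ s) - b (γ s) * u (γ s)‖ with hg
  have hgc : Continuous g := by
    have h1 := (contDiff_dz hu).continuous
    have h2 := hu.continuous
    have h3 := hγ.continuous
    fun_prop
  have hf : C¹ fun t => u (γ t) := (hu.of_le bnum).comp hγ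
  have key := gronwall_sup (g := g) (ε := 2 * ℓ * b0) hac.le hf hgc.continuousOn bpos hε
    (fun s hs => by
      have hd : deriv (fun t => u (γ t)) s = fd u (γ s) (deriv γ s) :=
        ((hu.differentiable bnum (γ s)).hasFDerivAt.comp_hasDerivAt s
          (hγ.differentiable bnum s).hasDerivAt).deriv
      rw [hd]
      refine (fderiv_le_dz u _ _).trans ?_
      have h1 : ‖dz u (γ s)‖ ≤ ‖dz u (γ s) - b (γ s) * u (γ s)‖ + b0 * |u (γ s)| := by
        have := norm_add_le (dz u (γ s) - b (γ s) * u (γ s)) (b (γ s) * u (γ s))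
        rw [sub_add_cancel, norm_mul, norm_real, nabs] at this
        have h2 := hb0 s hs
        exact this.trans (by gcongr)
      calc _ ≤ 2 * (‖dz u (γ s) - b (γ s) * u (γ s)‖ + b0 * |u (γ s)|) * ℓ := by gcongr; exact hℓ s
        _ = _ := by simp only [hg]; ring) ht ht0
  have hcs := interval_cs hac hgc
  have e1 : ∫ s in a..c, g s ^ 2 =
      4 * ℓ ^ 2 * ∫ s in a..c, ‖dz u (γ s) - b (γ s) * u (γ s)‖ ^ 2 := by
    rw [← intervalIntegral.integral_const_mul]
    congr 1; ext s; simp only [hg]; ring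
  rw [e1] at hcs
  have : u (γ t) ^ 2 ≤ (2 * (|u (γ t0)| + ∫ s in a..c, g s)) ^ 2 := by rw [← sq_abs]; gcongr
  have h3 : (2 * (|u (γ t0)| + ∫ s in a..c, g s)) ^ 2 ≤
      8 * u (γ t0) ^ 2 + 8 * (∫ s in a..c, g s) ^ 2 := by
    rw [← sq_abs (u (γ t0))]
    nlinarith [sq_nonneg (|u (γ t0)| - ∫ s in a..c, g s)]
  linarith

/-- The segment `z - t e`, used to leave the transition region. -/
def seg (e : ℂ) (t : ℝ) : ℂ := -(t * e)

/-- The circle of radius `16` about `z - 18 e`, relative to `z`. -/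
def circ (e : ℂ) (t : ℝ) : ℂ := -(18 * e) + 16 * e * cexp (t * I)

lemma seg_contDiff (e : ℂ) : C¹ (seg e) := by
  unfold seg
  exact (ofRealCLM.contDiff.mul contDiff_const).neg

lemma seg_deriv (e : ℂ) (t : ℝ) : deriv (seg e) t = -e := by
  have h : HasDerivAt (fun t : ℝ => (t : ℂ)) 1 t := ofRealCLM.hasDerivAt
  have : HasDerivAt (seg e) (-(1 * e)) t := (h.mul_const e).fun_neg
  rw [this.deriv, one_mul]

lemma circ_contDiff (e : ℂ) : C¹ (circ e) := by
  unfold circ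
  exact contDiff_const.add (contDiff_const.mul (ofRealCLM.contDiff.mul contDiff_const).cexp)

lemma circ_deriv (e : ℂ) (t : ℝ) : deriv (circ e) t = 16 * e * (cexp (t * I) * I) := by
  have h : HasDerivAt (fun t : ℝ => (t : ℂ)) 1 t := ofRealCLM.hasDerivAt
  have : HasDerivAt (circ e) (16 * e * (cexp (t * I) * (1 * I))) t :=
    (((h.mul_const I).cexp).const_mul (16 * e)).const_add _
  rw [this.deriv, one_mul]

/-- Average of `Φ` over the segment and the circle attached to `z`. -/
def Jf (Φ : ℂ → ℝ) (e z : ℂ) : ℝ :=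
  (∫ t in (0 : ℝ)..2, Φ (z + seg e t)) + ∫ t in (-π)..π, Φ (z + circ e t)

/-- If `u` vanishes somewhere on the circle attached to `z`, then `u z` is controlled by averages of
its gauged derivative. -/
lemma trans_est {u Φ : ℂ → ℝ} {b : ℂ → ℂ} {z e : ℂ} {b0 Λ : ℝ} (hu : C² u)
    (hb : Continuous b) (hΦ : Continuous Φ) (he : ‖e‖ = 1) (hb00 : 0 ≤ b0) (hb1 : 512 * b0 ≤ 1)
    (hzero : ∃ ζ, ‖ζ - (z - 18 * e)‖ = 16 ∧ u ζ = 0)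
    (hpt : ∀ y, (∃ t ∈ Set.Icc (0 : ℝ) 2, y = z + seg e t) ∨ (∃ t, y = z + circ e t) →
      ‖b y‖ ≤ b0 ∧ ‖dz u y - b y * u y‖ ^ 2 ≤ Λ * Φ y) :
    u z ^ 2 ≤ 10 ^ 6 * Λ * Jf Φ e z := by
  have hπ := Real.pi_pos
  have hπ4 := Real.pi_le_four
  have he0 : e ≠ 0 := norm_ne_zero_iff.1 (by rw [he]; norm_num)
  have c1 : Continuous fun z => ‖dz u z - b z * u z‖ ^ 2 := by
    have h1 := (contDiff_dz hu).continuous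
    have h2 := hu.continuous
    fun_prop
  have s1 := path_est (γ := fun t => z + seg e t) (a := 0) (c := 2) (ℓ := 1) (b0 := b0) (t := 0)
    (t0 := 2) bnum hu hb (contDiff_const.add (seg_contDiff e))
    (fun t => by rw [deriv_const_add, seg_deriv, norm_neg, he])
    (fun t ht => (hpt _ (.inl ⟨t, ht, rfl⟩)).1) blin (by simp) (by simp)
  obtain ⟨ζ, hζ, hζ0⟩ := hzero
  have s2 := path_est (γ := fun t => z + circ e t) (a := -π) (c := π) (ℓ := 16)
    (b0 := b0) (t := 0) (t0 := arg ((ζ - (z - 18 * e)) / e))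
    blin hu hb (contDiff_const.add (circ_contDiff e))
    (fun t => by
      rw [deriv_const_add, circ_deriv, norm_mul, norm_mul, he, norm_mul, norm_exp_ofReal_mul_I]
      simp)
    (fun t ht => (hpt _ (.inr ⟨t, rfl⟩)).1) (by nlinarith) ⟨blin, hπ.le⟩
    ⟨(neg_pi_lt_arg _).le, arg_le_pi _⟩
  have e0 : z + circ e (arg ((ζ - (z - 18 * e)) / e)) = ζ := by
    have h := norm_mul_exp_arg_mul_I ((ζ - (z - 18 * e)) / e)
    rw [norm_div, hζ, he, div_one] at h
    have h2 : 16 * e * cexp (arg ((ζ - (z - 18 * e)) / e) * I) = ζ - (z - 18 * e) := by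
      calc _ = e * (((16 : ℝ) : ℂ) * cexp (arg ((ζ - (z - 18 * e)) / e) * I)) := by push_cast; ring
        _ = _ := by rw [h]; field_simp
    rw [circ, h2]; ring
  have e1 : z + circ e 0 = z + seg e 2 := by simp [circ, seg]; ring
  have e2 : z + seg e 0 = z := by simp [seg]
  simp only [e0, hζ0, e1, e2] at s1 s2
  have i1 : ∫ s in (0 : ℝ)..2, ‖dz u (z + seg e s) - b (z + seg e s) * u (z + seg e s)‖ ^ 2 ≤
      Λ * ∫ s in (0 : ℝ)..2, Φ (z + seg e s) := by
    have cs := (seg_contDiff e).continuous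
    rw [← intervalIntegral.integral_const_mul]
    refine intervalIntegral.integral_mono_on bnum
      (Continuous.intervalIntegrable (c1.comp (continuous_const.add cs)) _ _)
      (Continuous.intervalIntegrable
        (continuous_const.mul (hΦ.comp (continuous_const.add cs))) _ _) fun s hs =>
      (hpt _ (.inl ⟨s, hs, rfl⟩)).2
  have i2 : ∫ s in (-π)..π, ‖dz u (z + circ e s) - b (z + circ e s) * u (z + circ e s)‖ ^ 2 ≤
      Λ * ∫ s in (-π)..π, Φ (z + circ e s) := by
    have cs := (circ_contDiff e).continuous
    rw [← intervalIntegral.integral_const_mul]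
    refine intervalIntegral.integral_mono_on blin
      (Continuous.intervalIntegrable (c1.comp (continuous_const.add cs)) _ _)
      (Continuous.intervalIntegrable
        (continuous_const.mul (hΦ.comp (continuous_const.add cs))) _ _) fun s hs =>
      (hpt _ (.inr ⟨s, rfl⟩)).2
  have n1 : 0 ≤ Λ * ∫ s in (0 : ℝ)..2, Φ (z + seg e s) :=
    le_trans (intervalIntegral.integral_nonneg bnum fun _ _ => bpos) i1
  have n2 : 0 ≤ ∫ s in (-π)..π, ‖dz u (z + circ e s) - b (z + circ e s) * u (z + circ e s)‖ ^ 2 :=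
    intervalIntegral.integral_nonneg blin fun _ _ => bpos
  rw [Jf]
  have b1 : 32 * (16 : ℝ) ^ 2 * (π - -π) ≤ 10 ^ 5 := blin
  have b2 := mul_le_mul b1 i2 n2 bnum
  nlinarith

lemma shift_int {Φ : ℂ → ℝ} (hΦ : Integrable Φ) (h0 : ∀ z, 0 ≤ Φ z) {g : ℂ} (hg : ‖g‖ ≤ 36)
    (m : ℤ × ℤ) :
    ∫ z in cell m, Φ (z + g) ≤ ∫ z, (𝔹 (pt m) 37).indicator Φ z := by
  rw [← integral_indicator (measurableSet_cell m),
    ← integral_add_right_eq_self (fun z => (𝔹 (pt m) 37).indicator Φ z) g]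
  refine integral_mono ?_ ((hΦ.indicator isClosed_closedBall.measurableSet).comp_add_right g)
    fun z => ?_
  · exact (hΦ.comp_add_right g).indicator (measurableSet_cell m)
  · by_cases hz : z ∈ cell m
    · have h1 : z + g ∈ 𝔹 (pt m) 37 := by
        rw [mem_cb]
        have := norm_sub_pt_of_cell hz
        calc ‖z + g - pt m‖ = ‖(z - pt m) + g‖ := by ring_nf
          _ ≤ 1 + 36 := (norm_add_le _ _).trans (by gcongr)
          _ = 37 := bnum
      simp [hz, h1]
    · simp only [Set.indicator_of_notMem hz]
      exact Set.indicator_nonneg (fun _ _ => h0 _) _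

lemma path_fubini {Φ : ℂ → ℝ} (hc : Continuous Φ) (hs : HCS Φ) (h0 : ∀ z, 0 ≤ Φ z)
    {γ : ℝ → ℂ} (hγ : Continuous γ) {a c : ℝ} (hac : a ≤ c)
    (hγ2 : ∀ t ∈ Set.Icc a c, ‖γ t‖ ≤ 36) (m : ℤ × ℤ) :
    IntegrableOn (fun z => ∫ t in a..c, Φ (z + γ t)) (cell m) ∧
    ∫ z in cell m, (∫ t in a..c, Φ (z + γ t)) ≤ (c - a) * ∫ z, (𝔹 (pt m) 37).indicator Φ z := by
  have hi : Integrable Φ := hc.integ hs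
  obtain ⟨M, hM⟩ := hs.exists_bound_of_continuous hc
  have : IsFiniteMeasure (volume.restrict (cell m)) := ⟨by simpa using volume_cell_lt m⟩
  have hp : Integrable (Function.uncurry fun (z : ℂ) (t : ℝ) => Φ (z + γ t))
      ((volume.restrict (cell m)).prod (volume.restrict (Set.Ioc a c))) := by
    refine Integrable.of_bound (C := M) ?_ (.of_forall fun p => hM _)
    exact Continuous.aestronglyMeasurable (by fun_prop)
  simp_rw [intervalIntegral.integral_of_le hac]
  refine ⟨hp.integral_prod_left, ?_⟩
  rw [integral_integral_swap hp]
  calc _ ≤ ∫ t in Set.Ioc a c, (∫ z, (𝔹 (pt m) 37).indicator Φ z) := by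
        refine setIntegral_mono_on hp.integral_prod_right (integrable_const _)
          measurableSet_Ioc fun t ht => ?_
        exact shift_int hi h0 (hγ2 t (Set.Ioc_subset_Icc_self ht)) m
    _ = _ := by simp [Measure.real, hac]

/-- The cellwise choice of directions `e`, summed over the box. -/
def tau (Φ : ℂ → ℝ) (e : ℤ × ℤ → ℂ) (N : ℕ) (z : ℂ) : ℝ :=
  ∑ m ∈ bx N, (cell m).indicator (Jf Φ (e m)) z

open Classical in
lemma tau_int {Φ : ℂ → ℝ} (hc : Continuous Φ) (hs : HCS Φ) (h0 : ∀ z, 0 ≤ Φ z)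
    {e : ℤ × ℤ → ℂ} (he : ∀ m, ‖e m‖ ≤ 1) (N : ℕ) :
    Integrable (tau Φ e N) ∧ (∀ z, 0 ≤ tau Φ e N z) ∧
      (∀ z, ‖z‖ + 1 ≤ N → tau Φ e N z = Jf Φ (e (rd z)) z) ∧
      ∫ z, tau Φ e N z ≤ 10 ^ 6 * ∫ z, Φ z := by
  have hi : Integrable Φ := hc.integ hs
  have hπ := Real.pi_pos
  have hπ4 := Real.pi_le_four
  have A := fun m => path_fubini hc hs h0 (seg_contDiff (e m)).continuous
    (a := 0) (c := 2) bnum (fun t ht => by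
      rw [seg, norm_neg, norm_mul, norm_real, nabs, abs_of_nonneg ht.1]
      nlinarith [he m, norm_nonneg (e m), ht.1, ht.2]) m
  have B := fun m => path_fubini hc hs h0 (circ_contDiff (e m)).continuous
    (a := -π) (c := π) blin (fun t ht => by
      rw [circ]
      refine (norm_add_le _ _).trans ?_
      rw [norm_neg, norm_mul, norm_mul, norm_mul, norm_exp_ofReal_mul_I]
      simp only [norm_ofNat, mul_one]
      linarith [he m]) m
  have J0 : ∀ m z, 0 ≤ Jf Φ (e m) z := fun m z => add_nonneg
    (intervalIntegral.integral_nonneg bnum fun _ _ => h0 _)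
    (intervalIntegral.integral_nonneg blin fun _ _ => h0 _)
  have JI : ∀ m, IntegrableOn (Jf Φ (e m)) (cell m) := fun m => iadd (A m).1 (B m).1
  have Jint : ∀ m, Integrable ((cell m).indicator (Jf Φ (e m))) := fun m =>
    (JI m).integrable_indicator (measurableSet_cell m)
  have bd : ∀ m, ∫ z, (cell m).indicator (Jf Φ (e m)) z ≤
      10 * ∫ z, (𝔹 (pt m) 37).indicator Φ z := fun m => by
    rw [integral_indicator (measurableSet_cell m)]
    have h1 : ∫ z in cell m, Jf Φ (e m) z = (∫ z in cell m, ∫ t in (0 : ℝ)..2, Φ (z + seg (e m) t))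
        + ∫ z in cell m, ∫ t in (-π)..π, Φ (z + circ (e m) t) :=
      integral_add (A m).1 (B m).1
    have h2 : 0 ≤ ∫ z, (𝔹 (pt m) 37).indicator Φ z :=
      integral_nonneg fun z => Set.indicator_nonneg (fun _ _ => h0 _) _
    have a := (A m).2
    have b := (B m).2
    rw [h1]
    nlinarith
  refine ⟨isum _ fun m _ => Jint m, fun z => sum_nonneg fun m _ =>
    Set.indicator_nonneg (fun _ _ => J0 _ _) _, fun z hz => ?_, ?_⟩
  · rw [tau, sum_eq_single (rd z)]
    · simp [cell]
    · intro m _ hm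
      refine Set.indicator_of_notMem ?_ _
      exact fun h => hm h.symm
    · intro h; exact absurd (mem_bx_of hz) h
  · have ci : ∀ m, Integrable fun z => (𝔹 (pt m) 37).indicator Φ z := fun m =>
      hi.indicator isClosed_closedBall.measurableSet
    calc ∫ z, tau Φ e N z = ∑ m ∈ bx N, ∫ z, (cell m).indicator (Jf Φ (e m)) z :=
          integral_finsetSum _ fun m _ => Jint m
      _ ≤ ∑ m ∈ bx N, 10 * ∫ z, (𝔹 (pt m) 37).indicator Φ z := sum_le_sum fun m _ => bd m
      _ = ∫ z, 10 * ∑ m ∈ bx N, (𝔹 (pt m) 37).indicator Φ z := by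
          rw [icm, integral_finsetSum _ fun m _ => ci m, mul_sum]
      _ ≤ ∫ z, 10 ^ 6 * Φ z := by
          refine integral_mono ((isum _ fun m _ => ci m).const_mul _) (hi.const_mul _) fun z => ?_
          have h1 : ∑ m ∈ bx N, (𝔹 (pt m) 37).indicator Φ z =
              ((bx N).filter fun m => z ∈ 𝔹 (pt m) 37).card * Φ z := by
            rw [← nsmul_eq_mul, ← sum_const, sum_filter]
            rfl
          have h2 := card_near z ((bx N).filter fun m => z ∈ 𝔹 (pt m) 37) 37
            (fun m hm => by
              have := (mem_filter.1 hm).2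
              rw [mem_cb] at this
              exact_mod_cast this)
          beta_reduce
          rw [h1]
          have h3 := mul_le_r (h2.trans (c := 11552) bnum) (h0 z)
          nlinarith [h0 z]
      _ = _ := icm _ _

/-! ### Cutoffs and commutators -/

lemma pt_sep {m m' : ℤ × ℤ} (h : m ≠ m') : 1 ≤ ‖pt m - pt m'‖ := by
  have h1 := abs_re_le_norm (pt m - pt m')
  have h2 := abs_im_le_norm (pt m - pt m')
  simp only [pt, sub_re, sub_im] at h1 h2
  by_contra! hc
  apply h
  have a1 : |(m.1 : ℝ) - m'.1| < 1 := by simpa [pt] using h1.trans_lt hc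
  have a2 : |(m.2 : ℝ) - m'.2| < 1 := by simpa [pt] using h2.trans_lt hc
  have b1 : |m.1 - m'.1| < 1 := by exact_mod_cast a1
  have b2 : |m.2 - m'.2| < 1 := by exact_mod_cast a2
  rw [Int.abs_lt_one_iff] at b1 b2
  exact Prod.ext (by omega) (by omega)

/-- Cutoff equal to one on the `1/8`-discs and supported in the `1/4`-discs around `F`. -/
def hh (F : Idx) (z : ℂ) : ℝ := ∑ m ∈ F, ct (4 / 3) (64 / 3) (pt m) z

/-- Cutoff near the origin. -/
def hs (s : ℝ) (z : ℂ) : ℝ := ct (4 / 3) (4 / (3 * s ^ 2)) 0 z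

/-- Cutoff of the disc of radius `ρ + 1`, vanishing beyond `ρ + 2`. -/
def eo (ρ : ℝ) (z : ℂ) : ℝ := ct ((ρ + 2) ^ 2) 1 0 z

lemma hh_contDiff {n : ℕ∞} (F) : ContDiff ℝ n (hh F) := by
  unfold hh
  exact ContDiff.sum fun m _ => ct_contDiff _ _ _

lemma hh_zero {F : Idx} {z : ℂ} (h : ∀ m ∈ F, 1 / 4 ≤ dpt z m) :
    hh F z = 0 ∧ (∀ v, fd (hh F) z v = 0) ∧ lap (hh F) z = 0 := by
  have h0 : ∀ m ∈ F, (4 / 3 : ℝ) - 64 / 3 * dpt z m ^ 2 ≤ 0 := fun m hm => by nlinarith [h m hm]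
  refine ⟨sum_eq_zero fun m hm => ct_zero (h0 m hm), fun v => ?_, ?_⟩
  · unfold hh
    rw [fd_sum F (fun m _ => ct_contDiff _ _ _)]
    exact sum_eq_zero fun m hm => (ct_flat (.inl (h0 m hm))).1 v
  · unfold hh
    rw [lap_sum F (fun m _ => ct_contDiff _ _ _)]
    exact sum_eq_zero fun m hm => (ct_flat (.inl (h0 m hm))).2

lemma hh_single {F : Idx} {z : ℂ} {m : ℤ × ℤ} (hm : m ∈ F) (h : dpt z m ≤ 1 / 4) :
    hh F z = ct (4 / 3) (64 / 3) (pt m) z ∧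
    (∀ v, fd (hh F) z v = fd (ct (4 / 3) (64 / 3) (pt m)) z v) ∧
    lap (hh F) z = lap (ct (4 / 3) (64 / 3) (pt m)) z := by
  have h0 : ∀ m' ∈ F, m' ≠ m → (4 / 3 : ℝ) - 64 / 3 * ‖z - pt m'‖ ^ 2 ≤ 0 := fun m' _ hne => by
    have h1 := pt_sep hne
    have h2 : ‖pt m' - pt m‖ ≤ dpt z m + ‖z - pt m'‖ := by
      have := norm_sub_le (z - pt m) (z - pt m'); rwa [sub_sub_sub_cancel_left] at this
    nlinarith
  refine ⟨sum_eq_single m (fun m' a b => ct_zero (h0 m' a b)) (absurd hm), fun v => ?_, ?_⟩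
  · unfold hh
    rw [fd_sum F (fun m _ => ct_contDiff _ _ _)]
    exact sum_eq_single m (fun m' a b => (ct_flat (.inl (h0 m' a b))).1 v) (absurd hm)
  · unfold hh
    rw [lap_sum F (fun m _ => ct_contDiff _ _ _)]
    exact sum_eq_single m (fun m' a b => (ct_flat (.inl (h0 m' a b))).2) (absurd hm)

lemma hh_mem (F : Idx) (z : ℂ) : 0 ≤ hh F z ∧ hh F z ≤ 1 := by
  by_cases h : ∀ m ∈ F, 1 / 4 ≤ dpt z m
  · simp [(hh_zero h).1]
  · push Not at h
    obtain ⟨m, hm, h⟩ := h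
    rw [(hh_single hm h.le).1]
    exact ct_mem _ _ _ _

lemma hh_one {F : Idx} {z : ℂ} {m : ℤ × ℤ} (hm : m ∈ F) (h : dpt z m ≤ 1 / 8) :
    hh F z = 1 := by
  rw [(hh_single hm (h.trans bnum)).1]
  exact ct_one (by nlinarith [norm_nonneg (z - pt m)])

/-- Quantitative bounds for the three cutoffs. -/
lemma cut_bounds : ∃ C, 1 ≤ C ∧
    (∀ F z, (∀ v, v = 1 ∨ v = I → |fd (hh F) z v| ≤ C) ∧ |lap (hh F) z| ≤ C) ∧
    (∀ s z, 0 < s → ‖z‖ ≤ s → (∀ v, v = 1 ∨ v = I → |fd (hs s) z v| ≤ C / s) ∧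
      |lap (hs s) z| ≤ C / s ^ 2) ∧
    (∀ ρ z, 0 ≤ ρ → ‖z‖ ≤ ρ + 2 → (∀ v, v = 1 ∨ v = I → |fd (eo ρ) z v| ≤ C * (ρ + 2)) ∧
      |lap (eo ρ) z| ≤ C * (ρ + 2) ^ 2) := by
  obtain ⟨C, hC, h⟩ := ct_bound
  refine ⟨100 * C, blin, fun F z => ?_, fun s z hs hz => ?_, fun ρ z hρ hz => ?_⟩
  · by_cases h1 : ∀ m ∈ F, 1 / 4 ≤ dpt z m
    · obtain ⟨-, a, b⟩ := hh_zero h1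
      refine ⟨fun v _ => ?_, ?_⟩
      · rw [a, abs_zero]; linarith
      · rw [b, abs_zero]; linarith
    · push Not at h1
      obtain ⟨m, hm, h1⟩ := h1
      obtain ⟨-, a, b⟩ := hh_single hm h1.le
      obtain ⟨c, d⟩ := h (4 / 3) (64 / 3) (pt m) z bnum
      have n1 : dpt z m ^ 2 ≤ 1 / 16 := by nlinarith [norm_nonneg (z - pt m)]
      refine ⟨fun v hv => ?_, ?_⟩
      · rw [a]; refine (c v hv).trans ?_; nlinarith
      · rw [b]; refine d.trans ?_; nlinarith
  · obtain ⟨c, d⟩ := h (4 / 3) (4 / (3 * s ^ 2)) 0 z bpos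
    rw [sub_zero] at c d
    refine ⟨fun v hv => (c v hv).trans ?_, d.trans ?_⟩
    · have : 4 / (3 * s ^ 2) * ‖z‖ ≤ 4 / (3 * s ^ 2) * s := by gcongr
      calc C * (4 / (3 * s ^ 2) * ‖z‖) ≤ C * (4 / (3 * s ^ 2) * s) := by gcongr
        _ = (4 / 3 * C) / s := by field_simp
        _ ≤ _ := by gcongr; linarith
    · calc C * ((4 / (3 * s ^ 2)) ^ 2 * ‖z‖ ^ 2 + 4 / (3 * s ^ 2))
          ≤ C * ((4 / (3 * s ^ 2)) ^ 2 * s ^ 2 + 4 / (3 * s ^ 2)) := by gcongr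
        _ = (28 / 9 * C) / s ^ 2 := by field_simp; ring
        _ ≤ _ := by gcongr; linarith
  · obtain ⟨c, d⟩ := h ((ρ + 2) ^ 2) 1 0 z bpos
    rw [sub_zero] at c d
    refine ⟨fun v hv => (c v hv).trans ?_, d.trans ?_⟩
    · rw [one_mul]
      have := mul_le_l hz (by linarith : (0 : ℝ) ≤ C)
      nlinarith
    · have h1 : ‖z‖ ^ 2 ≤ (ρ + 2) ^ 2 := by gcongr
      have h2 : 1 ≤ (ρ + 2) ^ 2 := by nlinarith
      nlinarith

lemma hs_flat {s : ℝ} {z : ℂ} (hs0 : 0 < s) (h : ‖z‖ ≤ s / 2 ∨ s ≤ ‖z‖) :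
    (∀ v, fd (hs s) z v = 0) ∧ lap (hs s) z = 0 := by
  refine ct_flat ?_
  rw [sub_zero]
  have e : 4 / (3 * s ^ 2) * ‖z‖ ^ 2 = 4 / 3 * (‖z‖ / s) ^ 2 := by field_simp
  rw [e]
  have n0 : 0 ≤ ‖z‖ / s := bpos
  rcases h with h | h
  · right
    have : ‖z‖ / s ≤ 1 / 2 := by rw [div_le_iff₀ hs0]; linarith
    nlinarith
  · left
    have : 1 ≤ ‖z‖ / s := by rw [le_div_iff₀ hs0]; linarith
    nlinarith

lemma hs_zero {s : ℝ} {z : ℂ} (hs0 : 0 < s) (h : s ≤ ‖z‖) : hs s z = 0 := by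
  refine ct_zero ?_
  rw [sub_zero]
  have e : 4 / (3 * s ^ 2) * ‖z‖ ^ 2 = 4 / 3 * (‖z‖ / s) ^ 2 := by field_simp
  rw [e]
  have : 1 ≤ ‖z‖ / s := by rw [le_div_iff₀ hs0]; linarith
  nlinarith

lemma hs_one {s : ℝ} {z : ℂ} (hs0 : 0 < s) (h : ‖z‖ ≤ s / 2) : hs s z = 1 := by
  refine ct_one ?_
  rw [sub_zero]
  have e : 4 / (3 * s ^ 2) * ‖z‖ ^ 2 = 4 / 3 * (‖z‖ / s) ^ 2 := by field_simp
  rw [e]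
  have n0 : 0 ≤ ‖z‖ / s := bpos
  have : ‖z‖ / s ≤ 1 / 2 := by rw [div_le_iff₀ hs0]; linarith
  nlinarith

lemma eo_flat {ρ : ℝ} {z : ℂ} (hρ : 0 ≤ ρ) (h : ‖z‖ ≤ ρ + 1) :
    eo ρ z = 1 ∧ (∀ v, fd (eo ρ) z v = 0) ∧ lap (eo ρ) z = 0 := by
  have h1 : 1 ≤ (ρ + 2) ^ 2 - 1 * ‖z - 0‖ ^ 2 := by rw [sub_zero]; nlinarith [norm_nonneg z]
  exact ⟨ct_one h1, ct_flat (.inr h1)⟩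

lemma eo_zero {ρ : ℝ} {z : ℂ} (hρ : 0 ≤ ρ) (h : ρ + 2 ≤ ‖z‖) : eo ρ z = 0 := by
  refine ct_zero ?_
  rw [sub_zero]; nlinarith [norm_nonneg z]

lemma lap_const_sub {f : ℂ → ℝ} (c : ℝ) (z : ℂ) : lap (fun w => c - f w) z = -lap f z := by
  simp only [lap, fderiv_const_sub, neg_apply, fderiv_fun_neg]
  ring

/-- The combined cutoff: outer disc, the origin and the discs around `F` removed. -/
def ca (ρ s : ℝ) (F : Idx) (z : ℂ) : ℝ := eo ρ z * (1 - (hs s z + hh F z))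

section
variable {ρ s : ℝ} {F : Idx}

lemma eo_contDiff {n : ℕ∞} : ContDiff ℝ n (eo ρ) := ct_contDiff _ _ _

lemma hs_contDiff {n : ℕ∞} : ContDiff ℝ n (hs s) := ct_contDiff _ _ _

lemma ca_contDiff {n : ℕ∞} : ContDiff ℝ n (ca ρ s F) :=
  eo_contDiff.mul (contDiff_const.sub (hs_contDiff.add (hh_contDiff F)))

lemma ca_fd (z v : ℂ) : fd (ca ρ s F) z v = -eo ρ z * (fd (hs s) z v + fd (hh F) z v) +
      (1 - (hs s z + hh F z)) * fd (eo ρ) z v := by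
  have h1 : C¹ fun z => hs s z + hh F z := hs_contDiff.add (hh_contDiff F)
  have := fd_mul (f := eo ρ) (g := fun z => 1 - (hs s z + hh F z)) (eo_contDiff (n := 1))
    (contDiff_const.sub h1) z v
  unfold ca
  rw [this, fderiv_const_sub, fderiv_fun_add ((hs_contDiff (n := 1)).differentiable bnum z)
    ((hh_contDiff (n := 1) F).differentiable bnum z)]
  simp only [neg_apply, add_apply]
  ring

lemma ca_lap (z : ℂ) : lap (ca ρ s F) z =
    -eo ρ z * (lap (hs s) z + lap (hh F) z) + (1 - (hs s z + hh F z)) * lap (eo ρ) z -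
      2 * (fd (eo ρ) z 1 * (fd (hs s) z 1 + fd (hh F) z 1) +
        fd (eo ρ) z I * (fd (hs s) z I + fd (hh F) z I)) := by
  have h1 : C² fun z => hs s z + hh F z := hs_contDiff.add (hh_contDiff F)
  have := lap_mul (f := eo ρ) (g := fun z => 1 - (hs s z + hh F z)) (eo_contDiff (n := 2))
    (contDiff_const.sub h1) z
  unfold ca
  rw [this, lap_const_sub, lap_add hs_contDiff (hh_contDiff F), fderiv_const_sub,
    fderiv_fun_add ((hs_contDiff (n := 1)).differentiable bnum z)
    ((hh_contDiff (n := 1) F).differentiable bnum z)]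
  simp only [neg_apply, add_apply]
  ring

lemma ca_mid (hρ : 0 ≤ ρ) (hs0 : 0 < s) {z : ℂ} (h1 : s ≤ ‖z‖) (h2 : ‖z‖ ≤ ρ + 1) :
    ca ρ s F z = 1 - hh F z ∧ (∀ v, fd (ca ρ s F) z v = -fd (hh F) z v) ∧
      lap (ca ρ s F) z = -lap (hh F) z := by
  obtain ⟨a, b, c⟩ := eo_flat hρ h2
  obtain ⟨d, e⟩ := hs_flat hs0 (.inr h1)
  refine ⟨?_, fun v => ?_, ?_⟩
  · rw [ca, a, hs_zero hs0 h1]; ring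
  · rw [ca_fd, a, b, d]; ring
  · rw [ca_lap, a, b, b, c, e]; ring

lemma hh_far (hF : ∀ m ∈ F, 50 ≤ ‖pt m‖) {z : ℂ} (h1 : ‖z‖ ≤ 1) : ∀ m ∈ F, 1 / 4 ≤ dpt z m :=
  fun m hm => by
    have := hF m hm
    have h := norm_sub_norm_le (pt m) z
    rw [norm_sub_rev] at h
    linarith

lemma ca_in (hρ : 0 ≤ ρ) (hs1 : s ≤ 1) (hF : ∀ m ∈ F, 50 ≤ ‖pt m‖) {z : ℂ}
    (h1 : ‖z‖ ≤ s) :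
    ca ρ s F z = 1 - hs s z ∧ (∀ v, fd (ca ρ s F) z v = -fd (hs s) z v) ∧
      lap (ca ρ s F) z = -lap (hs s) z := by
  obtain ⟨a, b, c⟩ := eo_flat hρ (z := z) blin
  obtain ⟨d, e, f⟩ := hh_zero (hh_far hF (z := z) blin)
  refine ⟨?_, fun v => ?_, ?_⟩
  · rw [ca, a, d]; ring
  · rw [ca_fd, a, b, e]; ring
  · rw [ca_lap, a, b, b, c, f]; ring

lemma ca_far (hρ : 0 ≤ ρ) {z : ℂ} (h1 : ρ + 2 ≤ ‖z‖) :
    ca ρ s F z = 0 ∧ ∀ v, fd (ca ρ s F) z v = 0 := by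
  have a := eo_zero hρ h1
  have b := (ct_flat (x := 0) (z := z) (α := (ρ + 2) ^ 2) (β := 1)
    (.inl (by rw [sub_zero]; nlinarith))).1
  refine ⟨by rw [ca, a]; ring, fun v => ?_⟩
  have b' : fd (eo ρ) z v = 0 := b v
  rw [ca_fd, a, b']; ring

lemma ca_core (hρ : 0 ≤ ρ) (hs0 : 0 < s) (hs1 : s ≤ 1) (hF : ∀ m ∈ F, 50 ≤ ‖pt m‖) {z : ℂ}
    (h1 : ‖z‖ ≤ s / 2) : ca ρ s F z = 0 := by
  rw [(ca_in hρ hs1 hF blin).1, hs_one hs0 h1]; ring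

lemma ca_hole (hs0 : 0 < s) (hs1 : s ≤ 1) (hF : ∀ m ∈ F, 50 ≤ ‖pt m‖) {z : ℂ} {m : ℤ × ℤ}
    (hm : m ∈ F) (h : dpt z m ≤ 1 / 8) : ca ρ s F z = 0 := by
  have h1 := norm_sub_norm_le (pt m) z
  rw [norm_sub_rev] at h1
  have := hF m hm
  rw [ca, hs_zero hs0 blin, hh_one hm h]; ring

lemma ca_mem (hs0 : 0 < s) (hs1 : s ≤ 1) (hF : ∀ m ∈ F, 50 ≤ ‖pt m‖) (z : ℂ) :
    0 ≤ ca ρ s F z ∧ ca ρ s F z ≤ 1 := by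
  have a : 0 ≤ eo ρ z ∧ eo ρ z ≤ 1 := ct_mem _ _ _ _
  have b : 0 ≤ hs s z ∧ hs s z ≤ 1 := ct_mem _ _ _ _
  have c := hh_mem F z
  have d : 0 ≤ hs s z + hh F z ∧ hs s z + hh F z ≤ 1 := by
    rcases le_total ‖z‖ s with h | h
    · rw [(hh_zero (hh_far hF (z := z) blin)).1]; simpa using b
    · rw [hs_zero hs0 h]; simpa using c
  constructor
  · exact mul_nonneg a.1 blin
  · exact mul_le_one₀ a.2 blin blin

end

/-- Hypotheses on the solution `u`; `F` indexes the lattice points that stay away from the zero set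
of `u`. -/
structure Base (u : ℂ → ℝ) (z1 : ℂ) (F : Idx) (ρ s δ Mo Mi : ℝ) : Prop where
  hu : C² u
  hρ : 200 ≤ ρ
  hs0 : 0 < s
  hs1 : s ≤ 1 / 2
  hδ : 1024 * δ ^ 2 ≤ 1
  hlap : ∀ z, ‖z‖ ≤ ρ + 50 → |lap u z| ≤ δ ^ 2 * |u z|
  hF : ∀ m ∈ F, 50 ≤ ‖pt m‖ ∧ ‖pt m‖ ≤ ρ + 3 ∧ ∀ y ∈ 𝔹 (pt m) 8, u y ≠ 0
  hF' : ∀ m, m ∉ F → 50 ≤ ‖pt m‖ → ‖pt m‖ ≤ ρ + 3 → ∃ y ∈ 𝔹 (pt m) 8, u y = 0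
  hz1 : ‖z1‖ ≤ ρ - 10
  hMo : ∀ z, ‖z‖ ≤ ρ + 10 → |u z| ≤ Mo
  hMi : ∀ z, ‖z‖ ≤ 2 * s → |u z| ≤ Mi

lemma lap_scale {u : ℂ → ℝ} (hu : C² u) (x : ℂ) (t : ℝ) (z : ℂ) :
    lap (fun w => u (x + t * w)) z = t ^ 2 * lap u (x + t * z) := by
  have h : ∀ v, fd (fun w => fd (fun w => u (x + t * w)) w v) z v =
      t ^ 2 * fd (fun w => fd u w v) (x + t * z) v := fun v => by
    have h1 : (fun w => fd (fun w => u (x + t * w)) w v) = fun w => t * fd u (x + t * w) v := by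
      ext w; exact fd_comp (hu.differentiable bnum) x t w v
    have h2 : Differentiable ℝ fun w => fd u w v := (contDiff1_fd hu v).differentiable bnum
    have h3 : Differentiable ℝ fun w => fd u (x + t * w) v :=
      (contDiff_aff (contDiff1_fd hu v) x t).differentiable bnum
    have h4 := fd_comp h2 x t z v
    rw [h1, fderiv_const_mul (h3 z), smul_apply, h4, smul_eq_mul]
    ring
  rw [lap, h, h, lap]; ring

lemma grad_scale : ∃ C, 1 ≤ C ∧ ∀ (u : ℂ → ℝ) (x : ℂ) (s M : ℝ), C² u → 0 < s → s ≤ 1 →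
    (∀ y ∈ 𝔹 x s, |u y| ≤ M) → (∀ y ∈ 𝔹 x s, |lap u y| ≤ M) →
    ∀ v, v = 1 ∨ v = I → |fd u x v| ≤ C * (M / s) := by
  obtain ⟨C, hC, h⟩ := grad_est
  refine ⟨C + 1, blin, fun u x s M hu hs hs1 h1 h2 => ?_⟩
  have M0 : 0 ≤ M := (abs_nonneg _).trans (h1 x (mem_closedBall_self hs.le))
  have hm : ∀ y ∈ 𝔹 (0 : ℂ) 1, x + s * y ∈ 𝔹 x s := fun y hy =>
    mem_aff hs.le le_rfl (by simpa using hy)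
  have := h (fun w => u (x + s * w)) 0 M (contDiff_aff hu x s) (fun y hy => h1 _ (hm y hy))
    (fun y hy => by
      rw [lap_scale hu, abs_mul, abs_of_nonneg bpos]
      have a := h2 _ (hm y hy)
      have c : s ^ 2 ≤ 1 := by nlinarith
      nlinarith)
  rw [fd_comp (hu.differentiable bnum), fd_comp (hu.differentiable bnum),
    mul_zero, add_zero, abs_mul, abs_mul, abs_of_pos hs] at this
  have e : (C + 1) * (M / s) = (C * M + M) / s := by ring
  rintro v (rfl | rfl)
  · rw [e, le_div_iff₀ hs]; linarith [this.1]
  · rw [e, le_div_iff₀ hs]; linarith [this.2]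

lemma near_bounds : ∃ C, 1 ≤ C ∧ ∀ {u : ℂ → ℝ} {z1 F ρ s δ Mo Mi}, Base u z1 F ρ s δ Mo Mi →
    (∀ z v, v = 1 ∨ v = I → ‖z‖ ≤ s → |fd u z v| ≤ C * (Mi / s)) ∧
    (∀ z v, v = 1 ∨ v = I → ‖z‖ ≤ ρ + 2 → |fd u z v| ≤ C * Mo) ∧
    (∀ z v m, v = 1 ∨ v = I → m ∈ F → dpt z m ≤ 1 / 4 → |fd u z v| ≤ C * |u z|) := by
  obtain ⟨C1, hC1, h1⟩ := grad_scale
  obtain ⟨C2, hC2, h2⟩ := hole_grad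
  refine ⟨C1 + C2, blin, fun {u z1 F ρ s δ Mo Mi} B => ⟨?_, ?_, ?_⟩⟩
  · intro z v hv hz
    have hm : ∀ y ∈ 𝔹 z s, ‖y‖ ≤ 2 * s := fun y hy => by
      rw [mem_cb] at hy
      have := norm_sub_norm_le y z
      linarith
    have M0 : 0 ≤ Mi := (abs_nonneg _).trans (B.hMi 0 (by simp [B.hs0.le]))
    have := h1 u z s Mi B.hu B.hs0 (by linarith [B.hs1]) (fun y hy => B.hMi y (hm y hy))
      (fun y hy => by
        have a := B.hlap y (by linarith [hm y hy, B.hs1, B.hρ])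
        have b := B.hMi y (hm y hy)
        have c := B.hδ
        nlinarith [abs_nonneg (u y)]) v hv
    refine this.trans ?_
    have := div_nonneg M0 B.hs0.le
    nlinarith
  · intro z v hv hz
    have hm : ∀ y ∈ 𝔹 z 1, ‖y‖ ≤ ρ + 10 := fun y hy => by
      rw [mem_cb] at hy
      have := norm_sub_norm_le y z
      linarith
    have M0 : 0 ≤ Mo := (abs_nonneg _).trans (B.hMo 0 (by simp; linarith [B.hρ]))
    have := h1 u z 1 Mo B.hu one_pos le_rfl (fun y hy => B.hMo y (hm y hy))
      (fun y hy => by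
        have a := B.hlap y (by linarith [hm y hy])
        have b := B.hMo y (hm y hy)
        have c := B.hδ
        nlinarith [abs_nonneg (u y)]) v hv
    refine this.trans ?_
    rw [div_one]
    nlinarith
  · intro z v m hv hm hz
    obtain ⟨a, b, c⟩ := B.hF m hm
    have h8 : ∀ w ∈ 𝔹 z 4, w ∈ 𝔹 (pt m) 8 := fun w hw => by
      rw [mem_cb] at hw ⊢
      have := norm_add_le (w - z) (z - pt m)
      rw [sub_add_sub_cancel] at this
      linarith
    have := h2 u z (δ ^ 2) B.hu bpos (by linarith [B.hδ]) (fun w hw => c w (h8 w hw))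
      (fun w hw => B.hlap w (by
        have h9 := h8 w hw
        rw [mem_cb] at h9
        have := norm_sub_norm_le w (pt m)
        linarith))
    have h0 := abs_nonneg (u z)
    rcases hv with rfl | rfl
    · refine this.1.trans ?_; nlinarith
    · refine this.2.trans ?_; nlinarith

lemma abs_dot {a b c d x y : ℝ} (ha : |a| ≤ x) (hb : |b| ≤ y) (hc : |c| ≤ x) (hd : |d| ≤ y) :
    |a * b + c * d| ≤ 2 * (x * y) := by
  have x0 := (abs_nonneg a).trans ha
  have h1 : |a * b| ≤ x * y := by rw [abs_mul]; exact mul_le_mul ha hb (abs_nonneg _) x0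
  have h2 : |c * d| ≤ x * y := by rw [abs_mul]; exact mul_le_mul hc hd (abs_nonneg _) x0
  linarith [abs_add_le (a * b) (c * d)]

/-- Size of the commutator `Δ(ηu) - ηΔu` in the three regions where the cutoff `η` varies. -/
lemma err_bd : ∃ C, 1 ≤ C ∧ ∀ {u : ℂ → ℝ} {z1 F ρ s δ Mo Mi}, Base u z1 F ρ s δ Mo Mi →
    (∀ z, ‖z‖ ≤ s → |lap (fun w => ca ρ s F w * u w) z - ca ρ s F z * lap u z| ≤ C * (Mi / s ^ 2)) ∧
    (∀ z, s ≤ ‖z‖ → ‖z‖ ≤ ρ + 1 →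
      |lap (fun w => ca ρ s F w * u w) z - ca ρ s F z * lap u z| ≤ C * |u z|) ∧
    (∀ z, ρ + 1 ≤ ‖z‖ → ‖z‖ ≤ ρ + 2 →
      |lap (fun w => ca ρ s F w * u w) z - ca ρ s F z * lap u z| ≤ C * ((ρ + 2) ^ 2 * Mo)) := by
  obtain ⟨C1, hC1, hc⟩ := cut_bounds
  obtain ⟨C2, hC2, hn⟩ := near_bounds
  refine ⟨100 * C1 * C1 * C2, ?_, fun {u z1 F ρ s δ Mo Mi} B => ?_⟩
  · have : 1 ≤ C1 * C1 := one_le_mul_of_one_le_of_one_le hC1 hC1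
    have : 1 ≤ C1 * C1 * C2 := one_le_mul_of_one_le_of_one_le this hC2
    linarith
  obtain ⟨hh1, hs1', he1⟩ := hc
  obtain ⟨n1, n2, n3⟩ := hn B
  have hs0 := B.hs0
  have hs1 := B.hs1
  have hρ := B.hρ
  have E : ∀ z, lap (fun w => ca ρ s F w * u w) z - ca ρ s F z * lap u z =
      u z * lap (ca ρ s F) z + 2 * (fd (ca ρ s F) z 1 * fd u z 1 +
        fd (ca ρ s F) z I * fd u z I) := fun z => by
    rw [lap_mul ca_contDiff B.hu]; ring
  have C12 : C1 * C2 ≤ C1 * C1 * C2 := by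
    have : 0 ≤ C1 * C2 := bpos
    nlinarith
  have C12' : C1 ≤ C1 * C1 * C2 := by
    have : C1 ≤ C1 * C2 := le_mul_of_one_le_right blin hC2
    linarith
  refine ⟨fun z hz => ?_, fun z h1 h2 => ?_, fun z h1 h2 => ?_⟩
  · obtain ⟨-, a, b⟩ := ca_in blin blin (fun m hm => (B.hF m hm).1) hz (ρ := ρ)
    obtain ⟨c, d⟩ := hs1' s z hs0 hz
    have M1 : |u z| ≤ Mi := B.hMi z blin
    have M0 : 0 ≤ Mi := (abs_nonneg _).trans M1
    rw [E, a, a, b]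
    have t1 : |u z * -lap (hs s) z| ≤ Mi * (C1 / s ^ 2) := by
      rw [abs_mul, abs_neg]; exact mul_le_mul M1 d (abs_nonneg _) M0
    have t2 := abs_dot (x := C1 / s) (a := -fd (hs s) z 1) (c := -fd (hs s) z I)
      (by rw [abs_neg]; exact c 1 (.inl rfl)) (n1 z 1 (.inl rfl) hz)
      (by rw [abs_neg]; exact c I (.inr rfl)) (n1 z I (.inr rfl) hz)
    have t3 : |2 * (-fd (hs s) z 1 * fd u z 1 + -fd (hs s) z I * fd u z I)|
        ≤ 4 * (C1 / s * (C2 * (Mi / s))) := by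
      rw [abs_mul, abs_two]; linarith
    refine (abs_add_le _ _).trans ((add_le_add t1 t3).trans ?_)
    have e : Mi * (C1 / s ^ 2) + 4 * (C1 / s * (C2 * (Mi / s))) =
        (C1 + 4 * (C1 * C2)) * (Mi / s ^ 2) := by field_simp
    rw [e]
    have : 0 ≤ Mi / s ^ 2 := bpos
    gcongr
    nlinarith
  · obtain ⟨-, a, b⟩ := ca_mid (F := F) blin hs0 h1 h2
    rw [E, a, a, b]
    by_cases hm : ∀ m ∈ F, 1 / 4 ≤ dpt z m
    · obtain ⟨-, c, d⟩ := hh_zero hm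
      rw [c, c, d]
      simp only [neg_zero, mul_zero, zero_mul, add_zero, abs_zero]
      positivity
    · push Not at hm
      obtain ⟨m, hm, hz⟩ := hm
      obtain ⟨c, d⟩ := hh1 F z
      have t1 : |u z * -lap (hh F) z| ≤ |u z| * C1 := by rw [abs_mul, abs_neg]; gcongr
      have t2 := abs_dot (x := C1) (a := -fd (hh F) z 1) (c := -fd (hh F) z I)
        (by rw [abs_neg]; exact c 1 (.inl rfl)) (n3 z 1 m (.inl rfl) hm hz.le)
        (by rw [abs_neg]; exact c I (.inr rfl)) (n3 z I m (.inr rfl) hm hz.le)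
      have t3 : |2 * (-fd (hh F) z 1 * fd u z 1 + -fd (hh F) z I *
          fd u z I)| ≤ 4 * (C1 * (C2 * |u z|)) := by
        rw [abs_mul, abs_two]; linarith
      refine (abs_add_le _ _).trans ((add_le_add t1 t3).trans ?_)
      have e : |u z| * C1 + 4 * (C1 * (C2 * |u z|)) = (C1 + 4 * (C1 * C2)) * |u z| := by ring
      rw [e]
      gcongr
      nlinarith
  · have M1 : |u z| ≤ Mo := B.hMo z blin
    have M0 : 0 ≤ Mo := (abs_nonneg _).trans M1
    obtain ⟨c, d⟩ := hh1 F z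
    obtain ⟨e, f⟩ := he1 ρ z blin h2
    obtain ⟨g, h⟩ := hs_flat hs0 (z := z) (.inr blin)
    have g0 := hs_zero hs0 (z := z) blin
    have i : 0 ≤ eo ρ z ∧ eo ρ z ≤ 1 := ct_mem _ _ _ _
    have j := hh_mem F z
    have j' : |1 - (hs s z + hh F z)| ≤ 1 := by rw [g0, abs_le]; constructor <;> linarith
    have i' : |-eo ρ z| ≤ 1 := by rw [abs_neg, abs_of_nonneg i.1]; exact i.2
    have P2 : ρ + 2 ≤ (ρ + 2) ^ 2 := by nlinarith
    have fb : ∀ v, v = 1 ∨ v = I → |fd (ca ρ s F) z v| ≤ 2 * C1 * (ρ + 2) := fun v hv => by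
      rw [ca_fd, g, zero_add]
      refine (abs_add_le _ _).trans ?_
      rw [abs_mul, abs_mul]
      have a1 := mul_le_mul i' (c v hv) (abs_nonneg _) zero_le_one
      have a2 := mul_le_mul j' (e v hv) (abs_nonneg _) zero_le_one
      nlinarith
    have lp : |lap (ca ρ s F) z| ≤ 10 * (C1 * C1) * (ρ + 2) ^ 2 := by
      rw [ca_lap, g, g, h, zero_add, zero_add, zero_add]
      have a1 := mul_le_mul i' d (abs_nonneg _) zero_le_one
      have a2 := mul_le_mul j' f (abs_nonneg _) zero_le_one
      have a3 := abs_dot (e 1 (.inl rfl)) (c 1 (.inl rfl)) (e I (.inr rfl)) (c I (.inr rfl))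
      rw [← abs_mul] at a1 a2
      refine (abs_sub _ _).trans ?_
      rw [abs_mul 2, abs_two]
      have a4 := abs_add_le (-eo ρ z * lap (hh F) z) ((1 - (hs s z + hh F z)) * lap (eo ρ) z)
      have a5 : C1 ≤ C1 * C1 := le_mul_of_one_le_right blin hC1
      have a6 : 0 ≤ (C1 * C1) * ((ρ + 2) ^ 2 - (ρ + 2)) := mul_nonneg bpos blin
      have a7 : 0 ≤ (C1 * C1 - C1) * (ρ + 2) ^ 2 := mul_nonneg blin bpos
      have a8 : 0 ≤ (C1 * C1) * ((ρ + 2) ^ 2 - 1) := mul_nonneg bpos blin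
      nlinarith
    rw [E]
    have t1 : |u z * lap (ca ρ s F) z| ≤ Mo * (10 * (C1 * C1) * (ρ + 2) ^ 2) := by
      rw [abs_mul]; exact mul_le_mul M1 lp (abs_nonneg _) M0
    have t2 := abs_dot (fb 1 (.inl rfl)) (n2 z 1 (.inl rfl) h2) (fb I (.inr rfl))
      (n2 z I (.inr rfl) h2)
    refine (abs_add_le _ _).trans ?_
    rw [abs_mul 2, abs_two]
    have b1 : C1 * C1 ≤ C1 * C1 * C2 := le_mul_of_one_le_right bpos hC2
    have b2 : (C1 * C2) * ((ρ + 2) * Mo) ≤ (C1 * C1 * C2) * ((ρ + 2) ^ 2 * Mo) := by gcongr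
    have b3 : (C1 * C1) * ((ρ + 2) ^ 2 * Mo) ≤ (C1 * C1 * C2) * ((ρ + 2) ^ 2 * Mo) := by gcongr
    have b4 : 0 ≤ (C1 * C1 * C2) * ((ρ + 2) ^ 2 * Mo) := bpos
    nlinarith

/-- Gradient of `u` cut off near the origin and near the outer circle. -/
lemma grad_bd : ∃ C, 1 ≤ C ∧ ∀ {u : ℂ → ℝ} {z1 F ρ s δ Mo Mi}, Base u z1 F ρ s δ Mo Mi →
    (∀ z v, v = 1 ∨ v = I → ‖z‖ ≤ s →
      |fd (fun w => ca ρ s ∅ w * u w) z v| ≤ C * (Mi / s)) ∧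
    (∀ z v, v = 1 ∨ v = I → ρ + 1 ≤ ‖z‖ → ‖z‖ ≤ ρ + 2 →
      |fd (fun w => ca ρ s ∅ w * u w) z v| ≤ C * ((ρ + 2) * Mo)) := by
  obtain ⟨C1, hC1, hc⟩ := cut_bounds
  obtain ⟨C2, hC2, hn⟩ := near_bounds
  refine ⟨C1 + C2, blin, fun {u z1 F ρ s δ Mo Mi} B => ?_⟩
  obtain ⟨-, hs1', he1⟩ := hc
  obtain ⟨n1, n2, -⟩ := hn B
  have hs0 := B.hs0
  have hs1 := B.hs1
  have hρ := B.hρ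
  have ce : ∀ z, |ca ρ s ∅ z| ≤ 1 := fun z => by
    have := ca_mem (ρ := ρ) (F := ∅) hs0 blin (by simp) z
    rw [abs_of_nonneg this.1]; exact this.2
  refine ⟨fun z v hv hz => ?_, fun z v hv h1 h2 => ?_⟩
  · obtain ⟨-, a, b⟩ := ca_in (F := ∅) blin blin (by simp) hz (ρ := ρ)
    obtain ⟨c, d⟩ := hs1' s z hs0 hz
    have M1 : |u z| ≤ Mi := B.hMi z blin
    have M0 : 0 ≤ Mi := (abs_nonneg _).trans M1
    rw [fd_mul ca_contDiff (B.hu.of_le bnum), a]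
    refine (abs_add_le _ _).trans ?_
    rw [abs_mul, abs_mul, abs_neg]
    have a1 := mul_le_mul (ce z) (n1 z v hv hz) (abs_nonneg _) zero_le_one
    have a2 := mul_le_mul M1 (c v hv) (abs_nonneg _) M0
    have e : (C1 + C2) * (Mi / s) = Mi * (C1 / s) + 1 * (C2 * (Mi / s)) := by ring
    rw [e]; linarith
  · have M1 : |u z| ≤ Mo := B.hMo z blin
    have M0 : 0 ≤ Mo := (abs_nonneg _).trans M1
    obtain ⟨e, f⟩ := he1 ρ z blin h2
    obtain ⟨g, h⟩ := hs_flat hs0 (z := z) (.inr blin)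
    obtain ⟨p, q, -⟩ := hh_zero (F := ∅) (z := z) (by simp)
    have g0 := hs_zero hs0 (z := z) blin
    rw [fd_mul ca_contDiff (B.hu.of_le bnum), ca_fd, g, q, g0, p]
    have a1 := mul_le_mul (ce z) (n2 z v hv h2) (abs_nonneg _) zero_le_one
    have a2 := mul_le_mul M1 (e v hv) (abs_nonneg _) M0
    rw [← abs_mul] at a1 a2
    have e1 : u z * (-eo ρ z * (0 + 0) + (1 - (0 + 0)) * fd (eo ρ) z v) =
        u z * fd (eo ρ) z v := by ring
    rw [e1]
    refine (abs_add_le _ _).trans ?_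
    have : 0 ≤ C2 * (Mo * (ρ + 1)) := bpos
    nlinarith

/-! ### Transition zone -/

/-- Sum of bumps of width about `100` at the origin, at `z1` and at the points of `F`. -/
def cs (z1 : ℂ) (F : Idx) (z : ℂ) : ℝ :=
  ct (121 / 21) (1 / 2100) 0 z + ct (121 / 21) (1 / 2100) z1 z +
    ∑ m ∈ F, ct (121 / 21) (1 / 2100) (pt m) z

/-- Cutoff equal to one within `100` of the poles and zero beyond `110`. -/
def ch (z1 : ℂ) (F : Idx) (z : ℂ) : ℝ := sm (cs z1 F z)

section
variable {z1 : ℂ} {F : Idx} {z : ℂ}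

lemma cs_contDiff {n : ℕ∞} : ContDiff ℝ n (cs z1 F) :=
  ((ct_contDiff _ _ _).add (ct_contDiff _ _ _)).add (ContDiff.sum fun _ _ => ct_contDiff _ _ _)

lemma ch_contDiff {n : ℕ∞} : ContDiff ℝ n (ch z1 F) := st_contDiff.comp cs_contDiff

lemma ch_mem : 0 ≤ ch z1 F z ∧ ch z1 F z ≤ 1 := st_mem _

lemma ch_fd (v : ℂ) : fd (ch z1 F) z v = deriv sm (cs z1 F z) * fd (cs z1 F) z v := by
  have h1 := ((st_contDiff (n := 1)).differentiable bnum (cs z1 F z)).hasDerivAt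
  have h2 := ((cs_contDiff (n := 1) (z1 := z1) (F := F)).differentiable bnum z).hasFDerivAt
  have h3 : fd (ch z1 F) z = _ := (h1.comp_hasFDerivAt z h2).fderiv
  rw [h3]; simp

lemma cs_fd (v : ℂ) : fd (cs z1 F) z v =
    fd (ct (121 / 21) (1 / 2100) 0) z v + fd (ct (121 / 21) (1 / 2100) z1) z v +
    ∑ m ∈ F, fd (ct (121 / 21) (1 / 2100) (pt m)) z v := by
  have d : ∀ p, Differentiable ℝ (ct (121 / 21) (1 / 2100) p) := fun p =>
    (ct_contDiff (n := 1) _ _ p).differentiable bnum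
  have h1 : C¹ fun z => ∑ m ∈ F, ct (121 / 21) (1 / 2100) (pt m) z :=
    ContDiff.sum fun _ _ => ct_contDiff _ _ _
  have h2 := (((d 0 z).hasFDerivAt.fun_add (d z1 z).hasFDerivAt).fun_add
    (h1.differentiable bnum z).hasFDerivAt).fderiv
  have h3 : fd (cs z1 F) z = _ := h2
  rw [h3, add_apply, add_apply, fd_sum F fun m _ => ct_contDiff _ _ _]

lemma ct_arg {p : ℂ} (h : 110 ≤ ‖z - p‖) : (121 / 21 : ℝ) - 1 / 2100 * ‖z - p‖ ^ 2 ≤ 0 := by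
  nlinarith

lemma cs_ge (h : near z1 F 100 z) : 1 ≤ cs z1 F z := by
  have c : ∀ p, ‖z - p‖ ≤ 100 → ct (121 / 21) (1 / 2100) p z = 1 := fun p hp =>
    ct_one (by nlinarith [norm_nonneg (z - p)])
  have n0 : ∀ p, 0 ≤ ct (121 / 21) (1 / 2100) p z := fun p => (ct_mem _ _ _ _).1
  have s0 : 0 ≤ ∑ m ∈ F, ct (121 / 21) (1 / 2100) (pt m) z := sum_nonneg fun m _ => n0 _
  rcases h with h | h | ⟨m, hm, h⟩
  · have := c 0 (by simpa using h)
    rw [cs, this]; linarith [n0 z1]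
  · have := c z1 h
    rw [cs, this]; linarith [n0 0]
  · have h1 := single_le_sum (f := fun m => ct (121 / 21) (1 / 2100) (pt m) z)
      (fun m _ => n0 _) hm
    beta_reduce at h1
    rw [c _ h] at h1
    rw [cs]; linarith [n0 0, n0 z1]

lemma ch_one (h : near z1 F 100 z) : ch z1 F z = 1 ∧ ∀ v, fd (ch z1 F) z v = 0 := by
  have h1 := cs_ge h
  refine ⟨Real.smoothTransition.one_of_one_le h1, fun v => ?_⟩
  rw [ch_fd, (st_deriv_zero (.inr h1)).1, zero_mul]

lemma ch_zero (h : ∀ R < 110, ¬ near z1 F R z) :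
    ch z1 F z = 0 ∧ ∀ v, fd (ch z1 F) z v = 0 := by
  have e : cs z1 F z = 0 := by
    have h0 : 110 ≤ ‖z - 0‖ := by rw [sub_zero]; by_contra! hc; exact h _ hc (.inl le_rfl)
    have h1 : 110 ≤ ‖z - z1‖ := by by_contra! hc; exact h _ hc (.inr (.inl le_rfl))
    have h2 : ∀ m ∈ F, 110 ≤ dpt z m := fun m hm => by
      by_contra! hc; exact h _ hc (.inr (.inr ⟨m, hm, le_rfl⟩))
    rw [cs, ct_zero (ct_arg h0), ct_zero (ct_arg h1),
      sum_eq_zero fun m hm => ct_zero (ct_arg (h2 m hm))]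
    norm_num
  refine ⟨Real.smoothTransition.zero_of_nonpos e.le, fun v => ?_⟩
  rw [ch_fd, (st_deriv_zero (.inl e.le)).1, zero_mul]

end

lemma ch_bd : ∃ C, 1 ≤ C ∧ ∀ z1 F z v, v = 1 ∨ v = I → |fd (ch z1 F) z v| ≤ C := by
  obtain ⟨C1, hC1, h1⟩ := st_bound
  obtain ⟨C2, hC2, h2⟩ := ct_bound
  refine ⟨C1 * (10 ^ 6 * C2), ?_, fun z1 F z v hv => ?_⟩
  · nlinarith
  have b : ∀ p, |fd (ct (121 / 21) (1 / 2100) p) z v| ≤ C2 := fun p => by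
    rcases le_total 110 ‖z - p‖ with h | h
    · rw [(ct_flat (.inl (ct_arg h))).1, abs_zero]; linarith
    · refine ((h2 (121 / 21) (1 / 2100) p z bnum).1 v hv).trans ?_
      nlinarith [norm_nonneg (z - p)]
  have c : |∑ m ∈ F, fd (ct (121 / 21) (1 / 2100) (pt m)) z v| ≤ 8 * 111 ^ 2 * C2 := by
    refine (abs_sum_le_sum_abs _ _).trans ?_
    rw [← sum_filter_add_sum_filter_not F (fun m => dpt z m ≤ 110)]
    have z0 : ∑ m ∈ F with ¬ dpt z m ≤ 110,
        |fd (ct (121 / 21) (1 / 2100) (pt m)) z v| = 0 := by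
      refine sum_eq_zero fun m hm => ?_
      have := (mem_filter.1 hm).2
      rw [(ct_flat (.inl (ct_arg (not_le.1 this).le))).1, abs_zero]
    rw [z0, add_zero]
    have h3 := card_near z (F.filter fun m => dpt z m ≤ 110) 110
      (fun m hm => by exact_mod_cast (mem_filter.1 hm).2)
    refine (sum_le_card_nsmul _ _ C2 fun m _ => b _).trans ?_
    rw [nsmul_eq_mul]
    refine mul_le_r (h3.trans bnum) blin
  rw [ch_fd, abs_mul]
  refine mul_le_mul (h1 _).1 ?_ (abs_nonneg _) blin
  rw [cs_fd]
  refine (abs_add_le _ _).trans ?_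
  have := abs_add_le (fd (ct (121 / 21) (1 / 2100) 0) z v)
    (fd (ct (121 / 21) (1 / 2100) z1) z v)
  linarith [b 0, b z1]

/-- The data produced by the gauge construction, together with the weight exponent
`wt z1 F - g`. -/
structure Gz (z1 : ℂ) (F : Idx) (ρ : ℝ) (b β : ℂ → ℂ) (g : ℂ → ℝ) (b0 κ Cq Q : ℝ) :
    Prop where
  hb : C¹ b
  hβ : C¹ β
  hg : C¹ g
  hb0 : 0 ≤ b0
  hCq : 0 ≤ Cq
  hb1 : 512 * b0 ≤ 1
  hbP : ∀ z, near z1 F 150 z → ‖b z‖ ≤ b0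
  hgβ : ∀ z, ‖z‖ ≤ ρ + 2 → |g z - (β z).re| ≤ 1
  hLip : ∀ z z', ‖z‖ ≤ ρ + 2 → ‖z'‖ ≤ ρ + 2 →
    |(wt z1 F z - g z) - (wt z1 F z' - g z')| ≤ Cq * ‖z - z'‖
  hκ : 0 < κ
  hl0 : ∀ z, (∀ m ∈ F, 1 / 8 ≤ dpt z m) → 0 ≤ lap (wt z1 F) z
  hlκ : ∀ z, (∀ m ∈ F, 1 / 8 ≤ dpt z m) → near z1 F 150 z → 2 * κ ≤ lap (wt z1 F) z
  hQ : ∀ z, ‖z‖ ≤ ρ + 2 → rexp (2 * (wt z1 F z - g z)) ≤ Q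

section
variable {u : ℂ → ℝ} {z1 : ℂ} {F : Idx} {ρ s δ Mo Mi : ℝ}
  {b β : ℂ → ℂ} {g : ℂ → ℝ} {b0 κ Cq Q : ℝ}

/-- The energy density of the conjugated derivative. -/
def PH (u : ℂ → ℝ) (z1 : ℂ) (F : Idx) (ρ s : ℝ) (b β : ℂ → ℂ) (k : ℕ) :
    ℂ → ℝ :=
  Ph (wt z1 F) (Hf (fun w => ca ρ s F w * u w) b β k)

lemma PH_nonneg (B : Base u z1 F ρ s δ Mo Mi) (G : Gz z1 F ρ b β g b0 κ Cq Q) (k : ℕ) (z : ℂ) :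
    0 ≤ PH u z1 F ρ s b β k z := by
  by_cases h : ∀ m ∈ F, 1 / 8 ≤ dpt z m
  · have := G.hl0 z h
    rw [PH, Ph]; positivity
  · push Not at h
    obtain ⟨m, hm, h⟩ := h
    have h0 : Hf (fun w => ca ρ s F w * u w) b β k z = 0 :=
      Hf_zero_on (isOpen_ball (x := pt m) (ε := 1 / 8)) (fun y hy => by
        rw [mem_ball, dist_eq_norm] at hy
        rw [ca_hole B.hs0 (by linarith [B.hs1]) (fun m hm => (B.hF m hm).1) hm hy.le,
          zero_mul]) b β k z (by rwa [mem_ball, dist_eq_norm])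
    rw [PH, Ph, h0]; simp

lemma Th_le (G : Gz z1 F ρ b β g b0 κ Cq Q) (k : ℕ) {z : ℂ} (hz : ‖z‖ ≤ ρ + 2) :
    Th (wt z1 F) β k z ≤ rexp 2 * Wg k z1 F g z ∧ Wg k z1 F g z ≤ rexp 2 * Th (wt z1 F) β k z := by
  have h := abs_le.1 (G.hgβ z hz)
  have e : ∀ x y : ℝ, x ≤ 2 + y → (‖z‖ ^ (2 * k))⁻¹ * rexp x ≤
      rexp 2 * ((‖z‖ ^ (2 * k))⁻¹ * rexp y) := fun x y hxy => by
    rw [mul_left_comm, ← Real.exp_add]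
    gcongr
  exact ⟨e _ _ blin, e _ _ blin⟩

lemma U_mid (B : Base u z1 F ρ s δ Mo Mi) {z : ℂ} (h1 : s ≤ ‖z‖) (h2 : ‖z‖ ≤ ρ + 1)
    (hF : ∀ m ∈ F, 1 / 4 ≤ dpt z m) :
    ca ρ s F z * u z = u z ∧ (∀ v, fd (fun w => ca ρ s F w * u w) z v = fd u z v) ∧
    lap (fun w => ca ρ s F w * u w) z - ca ρ s F z * lap u z = 0 := by
  obtain ⟨a, c, d⟩ := ca_mid (F := F) (by linarith [B.hρ]) B.hs0 h1 h2
  obtain ⟨e, f, g⟩ := hh_zero hF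
  refine ⟨by rw [a, e]; ring, fun v => ?_, ?_⟩
  · rw [fd_mul ca_contDiff (B.hu.of_le bnum), c, a, e, f]; ring
  · rw [lap_mul ca_contDiff B.hu, c, c, d, a, e, f, f, g]; ring

lemma Wq_PH (B : Base u z1 F ρ s δ Mo Mi) (G : Gz z1 F ρ b β g b0 κ Cq Q) (k : ℕ) {z : ℂ}
    (h1 : s ≤ ‖z‖) (h2 : ‖z‖ ≤ ρ + 1) (hF : ∀ m ∈ F, 1 / 4 ≤ dpt z m)
    (hn : near z1 F 150 z) :
    Wg k z1 F g z * ‖dz u z - b z * u z‖ ^ 2 ≤ rexp 2 / κ * PH u z1 F ρ s b β k z := by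
  obtain ⟨a, c, -⟩ := U_mid B h1 h2 hF
  have e1 : dz (fun w => ca ρ s F w * u w) z = dz u z := by rw [dz, c, c, dz]
  have hκ := G.hκ
  have hl := G.hlκ z (fun m hm => (by norm_num : (1 / 8 : ℝ) ≤ 1 / 4).trans (hF m hm)) hn
  have e2 : ‖Hf (fun w => ca ρ s F w * u w) b β k z‖ ^ 2 * rexp (2 * wt z1 F z) =
      Th (wt z1 F) β k z * ‖dz u z - b z * u z‖ ^ 2 := by
    have e3 : rexp (2 * wt z1 F z - 2 * (β z).re) =
        rexp (2 * wt z1 F z) * rexp (-(β z).re) ^ 2 := by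
      rw [← Real.exp_nat_mul, ← Real.exp_add]; congr 1; push_cast; ring
    rw [Hf, e1, a, norm_mul, norm_mul, norm_exp, norm_inv, norm_pow, neg_re, Th, e3, pow_mul']
    ring
  have t0 : 0 ≤ Th (wt z1 F) β k z * ‖dz u z - b z * u z‖ ^ 2 := by rw [← e2]; positivity
  have e4 : κ * (Th (wt z1 F) β k z * ‖dz u z - b z * u z‖ ^ 2) ≤ PH u z1 F ρ s b β k z := by
    rw [PH, Ph, e2]; nlinarith
  calc Wg k z1 F g z * ‖dz u z - b z * u z‖ ^ 2
      ≤ rexp 2 * Th (wt z1 F) β k z * ‖dz u z - b z * u z‖ ^ 2 := by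
        gcongr; exact (Th_le G k blin).2
    _ = rexp 2 / κ * (κ * (Th (wt z1 F) β k z * ‖dz u z - b z * u z‖ ^ 2)) := by field_simp
    _ ≤ _ := by gcongr

lemma near_shift {z1 : ℂ} {F : Idx} {R d : ℝ} {y z : ℂ} (h : near z1 F R z)
    (hd : ‖y - z‖ ≤ d) : near z1 F (R + d) y := by
  have t : ∀ p, ‖z - p‖ ≤ R → ‖y - p‖ ≤ R + d := fun p hp => by
    have := norm_add_le (y - z) (z - p)
    rw [sub_add_sub_cancel] at this
    linarith
  rcases h with h | h | ⟨m, hm, h⟩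
  · have := t 0 (by simpa using h)
    exact .inl (by simpa using this)
  · exact .inr (.inl (t _ h))
  · exact .inr (.inr ⟨m, hm, t _ h⟩)

/-- Unit vector pointing from the origin to a lattice point. -/
def ev (m : ℤ × ℤ) : ℂ := ((‖pt m‖⁻¹ : ℝ) : ℂ) * pt m

lemma ev_le (m : ℤ × ℤ) : ‖ev m‖ ≤ 1 := by
  rw [ev, norm_mul, norm_real, norm_inv, norm_norm]
  exact inv_mul_le_one

lemma ev_norm {m : ℤ × ℤ} (h : pt m ≠ 0) : ‖ev m‖ = 1 := by
  rw [ev, norm_mul, norm_real, norm_inv, norm_norm, inv_mul_cancel₀ (norm_ne_zero_iff.2 h)]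

/-- Moving towards the origin along a nearly radial direction decreases the modulus. -/
lemma inward {z e : ℂ} {r d t : ℝ} (he : ‖e‖ = 1) (hz : ‖z - r * e‖ ≤ 1) (ht : 0 ≤ t)
    (h : t ^ 2 + 2 * t ≤ 2 * t * r - d * (2 * ‖z‖ - d)) (hd : d ≤ ‖z‖) :
    ‖z - t * e‖ ≤ ‖z‖ - d := by
  set x := z - r * e with hx
  have e1 : z = x + r * e := by rw [hx]; ring
  have e2 : ‖z - t * e‖ ^ 2 = ‖z‖ ^ 2 - 2 * t * (x.re * e.re + x.im * e.im + r) + t ^ 2 := by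
    have h1 : e.re * e.re + e.im * e.im = 1 := by
      have := Complex.sq_norm e
      rw [he, normSq_apply] at this; linarith
    rw [Complex.sq_norm, Complex.sq_norm, normSq_apply, normSq_apply, e1]
    simp only [sub_re, sub_im, add_re, add_im, mul_re, mul_im, ofReal_re, ofReal_im]
    linear_combination (t ^ 2 - 2 * t * r) * h1
  have h2 : -1 ≤ x.re * e.re + x.im * e.im := by
    have := abs_re_le_norm (x * (starRingEnd ℂ) e)
    rw [norm_mul, RCLike.norm_conj, he, mul_one] at this
    simp only [mul_re, conj_re, conj_im] at this
    have := (abs_le.1 (this.trans hz)).1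
    linarith
  have h3 : ‖z - t * e‖ ^ 2 ≤ (‖z‖ - d) ^ 2 := by
    rw [e2]
    nlinarith
  exact (sq_le_sq₀ (norm_nonneg _) blin).1 h3

lemma Wq_trans (G : Gz z1 F ρ b β g b0 κ Cq Q) (k : ℕ) {y z : ℂ} (hy0 : y ≠ 0)
    (hyz : ‖y‖ ≤ ‖z‖) (hz : ‖z‖ ≤ ρ + 2) (hd : ‖y - z‖ ≤ 34) :
    Wg k z1 F g z ≤ rexp (68 * Cq) * Wg k z1 F g y := by
  have h1 := G.hLip z y hz blin
  have h2 := (abs_le.1 h1).2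
  have h3 : Cq * ‖z - y‖ ≤ Cq * 34 := by rw [norm_sub_rev]; exact mul_le_l hd G.hCq
  rw [Wq, Wq, mul_left_comm, ← Real.exp_add]
  have : 0 < ‖y‖ := norm_pos_iff.2 hy0
  gcongr
  linarith

/-- In the transition zone `u` is controlled through a nearby zero. -/
lemma trans_zone (B : Base u z1 F ρ s δ Mo Mi) (G : Gz z1 F ρ b β g b0 κ Cq Q) (k N : ℕ)
    (hPc : Continuous (PH u z1 F ρ s b β k))
    (hN : ρ + 4 ≤ N) {z : ℂ} (hz : ‖z‖ ≤ ρ + 1) (h1 : ¬ near z1 F 100 z) (h2 : near z1 F 110 z) :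
    u z ^ 2 * Wg k z1 F g z ≤
      10 ^ 6 * (rexp (68 * Cq) * (rexp 2 / κ)) * tau (PH u z1 F ρ s b β k) ev N z := by
  have hδ := B.hδ
  have hκ := G.hκ
  set q : ℂ → ℝ := fun z => wt z1 F z - g z
  have z100 : 100 < ‖z‖ := by by_contra! hc; exact h1 (.inl hc)
  have hr := norm_sub_pt_rd z
  have hr2 : ‖z‖ - 1 ≤ ‖pt (rd z)‖ := by have := norm_sub_norm_le z (pt (rd z)); linarith
  have hp0 : pt (rd z) ≠ 0 := norm_pos_iff.1 blin
  set e := ev (rd z) with he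
  have he1 : ‖e‖ = 1 := ev_norm hp0
  have hre : ‖z - (‖pt (rd z)‖ : ℝ) * e‖ ≤ 1 := by
    have : ((‖pt (rd z)‖ : ℝ) : ℂ) * e = pt (rd z) := by
      rw [he, ev, ← mul_assoc, ← ofReal_mul, mul_inv_cancel₀ (norm_ne_zero_iff.2 hp0), ofReal_one,
        one_mul]
    rwa [this]
  set c := z - 18 * e with hc
  have hcn : ‖c‖ ≤ ‖z‖ - 16 := by
    have := inward (t := 18) (d := 16) he1 hre bnum (by nlinarith) blin
    rw [hc]; exact_mod_cast this
  have hcz : ‖c - z‖ ≤ 18 := by rw [hc, sub_sub_cancel_left, norm_neg, norm_mul, he1]; simp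
  -- a zero of `u` on the circle of radius `16` about `c`
  have hcr := norm_sub_pt_rd c
  have far : ∀ p y, ‖y - z‖ ≤ 34 → 100 < ‖z - p‖ → 66 ≤ ‖y - p‖ := fun p y hy hp => by
    have := norm_sub_le (y - p) (y - z)
    rw [sub_sub_sub_cancel_left] at this
    linarith
  have hF0 : ∀ m ∈ F, 100 < dpt z m := fun m hm => by
    by_contra! hc; exact h1 (.inr (.inr ⟨m, hm, hc⟩))
  have hcp : ‖pt (rd c) - z‖ ≤ 34 := by
    have := norm_sub_le (c - z) (c - pt (rd c))
    rw [sub_sub_sub_cancel_left] at this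
    linarith
  have hcF : rd c ∉ F := fun hm => by
    have := far _ _ hcp (hF0 _ hm)
    rw [sub_self, norm_zero] at this; linarith
  have hc50 : 66 ≤ ‖pt (rd c)‖ := by simpa using far 0 _ hcp (by simpa using z100)
  have hcR : ‖pt (rd c)‖ ≤ ρ + 3 := by
    have := norm_sub_norm_le (pt (rd c)) c
    linarith [norm_sub_rev (pt (rd c)) c]
  obtain ⟨y0, hy0, hy00⟩ := B.hF' _ hcF blin hcR
  have hzero := zero_circle (u := u) (c := c) (τ := 16) (κ := 1 / 1024) B.hu bnum
    bnum bnum (fun w hw => by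
      rw [mem_cb] at hw
      have := norm_sub_norm_le w c
      refine (B.hlap w blin).trans ?_
      gcongr
      linarith) ⟨y0, by
      rw [mem_cb] at hy0 ⊢
      have := norm_sub_le (y0 - pt (rd c)) (c - pt (rd c))
      rw [sub_sub_sub_cancel_right] at this
      linarith, hy00⟩
  -- every point of the two paths lies in the region where the gauged density is effective
  have good : ∀ y, ‖y‖ ≤ ‖z‖ → ‖y - z‖ ≤ 34 → ‖b y‖ ≤ b0 ∧
      ‖dz u y - b y * u y‖ ^ 2 ≤ (rexp (68 * Cq) * (rexp 2 / κ) / Wq k q z) *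
        PH u z1 F ρ s b β k y := fun y hy hyz => by
    have y66 : 66 ≤ ‖y‖ := by simpa using far 0 y hyz (by simpa using z100)
    have hn : near z1 F 150 y := by
      have := near_shift h2 hyz
      rcases this with h | h | ⟨m, hm, h⟩
      · exact .inl blin
      · exact .inr (.inl blin)
      · exact .inr (.inr ⟨m, hm, blin⟩)
    have hy0 : y ≠ 0 := norm_pos_iff.1 blin
    refine ⟨G.hbP y hn, ?_⟩
    have a := Wq_PH B G k (z := y) (by linarith [B.hs1]) blin (fun m hm => by
      linarith [far _ y hyz (hF0 m hm)]) hn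
    have w0 : 0 < Wq k q z := by
      have : 0 < ‖z‖ := blin
      unfold Wq; positivity
    have c := Wq_trans G k hy0 hy blin hyz
    rw [div_mul_eq_mul_div, le_div_iff₀ w0]
    calc ‖dz u y - b y * u y‖ ^ 2 * Wq k q z
        ≤ ‖dz u y - b y * u y‖ ^ 2 * (rexp (68 * Cq) * Wq k q y) := by gcongr
      _ = rexp (68 * Cq) * (Wq k q y * ‖dz u y - b y * u y‖ ^ 2) := by ring
      _ ≤ rexp (68 * Cq) * (rexp 2 / κ * PH u z1 F ρ s b β k y) := by gcongr
      _ = _ := by ring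
  have main := trans_est (u := u) (Φ := PH u z1 F ρ s b β k) (b := b) (z := z) (e := e) (b0 := b0)
    (Λ := rexp (68 * Cq) * (rexp 2 / κ) / Wq k q z) B.hu G.hb.continuous hPc he1 G.hb0 G.hb1
    hzero ?_
  · have w0 : 0 < Wq k q z := by
      have : 0 < ‖z‖ := blin
      unfold Wq; positivity
    have ht : tau (PH u z1 F ρ s b β k) ev N z = Jf (PH u z1 F ρ s b β k) e z := by
      rw [tau, sum_eq_single (rd z)]
      · simp [cell, he]
      · intro m _ hm
        refine Set.indicator_of_notMem ?_ _
        exact fun h => hm h.symm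
      · intro h; exact absurd (mem_bx_of blin) h
    rw [ht]
    calc u z ^ 2 * Wq k q z ≤ (10 ^ 6 * (rexp (68 * Cq) * (rexp 2 / κ) / Wq k q z) *
          Jf (PH u z1 F ρ s b β k) e z) * Wq k q z := by gcongr
      _ = _ := by field_simp
  · rintro y (⟨t, ht, rfl⟩ | ⟨t, rfl⟩)
    · refine good _ ?_ ?_
      · have := inward (t := t) (d := 0) he1 hre ht.1 (by nlinarith [ht.1, ht.2]) (norm_nonneg z)
        rw [sub_zero] at this
        rw [seg, ← sub_eq_add_neg]; exact this
      · rw [add_sub_cancel_left, seg, norm_neg, norm_mul, he1, norm_real, nabs, abs_of_nonneg ht.1]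
        linarith [ht.2]
    · have n16 : ‖16 * e * cexp (t * I)‖ = 16 := by
        rw [norm_mul, norm_mul, he1, norm_exp_ofReal_mul_I]; simp
      refine good _ ?_ ?_
      · have e1 : z + circ e t = c + 16 * e * cexp (t * I) := by rw [circ, hc]; ring
        rw [e1]
        refine (norm_add_le _ _).trans ?_
        rw [n16]; linarith
      · have e1 : z + circ e t - z = (c - z) + 16 * e * cexp (t * I) := by rw [circ, hc]; ring
        rw [e1]
        refine (norm_add_le _ _).trans ?_
        rw [n16]; linarith

/-! ### Absorption -/

/-- Weighted size of the data on the two cutoff annuli. -/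
def J0 (ρ s Mo Mi Q : ℝ) (k : ℕ) : ℝ :=
  Q * (((s / 2) ^ (2 * k))⁻¹ * (Mi / s ^ 2) ^ 2 + ((ρ + 1) ^ (2 * k))⁻¹ * ((ρ + 2) ^ 2 * Mo) ^ 2)

/-- The solution localized near the poles and cut off at the origin and at the boundary, but not
at the poles of `F`. -/
def Vf (u : ℂ → ℝ) (z1 : ℂ) (F : Idx) (ρ s : ℝ) (z : ℂ) : ℝ := ch z1 F z * (ca ρ s ∅ z * u z)

lemma near_mono {R R' : ℝ} {z : ℂ} (h : near z1 F R z) (hR : R ≤ R') : near z1 F R' z := by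
  have := near_shift (d := R' - R) (y := z) h (by rw [sub_self, norm_zero]; linarith)
  rwa [add_sub_cancel] at this

lemma Q_pos (hρ : 0 ≤ ρ) (G : Gz z1 F ρ b β g b0 κ Cq Q) : 0 < Q :=
  (Real.exp_pos _).trans_le (G.hQ 0 (by rw [norm_zero]; linarith))

lemma Wq_le (G : Gz z1 F ρ b β g b0 κ Cq Q) (k : ℕ) {r : ℝ} {z : ℂ} (hr : 0 < r) (h1 : r ≤ ‖z‖)
    (h2 : ‖z‖ ≤ ρ + 2) : Wg k z1 F g z ≤ (r ^ (2 * k))⁻¹ * Q := by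
  rw [Wq]
  gcongr
  exact G.hQ z h2

lemma J0_bd (B : Base u z1 F ρ s δ Mo Mi) (G : Gz z1 F ρ b β g b0 κ Cq Q) (k : ℕ) {z : ℂ}
    {x C : ℝ} (h : s / 2 ≤ ‖z‖) (h2 : ‖z‖ ≤ ρ + 2)
    (hx : |x| ≤ C * (Mi / s ^ 2) ∨ ρ + 1 ≤ ‖z‖ ∧ |x| ≤ C * ((ρ + 2) ^ 2 * Mo)) :
    x ^ 2 * Wg k z1 F g z ≤ C ^ 2 * J0 ρ s Mo Mi Q k := by
  have hs := B.hs0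
  have hρ := B.hρ
  have hQ := Q_pos blin G
  have w0 := Wq_nonneg k (fun z => wt z1 F z - g z) z
  have p1 : 0 ≤ ((s / 2) ^ (2 * k))⁻¹ * (Mi / s ^ 2) ^ 2 := bpos
  have p2 : 0 ≤ ((ρ + 1) ^ (2 * k))⁻¹ * ((ρ + 2) ^ 2 * Mo) ^ 2 := bpos
  rcases hx with hx | ⟨h3, hx⟩
  · calc x ^ 2 * Wg k z1 F g z ≤ (C * (Mi / s ^ 2)) ^ 2 * (((s / 2) ^ (2 * k))⁻¹ * Q) := by
          rw [← sq_abs x]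
          gcongr
          exact Wq_le G k blin h h2
      _ = C ^ 2 * (Q * (((s / 2) ^ (2 * k))⁻¹ * (Mi / s ^ 2) ^ 2 + 0)) := by ring
      _ ≤ _ := by rw [J0]; gcongr
  · calc x ^ 2 * Wg k z1 F g z ≤ (C * ((ρ + 2) ^ 2 * Mo)) ^ 2 * (((ρ + 1) ^ (2 * k))⁻¹ * Q) := by
          rw [← sq_abs x]
          gcongr
          exact Wq_le G k blin h3 h2
      _ = C ^ 2 * (Q * (0 + ((ρ + 1) ^ (2 * k))⁻¹ * ((ρ + 2) ^ 2 * Mo) ^ 2)) := by ring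
      _ ≤ _ := by rw [J0]; gcongr

lemma V_mid (B : Base u z1 F ρ s δ Mo Mi) {z : ℂ} (h1 : s ≤ ‖z‖) (h2 : ‖z‖ ≤ ρ + 1) :
    ca ρ s ∅ z * u z = u z ∧ ∀ v, fd (fun w => ca ρ s ∅ w * u w) z v = fd u z v := by
  obtain ⟨a, c, -⟩ := ca_mid (F := ∅) (by linarith [B.hρ]) B.hs0 h1 h2
  obtain ⟨e, f, -⟩ := hh_zero (F := ∅) (z := z) (by simp)
  refine ⟨by rw [a, e]; ring, fun v => ?_⟩
  rw [fd_mul ca_contDiff (B.hu.of_le bnum), c, a, e, f]; ring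

lemma Vf_fd (B : Base u z1 F ρ s δ Mo Mi) (z v : ℂ) : fd (Vf u z1 F ρ s) z v =
    ch z1 F z * fd (fun w => ca ρ s ∅ w * u w) z v + ca ρ s ∅ z * u z * fd (ch z1 F) z v :=
  fd_mul ch_contDiff (ca_contDiff.mul (B.hu.of_le bnum)) z v

end

/-- The commutator source is dominated by the localized solution and the boundary data. -/
lemma src_bd : ∃ C, 1 ≤ C ∧ ∀ u z1 F ρ s δ Mo Mi b β g b0 κ Cq Q, Base u z1 F ρ s δ Mo Mi →
    Gz z1 F ρ b β g b0 κ Cq Q → ∀ (k : ℕ) z, s / 2 ≤ ‖z‖ → ‖z‖ ≤ ρ + 2 → 2 * Th (wt z1 F) β k z *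
      ((lap (fun w => ca ρ s F w * u w) z - ca ρ s F z * lap u z) / 4) ^ 2 ≤
    C * (Vf u z1 F ρ s z ^ 2 * Wg k z1 F g z + J0 ρ s Mo Mi Q k) := by
  obtain ⟨C, hC, h⟩ := err_bd
  refine ⟨rexp 2 * C ^ 2, by nlinarith [Real.add_one_le_exp 2],
    fun u z1 F ρ s δ Mo Mi b β g b0 κ Cq Q B G k z hz hz2 => ?_⟩
  obtain ⟨e1, e2, e3⟩ := h B
  have hρ := B.hρ
  have hs := B.hs0
  have hQ := Q_pos blin G
  have w0 := Wq_nonneg k (fun z => wt z1 F z - g z) z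
  have J : 0 ≤ J0 ρ s Mo Mi Q k := by unfold J0; positivity
  set E := lap (fun w => ca ρ s F w * u w) z - ca ρ s F z * lap u z with hE
  suffices hh : E ^ 2 * Wg k z1 F g z ≤
      C ^ 2 * (Vf u z1 F ρ s z ^ 2 * Wg k z1 F g z + J0 ρ s Mo Mi Q k) by
    calc 2 * Th (wt z1 F) β k z * (E / 4) ^ 2 ≤ 2 * (rexp 2 * Wg k z1 F g z) * (E / 4) ^ 2 := by
          gcongr; exact (Th_le G k hz2).1
      _ = rexp 2 / 8 * (E ^ 2 * Wg k z1 F g z) := by ring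
      _ ≤ rexp 2 / 1 * (C ^ 2 * (Vf u z1 F ρ s z ^ 2 * Wg k z1 F g z +
          J0 ρ s Mo Mi Q k)) := by gcongr; norm_num
      _ = _ := by ring
  rcases le_total ‖z‖ s with c | c
  · refine (J0_bd B G k hz hz2 (.inl (e1 z c))).trans ?_
    gcongr; nlinarith [sq_nonneg (Vf u z1 F ρ s z)]
  rcases le_total (ρ + 1) ‖z‖ with c' | c'
  · refine (J0_bd B G k hz hz2 (.inr ⟨c', e3 z c' hz2⟩)).trans ?_
    gcongr; nlinarith [sq_nonneg (Vf u z1 F ρ s z)]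
  by_cases hm : ∀ m ∈ F, 1 / 4 ≤ dpt z m
  · rw [hE, (U_mid B c c' hm).2.2, zero_pow two_ne_zero, zero_mul]; positivity
  · push Not at hm
    obtain ⟨m, hm, hm4⟩ := hm
    have v : Vf u z1 F ρ s z = u z := by
      rw [Vf, (V_mid B c c').1, (ch_one (.inr (.inr ⟨m, hm, blin⟩))).1, one_mul]
    rw [v]
    calc E ^ 2 * Wg k z1 F g z ≤ (C * |u z|) ^ 2 * Wg k z1 F g z := by
          rw [← sq_abs E]; gcongr; exact e2 z c c'
      _ = C ^ 2 * (u z ^ 2 * Wg k z1 F g z + 0) := by rw [mul_pow, sq_abs]; ring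
      _ ≤ _ := by gcongr

set_option maxHeartbeats 1000000 in
/-- Weighted gradient of the localized solution. -/
lemma grd_bd (κ Cq : ℝ) (hκ : 0 < κ) : ∃ C, 1 ≤ C ∧ ∀ u z1 F ρ s δ Mo Mi b β g b0 Q,
    Base u z1 F ρ s δ Mo Mi → Gz z1 F ρ b β g b0 κ Cq Q → ∀ (k N : ℕ),
    Continuous (PH u z1 F ρ s b β k) → (∀ z, 0 ≤ tau (PH u z1 F ρ s b β k) ev N z) →
    ρ + 4 ≤ N → ∀ z, (fd (Vf u z1 F ρ s) z 1 ^ 2 + fd (Vf u z1 F ρ s) z I ^ 2) * Wg k z1 F g z ≤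
    C * (PH u z1 F ρ s b β k z + Vf u z1 F ρ s z ^ 2 * Wg k z1 F g z +
      tau (PH u z1 F ρ s b β k) ev N z +
      (𝔹 (0 : ℂ) (ρ + 2)).indicator (fun _ => J0 ρ s Mo Mi Q k) z) := by
  obtain ⟨C2, hC2, h2⟩ := grad_bd
  obtain ⟨C3, hC3, h3⟩ := near_bounds
  obtain ⟨C4, hC4, h4⟩ := ch_bd
  set K := 10 ^ 6 * (rexp (68 * Cq) * (rexp 2 / κ))
  have κ0 : 0 ≤ rexp 2 / κ := bpos
  obtain ⟨C, hCd⟩ : ∃ C, C = 8 * (C2 + C3 * C4) ^ 2 + 16 * (rexp 2 / κ) + 2 * C3 ^ 2 +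
      (16 + 4 * C4 ^ 2) * K + 8 := ⟨_, rfl⟩
  have q1 : 0 ≤ (C2 + C3 * C4) ^ 2 := sq_nonneg _
  have q2 : 0 ≤ C3 ^ 2 := sq_nonneg _
  have q3 : 0 ≤ (16 + 4 * C4 ^ 2) * K := bpos
  refine ⟨C, blin, fun u z1 F ρ s δ Mo Mi b β g b0 Q B G k N hPc hτ hN z => ?_⟩
  obtain ⟨g1, g2⟩ := h2 B
  obtain ⟨-, n2, n3⟩ := h3 B
  have hρ := B.hρ
  have hs := B.hs0
  have hs1 := B.hs1
  have hQ := Q_pos blin G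
  have J : 0 ≤ J0 ρ s Mo Mi Q k := by unfold J0; positivity
  have w0 := Wq_nonneg k (fun z => wt z1 F z - g z) z
  have p0 := PH_nonneg B G k z
  have τ0 := hτ z
  set W := Wg k z1 F g z
  set P := PH u z1 F ρ s b β k z
  set t := tau (PH u z1 F ρ s b β k) ev N z
  have v0 : 0 ≤ Vf u z1 F ρ s z ^ 2 * W := bpos
  have i0 : 0 ≤ (𝔹 (0 : ℂ) (ρ + 2)).indicator (fun _ => J0 ρ s Mo Mi Q k) z :=
    Set.indicator_nonneg (fun _ _ => J) z
  have C0 : 0 ≤ C := blin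
  have triv : (∀ v, v = 1 ∨ v = I → fd (Vf u z1 F ρ s) z v = 0) → 
      (fd (Vf u z1 F ρ s) z 1 ^ 2 + fd (Vf u z1 F ρ s) z I ^ 2) * W ≤
      C * (P + Vf u z1 F ρ s z ^ 2 * W + t +
      (𝔹 (0 : ℂ) (ρ + 2)).indicator (fun _ => J0 ρ s Mo Mi Q k) z) := fun h => by
    rw [h 1 (.inl rfl), h I (.inr rfl)]
    have : 0 ≤ C * (P + Vf u z1 F ρ s z ^ 2 * W + t +
      (𝔹 (0 : ℂ) (ρ + 2)).indicator (fun _ => J0 ρ s Mo Mi Q k) z) := bpos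
    linarith
  rcases lt_or_ge ‖z‖ (s / 2) with c0 | c0
  · refine triv fun v _ => ?_
    rw [fderiv_zero_on (isOpen_ball (x := (0 : ℂ)) (ε := s / 2)) (fun y hy => ?_) z
      (by rwa [mem_ball_zero_iff])]
    · rfl
    · rw [mem_ball_zero_iff] at hy
      rw [Vf, ca_core blin hs blin (by simp) hy.le]; ring
  rcases lt_or_ge (ρ + 2) ‖z‖ with c1 | c1
  · refine triv fun v _ => ?_
    obtain ⟨a, d⟩ := ca_far (s := s) (F := ∅) blin c1.le
    rw [Vf_fd B, fd_mul ca_contDiff (B.hu.of_le bnum), a, d]; ring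
  have ind : (𝔹 (0 : ℂ) (ρ + 2)).indicator (fun _ => J0 ρ s Mo Mi Q k) z =
      J0 ρ s Mo Mi Q k := Set.indicator_of_mem (by rwa [mem_closedBall_zero_iff]) _
  have fin : ∀ v w : ℝ, v ^ 2 * W ≤ (C2 + C3 * C4) ^ 2 * J0 ρ s Mo Mi Q k →
      w ^ 2 * W ≤ (C2 + C3 * C4) ^ 2 * J0 ρ s Mo Mi Q k → (v ^ 2 + w ^ 2) * W ≤
      C * (P + Vf u z1 F ρ s z ^ 2 * W + t +
      (𝔹 (0 : ℂ) (ρ + 2)).indicator (fun _ => J0 ρ s Mo Mi Q k) z) := fun v w hv hw => by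
    rw [ind]
    calc (v ^ 2 + w ^ 2) * W ≤ 8 * (C2 + C3 * C4) ^ 2 * J0 ρ s Mo Mi Q k := by
          nlinarith [mul_nonneg q1 J]
      _ ≤ C * J0 ρ s Mo Mi Q k := by gcongr; linarith
      _ ≤ _ := by gcongr; linarith
  have h5 := h4 z1 F z
  have cm := ch_mem (z1 := z1) (F := F) (z := z)
  rcases le_total ‖z‖ s with c | c
  · obtain ⟨a, d⟩ := ch_one (z1 := z1) (F := F) (z := z) (.inl blin)
    have e : ∀ v, v = 1 ∨ v = I → fd (Vf u z1 F ρ s) z v ^ 2 * W ≤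
        (C2 + C3 * C4) ^ 2 * J0 ρ s Mo Mi Q k := fun v hv => by
      refine J0_bd B G k c0 c1 (.inl ?_)
      have Mi0 : 0 ≤ Mi := (abs_nonneg _).trans (B.hMi 0 (by rw [norm_zero]; linarith))
      rw [Vf_fd B, a, d, one_mul, mul_zero, add_zero]
      refine (g1 z v hv c).trans ?_
      have : Mi / s ≤ Mi / s ^ 2 := by gcongr; nlinarith
      have : 0 ≤ Mi / s ^ 2 := bpos
      gcongr
      nlinarith
    exact fin _ _ (e 1 (.inl rfl)) (e I (.inr rfl))
  rcases le_total (ρ + 1) ‖z‖ with c' | c'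
  · have e : ∀ v, v = 1 ∨ v = I → fd (Vf u z1 F ρ s) z v ^ 2 * W ≤
        (C2 + C3 * C4) ^ 2 * J0 ρ s Mo Mi Q k := fun v hv => by
      refine J0_bd B G k c0 c1 (.inr ⟨c', ?_⟩)
      have hMo := B.hMo z blin
      have Mo0 : 0 ≤ Mo := (abs_nonneg _).trans hMo
      have m := ca_mem (ρ := ρ) (F := ∅) hs blin (by simp) z
      rw [Vf_fd B]
      refine (abs_add_le _ _).trans ?_
      rw [abs_mul, abs_mul, abs_mul, abs_of_nonneg cm.1, abs_of_nonneg m.1]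
      have a1 : ch z1 F z * |fd (fun w => ca ρ s ∅ w * u w) z v| ≤ 1 * (C2 * ((ρ + 2) * Mo)) :=
        mul_le_mul cm.2 (g2 z v hv c' c1) (abs_nonneg _) zero_le_one
      have a2 : ca ρ s ∅ z * |u z| * |fd (ch z1 F) z v| ≤ 1 * Mo * C4 := by
        gcongr
        exacts [m.2, h5 v hv]
      have a3 : Mo ≤ (ρ + 2) * Mo := by nlinarith
      have a4 : (ρ + 2) * Mo ≤ (ρ + 2) ^ 2 * Mo := by gcongr; nlinarith
      have a5 : C4 ≤ C3 * C4 := by nlinarith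
      calc _ ≤ 1 * (C2 * ((ρ + 2) * Mo)) + 1 * Mo * C4 := add_le_add a1 a2
        _ = C2 * ((ρ + 2) * Mo) + C4 * Mo := by ring
        _ ≤ C2 * ((ρ + 2) ^ 2 * Mo) + (C3 * C4) * ((ρ + 2) ^ 2 * Mo) := by gcongr; linarith
        _ = _ := by ring
    exact fin _ _ (e 1 (.inl rfl)) (e I (.inr rfl))
  obtain ⟨m1, m2⟩ := V_mid B c c'
  have off : (∀ m ∈ F, 1 / 4 ≤ dpt z m) → near z1 F 150 z →
      (fd u z 1 ^ 2 + fd u z I ^ 2) * W ≤ 8 * (rexp 2 / κ) * P +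
        8 * (u z ^ 2 * W) := fun hF hn => by
    have hb := G.hbP z hn
    have hb1 := G.hb1
    have := Wq_PH B G k c c' hF hn
    have x1 : ‖dz u z‖ ≤ ‖dz u z - b z * u z‖ + |u z| := by
      have x2 := norm_add_le (dz u z - b z * u z) (b z * u z)
      rw [sub_add_cancel, norm_mul, norm_real, nabs] at x2
      nlinarith [abs_nonneg (u z)]
    have x3 : 4 * ‖dz u z‖ ^ 2 ≤ 8 * ‖dz u z - b z * u z‖ ^ 2 + 8 * u z ^ 2 := by
      rw [← sq_abs (u z)]
      nlinarith [sq_nonneg (‖dz u z - b z * u z‖ - |u z|), norm_nonneg (dz u z)]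
    rw [← norm_dz_sq]
    nlinarith [mul_le_r x3 w0]
  by_cases hn : near z1 F 100 z
  · obtain ⟨a, d⟩ := ch_one hn
    have vu : Vf u z1 F ρ s z = u z := by rw [Vf, a, m1, one_mul]
    have fu : ∀ v, fd (Vf u z1 F ρ s) z v = fd u z v := fun v => by rw [Vf_fd B, a, d, m2]; ring
    rw [vu] at v0 ⊢
    rw [fu, fu]
    by_cases hF : ∀ m ∈ F, 1 / 4 ≤ dpt z m
    · calc _ ≤ 8 * (rexp 2 / κ) * P + 8 * (u z ^ 2 * W) := off hF (near_mono hn bnum)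
        _ ≤ C * P + C * (u z ^ 2 * W) := by gcongr <;> linarith
        _ = C * (P + u z ^ 2 * W + 0 + 0) := by ring
        _ ≤ _ := by gcongr
    · push Not at hF
      obtain ⟨m, hm, hm4⟩ := hF
      have x : ∀ v, v = 1 ∨ v = I → fd u z v ^ 2 ≤ C3 ^ 2 * u z ^ 2 := fun v hv => by
        rw [← sq_abs, ← sq_abs (u z), ← mul_pow]
        gcongr
        exact n3 z v m hv hm hm4.le
      calc _ ≤ (C3 ^ 2 * u z ^ 2 + C3 ^ 2 * u z ^ 2) * W := by
            gcongr
            exacts [x 1 (.inl rfl), x I (.inr rfl)]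
        _ = 2 * C3 ^ 2 * (u z ^ 2 * W) := by ring
        _ ≤ C * (0 + u z ^ 2 * W + 0 + 0) := by rw [zero_add, add_zero, add_zero]; gcongr; linarith
        _ ≤ _ := by gcongr
  by_cases hz : ∀ R < 110, ¬ near z1 F R z
  · obtain ⟨a, d⟩ := ch_zero hz
    refine triv fun v _ => ?_
    rw [Vf_fd B, a, d]; ring
  push Not at hz
  obtain ⟨R, hR, hz⟩ := hz
  have hn2 : near z1 F 110 z := near_mono hz hR.le
  have T := trans_zone B G k N hPc hN c' hn hn2
  have o := off (fun m hm => by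
    by_contra! hc; exact hn (.inr (.inr ⟨m, hm, blin⟩))) (near_mono hn2 bnum)
  have x : ∀ v, v = 1 ∨ v = I → fd (Vf u z1 F ρ s) z v ^ 2 ≤
      2 * fd u z v ^ 2 + 2 * C4 ^ 2 * u z ^ 2 := fun v hv => by
    rw [Vf_fd B, m1, m2]
    have y1 : (ch z1 F z * fd u z v) ^ 2 ≤ fd u z v ^ 2 := by
      rw [mul_pow]
      exact mul_le_of_le_one_left (sq_nonneg _) (pow_le_one₀ cm.1 cm.2)
    have y2 : (u z * fd (ch z1 F) z v) ^ 2 ≤ C4 ^ 2 * u z ^ 2 := by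
      rw [mul_pow, mul_comm, ← sq_abs (fd (ch z1 F) z v)]
      gcongr
      exact h5 v hv
    nlinarith [sq_nonneg (ch z1 F z * fd u z v - u z * fd (ch z1 F) z v)]
  calc (fd (Vf u z1 F ρ s) z 1 ^ 2 + fd (Vf u z1 F ρ s) z I ^ 2) * W
      ≤ (2 * fd u z 1 ^ 2 + 2 * C4 ^ 2 * u z ^ 2 +
        (2 * fd u z I ^ 2 + 2 * C4 ^ 2 * u z ^ 2)) * W := by
        gcongr
        exacts [x 1 (.inl rfl), x I (.inr rfl)]
    _ = 2 * ((fd u z 1 ^ 2 + fd u z I ^ 2) * W) + 4 * C4 ^ 2 * (u z ^ 2 * W) := by ring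
    _ ≤ 2 * (8 * (rexp 2 / κ) * P + 8 * (u z ^ 2 * W)) + 4 * C4 ^ 2 * (u z ^ 2 * W) := by gcongr
    _ = 16 * (rexp 2 / κ) * P + (16 + 4 * C4 ^ 2) * (u z ^ 2 * W) := by ring
    _ ≤ 16 * (rexp 2 / κ) * P + (16 + 4 * C4 ^ 2) * (K * t) := by gcongr
    _ = 16 * (rexp 2 / κ) * P + (16 + 4 * C4 ^ 2) * K * t := by ring
    _ ≤ C * P + C * t := by gcongr <;> linarith
    _ = C * (P + 0 + t + 0) := by ring
    _ ≤ _ := by gcongr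

set_option maxHeartbeats 1000000 in
/-- For `k` large compared with `ρ`, the Poincaré gain absorbs the commutator terms. -/
lemma absorb (κ Cq : ℝ) (hκ : 0 < κ) : ∃ m, 1 ≤ m ∧ ∀ u z1 F ρ s δ Mo Mi b β g b0 Q,
    Base u z1 F ρ s δ Mo Mi → Gz z1 F ρ b β g b0 κ Cq Q → ∀ (k N : ℕ) (ω' : ℝ),
    ρ + 4 ≤ N → m * ρ ≤ k → (∀ z, ‖z‖ ≤ ρ + 2 → fd (fun z => wt z1 F z - g z) z z ≤ k / 4) →
    ∫ z, ‖cexp (β z) * dbar (fun w => cexp (-β w) * (dz (fun w => ca ρ s F w * u w) w -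
      b w * (ca ρ s F w * u w : ℝ))) z -
      (((lap (fun w => ca ρ s F w * u w) z - ca ρ s F z * lap u z) / 4 : ℝ) : ℂ)‖ ^ 2 ≤ ω' →
    Integrable (fun z => Vf u z1 F ρ s z ^ 2 * Wg k z1 F g z) ∧
    ∫ z, Vf u z1 F ρ s z ^ 2 * Wg k z1 F g z ≤ 4 * (ρ + 2) ^ 2 * J0 ρ s Mo Mi Q k +
        2 * (rexp 2 * (((s / 2) ^ (2 * k))⁻¹ * Q)) * ω' := by
  obtain ⟨C1, hC1, h1⟩ := src_bd
  obtain ⟨C2, hC2, h2⟩ := grd_bd κ Cq hκ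
  obtain ⟨K, hK⟩ : ∃ K, K = 3 * 10 ^ 6 * (C1 * C2) := ⟨_, rfl⟩
  have hK1 : 1 ≤ K := by nlinarith
  refine ⟨6 * K, blin, fun u z1 F ρ s δ Mo Mi b β g b0 Q B G k N ω' hN hk hqg herr => ?_⟩
  have hρ := B.hρ
  have hs := B.hs0
  have hs1 := B.hs1
  have hQ := Q_pos blin G
  have hk4 : (4 : ℝ) ≤ k := by nlinarith
  have J : 0 ≤ J0 ρ s Mo Mi Q k := by unfold J0; positivity
  have far : ∀ F z, ρ + 2 < ‖z‖ → ca ρ s F z = 0 := fun F z hz => (ca_far blin hz.le).1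
  have core : ∀ F : Idx, (∀ m ∈ F, 50 ≤ ‖pt m‖) → ∀ z ∈ ball 0 (s / 2),
      ca ρ s F z = 0 := fun F hF z hz => by
    rw [mem_ball_zero_iff] at hz
    exact ca_core blin hs blin hF hz.le
  have hq := ((wt_contDiff z1 F).of_le bnum).sub G.hg
  obtain ⟨iX, po⟩ := poincare (V := Vf u z1 F ρ s) (k := k) (ρ' := ρ + 2) (σ := s / 2)
    (by exact_mod_cast hk4) blin
    (ch_contDiff.mul (ca_contDiff.mul (B.hu.of_le bnum)))
    (fun z hz => by rw [Vf, core ∅ (by simp) z hz]; ring) (fun z hz => by rw [Vf, far ∅ z hz]; ring)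
    hq hqg
  refine ⟨iX, ?_⟩
  set X := ∫ z, Vf u z1 F ρ s z ^ 2 * Wg k z1 F g z
  have X0 : 0 ≤ X := integral_nonneg fun z => mul_nonneg (sq_nonneg _) (Wq_nonneg _ _ _)
  set ι : ℂ → ℝ := (𝔹 0 (ρ + 2)).indicator fun _ => J0 ρ s Mo Mi Q k with hι
  have ι0 : ∀ z, 0 ≤ ι z := fun z => Set.indicator_nonneg (fun _ _ => J) z
  have iι : Integrable ι := (integrable_indicator_iff measurableSet_closedBall).2
    (integrableOn_const (isCompact_closedBall _ _).measure_lt_top.ne)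
  have Iι : ∫ z, ι z ≤ 4 * (ρ + 2) ^ 2 * J0 ρ s Mo Mi Q k := by
    rw [hι, integral_indicator measurableSet_closedBall, setIntegral_const, measureReal_def,
      volume_closedBall, smul_eq_mul]
    gcongr
    rw [ENNReal.toReal_mul, ENNReal.toReal_pow, ENNReal.toReal_ofReal blin, mul_comm]
    gcongr
    exact Real.pi_le_four
  set S : ℂ → ℝ := fun z => Vf u z1 F ρ s z ^ 2 * Wg k z1 F g z
  have S0 : ∀ z, 0 ≤ S z := fun z => mul_nonneg (sq_nonneg _) (Wq_nonneg _ _ _)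
  obtain ⟨l1, l2, l3⟩ := level1 (U := fun w => ca ρ s F w * u w) (D := fun z => ca ρ s F z * lap u z)
    (M := rexp 2 * (((s / 2) ^ (2 * k))⁻¹ * Q)) (ω' := ω') k
    (ca_contDiff.mul B.hu) (fun z hz => by rw [far F z hz, zero_mul])
    (fun z hz => by rw [core F (fun m hm => (B.hF m hm).1) z hz, zero_mul]) blin
    ((ca_contDiff (n := 0)).continuous.mul (lap_cont B.hu))
    (fun z hz => by
      rcases lt_or_ge (ρ + 2) ‖z‖ with c | c
      · rw [far F z c, zero_mul]
      rcases mul_eq_zero.1 hz with c' | c'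
      · rw [c', zero_mul]
      · have := B.hlap z blin
        rw [c', abs_zero, mul_zero] at this
        rw [abs_nonpos_iff.1 this, mul_zero])
    G.hb G.hβ (wt_contDiff z1 F) herr bpos
    (fun z h1 h2 => (Th_le G k h2).1.trans (by gcongr; exact Wq_le G k blin h1 h2))
    ((iadd iX iι).const_mul C1)
    (fun z => mul_nonneg blin (add_nonneg (S0 z) (ι0 z)))
    (fun z hz1 hz2 => by
      refine (h1 u z1 F ρ s δ Mo Mi b β g b0 κ Cq Q B G k z hz1 hz2).trans_eq ?_
      rw [hι, Set.indicator_of_mem (by rwa [mem_closedBall_zero_iff])])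
  have P0 := PH_nonneg B G k
  have Pc : Continuous (PH u z1 F ρ s b β k) :=
    (continuous_const.mul (lap_cont (wt_contDiff z1 F))).mul ((l1.continuous.norm.pow 2).mul
      (Real.continuous_exp.comp (continuous_const.mul (wt_contDiff z1 F).continuous)))
  have Ps : HCS (PH u z1 F ρ s b β k) := hcs_of l2 fun z hz => by rw [PH, Ph, hz]; simp
  have iP := Pc.integ Ps
  obtain ⟨t1, t2, -, t3⟩ := tau_int Pc Ps P0 ev_le N
  have po := po _ ((iadd (iadd (iadd iP iX) t1) iι).const_mul C2) fun z =>
    h2 u z1 F ρ s δ Mo Mi b β g b0 Q B G k N Pc t2 hN z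
  rw [icm, integral_add (iadd (iadd iP iX) t1) iι, integral_add (iadd iP iX) t1,
    integral_add iP iX] at po
  have l3' : ∫ z, PH u z1 F ρ s b β k z ≤ _ := l3
  rw [icm, integral_add iX iι] at l3'
  set Y := ∫ z, PH u z1 F ρ s b β k z
  set I := ∫ z, ι z
  have I0 : 0 ≤ I := integral_nonneg ι0
  set E := 2 * (rexp 2 * (((s / 2) ^ (2 * k))⁻¹ * Q)) * ω'
  have E0 : 0 ≤ E := by
    have := (integral_nonneg fun z => bpos).trans herr
    positivity
  have θ : (2 * (ρ + 2) / k) ^ 2 * K ≤ 1 / 2 := by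
    have : 2 * (ρ + 2) / k ≤ 4 / (6 * K) := by rw [div_le_div_iff₀ blin bpos]; nlinarith
    calc (2 * (ρ + 2) / k) ^ 2 * K ≤ (4 / (6 * K)) ^ 2 * K := by gcongr
      _ = 4 / 9 / K := by field_simp; ring
      _ ≤ 4 / 9 / 1 := by gcongr
      _ ≤ 1 / 2 := bnum
  have a1 : Y + X + 10 ^ 6 * Y + I ≤ 3 * 10 ^ 6 * C1 * (E + X + I) := by nlinarith
  have a2 : X ≤ 1 / 2 * (E + X + I) := by
    calc X ≤ (2 * (ρ + 2) / k) ^ 2 * (C2 * (Y + X + 10 ^ 6 * Y + I)) := po.trans (by gcongr)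
      _ ≤ (2 * (ρ + 2) / k) ^ 2 * (C2 * (3 * 10 ^ 6 * C1 * (E + X + I))) := by gcongr
      _ = (2 * (ρ + 2) / k) ^ 2 * K * (E + X + I) := by rw [hK]; ring
      _ ≤ _ := by gcongr
  linarith

/-! ### Three-ball inequality -/

/-- The localized weighted mass bounds the value of the solution at `z1`. -/
lemma lower_bd : ∃ C, 1 ≤ C ∧ ∀ u z1 F ρ s δ Mo Mi b β g b0 κ Cq Q,
    Base u z1 F ρ s δ Mo Mi → Gz z1 F ρ b β g b0 κ Cq Q → ∀ (k : ℕ) (T : ℝ), 1 ≤ Q → 0 ≤ T →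
    (∀ z, ‖z‖ ≤ ρ + 2 → -T ≤ wt z1 F z - g z) →
    Integrable (fun z => Vf u z1 F ρ s z ^ 2 * Wg k z1 F g z) →
    u z1 ^ 2 ≤ C * ((‖z1‖ + 2) ^ (2 * k) * rexp (2 * T)) *
      ((∫ z, Vf u z1 F ρ s z ^ 2 * Wg k z1 F g z) + J0 ρ s Mo Mi Q k) := by
  set c := ∫ z, bp 2 z with hc
  have c0 : 0 < c := bp_int_pos
  refine ⟨2 / c + 2, by have := div_pos two_pos c0; linarith,
    fun u z1 F ρ s δ Mo Mi b β g b0 κ Cq Q B G k T hQ hT hq iX => ?_⟩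
  have hρ := B.hρ
  have hs := B.hs0
  have hs1 := B.hs1
  have hz1 := B.hz1
  set L := (‖z1‖ + 2) ^ (2 * k) * rexp (2 * T) with hL
  have n0 := norm_nonneg z1
  have L0 : 0 ≤ L := bpos
  set S : ℂ → ℝ := fun z => Vf u z1 F ρ s z ^ 2 * Wg k z1 F g z with hS
  have S0 : ∀ z, 0 ≤ S z := fun z => mul_nonneg (sq_nonneg _) (Wq_nonneg _ _ _)
  have pe := point_est B.hu (x := z1) (κ := δ ^ 2) (sq_nonneg _) (by linarith [B.hδ])
    fun w hw => B.hlap w (by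
      rw [mem_cb] at hw
      linarith [norm_sub_norm_le w z1])
  have ib : Integrable fun w => bp 2 (w - z1) :=
    ((bp_cont 2).integ (bp_hcs two_ne_zero)).comp_sub_right z1
  have e1 : ∫ w, bp 2 (w - z1) * u w ^ 2 ≤ ∫ w, (L * S w + Mi ^ 2 * bp 2 (w - z1)) := by
    refine integral_mono_of_nonneg (.of_forall fun w => mul_nonneg (bp_nonneg _ _) (sq_nonneg _))
      (iadd (iX.const_mul L) (ib.const_mul _)) (.of_forall fun w => ?_)
    beta_reduce
    have b0 := bp_nonneg 2 (w - z1)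
    have q0 : 0 ≤ L * S w := mul_nonneg L0 (S0 w)
    rcases le_total 1 ‖w - z1‖ with h | h
    · rw [bp_zero two_ne_zero h]; linarith
    have hw := norm_sub_norm_le w z1
    rcases le_total ‖w‖ s with h' | h'
    · have := B.hMi w blin
      have : u w ^ 2 ≤ Mi ^ 2 := by rw [← sq_abs]; gcongr
      nlinarith
    · have v : Vf u z1 F ρ s w = u w := by
        rw [Vf, (V_mid B h' blin).1, (ch_one (.inr (.inl blin))).1, one_mul]
      have w0 : 0 < ‖w‖ := blin
      have x1 : 1 ≤ L * Wg k z1 F g w := by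
        have y1 : 1 ≤ (‖z1‖ + 2) ^ (2 * k) * (‖w‖ ^ (2 * k))⁻¹ := by
          rw [← div_eq_mul_inv, one_le_div bpos]
          gcongr; linarith
        have y2 : 1 ≤ rexp (2 * T) * rexp (2 * (wt z1 F w - g w)) := by
          rw [← Real.exp_add, Real.one_le_exp_iff]
          linarith [hq w blin]
        calc (1 : ℝ) ≤ ((‖z1‖ + 2) ^ (2 * k) * (‖w‖ ^ (2 * k))⁻¹) *
              (rexp (2 * T) * rexp (2 * (wt z1 F w - g w))) := one_le_mul_of_one_le_of_one_le y1 y2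
          _ = _ := by rw [hL, Wq]; ring
      have x2 : u w ^ 2 ≤ L * S w := by
        simp only [hS]
        rw [v]; nlinarith [sq_nonneg (u w)]
      have := bp_le_one 2 (w - z1)
      nlinarith [sq_nonneg (u w), sq_nonneg Mi, mul_nonneg (sq_nonneg Mi) b0]
  rw [integral_add (iX.const_mul L) (ib.const_mul _), icm, icm,
    integral_sub_right_eq_self (fun w => bp 2 w) z1, ← hc] at e1
  set X := ∫ z, S z
  have X0 : 0 ≤ X := integral_nonneg S0
  have m1 : Mi ^ 2 ≤ L * J0 ρ s Mo Mi Q k := by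
    have a1 : Mi ^ 2 ≤ (Mi / s ^ 2) ^ 2 := by
      rw [div_pow]
      exact le_div_self (sq_nonneg _) bpos
        (pow_le_one₀ bpos (pow_le_one₀ hs.le blin))
    have a2 : 1 ≤ (‖z1‖ + 2) ^ (2 * k) * ((s / 2) ^ (2 * k))⁻¹ := by
      rw [← div_eq_mul_inv, one_le_div bpos]
      gcongr; linarith
    have a3 : 1 ≤ rexp (2 * T) := Real.one_le_exp blin
    calc Mi ^ 2 ≤ (Mi / s ^ 2) ^ 2 := a1
      _ ≤ (‖z1‖ + 2) ^ (2 * k) * ((s / 2) ^ (2 * k))⁻¹ * rexp (2 * T) * Q *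
          (Mi / s ^ 2) ^ 2 := le_mul_of_one_le_left (sq_nonneg _)
            (one_le_mul_of_one_le_of_one_le (one_le_mul_of_one_le_of_one_le a2 a3) hQ)
      _ = L * (Q * (((s / 2) ^ (2 * k))⁻¹ * (Mi / s ^ 2) ^ 2 + 0)) := by rw [hL]; ring
      _ ≤ _ := by rw [J0]; gcongr; positivity
  have J : 0 ≤ J0 ρ s Mo Mi Q k := by unfold J0; positivity
  have f1 : u z1 ^ 2 ≤ 2 / c * (L * X) + 2 * Mi ^ 2 := by
    have : c * u z1 ^ 2 ≤ c * (2 / c * (L * X) + 2 * Mi ^ 2) := by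
      have : c * (2 / c * (L * X) + 2 * Mi ^ 2) = 2 * (L * X + Mi ^ 2 * c) := by field_simp
      linarith
    exact le_of_mul_le_mul_left this c0
  have f2 : 0 ≤ 2 / c * (L * J0 ρ s Mo Mi Q k) := bpos
  have f3 : 0 ≤ L * X := bpos
  linear_combination f1 + 2 * m1 + f2 + 2 * f3

set_option maxHeartbeats 1000000 in
/-- Quantitative three-ball inequality at unit scale, for a potential of size `δ ^ 2`. -/
theorem core : ∃ A C m : ℝ, 1 ≤ A ∧ 1 ≤ C ∧ 1 ≤ m ∧ ∀ (u : ℂ → ℝ) (z1 : ℂ) (ρ s δ Mo Mi : ℝ)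
    (k N : ℕ), C² u → 200 ≤ ρ → ρ + 10 ≤ N → (N : ℝ) ≤ 2 * ρ → 0 < s → s ≤ 1 / 2 →
    0 < δ → A * δ ^ 2 * (1 + Real.log (3 * N + 1)) ≤ 1 →
    (∀ z, ‖z‖ ≤ ρ + 50 → |lap u z| ≤ δ ^ 2 * |u z|) → ‖z1‖ ≤ ρ - 10 →
    (∀ z, ‖z‖ ≤ ρ + 10 → |u z| ≤ Mo) → (∀ z, ‖z‖ ≤ 2 * s → |u z| ≤ Mi) → m * ρ ≤ k →
    u z1 ^ 2 ≤ C * ((‖z1‖ + 2) ^ (2 * k) * rexp (2 * (A * δ ^ 2 * (N + 1) + 1))) *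
      (ρ ^ 2 * J0 ρ s Mo Mi
        (rexp (2 * (C + (A * δ ^ 2 * (N + 1) + 1))) * (4 * ρ ^ 2) ^ 4) k) := by
  obtain ⟨K, hK, cells⟩ := cells_exist
  obtain ⟨A, hA, ga⟩ := gauge hK
  obtain ⟨Cw, hCw, κ, hκ, hw⟩ := wt_props
  obtain ⟨Cm, hCm, mo⟩ := mollify
  obtain ⟨m, hm, ab⟩ := absorb κ (Cw + 2 * Cm) hκ
  obtain ⟨CL, hCL, lo⟩ := lower_bd
  refine ⟨A + 1024 * A + 1024, 8 * CL + Cw, m + 16 * (Cw + Cm), blin, blin,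
    blin, fun u z1 ρ s δ Mo Mi k N hu hρ hN hN2 hs hs1 hδ hAδ hlap hz1 hMo hMi hk => ?_⟩
  classical
  have hd2 : 0 < δ ^ 2 := bpos
  have hlog : 0 ≤ Real.log (3 * N + 1) := Real.log_nonneg blin
  have hAd : 0 < A * δ ^ 2 := bpos
  have hA1 : A * δ ^ 2 + 1024 * (A * δ ^ 2) + 1024 * δ ^ 2 ≤ 1 := by nlinarith
  have hA2 : A * δ ^ 2 * (1 + Real.log (3 * N + 1)) ≤ 1 := by nlinarith
  obtain ⟨T, hT⟩ : ∃ T, T = (A + 1024 * A + 1024) * δ ^ 2 * (N + 1) + 1 := ⟨_, rfl⟩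
  have hT1 : A * δ ^ 2 * (N + 1) + 1 ≤ T := by rw [hT]; gcongr; linarith
  have hT0 : 0 ≤ T := by rw [hT]; positivity
  obtain ⟨Q, hQ⟩ : ∃ Q, Q = rexp (2 * (8 * CL + Cw + T)) * (4 * ρ ^ 2) ^ 4 := ⟨_, rfl⟩
  have hQ1 : 1 ≤ Q := by
    rw [hQ]
    exact one_le_mul_of_one_le_of_one_le (Real.one_le_exp blin) (one_le_pow₀ (by nlinarith))
  rw [← hT, ← hQ]
  -- poles are placed at the lattice points far from the zero set
  obtain ⟨F, hFd⟩ : ∃ F, F = (bx N).filter fun n => 50 ≤ ‖pt n‖ ∧ ‖pt n‖ ≤ ρ + 3 ∧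
    ∀ y ∈ 𝔹 (pt n) 8, u y ≠ 0 := ⟨_, rfl⟩
  have B : Base u z1 F ρ s δ Mo Mi := by
    refine ⟨hu, hρ, hs, hs1, blin, hlap, fun n hn => ?_, fun n hn h1 h2 => ?_, hz1, hMo, hMi⟩
    · rw [hFd, mem_filter] at hn; exact hn.2
    · have : rd (pt n) = n := by simp [rd, pt]
      have hb := mem_bx_of (z := pt n) (N := N) blin
      rw [this] at hb
      by_contra! hc
      exact hn (by rw [hFd, mem_filter]; exact ⟨hb, h1, h2, hc⟩)
  have hF50 : ∀ n ∈ F, 50 ≤ ‖pt n‖ := fun n hn => (B.hF n hn).1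
  set U : ℂ → ℝ := fun w => ca ρ s F w * u w with hU
  have hUc : C² U := ca_contDiff.mul hu
  have far : ∀ z, ρ + 2 ≤ ‖z‖ → ca ρ s F z = 0 := fun z hz => (ca_far blin hz).1
  have hUs : tsupport U ⊆ 𝔹 0 (ρ + 2) := closure_minimal (fun z hz => by
    by_contra hc
    rw [mem_closedBall_zero_iff, not_le] at hc
    exact hz (by simp only [hU]; rw [far z hc.le, zero_mul])) isClosed_closedBall
  obtain ⟨Lp, hLp⟩ := hUc.lipschitzWith_of_hasCompactSupport
    (HasCompactSupport.of_support_subset_isCompact (isCompact_closedBall 0 (ρ + 2))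
      (subset_closure.trans hUs)) bnum
  obtain ⟨D, hD⟩ : ∃ D, D = fun p => (bx N).filter fun n => ‖p - pt n‖ ≤ 171 := ⟨_, rfl⟩
  obtain ⟨E, hE⟩ : ∃ E, E = D 0 ∪ D z1 := ⟨_, rfl⟩
  have hEc : (E.card : ℝ) ≤ 10 ^ 6 := by
    have c : ∀ p, ((D p).card : ℝ) ≤ 8 * ((171 : ℕ) + 1) ^ 2 := fun p =>
      card_near p (D p) 171 fun n hn => by
        rw [hD] at hn
        exact mod_cast (mem_filter.1 hn).2
    have h : (E.card : ℝ) ≤ (D 0).card + (D z1).card := by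
      rw [hE]; exact mod_cast Finset.card_union_le _ _
    have := c 0
    have := c z1
    push_cast at *
    linarith
  have hcell : ∀ n ∈ bx N, n ∉ E → (∃ p, ‖p - pt n‖ ≤ 170 ∧ ∀ z ∈ 𝔹 p (1/8), U z = 0) ∨
      ((∀ t, 9 ≤ t → t ≤ 13 → ∃ p, ‖p - pt n‖ = t ∧ U p = 0) ∧
        ∀ z ∈ {z | near z1 F 150 z}, 14 ≤ ‖z - pt n‖) := fun n hn hnE => by
    simp only [hE, hD] at hnE
    rw [mem_union, mem_filter, mem_filter, not_or, not_and, not_and,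
      not_le, not_le, zero_sub, norm_neg] at hnE
    obtain ⟨n1, n2⟩ := hnE
    replace n1 := n1 hn
    replace n2 := n2 hn
    by_cases h1 : ρ + 2.5 ≤ ‖pt n‖
    · refine .inl ⟨pt n, by rw [sub_self, norm_zero]; norm_num, fun z hz => ?_⟩
      rw [mem_cb] at hz
      have := norm_sub_norm_le (pt n) z
      rw [norm_sub_rev] at this
      simp only [hU]
      rw [far z blin, zero_mul]
    by_cases h2 : ∃ l ∈ F, ‖pt l - pt n‖ ≤ 170
    · obtain ⟨l, hl, h2⟩ := h2
      refine .inl ⟨pt l, h2, fun z hz => ?_⟩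
      rw [mem_cb] at hz
      simp only [hU]
      rw [ca_hole hs blin hF50 hl hz, zero_mul]
    push Not at h1 h2
    have hnF : n ∉ F := fun h => by
      have := h2 n h
      rw [sub_self, norm_zero] at this; linarith
    obtain ⟨y, hy, hy0⟩ := B.hF' n hnF blin blin
    refine .inr ⟨fun t ht1 ht2 => ?_, fun z hz => ?_⟩
    · obtain ⟨p, hp, hp0⟩ := zero_circle (c := pt n) (τ := t) (κ := δ ^ 2) hu blin hd2
        (by nlinarith) (fun w hw => hlap w (by
          rw [mem_cb] at hw
          linarith [norm_sub_norm_le w (pt n)])) ⟨y, closedBall_subset_closedBall blin hy, hy0⟩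
      exact ⟨p, hp, by simp only [hU]; rw [hp0, mul_zero]⟩
    · have d : ∀ p, ‖z - p‖ ≤ 150 → 170 < ‖p - pt n‖ → 14 ≤ ‖z - pt n‖ := fun p hp h => by
        have := norm_sub_le (z - pt n) (z - p)
        rw [sub_sub_sub_cancel_left] at this
        linarith
      rcases hz with hz | hz | ⟨l, hl, hz⟩
      · exact d 0 (by simpa using hz) (by rw [zero_sub, norm_neg]; linarith)
      · exact d z1 hz blin
      · exact d _ hz (h2 l hl)
  have J : 0 ≤ J0 ρ s Mo Mi Q k := by unfold J0; positivity
  set L := (‖z1‖ + 2) ^ (2 * k) * rexp (2 * T)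
  have L0 : 0 < L := by have := norm_nonneg z1; positivity
  refine le_of_forall_pos_le_add fun η hη => ?_
  set M := 2 * (rexp 2 * (((s / 2) ^ (2 * k))⁻¹ * Q))
  have M0 : 0 < M := bpos
  obtain ⟨ω, hω, ga⟩ := ga N (by
    have : ((4 : ℕ) : ℝ) ≤ N := by push_cast; linarith
    exact mod_cast this) (η / (CL * L * M)) bpos
  obtain ⟨S₁, S₂, hS⟩ := cells N ω Lp U {z | near z1 F 150 z} E hω Lp.2
    (fun z w => by simpa [dist_eq_norm] using hLp.dist_le_mul z w) hEc hcell
  obtain ⟨b, β, hb, hβ, hbP, hβN, hβL, herr⟩ := ga δ hδ blin U (fun z => ca ρ s F z * lap u z)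
    hUc (hUs.trans (closedBall_subset_closedBall blin))
    ((ca_contDiff (n := 0)).continuous.mul (lap_cont hu)) (fun z => by
      simp only [hU]
      rw [abs_mul, abs_mul, mul_left_comm]
      rcases le_total (ρ + 2) ‖z‖ with c | c
      · rw [far z c]; simp
      · gcongr; exact hlap z blin) _ E S₁ S₂ hS
  obtain ⟨g, hg, hgβ, hgd⟩ := mo (fun z => (β z).re) N (continuous_re.comp hβ.continuous)
    fun z z' hz hzz => by
      rw [← sub_re]
      exact (abs_re_le_norm _).trans ((hβL z z' hz hzz).trans hA2)
  obtain ⟨w1, w2, w3, w4, w5⟩ := hw z1 F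
  have hgT : ∀ z, ‖z‖ ≤ ρ + 2 → |g z| ≤ T := fun z hz => by
    have h1 := hgβ z blin
    have h2 := (abs_re_le_norm (β z)).trans (hβN z blin)
    have := abs_add_le (g z - (β z).re) (β z).re
    rw [sub_add_cancel] at this
    linarith
  have G : Gz z1 F ρ b β g (A * δ ^ 2) κ (Cw + 2 * Cm) Q := by
    refine ⟨hb, hβ, hg, hAd.le, blin, blin, hbP, fun z hz => hgβ z blin,
      fun z z' hz hz' => ?_, hκ, w4, w5, fun z hz => ?_⟩
    · have h1 := w3 z z'
      have h2 := lip_on_ball hg blin hgd z z' blin blin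
      have := abs_sub (wt z1 F z - wt z1 F z') (g z - g z')
      rw [sub_sub_sub_comm]
      linarith
    · have x : ∀ t : ℝ, 0 ≤ t → t ≤ 2 * ρ - 1 → Real.log (1 + t ^ 2) ≤ Real.log (4 * ρ ^ 2) :=
        fun t ht h => Real.log_le_log bpos (by nlinarith)
      have x1 := x ‖z‖ (norm_nonneg _) blin
      have x2 := x ‖z - z1‖ (norm_nonneg _) ((norm_sub_le _ _).trans blin)
      have e : Q = rexp (2 * (8 * CL + Cw + T) + 4 * Real.log (4 * ρ ^ 2)) := by
        rw [hQ, Real.exp_add, show (4 : ℝ) * Real.log (4 * ρ ^ 2) = Real.log ((4 * ρ ^ 2) ^ 4) by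
          rw [Real.log_pow]; norm_num, Real.exp_log bpos]
      rw [e, Real.exp_le_exp]
      linarith [w1 z, (abs_le.1 (hgT z hz)).1]
  obtain ⟨iX, hX⟩ := ab u z1 F ρ s δ Mo Mi b β g _ Q B G k N _ blin (by nlinarith)
    (fun z hz => by
      have d1 : ∀ v, v = 1 ∨ v = I → |fd (fun z => wt z1 F z - g z) z v| ≤ Cw + Cm := fun v hv => by
          rw [fderiv_fun_sub ((wt_contDiff z1 F).differentiable bnum z)
            (hg.differentiable bnum z), sub_apply]
          exact (abs_sub _ _).trans (add_le_add (w2 z v hv) (hgd z v blin hv))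
      rw [fd_dir]
      have y : ∀ a b : ℝ, |a| ≤ ‖z‖ → |b| ≤ Cw + Cm → a * b ≤ 2 * ρ * (Cw + Cm) := fun a b ha hb =>
        (le_abs_self _).trans (by rw [abs_mul]; gcongr; linarith)
      have y1 := y _ _ (abs_re_le_norm z) (d1 1 (.inl rfl))
      have y2 := y _ _ (abs_im_le_norm z) (d1 I (.inr rfl))
      nlinarith) herr
  have fin := lo u z1 F ρ s δ Mo Mi b β g _ κ _ Q B G k T hQ1 hT0
    (fun z hz => by linarith [wt_nonneg z1 F z, (abs_le.1 (hgT z hz)).2]) iX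
  calc u z1 ^ 2 ≤ CL * L * (4 * (ρ + 2) ^ 2 * J0 ρ s Mo Mi Q k + M * (η / (CL * L * M)) +
        J0 ρ s Mo Mi Q k) := fin.trans (by gcongr)
    _ = CL * L * ((4 * (ρ + 2) ^ 2 + 1) * J0 ρ s Mo Mi Q k) + η := by field_simp; ring
    _ ≤ CL * L * ((8 * ρ ^ 2) * J0 ρ s Mo Mi Q k) + η := by gcongr; nlinarith
    _ = 8 * CL * L * (ρ ^ 2 * J0 ρ s Mo Mi Q k) + η := by ring
    _ ≤ _ := by gcongr; linarith

/-! ### Rescaling and final estimates -/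

lemma lap_congr {f g : ℂ → ℝ} {z : ℂ} (h : f =ᶠ[𝓝 z] g) : lap f z = lap g z := by
  have h1 : ∀ v, (fun w => fd f w v) =ᶠ[𝓝 z] fun w => fd g w v := fun v => by
    filter_upwards [h.eventuallyEq_nhds] with w hw
    rw [hw.fderiv_eq]
  rw [lap, lap, (h1 1).fderiv_eq, (h1 I).fderiv_eq]

/-- Rescaling a solution by `ε` and extending it to the plane. -/
lemma rescale {W v : ℂ → ℝ} {R a ε ρ : ℝ} (hW : ∀ z ∈ ball (0 : ℂ) R, |W z| ≤ a ^ 2)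
    (hv : ContDiffOn ℝ 2 v (ball (0 : ℂ) R))
    (hs : ∀ z ∈ ball (0 : ℂ) R, -lap v z + W z * v z = 0) (hε : 0 < ε) (hρ : 0 < ρ)
    (hR : ε * ρ < R) :
    ∃ u : ℂ → ℝ, C² u ∧ (∀ z, ‖z‖ ≤ ρ → u z = v (ε * z)) ∧
      ∀ z, ‖z‖ ≤ ρ → |lap u z| ≤ (a * ε) ^ 2 * |u z| := by
  obtain ⟨x, hx, hxR⟩ := exists_between hR
  obtain ⟨y, hy, hyR⟩ := exists_between hxR
  have x0 : 0 < x := by nlinarith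
  have hd : 0 < y ^ 2 - x ^ 2 := by nlinarith
  obtain ⟨β, hβ⟩ : ∃ β, β = (y ^ 2 - x ^ 2)⁻¹ := ⟨_, rfl⟩
  have hβ0 : 0 < β := by rw [hβ]; positivity
  have hb : β * y ^ 2 - β * x ^ 2 = 1 := by rw [hβ]; field_simp
  set χ := ct (β * y ^ 2) β 0
  have c1 : ∀ z : ℂ, ‖z‖ ≤ x → χ z = 1 := fun z hz => ct_one (by rw [sub_zero, ← hb]; gcongr)
  have c0 : ∀ z : ℂ, y ≤ ‖z‖ → χ z = 0 := fun z hz => ct_zero (by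
    rw [sub_zero, sub_nonpos]; gcongr; linarith)
  set V : ℂ → ℝ := fun z => χ z * v z with hV
  have hVc : C² V := by
    rw [contDiff_iff_contDiffAt]
    intro z
    rcases lt_or_ge ‖z‖ R with h | h
    · have hz : z ∈ ball 0 R := by rwa [mem_ball_zero_iff]
      exact (ct_contDiff (n := 2) _ _ _).contDiffAt.mul (hv.contDiffAt (isOpen_ball.mem_nhds hz))
    · refine (contDiffAt_const (c := 0)).congr_of_eventuallyEq ?_
      filter_upwards [(isOpen_lt continuous_const continuous_norm).mem_nhds
        (show y < ‖z‖ by linarith)] with w hw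
      simp only [hV]
      rw [c0 w (le_of_lt hw), zero_mul]
  have hVl : ∀ z, ‖z‖ < x → |lap V z| ≤ a ^ 2 * |V z| := fun z hz => by
    have hz' : z ∈ ball 0 R := by rw [mem_ball_zero_iff]; linarith
    have e : V =ᶠ[𝓝 z] v := by
      filter_upwards [(isOpen_lt continuous_norm continuous_const).mem_nhds hz] with w hw
      simp only [hV]
      rw [c1 w (le_of_lt hw), one_mul]
    rw [lap_congr e, e.eq_of_nhds, show lap v z = W z * v z by linarith [hs z hz'], abs_mul]
    gcongr
    exact hW z hz'
  have hn : ∀ z : ℂ, ‖z‖ ≤ ρ → ‖ε * z‖ < x := fun z hz => by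
    rw [norm_mul, norm_real, nabs, abs_of_pos hε]
    nlinarith
  refine ⟨fun z => V (0 + ε * z), contDiff_aff hVc 0 ε, fun z hz => ?_, fun z hz => ?_⟩
  · simp only [hV]
    rw [zero_add, c1 _ (hn z hz).le, one_mul]
  · rw [lap_scale hVc, zero_add, abs_mul, abs_of_nonneg (sq_nonneg ε), mul_pow, mul_comm (a ^ 2),
      mul_assoc]
    gcongr
    simpa using hVl _ (hn z hz)

lemma thr {A C a : ℝ} (hA : 1 ≤ A) (ha : 0 < a) : ∃ R0, ∀ R, R0 ≤ R → 1 ≤ √(Real.log R) ∧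
    6 * a ≤ √(Real.log R) ∧ 1 ≤ 2 * A * a * √(Real.log R) ∧ 64 * A * a * √(Real.log R) ≤ R ∧
    rexp (3 * C) * 2 ^ 14 * R ^ 28 ≤ rexp R ∧ 2 * rexp 10 ≤ R ∧ 1000 ≤ R := by
  have h1 := (Real.tendsto_sqrt_atTop.comp Real.tendsto_log_atTop).eventually_ge_atTop
    (1 + 6 * a + 1 / (2 * A * a))
  have h2 := Real.isLittleO_log_id_atTop.bound (c := 1 / (64 * A * a)) bpos
  have h3 := (Real.tendsto_exp_div_pow_atTop 28).eventually_ge_atTop (rexp (3 * C) * 2 ^ 14)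
  rw [← eventually_atTop]
  filter_upwards [h1, h2, h3, eventually_ge_atTop (2 * rexp 10), eventually_ge_atTop 1000]
    with R r1 r2 r3 r4 r5
  rw [Function.comp] at r1
  have p : 0 < 1 / (2 * A * a) := bpos
  have y1 : 1 ≤ √(Real.log R) := blin
  have y2 := Real.sq_sqrt (zero_le_one.trans (Real.one_le_sqrt.1 y1))
  refine ⟨y1, blin, ?_, ?_, ?_, r4, r5⟩
  · rw [← div_le_iff₀' bpos]; linarith
  · rw [nabs, nabs, id, abs_of_nonneg (by linarith : 0 ≤ R)] at r2
    have := (le_abs_self _).trans r2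
    rw [div_mul_eq_mul_div, one_mul, le_div_iff₀ bpos] at this
    have : √(Real.log R) * (64 * A * a) ≤ Real.log R * (64 * A * a) := by gcongr; nlinarith
    linarith
  · rwa [le_div_iff₀ bpos] at r3

/-- The outer term of the three-ball inequality is absorbed and the inner one is solved for `M`. -/
lemma conclude {G ρ σ x s c R L l T E M : ℝ} {k : ℕ} (hρ : 200 ≤ ρ) (hx : 0 ≤ x)
    (hxρ : x ≤ ρ - σ / 2) (hσ : 100 ≤ σ) (hs : 0 < s) (hM : 0 ≤ M) (hG : 0 ≤ G)
    (hE : rexp (-(2 * L)) ≤ E)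
    (h : E ≤ (x + 2) ^ (2 * k) * G * (((s / 2) ^ (2 * k))⁻¹ * (M / s ^ 2) ^ 2 +
      ((ρ + 1) ^ (2 * k))⁻¹ * ((ρ + 2) ^ 2 * rexp (c * R)) ^ 2))
    (hGe : 4 * G * (ρ + 2) ^ 4 ≤ rexp (5 * R))
    (hk : 5 * R + 2 * (c * R) + 2 * L ≤ 2 * k * (σ / (3 * ρ)))
    (hl : 2 * ρ / s ≤ rexp (2 * l)) (hls : 1 / s ≤ rexp l)
    (hT : 2 * L + 4 * k * l + 5 * R + 4 * l ≤ 2 * T) : rexp (-T) ≤ M := by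
  have d1 : (x + 2) / (ρ + 1) ≤ rexp (-(σ / (3 * ρ))) := by
    refine le_trans ?_ (Real.add_one_le_exp _)
    rw [div_le_iff₀ blin, neg_add_eq_sub, sub_mul, div_mul_eq_mul_div, one_mul,
      le_sub_iff_add_le', ← le_sub_iff_add_le, div_le_iff₀ blin]
    nlinarith
  have d2 : (x + 2) ^ (2 * k) * ((ρ + 1) ^ (2 * k))⁻¹ ≤ rexp (-(5 * R + 2 * (c * R) + 2 * L)) := by
    rw [← div_eq_mul_inv, ← div_pow]
    refine (pow_le_pow_left₀ bpos d1 _).trans ?_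
    rw [← Real.exp_nat_mul, Real.exp_le_exp]
    push_cast
    linarith
  have o : (x + 2) ^ (2 * k) * G * (((ρ + 1) ^ (2 * k))⁻¹ * ((ρ + 2) ^ 2 * rexp (c * R)) ^ 2) ≤
      rexp (-(2 * L)) / 4 := by
    calc _ = (x + 2) ^ (2 * k) * ((ρ + 1) ^ (2 * k))⁻¹ * ((4 * G * (ρ + 2) ^ 4) *
          rexp (c * R) ^ 2) / 4 := by ring
      _ ≤ rexp (-(5 * R + 2 * (c * R) + 2 * L)) * (rexp (5 * R) * rexp (c * R) ^ 2) / 4 := by gcongr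
      _ = _ := by
        rw [← Real.exp_nat_mul, ← Real.exp_add, ← Real.exp_add]
        ring_nf
  have i : (x + 2) ^ (2 * k) * G * (((s / 2) ^ (2 * k))⁻¹ * (M / s ^ 2) ^ 2) ≤
      rexp (4 * k * l + 5 * R + 4 * l) * M ^ 2 / 4 := by
    have i1 : (x + 2) ^ (2 * k) * ((s / 2) ^ (2 * k))⁻¹ ≤ rexp (4 * k * l) := by
      rw [← div_eq_mul_inv, ← div_pow]
      have : (x + 2) / (s / 2) ≤ rexp (2 * l) := le_trans (by
        rw [div_div_eq_mul_div]; exact div_le_div_of_nonneg_right blin hs.le) hl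
      refine (pow_le_pow_left₀ bpos this _).trans ?_
      rw [← Real.exp_nat_mul, Real.exp_le_exp]
      push_cast
      linarith
    have i2 := le_trans (le_mul_of_one_le_right bpos
      (one_le_pow₀ blin)) hGe
    have i3 : (1 / s) ^ 4 ≤ rexp (4 * l) := by
      rw [show 4 * l = (4 : ℕ) * l by norm_num, Real.exp_nat_mul]
      gcongr
    calc _ = (x + 2) ^ (2 * k) * ((s / 2) ^ (2 * k))⁻¹ * (4 * G) * (1 / s) ^ 4 * M ^ 2 / 4 := by ring
      _ ≤ rexp (4 * k * l) * rexp (5 * R) * rexp (4 * l) * M ^ 2 / 4 := by gcongr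
      _ = _ := by rw [Real.exp_add, Real.exp_add]
  have f : rexp (-(2 * L)) ≤ rexp (4 * k * l + 5 * R + 4 * l) * M ^ 2 := by
    have := mul_nonneg (Real.exp_pos (4 * k * l + 5 * R + 4 * l)).le (sq_nonneg M)
    have := Real.exp_pos (-(2 * L))
    linarith
  refine le_of_sq_le_sq ?_ hM
  refine le_of_mul_le_mul_left (le_trans ?_ f) (Real.exp_pos (4 * k * l + 5 * R + 4 * l))
  rw [← Real.exp_nat_mul, ← Real.exp_add, Real.exp_le_exp]
  push_cast
  linarith

lemma G_bd {C D ρ R : ℝ} (hρ : 200 ≤ ρ) (hρR : ρ ≤ R ^ 2) (hD : 4 * D ≤ 2 * R)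
    (hR : 0 < R) (h : rexp (3 * C) * 2 ^ 14 * R ^ 28 ≤ rexp R) :
    4 * (C * rexp (2 * D) * (ρ ^ 2 * (rexp (2 * (C + D)) * (4 * ρ ^ 2) ^ 4))) * (ρ + 2) ^ 4 ≤
      rexp (5 * R) := by
  have hCe : C ≤ rexp C := by linarith [Real.add_one_le_exp C]
  calc _ ≤ 4 * (rexp C * rexp (2 * D) * (ρ ^ 2 * (rexp (2 * (C + D)) *
        (4 * ρ ^ 2) ^ 4))) * (2 * ρ) ^ 4 := by gcongr; linarith
    _ = rexp C * rexp (2 * D) * rexp (2 * (C + D)) * (2 ^ 14 * ρ ^ 14) := by ring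
    _ = rexp (3 * C) * rexp (4 * D) * (2 ^ 14 * ρ ^ 14) := by
      rw [← Real.exp_add, ← Real.exp_add, ← Real.exp_add]; ring_nf
    _ ≤ rexp (3 * C) * rexp (2 * R) * (2 ^ 14 * (R ^ 2) ^ 14) := by gcongr
    _ = rexp (2 * R) * (rexp (3 * C) * 2 ^ 14 * R ^ 28) := by ring
    _ ≤ rexp (2 * R) * rexp R := by gcongr
    _ ≤ _ := by rw [← Real.exp_add, Real.exp_le_exp]; linarith

lemma k_bd {c R L T S q ρ k : ℝ} (hc : 1 ≤ c) (hL : 0 ≤ L) (hR : 0 < R) (hS : 0 < S) 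
    (hρ : 0 < ρ) (hρP : ρ ≤ R * q) (hk : T / 32 ≤ k) (hT : 2 ^ 14 * (c * R + L) ≤ T * (S / R)) :
    5 * R + 2 * (c * R) + 2 * L ≤ 2 * k * (S * q / (3 * ρ)) := by
  have h1 : S / R ≤ S * q / ρ := by
    rw [div_le_div_iff₀ hR hρ, mul_assoc]
    gcongr
    linarith
  have h2 : 0 < S / R := bpos
  have hcR := le_mul_of_one_le_left hR.le hc
  have h0 : 0 < T := by nlinarith
  have h3 : T / 32 * (S / R) ≤ k * (S * q / ρ) := by gcongr; linarith
  rw [mul_comm 3, ← div_div]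
  linarith

lemma T_bd {L k l R T y : ℝ} (hk : k ≤ T / 16) (hl : 10 ≤ l) (hL : 0 ≤ L) (hT : 2 ^ 15 * R ≤ T)
    (hR : 1 ≤ R) : 2 * L + 4 * k * l + 5 * R + 4 * l ≤ 2 * (l * (T + 1 / 5 * (L + 1 / y ^ 2))) := by
  have h1 : 0 ≤ l * (1 / 5 * (1 / y ^ 2)) := bpos
  have h2 : 10 * L ≤ l * L := by gcongr
  have h3 : k * l ≤ T / 16 * l := by gcongr
  have h4 : l * (2 ^ 15 * R) ≤ l * T := by gcongr
  have h5 : l ≤ l * R := le_mul_of_one_le_right blin hR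
  have h6 : 10 * R ≤ l * R := by gcongr
  linarith

end

end Landis

set_option maxHeartbeats 2000000 in
/-- Iterative proposition (three-ball inequality for Schrödinger equations): there are
universal constants `C_K > 0`, `c_d > 0`, `C_H ≥ 10` such that for every `a > 0` there
is a threshold `Rhat₀(a)` so that for all `R ≥ Rhat₀(a)` there exists `r₀ = r₀(a,R) > 1`
with: if `W : B_R → ℝ` has `|W| ≤ a²` on `B_R`, `v` solves `-Δv + Wv = 0` in `B_R`
with `|v| ≤ exp (c₁ R)` on `B_R` for some `c₁ ≥ 1`, and for some `S ∈ (2^8, R/2)` there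
are `z₀ ∈ closedBall 0 (R - S)` and `L ≥ 0` with `|v z₀| ≥ exp (-L)`, then for every
`r ∈ (0, r₀)`, `sup_{B_r} |v| ≥ (r/R) ^ τ`, where
`τ = max (3 a C_H √(C_K/(32 ln 2)) R √(log R)) (2^14 (c₁ R + L + c_d/log R) R / S)
      + (1/5) (L + c_d/log R)`. -/
theorem iterative_proposition :
    ∃ C_K > (0 : ℝ), ∃ c_d > (0 : ℝ), ∃ C_H : ℝ, 10 ≤ C_H ∧
      ∀ a : ℝ, 0 < a → ∃ Rhat₀ : ℝ, ∀ R : ℝ, Rhat₀ ≤ R →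
        ∃ r₀ > (1 : ℝ),
          ∀ (W v : ℂ → ℝ) (c₁ : ℝ), 1 ≤ c₁ →
            (∀ z ∈ ball (0 : ℂ) R, |W z| ≤ a ^ 2) →
            ContDiffOn ℝ 2 v (ball (0 : ℂ) R) →
            (∀ z ∈ ball (0 : ℂ) R, -lap v z + W z * v z = 0) →
            (∀ z ∈ ball (0 : ℂ) R, |v z| ≤ Real.exp (c₁ * R)) →
            ∀ S : ℝ, (2 : ℝ) ^ 8 < S → S < R / 2 →
            ∀ z₀ ∈ closedBall (0 : ℂ) (R - S), ∀ L : ℝ, 0 ≤ L →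
              Real.exp (-L) ≤ |v z₀| →
              ∀ r : ℝ, 0 < r → r < r₀ →
                (r / R) ^
                    (max (3 * a * C_H * Real.sqrt (C_K / (32 * Real.log 2)) * R *
                        Real.sqrt (Real.log R))
                      (2 ^ 14 * (c₁ * R + L + c_d / Real.log R) * R / S) +
                      1 / 5 * (L + c_d / Real.log R)) ≤
                  sSup ((fun z => |v z|) '' ball (0 : ℂ) r) := by
  obtain ⟨A, C, m, hA, hC, hm, core⟩ := Landis.core
  -- the spatial scale below is `ε = 1 / (2 A a √(log R))`, and `C_K` makes the degree exceed `m R / ε`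
  refine ⟨32 * Real.log 2 * (64 * m * A) ^ 2, by positivity, 1, one_pos, 10, le_rfl, fun a ha => ?_⟩
  obtain ⟨R0, hR0⟩ := Landis.thr (C := C) hA ha
  refine ⟨R0, fun R hR => ⟨2, one_lt_two, fun W v c hc hW hv hs hb S hS hS2 z0 hz0 L hL hvz r hr hr2 => ?_⟩⟩
  obtain ⟨y1, y6, y2, y64, e28, e10, hRk⟩ := hR0 R hR
  have hlog : √(Real.log R) ^ 2 = Real.log R :=
    Real.sq_sqrt (zero_le_one.trans (Real.one_le_sqrt.1 y1))
  have hK : √(32 * Real.log 2 * (64 * m * A) ^ 2 / (32 * Real.log 2)) = 64 * m * A := by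
    rw [mul_div_cancel_left₀ _ (by positivity), Real.sqrt_sq (by positivity)]
  rw [hK]
  generalize √(Real.log R) = y at *
  rw [← hlog]
  have hR : 0 < R := by linarith
  have hS0 : 0 < S := by linarith
  set T := max (3 * a * 10 * (64 * m * A) * R * y) (2 ^ 14 * (c * R + L + 1 / y ^ 2) * R / S)
  have T1 : 3 * a * 10 * (64 * m * A) * R * y ≤ T := le_max_left _ _
  have T2 : 2 ^ 14 * (c * R + L) ≤ T * (S / R) := by
    have : 2 ^ 14 * (c * R + L + 1 / y ^ 2) * R / S ≤ T := le_max_right _ _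
    rw [← mul_div_assoc, le_div_iff₀ hR]
    rw [div_le_iff₀ hS0] at this
    have h : 0 ≤ 2 ^ 14 * (1 / y ^ 2) * R := by positivity
    linarith
  have T0 : 2 ^ 15 * R ≤ T := by
    have h : S / R ≤ 1 / 2 := by rw [div_le_iff₀ hR]; linarith
    have h0 : 0 ≤ T := le_trans (by positivity) T1
    have := mul_le_mul_of_nonneg_left h h0
    linarith [le_mul_of_one_le_left hR.le hc]
  obtain ⟨q, hq⟩ : ∃ q, q = 2 * A * a * y := ⟨_, rfl⟩
  have q1 : 1 ≤ q := by rwa [hq]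
  have q0 : 0 < q := by linarith
  obtain ⟨P, hP⟩ : ∃ P, P = R * q := ⟨_, rfl⟩
  have PR : R ≤ P := by rw [hP]; exact le_mul_of_one_le_right hR.le q1
  have PR2 : P ≤ R ^ 2 := by rw [hP, sq]; gcongr; linarith
  obtain ⟨σ, hσ⟩ : ∃ σ, σ = S * q := ⟨_, rfl⟩
  have hσ1 : 200 ≤ σ := by linarith [le_mul_of_one_le_right hS0.le q1]
  have hσP : 2 * σ ≤ P := by
    linarith [mul_le_mul_of_nonneg_right hS2.le q0.le]
  obtain ⟨ρ, hρ⟩ : ∃ ρ, ρ = P - σ / 2 := ⟨_, rfl⟩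
  have hρ0 : 0 < ρ := by linarith
  obtain ⟨u, hu, huv, hul⟩ := Landis.rescale (ε := q⁻¹) (ρ := ρ + 50) hW hv hs (by positivity)
    (by linarith) (by rw [inv_mul_lt_iff₀ q0]; linarith)
  have hub : ∀ z : ℂ, ‖z‖ ≤ ρ + 50 → (q⁻¹ : ℂ) * z ∈ ball (0 : ℂ) R := fun z hz => by
    rw [mem_ball_zero_iff, norm_mul, norm_inv, Complex.norm_real, Real.norm_eq_abs, abs_of_pos q0,
      inv_mul_lt_iff₀ q0]
    linarith
  obtain ⟨M, hM⟩ : ∃ M, M = sSup ((fun z => |v z|) '' ball (0 : ℂ) r) := ⟨_, rfl⟩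
  have hMv : ∀ z ∈ ball (0 : ℂ) r, |v z| ≤ M := fun z hz => by
    rw [hM]
    refine le_csSup ⟨Real.exp (c * R), ?_⟩ ⟨z, hz, rfl⟩
    rintro _ ⟨w, hw, rfl⟩
    exact hb w (ball_subset_ball (by linarith) hw)
  have M0 : 0 ≤ M := (abs_nonneg _).trans (hMv 0 (mem_ball_self hr))
  rw [← hM]
  have hN1 := Nat.le_ceil ρ
  have hN2 := Nat.ceil_lt_add_one hρ0.le
  have hk1 := Nat.floor_le (show 0 ≤ T / 16 by linarith)
  have hk2 := Nat.lt_floor_add_one (T / 16)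
  obtain ⟨N, hN⟩ : ∃ N, N = ⌈ρ⌉₊ + 10 := ⟨_, rfl⟩
  have hN' : (N : ℝ) = ⌈ρ⌉₊ + 10 := by rw [hN]; push_cast; rfl
  generalize ⌊T / 16⌋₊ = k at *
  have hyi : q⁻¹ * a = (2 * A * y)⁻¹ := by rw [hq]; field_simp
  have hd : A * (a * q⁻¹) ^ 2 = 1 / (4 * A * y ^ 2) := by rw [mul_comm a, hyi]; field_simp; norm_num
  have nz : ∀ z : ℂ, ‖(q : ℂ) * z‖ = q * ‖z‖ := fun z => by
    rw [norm_mul, Complex.norm_real, Real.norm_eq_abs, abs_of_pos q0]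
  have hz0' : ‖(q : ℂ) * z0‖ ≤ ρ - σ / 2 := by
    rw [mem_closedBall_zero_iff] at hz0
    rw [nz, hρ, hP, hσ]
    linarith [mul_le_mul_of_nonneg_left hz0 q0.le]
  have B := core u (q * z0) ρ (r / 4) (a * q⁻¹) (Real.exp (c * R)) M k N hu (by linarith)
    (by linarith) (by linarith) (by linarith) (by linarith) (by positivity) (by
      have h : Real.log (3 * N + 1) ≤ 3 * y ^ 2 := by
        rw [hlog, show 3 * Real.log R = Real.log (R ^ 3) by rw [Real.log_pow]; norm_num]
        have h1 : 7 * R ^ 2 ≤ R ^ 3 := by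
          rw [pow_succ' R 2]; exact mul_le_mul_of_nonneg_right (by linarith) (sq_nonneg R)
        exact Real.log_le_log (by positivity) (by linarith)
      rw [hd, div_mul_eq_mul_div, one_mul, div_le_one (by positivity)]
      linarith [one_le_pow₀ (n := 2) y1, le_mul_of_one_le_left (sq_nonneg y) hA]) hul (by linarith)
    (fun z hz => by rw [huv z (by linarith)]; exact hb _ (by simpa using hub z (by linarith)))
    (fun z hz => by
      rw [huv z (by linarith)]
      refine hMv _ ?_
      rw [mem_ball_zero_iff, norm_mul, Complex.norm_real, Real.norm_eq_abs, abs_of_pos (by positivity),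
        inv_mul_lt_iff₀ q0]
      linarith [le_mul_of_one_le_left hr.le q1])
    (by
      have h1 : m * ρ ≤ m * P := by gcongr; linarith
      have h3 : m * P = 2 * (m * A * a * R * y) := by rw [hP, hq]; ring
      linarith)
  obtain ⟨D, hD⟩ : ∃ D, D = A * (a * q⁻¹) ^ 2 * (N + 1) + 1 := ⟨_, rfl⟩
  have hD4 : 4 * D ≤ 2 * R := by
    have : A * (a * q⁻¹) ^ 2 * (N + 1) ≤ R / 4 := by
      rw [hd, div_mul_eq_mul_div, one_mul, div_le_iff₀ (by positivity)]
      have h : 6 * a * (A * R * y) ≤ y * (A * R * y) :=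
        mul_le_mul_of_nonneg_right y6 (by positivity)
      have : P = 2 * (a * (A * R * y)) := by rw [hP, hq]; ring
      linarith
    linarith
  rw [← hD, Landis.J0] at B
  obtain ⟨G, hG⟩ : ∃ G, G = C * Real.exp (2 * D) * (ρ ^ 2 * (Real.exp (2 * (C + D)) *
    (4 * ρ ^ 2) ^ 4)) := ⟨_, rfl⟩
  have hr1 : Real.log (r / R) = -Real.log (R / r) := by rw [← Real.log_inv, inv_div]
  rw [Real.rpow_def_of_pos (by positivity), hr1, neg_mul]
  have hl0 : Real.exp 10 ≤ R / r := by rw [le_div_iff₀ hr]; linarith [mul_le_mul_of_nonneg_left hr2.le (Real.exp_pos 10).le]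
  have hl := Real.exp_log (show 0 < R / r by positivity)
  generalize Real.log (R / r) = l at *
  have l10 : 10 ≤ l := by rwa [← hl, Real.exp_le_exp] at hl0
  refine Landis.conclude (G := G) (ρ := ρ) (σ := σ) (x := ‖q * z0‖) (s := r / 4) (c := c) (R := R)
    (L := L) (l := l) (E := u (q * z0) ^ 2) (k := k) (by linarith) (norm_nonneg _) hz0' (by linarith)
    (by linarith) M0 (by rw [hG]; positivity) ?_ (B.trans_eq (by rw [hG]; ring)) ?_ ?_ ?_ ?_ ?_
  · rw [huv _ (by linarith), ← mul_assoc, Complex.ofReal_inv, inv_mul_cancel₀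
      (Complex.ofReal_ne_zero.2 q0.ne'), one_mul, ← sq_abs, show -(2 * L) = (2 : ℕ) * -L by
      push_cast; ring, Real.exp_nat_mul]
    gcongr
  · rw [hG]
    exact Landis.G_bd (by linarith) (by linarith) hD4 hR e28
  · rw [hσ]
    exact Landis.k_bd hc hL hR hS0 hρ0 (by linarith) (by linarith) T2
  · have h : 64 * P ≤ 2 * R * R := by
      have := mul_le_mul_of_nonneg_left y64 (by positivity : 0 ≤ 2 * R)
      rw [hP, hq]; linarith
    rw [show 2 * l = (2 : ℕ) * l by norm_num, Real.exp_nat_mul, hl, div_pow, div_le_div_iff₀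
      (by positivity) (by positivity)]
    have : 8 * ρ * r ^ 2 ≤ R ^ 2 * r := by
      rw [sq r, ← mul_assoc]
      gcongr
      have := mul_le_mul_of_nonneg_left hr2.le hρ0.le
      linarith
    linarith
  · rw [hl, one_div_div]
    gcongr
    linarith
  · exact Landis.T_bd hk1 l10 hL T0 (by linarith)
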